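/- Let ρ₀ : 𝔽ₙ → PSL(2,ℝ) be a convex cocompact representation of the free group on n generators. There exists a C¹-neighbourhood U of ρ₀ (in the sense of the C¹ topology on the images of a fixed free generating set) such that every representation ρ₁ : 𝔽ₙ → Diff(S¹) lying in U that is spectrally Möbius-like preserves a smooth volume form on the cylinder C, i.e., is area-preserving. -/

import Mathlib

/-!
The invariant form is `exp U(x, y) dx dy`, where the logarithmic density `U` is built on the limit set
first and then extended to the cylinder. Everything happens on the universal cover: circle maps are
replaced by lifts, and the cylinder by the band `Ω = {y < x < y + 1}`.

*Dynamics.* By compactness of the convex core, the norms of the matrices of `ρ₀` are multiplicative up to a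
constant along reduced words (`exists_matrices`), so long reduced words contract the circle minus an interval
(`exists_contracting`). Only finitely many words matter, so this persists for every `C¹`-close `ρ₁`
(`exists_ping`). Iteration gives a limit set `L`, coded by reduced infinite words, on which the group of
lifts is uniformly expanding (`Dyn`).

*The density over `L`.* For `y ∈ L` the distortion of the expanding maps along the itinerary of `y` converges
on `(y, y + 1)` with all derivatives, which determines `u(·, y)` up to a constant. The spectral condition,
applied to `δ α ^ k` for a fixed hyperbolic `α` and `k → ∞` (`dagger`), says that the constants can be chosen
so that `u` is invariant and the potentials obtained from the two variables agree on `L × L` (`uv`). An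
expansion at the fixed points of `α` then gives a constant `κ` for which the density satisfies on `L` the
integrated equation of constant curvature (`Star`), and shows that the projective connections
`∂ₓ²u - (∂ₓu)² / 2` do not depend on the base point at points of `L` (`σ_eq`).

*Extension.* At each corner `(ζ + 1, η) ∈ L × L` there is an explicit local model `Form.lam` with the
prescribed traces on both axes. It is equivariant in the corner, and models at different corners agree to
infinite order at the common points, because `L` is perfect (`Reg.flat`). At a point of `Ω` the
models at the corners of the surrounding cell of gaps of `L` are blended with invariant cut-offs (`Form.Φ`).
The cut-offs have derivatives bounded by powers of the inverse gap size, which the flatness beats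
(`masterX`, `masterY`); hence the blends fit together to a smooth invariant `U` (`glue`, `U_smooth`, `U_inv`).
-/

noncomputable section

open Real Set Function MeasureTheory
open scoped Classical

/-- The circle, modeled as the real projective line `ℝP¹`. -/
abbrev RP1 : Type := Projectivization ℝ (Fin 2 → ℝ)

instance : TopologicalSpace RP1 :=
  inferInstanceAs (TopologicalSpace (Quotient (projectivizationSetoid ℝ (Fin 2 → ℝ))))

instance : MeasurableSpace RP1 := borel RP1
instance : BorelSpace RP1 := ⟨rfl⟩

lemma cossin_ne_zero (t : ℝ) : ![Real.cos (π * t), Real.sin (π * t)] ≠ 0 := by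
  intro h
  have h0 : Real.cos (π * t) = 0 := by simpa using congrFun h 0
  have h1 : Real.sin (π * t) = 0 := by simpa using congrFun h 1
  have h2 := Real.sin_sq_add_cos_sq (π * t)
  rw [h0, h1] at h2
  norm_num at h2

/-- The standard (angular) parametrization `ℝ → ℝP¹`; it has period `1` and realizes
the identification `S¹ = ℝ/ℤ ≃ ℝP¹`. -/
def para (t : ℝ) : RP1 :=
  Projectivization.mk ℝ ![Real.cos (π * t), Real.sin (π * t)] (cossin_ne_zero t)

/-- `F : ℝ → ℝ` is a lift of the circle map `f` through the angular parametrization. -/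
def IsLift (F : ℝ → ℝ) (f : RP1 → RP1) : Prop :=
  ∀ t : ℝ, f (para t) = para (F t)

/-- `f` is a `C^k` diffeomorphism of the circle: it admits a `C^k` lift of degree `±1`
with nowhere vanishing derivative. -/
def IsCircleDiffeo (k : ℕ∞) (f : RP1 → RP1) : Prop :=
  ∃ F : ℝ → ℝ, IsLift F f ∧ ContDiff ℝ k F ∧ (∀ t : ℝ, deriv F t ≠ 0) ∧
    ((∀ t : ℝ, F (t + 1) = F t + 1) ∨ (∀ t : ℝ, F (t + 1) = F t - 1))

/-- `f` is a real-analytic diffeomorphism of the circle. -/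
def IsAnalyticCircleDiffeo (f : RP1 → RP1) : Prop :=
  ∃ F : ℝ → ℝ, IsLift F f ∧ AnalyticOnNhd ℝ F Set.univ ∧ (∀ t : ℝ, deriv F t ≠ 0) ∧
    ((∀ t : ℝ, F (t + 1) = F t + 1) ∨ (∀ t : ℝ, F (t + 1) = F t - 1))

/-- The derivative of a circle map at a point, computed in the angular coordinate via a
differentiable lift. (Any two differentiable lifts differ by an integer constant, and the
derivative of a lift is `1`-periodic, so this does not depend on any choice.) -/
def circleDeriv (f : RP1 → RP1) (x : RP1) : ℝ :=
  if h : ∃ F : ℝ → ℝ, IsLift F f ∧ Differentiable ℝ F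
  then deriv h.choose (Function.invFun para x) else 0

/-- The `n`-th derivative of a smooth circle map at a point, in the angular coordinate. -/
def circleDerivN (n : ℕ) (f : RP1 → RP1) (x : RP1) : ℝ :=
  if h : ∃ F : ℝ → ℝ, IsLift F f ∧ ContDiff ℝ (⊤ : ℕ∞) F
  then iteratedDeriv n h.choose (Function.invFun para x) else 0

/-- The expression of a function on `S¹ × S¹` in the angular coordinates. -/
def chartDensity (ω : RP1 → RP1 → ℝ) : ℝ × ℝ → ℝ := fun q => ω (para q.1) (para q.2)

/-- The lift to `ℝ × ℝ` of the complement of the diagonal in `S¹ × S¹`. -/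
def offDiag2 : Set (ℝ × ℝ) := {q : ℝ × ℝ | para q.1 ≠ para q.2}

/-- A `C^k` volume form on the cylinder `C = S¹ × S¹ \ Δ`: a positive function of class
`C^k` (in the angular coordinates) off the diagonal. -/
def IsVolumeForm (k : ℕ∞) (ω : RP1 → RP1 → ℝ) : Prop :=
  (∀ x y : RP1, x ≠ y → 0 < ω x y) ∧ ContDiffOn ℝ k (chartDensity ω) offDiag2

/-- A real-analytic volume form on the cylinder `C = S¹ × S¹ \ Δ`. -/
def IsAnalyticVolumeForm (ω : RP1 → RP1 → ℝ) : Prop :=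
  (∀ x y : RP1, x ≠ y → 0 < ω x y) ∧ AnalyticOnNhd ℝ (chartDensity ω) offDiag2

/-- The circle diffeomorphism `f` preserves the volume form `ω` on the cylinder:
`ω (f x) (f y) · f'(x) · f'(y) = ω x y` for all `x ≠ y`. -/
def PreservesForm (f : RP1 → RP1) (ω : RP1 → RP1 → ℝ) : Prop :=
  ∀ x y : RP1, x ≠ y →
    ω (f x) (f y) * circleDeriv f x * circleDeriv f y = ω x y

abbrev SL2 : Type := Matrix.SpecialLinearGroup (Fin 2) ℝ

/-- The projective action of `SL(2,ℝ)` on `ℝP¹`; its image in the maps of `ℝP¹`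
is the group `PSL(2,ℝ)`. -/
def mobius (M : SL2) : RP1 → RP1 :=
  Projectivization.map (Matrix.SpecialLinearGroup.toLin' M : (Fin 2 → ℝ) →ₗ[ℝ] Fin 2 → ℝ)
    (Matrix.SpecialLinearGroup.toLin' M).injective

/-- `f` is an element of `PSL(2,ℝ)`, viewed as a self-map of the circle `ℝP¹`. -/
def IsMobius (f : RP1 → RP1) : Prop := ∃ M : SL2, f = mobius M

lemma rot_det (α : ℝ) :
    Matrix.det !![Real.cos (π * α), -Real.sin (π * α); Real.sin (π * α), Real.cos (π * α)] = 1 := by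
  rw [Matrix.det_fin_two_of]
  nlinarith [Real.sin_sq_add_cos_sq (π * α)]

/-- The rotation of angle `α` (in the angular coordinate of total length `1`), as an
element of `SL(2,ℝ)`: `mobius (rotSL α)` is the rotation `para t ↦ para (t + α)`. -/
def rotSL (α : ℝ) : SL2 :=
  ⟨!![Real.cos (π * α), -Real.sin (π * α); Real.sin (π * α), Real.cos (π * α)], rot_det α⟩

section Reps

variable {Γ : Type*} [Group Γ]

/-- The action `ρ` has no finite orbit on the circle. -/
def HasNoFiniteOrbit (ρ : Γ →* Equiv.Perm RP1) : Prop :=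
  ∀ x : RP1, (Set.range fun γ : Γ => ρ γ x).Infinite

/-- The action `ρ` has a dense orbit on the circle. -/
def HasDenseOrbit (ρ : Γ →* Equiv.Perm RP1) : Prop :=
  ∃ x : RP1, Dense (Set.range fun γ : Γ => ρ γ x)

/-- `L` is the limit set of the action `ρ`: the minimal nonempty closed invariant subset. -/
def IsLimitSet (ρ : Γ →* Equiv.Perm RP1) (L : Set RP1) : Prop :=
  L.Nonempty ∧ IsClosed L ∧ (∀ γ : Γ, (ρ γ) '' L = L) ∧
    ∀ L' : Set RP1, L'.Nonempty → IsClosed L' → (∀ γ : Γ, (ρ γ) '' L' = L') → L ⊆ L'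

/-- `ρ` is area-preserving: the diagonal action on the cylinder preserves a smooth
volume form. -/
def AreaPreserving (ρ : Γ →* Equiv.Perm RP1) : Prop :=
  ∃ ω : RP1 → RP1 → ℝ, IsVolumeForm (⊤ : ℕ∞) ω ∧ ∀ γ : Γ, PreservesForm (ρ γ) ω

/-- `ρ` is topologically Fuchsian: conjugate to a subgroup of `PSL(2,ℝ)` by a
homeomorphism of the circle. -/
def TopologicallyFuchsian (ρ : Γ →* Equiv.Perm RP1) : Prop :=
  ∃ h : RP1 ≃ₜ RP1, ∀ γ : Γ, IsMobius fun x => h.symm (ρ γ (h x))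

/-- `ρ` is differentially Fuchsian: conjugate to a subgroup of `PSL(2,ℝ)` by a `C^∞`
diffeomorphism of the circle. -/
def DifferentiallyFuchsian (ρ : Γ →* Equiv.Perm RP1) : Prop :=
  ∃ h g : RP1 → RP1, IsCircleDiffeo (⊤ : ℕ∞) h ∧ IsCircleDiffeo (⊤ : ℕ∞) g ∧
    (∀ x, g (h x) = x) ∧ (∀ x, h (g x) = x) ∧
    ∀ γ : Γ, IsMobius fun x => g (ρ γ (h x))

/-- `ρ` is analytically Fuchsian: conjugate to a subgroup of `PSL(2,ℝ)` by a real-analytic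
diffeomorphism of the circle. -/
def AnalyticallyFuchsian (ρ : Γ →* Equiv.Perm RP1) : Prop :=
  ∃ h g : RP1 → RP1, IsAnalyticCircleDiffeo h ∧ IsAnalyticCircleDiffeo g ∧
    (∀ x, g (h x) = x) ∧ (∀ x, h (g x) = x) ∧
    ∀ γ : Γ, IsMobius fun x => g (ρ γ (h x))

end Reps

/-- The "Lebesgue" measure on the circle, transported from `[0,1)` by the angular
parametrization. -/
def circleMeasure : Measure RP1 :=
  Measure.map para (volume.restrict (Set.Ico (0 : ℝ) 1))

/-- The measure on `S¹ × S¹` with density `ω` with respect to Lebesgue measure. -/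
def volumeFormMeasure (ω : RP1 → RP1 → ℝ) : Measure (RP1 × RP1) :=
  (circleMeasure.prod circleMeasure).withDensity fun q => ENNReal.ofReal (ω q.1 q.2)

-- extras appended to base
section Extra

open scoped UpperHalfPlane

/-- The affine chart `ℝ → ℝP¹`, `u ↦ [u : 1]`, realizing `S¹ = ℝ ∪ {∞}`. -/
def aff (u : ℝ) : RP1 :=
  Projectivization.mk ℝ ![u, (1 : ℝ)] (by
    intro h
    simpa using congrFun h 1)

/-- The curvature `K = (2/ω) ∂²(log ω)/∂x∂y` (in the angular coordinates) of the Lorentz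
metric associated to the volume form `ω` on the cylinder. -/
def curvature (ω : RP1 → RP1 → ℝ) (x y : RP1) : ℝ :=
  (2 / ω x y) *
    deriv (fun t : ℝ =>
        deriv (fun s : ℝ => Real.log (ω (para t) (para s))) (Function.invFun para y))
      (Function.invFun para x)

/-- The Schwarzian derivative of `f` (with respect to the standard projective structure of
`ℝP¹`) vanishes at `x`: `f` agrees to third order at `x` with some element of `PSL(2,ℝ)`. -/
def SchwarzianVanishesAt (f : RP1 → RP1) (x : RP1) : Prop :=
  ∃ M : SL2, f x = mobius M x ∧
    circleDerivN 1 f x = circleDerivN 1 (mobius M) x ∧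
    circleDerivN 2 f x = circleDerivN 2 (mobius M) x ∧
    circleDerivN 3 f x = circleDerivN 3 (mobius M) x

/-- The action on the hyperbolic plane of an element of `PSL(2,ℝ)`, given as a self-map of
the circle. (Well defined: matrices `±M` induce the same map on `ℝP¹` and on `ℍ`.) -/
def mobiusHAct (f : RP1 → RP1) : ℍ → ℍ :=
  if h : ∃ M : SL2, f = mobius M then fun z => h.choose • z else id

/-- A subset of the hyperbolic plane is (geodesically) convex iff it contains every point
lying between two of its points. -/
def HypConvex (C : Set ℍ) : Prop :=
  ∀ x ∈ C, ∀ y ∈ C, ∀ z : ℍ, dist x z + dist z y = dist x y → z ∈ C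

/-- A Cantor subset of the circle: nonempty, perfect, with empty interior. -/
def IsCantorSet (L : Set RP1) : Prop :=
  L.Nonempty ∧ Perfect L ∧ interior L = ∅

/-- `ρ` is a convex cocompact representation in `PSL(2,ℝ)`: it is injective, takes values in
`PSL(2,ℝ)`, is discrete (acts properly discontinuously on `ℍ`), its limit set is a Cantor
set, and it acts cocompactly on some nonempty closed convex invariant subset of `ℍ`
(equivalently, on the convex hull of its limit set). -/
def IsConvexCocompact {Γ : Type*} [Group Γ] (ρ : Γ →* Equiv.Perm RP1) : Prop :=
  Function.Injective ρ ∧ (∀ γ : Γ, IsMobius (ρ γ)) ∧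
  (∀ K : Set ℍ, IsCompact K →
    {γ : Γ | ((mobiusHAct (ρ γ) '' K) ∩ K).Nonempty}.Finite) ∧
  (∃ L : Set RP1, IsLimitSet ρ L) ∧
  (∀ L : Set RP1, IsLimitSet ρ L → IsCantorSet L) ∧
  ∃ C : Set ℍ, C.Nonempty ∧ IsClosed C ∧ HypConvex C ∧
    (∀ γ : Γ, mobiusHAct (ρ γ) '' C = C) ∧
    ∃ K : Set ℍ, IsCompact K ∧ C ⊆ ⋃ γ : Γ, mobiusHAct (ρ γ) '' K

/-- Two circle maps are `ε`-close in the `C¹` topology. -/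
def C1Close (f g : RP1 → RP1) (ε : ℝ) : Prop :=
  ∃ F G : ℝ → ℝ, IsLift F f ∧ IsLift G g ∧ ContDiff ℝ 1 F ∧ ContDiff ℝ 1 G ∧
    ∀ t : ℝ, |F t - G t| ≤ ε ∧ |deriv F t - deriv G t| ≤ ε

/-- `ρ` is spectrally Möbius-like: every nontrivial element has at most two fixed points,
and at a pair of fixed points `N, S` the derivatives satisfy `f'(N)·f'(S) = 1`, `f'(N) ≠ 1`. -/
def SpectrallyMobiusLike {Γ : Type*} [Group Γ] (ρ : Γ →* Equiv.Perm RP1) : Prop :=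
  ∀ γ : Γ, ρ γ ≠ 1 →
    {x : RP1 | ρ γ x = x}.encard ≤ 2 ∧
    ∀ N S : RP1, N ≠ S → {x : RP1 | ρ γ x = x} = {N, S} →
      circleDeriv (ρ γ) N * circleDeriv (ρ γ) S = 1 ∧ circleDeriv (ρ γ) N ≠ 1

end Extra

namespace AP
set_option linter.unusedSectionVars false
open scoped ContDiff
open Filter Topology
open Equiv (Perm)

/-! ### Expanding dynamics on the universal cover of the circle -/

/-- The fundamental arc of the circle cut at the point `a`. -/
notation "Arc" a:max => Ioo a (a + 1)
/-- The part of `Arc a` at distance at least `c` from its ends. -/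
notation "Mid" c:max a:max => Icc (a + c) (a + 1 - c)

/-- Translation of the line by an integer. -/
def tr (m : ℤ) : Perm ℝ := Equiv.addRight (m : ℝ)

@[simp] lemma tr_apply (m : ℤ) (x : ℝ) : tr m x = x + m := rfl

/-- The group of lifts generated by the maps `φ t` and the integer translations. -/
def liftGroup {S : Type} (φ : S → Perm ℝ) : Subgroup (Perm ℝ) :=
  Subgroup.closure (Set.range φ ∪ Set.range tr)

/-- The `k`-step expanding map along the itinerary of `y` for the coding `s`. -/
def gw {S : Type} (φ : S → Perm ℝ) (s : ℝ → S) (y : ℝ) : ℕ → Perm ℝ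
  | 0 => 1
  | k + 1 => φ (s (gw φ s y k y)) * gw φ s y k

/-- A finitely generated group of lifts of circle diffeomorphisms acting on a perfect set `L` in a
uniformly expanding way, coded by letters: `s y` is the letter whose map `φ (s y)` expands at
`y ∈ L`. The record also holds a marked letter `a` with its attracting and repelling fixed points,
an element `μ` moving them, and the spectral condition on pairs of fixed points. -/
structure Dyn (S : Type) where
  inv : S → S
  φ : S → Perm ℝ
  smooth : ∀ t, ContDiff ℝ ∞ (φ t)
  dpos : ∀ t x, 0 < deriv (φ t) x
  per : ∀ t x, φ t (x + 1) = φ t x + 1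
  inv_φ : ∀ t, φ (inv t) = (φ t)⁻¹
  inv_inv : ∀ t, inv (inv t) = t
  L : Set ℝ
  closed : IsClosed L
  Lper : ∀ y ∈ L, ∀ m : ℤ, y + m ∈ L
  Linv : ∀ t, ∀ y ∈ L, φ t y ∈ L
  perfect : ∀ y ∈ L, ∀ ε > 0, ∃ y' ∈ L, y' ≠ y ∧ |y' - y| < ε
  s : ℝ → S
  s_per : ∀ y ∈ L, ∀ m : ℤ, s (y + m) = s y
  scode : ∀ y ∈ L, ∀ t, t ≠ s y → s (φ t y) = inv t
  sloc : ∃ r > 0, ∀ y ∈ L, ∀ y' ∈ L, |y - y'| < r → s y = s y'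
  θ : ℝ
  θ0 : 0 < θ
  θ1 : θ < 1
  contr : ∀ c > 0, ∃ C, ∀ y ∈ L, ∀ k, ∀ z ∈ Mid c y,
    deriv (gw φ s y k) z ≤ C * θ ^ k
  sep : ∀ c > 0, ∃ c' > 0, ∀ y ∈ L, ∀ k, ∀ z ∈ Mid c y,
    gw φ s y k z ∈ Mid c' (gw φ s y k y)
  expansive : ∃ r > 0, ∀ y ∈ L, ∀ y' ∈ L, y ≠ y' → ∃ k, r ≤ |gw φ s y k y - gw φ s y k y'|
  ap : ℝ
  an : ℝ
  a : S
  m : ℤ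
  apL : ap ∈ L
  anL : an ∈ L
  an_lt : an < ap
  ap_lt : ap < an + 1
  s_ap : s ap = a
  s_an : s an = inv a
  φ_ap : φ a ap = ap + m
  φ_an : φ (inv a) an = an - m
  dense_ap : ∀ y ∈ L, ∀ ε > 0, ∃ F ∈ liftGroup φ, |F ap - y| < ε
  dense_an : ∀ y ∈ L, ∀ ε > 0, ∃ F ∈ liftGroup φ, |F an - y| < ε
  μ : Perm ℝ
  μG : μ ∈ liftGroup φ
  μ_ap : ∀ k : ℤ, μ ap ≠ ap + k
  μ_ap_an : ∀ k : ℤ, μ ap ≠ an + k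
  μ_an : ∀ k : ℤ, μ an ≠ an + k
  μ_an_ap : ∀ k : ℤ, μ an ≠ ap + k
  spectral : ∀ F ∈ liftGroup φ, ∀ p q, F p = p → F q = q → (∀ k : ℤ, p ≠ q + k) →
    deriv F p < 1 → deriv F p * deriv F q = 1

/-- Logarithm of the derivative. -/
def ld (F : ℝ → ℝ) (x : ℝ) : ℝ := log (deriv F x)

/-- Smooth increasing lift of a degree one circle diffeomorphism. -/
structure Good (F : ℝ → ℝ) : Prop where
  smooth : ContDiff ℝ ∞ F
  dpos : ∀ x, 0 < deriv F x
  per : ∀ x, F (x + 1) = F x + 1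

namespace Good
variable {F H : ℝ → ℝ}
lemma diff (h : Good F) (x : ℝ) : DifferentiableAt ℝ F x :=
  h.smooth.contDiffAt.differentiableAt (by simp)
lemma hd (h : Good F) (x : ℝ) : HasDerivAt F (deriv F x) x := (h.diff x).hasDerivAt
lemma mono (h : Good F) : StrictMono F := strictMono_of_deriv_pos h.dpos
lemma cont (h : Good F) : Continuous F := h.smooth.continuous
lemma comp (h : Good F) (h' : Good H) : Good (F ∘ H) where
  smooth := h.smooth.comp h'.smooth
  dpos x := by
    rw [deriv_comp x (h.diff _) (h'.diff _)]
    exact mul_pos (h.dpos _) (h'.dpos _)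
  per x := by simp [h'.per, h.per]
lemma ld_comp (h : Good F) (h' : Good H) (x : ℝ) : ld (F ∘ H) x = ld F (H x) + ld H x := by
  unfold ld
  rw [deriv_comp x (h.diff _) (h'.diff _),
    log_mul (h.dpos _).ne' (h'.dpos _).ne']
lemma deriv_smooth (h : Good F) : ContDiff ℝ ∞ (deriv F) := by
  have h1 : ContDiff ℝ (∞ + 1) F := by simpa using h.smooth
  exact (contDiff_succ_iff_deriv.1 h1).2.2
lemma ld_smooth (h : Good F) : ContDiff ℝ ∞ (ld F) :=
  h.deriv_smooth.log fun x => (h.dpos x).ne'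
lemma exp_ld (h : Good F) (x : ℝ) : exp (ld F x) = deriv F x := exp_log (h.dpos x)
lemma per_int (h : Good F) (x : ℝ) (m : ℤ) : F (x + m) = F x + m := by
  induction m using Int.induction_on with
  | zero => simp
  | succ i ih => push_cast; rw [← add_assoc, h.per]; push_cast at ih; rw [ih]; ring
  | pred i ih =>
    have := h.per (x + ((-(i:ℤ) - 1 : ℤ) : ℝ))
    grind
lemma deriv_per (h : Good F) (x : ℝ) (m : ℤ) : deriv F (x + m) = deriv F x := by
  have h1 : (fun x => F (x + m)) = fun x => F x + m := funext fun x => h.per_int x m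
  have h2 : deriv (fun x => F (x + m)) x = deriv F (x + m) := deriv_comp_add_const F (m:ℝ) x
  rw [← h2, h1, deriv_add_const]
lemma ld_per (h : Good F) (x : ℝ) (m : ℤ) : ld F (x + m) = ld F x := by
  unfold ld; rw [h.deriv_per]
end Good

lemma good_tr (m : ℤ) : Good (tr m) where
  smooth := by
    have : (⇑(tr m)) = fun x => x + (m:ℝ) := rfl
    rw [this]; fun_prop
  dpos x := by
    have : (⇑(tr m)) = fun x => x + (m:ℝ) := rfl
    rw [this]; simp
  per x := by simp; ring

lemma ld_tr (m : ℤ) (x : ℝ) : ld (tr m) x = 0 := by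
  have : (⇑(tr m)) = fun x => x + (m:ℝ) := rfl
  unfold ld; rw [this]; simp

lemma tr_inv (m : ℤ) : (tr m)⁻¹ = tr (-m) := by
  rw [inv_eq_iff_mul_eq_one]; ext x; simp

lemma exists_root_rate {θ : ℝ} (h0 : 0 < θ) (h1 : θ < 1) (m : ℕ) (hm : 1 ≤ m) :
    ∃ τ, 0 < τ ∧ τ < 1 ∧ θ ≤ τ ^ m := by
  have hm' : (0:ℝ) < m := by exact_mod_cast hm
  have hm1 : (1:ℝ) ≤ m := by exact_mod_cast hm
  have e : (1 - θ) / m ≤ 1 - θ := div_le_self (by linarith) hm1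
  have e0 : 0 < (1 - θ) / m := div_pos (by linarith) hm'
  refine ⟨1 - (1 - θ) / m, by linarith, by linarith, ?_⟩
  have := one_add_mul_le_pow (a := -((1 - θ) / m)) (by linarith) m
  have h2 : 1 + (m:ℝ) * -((1 - θ) / m) = θ := by field_simp; ring
  grind

lemma periodic_bounded {f : ℝ → ℝ} (hf : Continuous f) (hp : ∀ x (m : ℤ), f (x + m) = f x) :
    ∃ B, ∀ x, |f x| ≤ B := by
  obtain ⟨B, hB⟩ := (isCompact_Icc (a := (0:ℝ)) (b := 1)).exists_bound_of_continuousOn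
    hf.continuousOn
  refine ⟨B, fun x => ?_⟩
  have := hB (Int.fract x) ⟨Int.fract_nonneg x, (Int.fract_lt_one x).le⟩
  rw [← hp (Int.fract x) ⌊x⌋, add_comm, Int.floor_add_fract] at this
  simpa using this

namespace Dyn
variable {S : Type} (D : Dyn S)

/-- The group of lifts of the dynamics. -/
abbrev G : Subgroup (Perm ℝ) := liftGroup D.φ
/-- The expanding itinerary maps of the dynamics. -/
abbrev g (y : ℝ) (k : ℕ) : Perm ℝ := gw D.φ D.s y k

lemma φG (t : S) : D.φ t ∈ D.G := Subgroup.subset_closure (Or.inl ⟨t, rfl⟩)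
lemma trG (m : ℤ) : tr m ∈ D.G := Subgroup.subset_closure (Or.inr ⟨m, rfl⟩)

lemma G_ind {P : Perm ℝ → Prop} (h1 : P 1) (hφ : ∀ t, P (D.φ t)) (ht : ∀ m, P (tr m))
    (hm : ∀ F ∈ D.G, ∀ H ∈ D.G, P F → P H → P (F * H)) : ∀ F ∈ D.G, P F := by
  intro F hF
  refine Subgroup.closure_induction'' (p := fun F _ => P F) ?_ ?_ h1 ?_ hF
  · grind
  · rintro _ (⟨t, rfl⟩ | ⟨m, rfl⟩)
    · rw [← D.inv_φ]; exact hφ _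
    · rw [tr_inv]; exact ht _
  · intro F H hF hH h h'; exact hm F hF H hH h h'

lemma good_φ (t : S) : Good (D.φ t) := ⟨D.smooth t, D.dpos t, D.per t⟩

lemma good : ∀ F ∈ D.G, Good F := by
  refine D.G_ind ⟨contDiff_id, fun x => ?_, fun x => rfl⟩ D.good_φ good_tr
    (fun F _ H _ h h' => h.comp h')
  simp_all

lemma LG : ∀ F ∈ D.G, ∀ y ∈ D.L, F y ∈ D.L := by
  refine D.G_ind (fun y h => h) D.Linv (fun m y h => D.Lper y h m) ?_
  simp_all

lemma gG (y : ℝ) (k : ℕ) : D.g y k ∈ D.G := by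
  induction k with
  | zero => exact one_mem _
  | succ k ih => exact mul_mem (D.φG _) ih

lemma good_g (y : ℝ) (k : ℕ) : Good (D.g y k) := D.good _ (D.gG y k)

lemma gL {y : ℝ} (hy : y ∈ D.L) (k : ℕ) : D.g y k y ∈ D.L := D.LG _ (D.gG y k) y hy

lemma ld_mul {F H : Perm ℝ} (hF : F ∈ D.G) (hH : H ∈ D.G) (x : ℝ) :
    ld (F * H : Perm ℝ) x = ld F (H x) + ld H x := (D.good F hF).ld_comp (D.good H hH) x

lemma ld_one (x : ℝ) : ld (1 : Perm ℝ) x = 0 := by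
  have : (⇑(1 : Perm ℝ)) = fun x => x := rfl
  unfold ld; rw [this]; simp

lemma ld_inv {F : Perm ℝ} (hF : F ∈ D.G) (x : ℝ) :
    ld (F⁻¹ : Perm ℝ) (F x) = - ld F x := by
  have := D.ld_mul (inv_mem hF) hF x
  rw [inv_mul_cancel, ld_one] at this
  linarith

lemma ld_inv' {F : Perm ℝ} (hF : F ∈ D.G) (x : ℝ) :
    ld (F⁻¹ : Perm ℝ) x = - ld F (F⁻¹ x) := by
  have := D.ld_inv hF (F⁻¹ x)
  simpa using this

/-- The letter read at time `k` along the itinerary of `y`. -/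
def let_ (y : ℝ) (k : ℕ) : S := D.s (D.g y k y)

/-- The logarithmic derivative contributed at time `k` along the itinerary of `y`. -/
def term (y : ℝ) (k : ℕ) : ℝ → ℝ := ld (D.φ (D.let_ y k)) ∘ D.g y k

lemma term_smooth (y : ℝ) (k : ℕ) : ContDiff ℝ ∞ (D.term y k) :=
  (D.good_φ _).ld_smooth.comp (D.good_g y k).smooth

lemma ld_g_succ (y : ℝ) (k : ℕ) (z : ℝ) :
    ld (D.g y (k+1)) z = D.term y k z + ld (D.g y k) z :=
  D.ld_mul (D.φG _) (D.gG y k) z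

lemma ld_g (y : ℝ) (k : ℕ) (z : ℝ) :
    ld (D.g y k) z = ∑ l ∈ Finset.range k, D.term y l z := by
  induction k with
  | zero => exact (ld_one z).trans (by simp)
  | succ k ih => rw [ld_g_succ, ih, Finset.sum_range_succ, add_comm]

lemma ld_bound [Finite S] (j : ℕ) : ∃ B, 0 ≤ B ∧ ∀ t x, |iteratedDeriv j (ld (D.φ t)) x| ≤ B := by
  have h : ∀ t, ∃ B, ∀ x, |iteratedDeriv j (ld (D.φ t)) x| ≤ B := by
    intro t
    refine periodic_bounded ((D.good_φ t).ld_smooth.continuous_iteratedDeriv j (by exact_mod_cast le_top)) ?_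
    intro x m
    have h1 : (fun x => ld (D.φ t) (x + m)) = ld (D.φ t) := funext fun x => (D.good_φ t).ld_per x m
    conv_rhs => rw [← h1]
    rw [iteratedDeriv_comp_add_const]
  choose B hB using h
  have : Fintype S := Fintype.ofFinite S
  refine ⟨∑ t, |B t|, Finset.sum_nonneg fun _ _ => abs_nonneg _, fun t x => ?_⟩
  calc _ ≤ B t := hB t x
    _ ≤ |B t| := le_abs_self _
    _ ≤ _ := Finset.single_le_sum (f := fun t => |B t|) (fun _ _ => abs_nonneg _) (Finset.mem_univ t)

/-- Exponential decay of the derivatives of order `1, …, m` of the itinerary maps. -/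
def Decay (m : ℕ) : Prop := ∀ c > 0, ∃ C, ∀ j, 1 ≤ j → j ≤ m → ∀ y ∈ D.L, ∀ k,
  ∀ z ∈ Mid c y, |iteratedDeriv j (D.g y k) z| ≤ C * D.θ ^ k

lemma term_decay [Finite S] (m : ℕ) (hm : 1 ≤ m) (h : D.Decay m) (c : ℝ) (hc : 0 < c) :
    ∃ C τ, 0 ≤ C ∧ 0 < τ ∧ τ < 1 ∧ ∀ j, 1 ≤ j → j ≤ m → ∀ y ∈ D.L, ∀ k,
    ∀ z ∈ Mid c y, |iteratedDeriv j (D.term y k) z| ≤ C * τ ^ k := by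
  obtain ⟨C, hC⟩ := h c hc
  obtain ⟨τ, t0, t1, ht⟩ := exists_root_rate D.θ0 D.θ1 m hm
  choose B hB0 hB using D.ld_bound
  set A := ∑ i ∈ Finset.range (m+1), B i
  have hA : ∀ i ≤ m, B i ≤ A := fun i hi =>
    Finset.single_le_sum (f := B) (fun _ _ => hB0 _) (Finset.mem_range.2 (by omega))
  have hA0 : 0 ≤ A := (hB0 0).trans (hA 0 (by omega))
  set C' := max 1 C
  have hC1 : 1 ≤ C' := le_max_left _ _
  refine ⟨(m.factorial : ℝ) * A * C' ^ m, τ, by positivity, t0, t1, fun j hj hjm y hy k z hz => ?_⟩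
  have key := norm_iteratedFDeriv_comp_le (n := j) (N := ∞) (D.good_φ (D.let_ y k)).ld_smooth
    (D.good_g y k).smooth (by exact_mod_cast le_top) z (C := A) (D := C' * τ ^ k)
    (fun i hi => by
      rw [norm_iteratedFDeriv_eq_norm_iteratedDeriv]
      exact (hB i _ _).trans (hA i (by omega)))
    (fun i hi hij => by
      rw [norm_iteratedFDeriv_eq_norm_iteratedDeriv]
      refine (hC i hi (by omega) y hy k z hz).trans ?_
      rw [mul_pow]
      have e1 : D.θ ^ k ≤ (τ ^ k) ^ i := by
        calc D.θ ^ k ≤ (τ ^ m) ^ k := pow_le_pow_left₀ D.θ0.le ht k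
          _ = (τ ^ k) ^ m := by rw [← pow_mul, ← pow_mul, mul_comm]
          _ ≤ _ := pow_le_pow_of_le_one (by positivity) (pow_le_one₀ t0.le t1.le) (by omega)
      have e2 : C ≤ C' ^ i := (le_max_right _ _).trans (le_self_pow₀ hC1 (by omega))
      have : 0 ≤ C' ^ i := by positivity
      have := pow_nonneg D.θ0.le k
      nlinarith)
  rw [norm_iteratedFDeriv_eq_norm_iteratedDeriv] at key
  refine key.trans ?_
  rw [mul_pow, ← mul_assoc]
  have e1 : (τ ^ k) ^ j ≤ τ ^ k :=
    pow_le_of_le_one (by positivity) (pow_le_one₀ t0.le t1.le) (by omega)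
  have e2 : C' ^ j ≤ C' ^ m := pow_le_pow_right₀ hC1 hjm
  have e3 : (j.factorial : ℝ) ≤ (m.factorial : ℝ) := by exact_mod_cast Nat.factorial_le hjm
  gcongr

lemma iteratedDeriv_exp_comp_bound {f : ℝ → ℝ} (hf : ContDiff ℝ ∞ f) (n : ℕ) (x E : ℝ)
    (hE : ∀ i, 1 ≤ i → i ≤ n → |iteratedDeriv i f x| ≤ E ^ i) :
    |iteratedDeriv n (fun x => exp (f x)) x| ≤ (n.factorial : ℝ) * exp (f x) * E ^ n := by
  have key := norm_iteratedFDeriv_comp_le (n := n) (N := ∞) contDiff_exp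
    hf (by exact_mod_cast le_top) x (C := exp (f x)) (D := E)
    (fun i hi => by
      rw [norm_iteratedFDeriv_eq_norm_iteratedDeriv, iteratedDeriv_eq_iterate]
      simp) (fun i h1 h2 => by
      rw [norm_iteratedFDeriv_eq_norm_iteratedDeriv]; exact hE i h1 h2)
  rwa [norm_iteratedFDeriv_eq_norm_iteratedDeriv] at key

lemma decay [Finite S] (m : ℕ) : D.Decay m := by
  induction m with
  | zero => intro c _; exact ⟨0, fun j h1 h2 => by omega⟩
  | succ m ih =>
    intro c hc
    obtain ⟨C1, hC1⟩ := D.contr c hc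
    have base : ∀ y ∈ D.L, ∀ k, ∀ z ∈ Mid c y, |deriv (D.g y k) z| ≤ C1 * D.θ ^ k := by
      intro y hy k z hz
      rw [abs_of_pos ((D.good_g y k).dpos z)]; exact hC1 y hy k z hz
    rcases Nat.eq_zero_or_pos m with rfl | hm
    · refine ⟨C1, fun j h1 h2 y hy k z hz => ?_⟩
      obtain rfl : j = 1 := by omega
      simp_all
    obtain ⟨C, hC⟩ := ih c hc
    obtain ⟨B, τ, hB0, t0, t1, hB⟩ := D.term_decay m hm ih c hc
    set E := 1 + B / (1 - τ)
    have h1τ : 0 < 1 - τ := by linarith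
    have hE : 1 ≤ E := by
      have : 0 ≤ B / (1 - τ) := by positivity
      simp only [E]; linarith
    refine ⟨max C ((m.factorial : ℝ) * C1 * E ^ m), fun j h1 h2 y hy k z hz => ?_⟩
    have hθ := pow_nonneg D.θ0.le k
    rcases Nat.lt_or_ge m j with h | h
    swap
    · exact (hC j h1 h y hy k z hz).trans (mul_le_mul_of_nonneg_right (le_max_left _ _) hθ)
    obtain rfl : j = m + 1 := by omega
    have hder : deriv (D.g y k) = fun x => exp (∑ l ∈ Finset.range k, D.term y l x) := by
      funext x; rw [← D.ld_g, (D.good_g y k).exp_ld]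
    have hs : ContDiff ℝ ∞ (fun x => ∑ l ∈ Finset.range k, D.term y l x) :=
      ContDiff.sum fun l _ => D.term_smooth y l
    rw [iteratedDeriv_succ', hder]
    have key := iteratedDeriv_exp_comp_bound hs m z E (fun i hi him => by
      rw [iteratedDeriv_fun_sum (fun l _ => (D.term_smooth y l).contDiffAt.of_le (by exact_mod_cast le_top))]
      calc _ ≤ ∑ l ∈ Finset.range k, |iteratedDeriv i (D.term y l) z| := Finset.abs_sum_le_sum_abs _ _
        _ ≤ ∑ l ∈ Finset.range k, B * τ ^ l := Finset.sum_le_sum fun l _ => hB i hi him y hy l z hz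
        _ = B * ∑ l ∈ Finset.range k, τ ^ l := by rw [Finset.mul_sum]
        _ ≤ B * (1 / (1 - τ)) := by
          gcongr
          rw [geom_sum_eq t1.ne, ← neg_div_neg_eq]
          have := pow_pos t0 k
          gcongr <;> linarith
        _ ≤ E := by grind
        _ ≤ _ := le_self_pow₀ hE (by omega))
    refine key.trans ?_
    have e : exp (∑ l ∈ Finset.range k, D.term y l z) ≤ C1 * D.θ ^ k := by
      rw [← D.ld_g, (D.good_g y k).exp_ld]; exact hC1 y hy k z hz
    calc _ ≤ ((m.factorial : ℝ) : ℝ) * (C1 * D.θ ^ k) * E ^ m := by gcongr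
      _ = ((m.factorial : ℝ) * C1 * E ^ m) * D.θ ^ k := by ring
      _ ≤ _ := mul_le_mul_of_nonneg_right (le_max_right _ _) hθ

end Dyn

/-! ### Distortion series -/

lemma hasDerivAt_iteratedDeriv {f : ℝ → ℝ} (hf : ContDiff ℝ ∞ f) (j : ℕ) (z : ℝ) :
    HasDerivAt (iteratedDeriv j f) (iteratedDeriv (j + 1) f z) z := by
  rw [iteratedDeriv_succ]
  exact ((hf.differentiable_iteratedDeriv j (by exact_mod_cast ENat.natCast_lt_top j)) z).hasDerivAt

namespace Dyn
variable {S : Type} (D : Dyn S)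

/-- `term`, normalised to vanish at the middle point `y + 1/2`. -/
def tm (y : ℝ) (k : ℕ) (z : ℝ) : ℝ := D.term y k z - D.term y k (y + 1 / 2)

lemma tm_smooth (y : ℝ) (k : ℕ) : ContDiff ℝ ∞ (D.tm y k) :=
  (D.term_smooth y k).sub contDiff_const

lemma tm_bound [Finite S] (j : ℕ) (c : ℝ) (hc : 0 < c) :
    ∃ C τ, 0 ≤ C ∧ 0 < τ ∧ τ < 1 ∧ ∀ y ∈ D.L, ∀ k, ∀ z ∈ Mid c y,
      |iteratedDeriv j (D.tm y k) z| ≤ C * τ ^ k := by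
  obtain ⟨C, τ, hC, t0, t1, h⟩ := D.term_decay (j + 1) (by omega) (D.decay (j + 1)) c hc
  refine ⟨C, τ, hC, t0, t1, fun y hy k z hz => ?_⟩
  rcases j with _ | j
  · rw [iteratedDeriv_zero]
    have hd : ∀ x ∈ Mid c y, ‖deriv (D.term y k) x‖ ≤ C * τ ^ k := by
      intro x hx
      have := h 1 le_rfl (by omega) y hy k x hx
      rwa [iteratedDeriv_one] at this
    have h2 := (convex_Icc (y + c) (y + 1 - c)).norm_image_sub_le_of_norm_deriv_le
      (f := D.term y k) (x := y + 1/2) (y := z)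
      (fun x _ => (D.term_smooth y k).contDiffAt.differentiableAt (by simp)) hd
      ⟨by linarith [hz.1, hz.2], by linarith [hz.1, hz.2]⟩ hz
    refine h2.trans ?_
    have : ‖z - (y + 1/2)‖ ≤ 1 := by
      rw [norm_eq_abs, abs_le]; constructor <;> linarith [hz.1, hz.2]
    calc _ ≤ C * τ ^ k * 1 := by gcongr
      _ = _ := mul_one _
  · have : iteratedDeriv (j + 1) (D.tm y k) = iteratedDeriv (j + 1) (D.term y k) := by
      rw [iteratedDeriv_succ', iteratedDeriv_succ']
      congr 1
      funext x
      exact deriv_sub_const _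
    rw [this]
    exact h (j + 1) (by omega) (by omega) y hy k z hz

/-- The distortion potential at `y` (`j = 0`) and its derivatives. -/
def V (y : ℝ) (j : ℕ) (z : ℝ) : ℝ := ∑' k, iteratedDeriv j (D.tm y k) z

/-- The limit distortion `lim log (g_k'(z) / g_k'(z'))` along the itinerary of `y`. -/
def Dl (y z z' : ℝ) : ℝ := D.V y 0 z - D.V y 0 z'

lemma exists_c {y z : ℝ} (hz : z ∈ Arc y) :
    ∃ c > 0, c < 1/2 ∧ z ∈ Ioo (y + c) (y + 1 - c) := by
  refine ⟨min (z - y) (y + 1 - z) / 2, ?_, ?_, ?_, ?_⟩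
  · have := lt_min (sub_pos.2 hz.1) (sub_pos.2 hz.2); linarith
  · have := min_le_left (z - y) (y + 1 - z); linarith [hz.2]
  · have := min_le_left (z - y) (y + 1 - z); linarith [hz.1]
  · have := min_le_right (z - y) (y + 1 - z); linarith [hz.2]

variable [Finite S]

lemma V_summable {y z : ℝ} (hy : y ∈ D.L) (hz : z ∈ Arc y) (j : ℕ) :
    Summable fun k => iteratedDeriv j (D.tm y k) z := by
  obtain ⟨c, hc, -, hz'⟩ := exists_c hz
  obtain ⟨C, τ, -, t0, t1, h⟩ := D.tm_bound j c hc
  exact Summable.of_norm_bounded ((summable_geometric_of_lt_one t0.le t1).mul_left C)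
    fun k => h y hy k z ⟨hz'.1.le, hz'.2.le⟩

lemma V_hasDeriv {y z : ℝ} (hy : y ∈ D.L) (hz : z ∈ Arc y) (j : ℕ) :
    HasDerivAt (D.V y j) (D.V y (j + 1) z) z := by
  obtain ⟨c, hc, hc2, hz'⟩ := exists_c hz
  obtain ⟨C, τ, -, t0, t1, h⟩ := D.tm_bound (j + 1) c hc
  refine hasDerivAt_tsum_of_isPreconnected (t := Ioo (y + c) (y + 1 - c)) (y₀ := z)
    ((summable_geometric_of_lt_one t0.le t1).mul_left C) isOpen_Ioo isPreconnected_Ioo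
    (fun k x _ => hasDerivAt_iteratedDeriv (D.tm_smooth y k) j x)
    (fun k x hx => h y hy k x ⟨hx.1.le, hx.2.le⟩) hz' (D.V_summable hy hz j) hz'

lemma V_bound (j : ℕ) (c : ℝ) (hc : 0 < c) :
    ∃ C, ∀ y ∈ D.L, ∀ z ∈ Mid c y, |D.V y j z| ≤ C := by
  obtain ⟨C, τ, -, t0, t1, h⟩ := D.tm_bound j c hc
  refine ⟨∑' k, C * τ ^ k, fun y hy z hz => ?_⟩
  exact tsum_of_norm_bounded (f := fun k => iteratedDeriv j (D.tm y k) z)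
    ((summable_geometric_of_lt_one t0.le t1).mul_left C).hasSum fun k => h y hy k z hz

lemma Dl_hasSum {y z z' : ℝ} (hy : y ∈ D.L) (hz : z ∈ Arc y) (hz' : z' ∈ Arc y) :
    HasSum (fun k => D.term y k z - D.term y k z') (D.Dl y z z') := by
  refine ((D.V_summable hy hz 0).hasSum.sub (D.V_summable hy hz' 0).hasSum).congr_fun fun k => ?_
  simp [tm]

lemma Dl_self (y z : ℝ) : D.Dl y z z = 0 := sub_self _
lemma Dl_add (y z z' z'' : ℝ) : D.Dl y z z' + D.Dl y z' z'' = D.Dl y z z'' := by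
  unfold Dl; ring

/-- Exponential convergence of the distortion of the itinerary maps, with a tail estimate that is
uniform in `y`. -/
lemma Dl_rate (c : ℝ) (hc : 0 < c) : ∃ C τ, 0 ≤ C ∧ 0 < τ ∧ τ < 1 ∧ ∀ y ∈ D.L, ∀ k,
    ∀ z ∈ Mid c y, ∀ z' ∈ Mid c y,
    |ld (D.g y k) z - ld (D.g y k) z' - D.Dl y z z'| ≤ C * τ ^ k := by
  obtain ⟨C, τ, C0, t0, t1, h⟩ := D.tm_bound 0 c hc
  refine ⟨2 * C * (1 - τ)⁻¹, τ, ?_, t0, t1, fun y hy k z hz z' hz' => ?_⟩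
  · positivity
  have hs := D.Dl_hasSum hy (z := z) (z' := z') ⟨by linarith [hz.1], by linarith [hz.2]⟩
    ⟨by linarith [hz'.1], by linarith [hz'.2]⟩
  have hb : ∀ l, ‖D.term y l z - D.term y l z'‖ ≤ (2 * C) * τ ^ l := by
    intro l
    have e1 := h y hy l z hz
    have e2 := h y hy l z' hz'
    rw [iteratedDeriv_zero] at e1 e2
    calc _ = |D.tm y l z - D.tm y l z'| := by simp [tm]
      _ ≤ |D.tm y l z| + |D.tm y l z'| := abs_sub _ _
      _ ≤ _ := by linarith
  have := norm_sub_le_of_geometric_bound_of_hasSum t1 hb hs k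
  rw [Finset.sum_sub_distrib, ← D.ld_g, ← D.ld_g] at this
  refine this.trans (le_of_eq ?_)
  ring

lemma g_succ_shift (y : ℝ) (k : ℕ) :
    D.g y (k + 1) = D.g (D.φ (D.s y) y) k * D.φ (D.s y) := by
  induction k with
  | zero => simp [g, gw]
  | succ k ih =>
    have h1 : D.g y (k + 1 + 1) = D.φ (D.s (D.g y (k+1) y)) * D.g y (k+1) := rfl
    have h2 : D.g (D.φ (D.s y) y) (k+1)
      = D.φ (D.s (D.g (D.φ (D.s y) y) k (D.φ (D.s y) y))) * D.g (D.φ (D.s y) y) k := rfl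
    rw [h1, h2, ih, mul_assoc]
    rfl

lemma term_succ (y : ℝ) (k : ℕ) (z : ℝ) :
    D.term y (k + 1) z = D.term (D.φ (D.s y) y) k (D.φ (D.s y) z) := by
  simp only [term, let_, comp_apply]
  rw [g_succ_shift]; rfl

lemma g_tr {y : ℝ} (hy : y ∈ D.L) (m : ℤ) (k : ℕ) : D.g (y + m) k = D.g y k := by
  induction k with
  | zero => rfl
  | succ k ih =>
    have h1 : D.g (y + m) (k + 1) = D.φ (D.s (D.g (y+m) k (y+m))) * D.g (y+m) k := rfl
    rw [h1, ih, (D.good_g y k).per_int, D.s_per _ (D.gL hy k)]; rfl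

lemma Dl_letter {y z z' : ℝ} (hy : y ∈ D.L) (hz : z ∈ Arc y) (hz' : z' ∈ Arc y) :
    D.Dl (D.φ (D.s y) y) (D.φ (D.s y) z) (D.φ (D.s y) z') + ld (D.φ (D.s y)) z
      - ld (D.φ (D.s y)) z' = D.Dl y z z' := by
  have h := D.good_φ (D.s y)
  have im : ∀ w ∈ Ioo y (y+1), D.φ (D.s y) w ∈ Ioo (D.φ (D.s y) y) (D.φ (D.s y) y + 1) := by
    intro w hw
    exact ⟨h.mono hw.1, by rw [← h.per]; exact h.mono hw.2⟩
  have h3 := (hasSum_nat_add_iff' 1).2 (D.Dl_hasSum hy hz hz')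
  simp only [term_succ] at h3
  rw [(D.Dl_hasSum (D.Linv (D.s y) y hy) (im z hz) (im z' hz')).unique h3]
  simp [term, let_, g, gw]
  ring

/-- Equivariance of the limit distortion. -/
lemma Dl_equiv : ∀ F ∈ D.G, ∀ y ∈ D.L, ∀ z ∈ Arc y, ∀ z' ∈ Arc y,
    D.Dl (F y) (F z) (F z') + ld F z - ld F z' = D.Dl y z z' := by
  refine D.G_ind ?_ ?_ ?_ ?_
  · intro y hy z hz z' hz'
    rw [ld_one, ld_one]; simp
  · intro t y hy z hz z' hz'
    by_cases ht : t = D.s y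
    · subst ht; exact D.Dl_letter hy hz hz'
    have h := D.good_φ t
    have im : ∀ w ∈ Ioo y (y+1), D.φ t w ∈ Ioo (D.φ t y) (D.φ t y + 1) := by
      intro w hw
      exact ⟨h.mono hw.1, by rw [← h.per]; exact h.mono hw.2⟩
    have := D.Dl_letter (D.Linv t y hy) (im z hz) (im z' hz')
    rw [D.scode y hy t ht, D.inv_φ] at this
    rw [← this, D.ld_inv (D.φG t), D.ld_inv (D.φG t)]
    simp only [Equiv.Perm.coe_inv, Equiv.symm_apply_apply]
    ring
  · intro m y hy z hz z' hz'
    rw [ld_tr, ld_tr]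
    have h2 := D.Dl_hasSum (D.Lper y hy m) (z := z + m) (z' := z' + m)
      ⟨by linarith [hz.1], by linarith [hz.2]⟩ ⟨by linarith [hz'.1], by linarith [hz'.2]⟩
    have : ∀ k w, D.term (y + m) k (w + m) = D.term y k w := by
      intro k w
      simp only [term, let_, comp_apply]
      rw [D.g_tr hy, (D.good_g y k).per_int, (D.good_g y k).per_int, D.s_per _ (D.gL hy k),
        (D.good_φ _).ld_per]
    simp only [this] at h2
    simp only [tr_apply]
    rw [h2.unique (D.Dl_hasSum hy hz hz')]; ring
  · intro F hF H hH h h' y hy z hz z' hz'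
    have im : ∀ w ∈ Ioo y (y+1), H w ∈ Ioo (H y) (H y + 1) := by
      intro w hw
      have := D.good H hH
      exact ⟨this.mono hw.1, by rw [← this.per]; exact this.mono hw.2⟩
    have e1 := h (H y) (D.LG H hH y hy) (H z) (im z hz) (H z') (im z' hz')
    rw [D.ld_mul hF hH, D.ld_mul hF hH, ← (h' y hy z hz z' hz'), ← e1]
    simp only [Equiv.Perm.mul_apply]
    ring

lemma lip : ∃ Λ, 1 < Λ ∧ ∀ t x x', |D.φ t x - D.φ t x'| ≤ Λ * |x - x'| := by
  have h : ∀ t, ∃ B, ∀ x, |deriv (D.φ t) x| ≤ B := fun t =>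
    periodic_bounded (D.good_φ t).deriv_smooth.continuous (D.good_φ t).deriv_per
  choose B hB using h
  have : Fintype S := Fintype.ofFinite S
  refine ⟨2 + ∑ t, |B t|, ?_, fun t x x' => ?_⟩
  · have : 0 ≤ ∑ t, |B t| := Finset.sum_nonneg fun _ _ => abs_nonneg _
    linarith
  have hb : ∀ w ∈ (univ : Set ℝ), ‖deriv (D.φ t) w‖ ≤ 2 + ∑ t, |B t| := by
    intro w _
    have := Finset.single_le_sum (f := fun t => |B t|) (fun _ _ => abs_nonneg _) (Finset.mem_univ t)
    have := hB t w
    have := le_abs_self (B t)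
    rw [norm_eq_abs]
    linarith
  exact convex_univ.norm_image_sub_le_of_norm_deriv_le (fun w _ => (D.good_φ t).diff w) hb
    (mem_univ x') (mem_univ x)

lemma g_lip {Λ : ℝ} (h1 : 1 < Λ) (h : ∀ t x x', |D.φ t x - D.φ t x'| ≤ Λ * |x - x'|)
    (y : ℝ) (k : ℕ) (x x' : ℝ) : |D.g y k x - D.g y k x'| ≤ Λ ^ k * |x - x'| := by
  induction k with
  | zero => simp [g, gw]
  | succ k ih =>
    calc _ ≤ Λ * |D.g y k x - D.g y k x'| := h _ _ _
      _ ≤ Λ * (Λ ^ k * |x - x'|) := by gcongr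
      _ = _ := by ring

/-- Nearby points of `L` share a long initial itinerary. -/
lemma same_g (K : ℕ) : ∃ r > 0, ∀ y ∈ D.L, ∀ y' ∈ D.L, |y - y'| < r → ∀ k ≤ K,
    D.g y k = D.g y' k := by
  obtain ⟨r, hr, hs⟩ := D.sloc
  obtain ⟨Λ, h1, hΛ⟩ := D.lip
  refine ⟨r / Λ ^ K, by positivity, fun y hy y' hy' hd k => ?_⟩
  induction k with
  | zero => intro _; rfl
  | succ k ih =>
    intro hk
    have e := ih (by omega)
    have e2 : D.s (D.g y k y) = D.s (D.g y' k y') := by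
      refine hs _ (D.gL hy k) _ (D.gL hy' k) ?_
      rw [← e]
      refine (D.g_lip h1 hΛ y k y y').trans_lt ?_
      have : Λ ^ k ≤ Λ ^ K := pow_le_pow_right₀ h1.le (by omega)
      calc _ ≤ Λ ^ K * |y - y'| := by gcongr
        _ < Λ ^ K * (r / Λ ^ K) := by gcongr
        _ = r := by field_simp
    have h3 : D.g y (k + 1) = D.φ (D.s (D.g y k y)) * D.g y k := rfl
    have h4 : D.g y' (k + 1) = D.φ (D.s (D.g y' k y')) * D.g y' k := rfl
    rw [h3, h4, e2, e]

/-- Continuity of the limit distortion in the base point. -/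
lemma Dl_cont (c ε : ℝ) (hc : 0 < c) (hε : 0 < ε) : ∃ r > 0, ∀ y ∈ D.L, ∀ y' ∈ D.L, |y - y'| < r →
    ∀ z ∈ Mid c y, ∀ z' ∈ Mid c y,
    z ∈ Mid c y' → z' ∈ Mid c y' →
    |D.Dl y z z' - D.Dl y' z z'| < ε := by
  obtain ⟨C, τ, C0, t0, t1, h⟩ := D.Dl_rate c hc
  obtain ⟨K, hK⟩ := (((tendsto_pow_atTop_nhds_zero_of_lt_one t0.le t1).const_mul C).eventually
    (gt_mem_nhds (show C * 0 < ε / 2 by simpa using hε))).exists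
  obtain ⟨r, hr, hs⟩ := D.same_g K
  refine ⟨r, hr, fun y hy y' hy' hd z hz z' hz' w w' => ?_⟩
  have e1 := h y hy K z hz z' hz'
  have e2 := h y' hy' K z w z' w'
  rw [← hs y hy y' hy' hd K le_rfl] at e2
  rw [abs_lt]
  rw [abs_le] at e1 e2
  constructor <;> linarith

end Dyn

/-! ### The marked hyperbolic element and the spectral condition -/

@[simp] lemma pinv (F : Perm ℝ) (x : ℝ) : F⁻¹ (F x) = x := F.symm_apply_apply x
@[simp] lemma pinv' (F : Perm ℝ) (x : ℝ) : F (F⁻¹ x) = x := F.apply_symm_apply x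

namespace Dyn
variable {S : Type} (D : Dyn S)

lemma ioo_map {F : Perm ℝ} (hF : F ∈ D.G) {y z : ℝ} (hz : z ∈ Arc y) :
    F z ∈ Ioo (F y) (F y + 1) := by
  have := D.good F hF
  exact ⟨this.mono hz.1, by rw [← this.per]; exact this.mono hz.2⟩

/-- The same dynamics with the roles of the attracting and repelling fixed points exchanged. -/
def swap : Dyn S :=
  { D with
    ap := D.an + 1, an := D.ap, a := D.inv D.a, m := -D.m
    apL := by simpa using D.Lper _ D.anL 1
    anL := D.apL
    an_lt := D.ap_lt
    ap_lt := by linarith [D.an_lt]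
    s_ap := by simpa [D.s_an] using D.s_per _ D.anL 1
    s_an := by rw [D.s_ap, D.inv_inv]
    φ_ap := by rw [D.per, D.φ_an]; push_cast; ring
    φ_an := by rw [D.inv_inv, D.φ_ap]; push_cast; ring
    dense_ap := fun y hy ε hε => by
      obtain ⟨F, hF, h⟩ := D.dense_an y hy ε hε
      exact ⟨F * tr (-1), mul_mem hF (D.trG _), by simpa using h⟩
    dense_an := D.dense_ap
    μ_ap := fun k h => D.μ_an k (by rw [(D.good _ D.μG).per] at h; linarith)
    μ_ap_an := fun k h => D.μ_an_ap (k - 1) (by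
      rw [(D.good _ D.μG).per] at h; push_cast; linarith)
    μ_an := D.μ_ap
    μ_an_ap := fun k h => D.μ_ap_an (k + 1) (by rw [h]; push_cast; ring) }

/-- The marked hyperbolic lift, with attracting fixed point `ap` and repelling fixed point `an`. -/
def α : Perm ℝ := tr D.m * D.φ (D.inv D.a)

lemma αG : D.α ∈ D.G := mul_mem (D.trG _) (D.φG _)
lemma αkG (k : ℕ) : D.α ^ k ∈ D.G := pow_mem D.αG k
lemma α_an : D.α D.an = D.an := by simp [α, D.φ_an]
lemma α_ap : D.α D.ap = D.ap := by
  have h2 : D.φ (D.inv D.a) (D.φ D.a D.ap) = D.ap := by rw [D.inv_φ]; simp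
  rw [D.φ_ap, (D.good_φ _).per_int] at h2
  simp [α, h2]

lemma swap_α : D.swap.α = D.α⁻¹ := by
  rw [eq_inv_iff_mul_eq_one]
  ext x
  have : ∀ x, D.swap.α x = D.φ D.a x - D.m := fun x => by
    simp [α, swap, D.inv_inv, sub_eq_add_neg]
  rw [Equiv.Perm.mul_apply, this]
  simp only [α, Equiv.Perm.mul_apply, tr_apply, (D.good_φ _).per_int, D.inv_φ]
  simp

lemma αk_ap (k : ℕ) : (D.α ^ k) D.ap = D.ap := by
  induction k with
  | zero => rfl
  | succ k ih => rw [pow_succ, Equiv.Perm.mul_apply, D.α_ap, ih]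
lemma αk_an (k : ℕ) : (D.α ^ k) D.an = D.an := by
  induction k with
  | zero => rfl
  | succ k ih => rw [pow_succ, Equiv.Perm.mul_apply, D.α_an, ih]

lemma g_an (k : ℕ) (x : ℝ) : D.g D.an k x = (D.α ^ k) x - (k * D.m : ℤ) := by
  induction k generalizing x with
  | zero => simp [g, gw]
  | succ k ih =>
    have h1 : D.g D.an (k + 1) x = D.φ (D.s (D.g D.an k D.an)) (D.g D.an k x) := rfl
    have h2 : D.s (D.g D.an k D.an) = D.inv D.a := by
      rw [ih, D.αk_an, ← D.s_an, sub_eq_add_neg]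
      have := D.s_per D.an D.anL (-(k * D.m))
      push_cast at this ⊢; exact this
    rw [h1, h2, ih, pow_succ', Equiv.Perm.mul_apply]
    have h3 := (D.good_φ (D.inv D.a)).per_int ((D.α ^ k) x) (-(k * D.m))
    simp only [α, Equiv.Perm.mul_apply, tr_apply] at h3 ⊢
    push_cast at h3 ⊢
    rw [sub_eq_add_neg, h3]; ring

lemma deriv_g_an (k : ℕ) (x : ℝ) : deriv (D.g D.an k) x = deriv (D.α ^ k : Perm ℝ) x := by
  rw [funext (D.g_an k), deriv_sub_const]

lemma ld_αk_ap (k : ℕ) : ld (D.α ^ k : Perm ℝ) D.ap = k * ld D.α D.ap := by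
  induction k with
  | zero => simpa using ld_one D.ap
  | succ k ih =>
    rw [pow_succ, D.ld_mul (D.αkG k) D.αG, D.α_ap, ih]; push_cast; ring

lemma g_contr (c : ℝ) (hc : 0 < c) : ∃ C, 0 < C ∧ ∀ y ∈ D.L, ∀ k, ∀ z ∈ Mid c y,
    ∀ z' ∈ Mid c y, |D.g y k z - D.g y k z'| ≤ C * D.θ ^ k * |z - z'| := by
  obtain ⟨C, h⟩ := D.contr c hc
  refine ⟨max 1 C, by positivity, fun y hy k z hz z' hz' => ?_⟩
  refine (convex_Icc _ _).norm_image_sub_le_of_norm_deriv_le (fun w _ => (D.good_g y k).diff w)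
    (fun w hw => ?_) hz' hz
  rw [norm_eq_abs, abs_of_pos ((D.good_g y k).dpos w)]
  refine (h y hy k w hw).trans ?_
  have := pow_nonneg D.θ0.le k
  gcongr
  exact le_max_right _ _

lemma ap_mem : D.ap ∈ Arc D.an := ⟨D.an_lt, D.ap_lt⟩

/-- The multiplier of `α` at its attracting fixed point. -/
def lam : ℝ := deriv D.α D.ap

lemma lam_pos : 0 < D.lam := (D.good _ D.αG).dpos _
lemma ld_α_ap : ld D.α D.ap = log D.lam := rfl

lemma lam_lt : D.lam < 1 := by
  obtain ⟨c, hc, hc2, hz⟩ := exists_c D.ap_mem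
  obtain ⟨C, h⟩ := D.contr c hc
  by_contra! hl
  have hk : ∀ k : ℕ, 1 ≤ C * D.θ ^ k := by
    intro k
    refine le_trans ?_ (h D.an D.anL k D.ap ⟨hz.1.le, hz.2.le⟩)
    rw [D.deriv_g_an, ← ((D.good _ (D.αkG k)).exp_ld D.ap), D.ld_αk_ap k]
    exact one_le_exp (mul_nonneg (Nat.cast_nonneg k) (log_nonneg hl))
  have := ge_of_tendsto' ((tendsto_pow_atTop_nhds_zero_of_lt_one D.θ0.le D.θ1).const_mul C) hk
  simp at this
  linarith

lemma not_int {x : ℝ} (h0 : 0 < x) (h1 : x < 1) (k : ℤ) : x ≠ k := by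
  intro h
  rw [h] at h0 h1
  have a1 : 0 < k := by exact_mod_cast h0
  have a2 : k < 1 := by exact_mod_cast h1
  omega

lemma ld_α_an : ld D.α D.an = - log D.lam := by
  have := D.spectral D.α D.αG D.ap D.an D.α_ap D.α_an (fun k h => not_int
    (sub_pos.2 D.an_lt) (by linarith [D.ap_lt]) k (by linarith)) D.lam_lt
  unfold ld
  rw [show deriv D.α D.an = D.lam⁻¹ from eq_inv_of_mul_eq_one_right this, log_inv]

lemma swap_lam : log D.swap.lam = log D.lam := by
  have h : log D.swap.lam = ld (D.α⁻¹ : Perm ℝ) (D.an + 1) := by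
    rw [← D.swap_α]; rfl
  have h2 := (D.good _ (inv_mem D.αG)).ld_per D.an 1
  rw [h, show D.an + 1 = D.an + ((1:ℤ):ℝ) by simp, h2, D.ld_inv' D.αG]
  have : D.α⁻¹ D.an = D.an := by rw [Equiv.Perm.inv_eq_iff_eq, D.α_an]
  rw [this, D.ld_α_an]; ring

variable [Finite S]

lemma Dl_continuousAt {y z : ℝ} (z' : ℝ) (hy : y ∈ D.L) (hz : z ∈ Arc y) :
    ContinuousAt (fun z => D.Dl y z z') z :=
  ((D.V_hasDeriv hy hz 0).continuousAt).sub continuousAt_const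

/-- If `p k` stays in a compact part of `(an, an+1)` then `α^k (p k) → ap`. -/
lemma αk_tendsto {c : ℝ} (hc : 0 < c) {p : ℕ → ℝ} (hp : ∀ᶠ k in atTop, p k ∈ Mid c D.an) :
    Tendsto (fun k => (D.α ^ k) (p k)) atTop (𝓝 D.ap) := by
  obtain ⟨c1, hc1, hc2, hz⟩ := exists_c D.ap_mem
  obtain ⟨C, C0, h⟩ := D.g_contr (min c c1) (lt_min hc hc1)
  have ht := (tendsto_pow_atTop_nhds_zero_of_lt_one D.θ0.le D.θ1).const_mul C
  rw [tendsto_iff_dist_tendsto_zero]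
  refine squeeze_zero' (Eventually.of_forall fun k => dist_nonneg) ?_ (by simpa using ht)
  filter_upwards [hp] with k hk
  have m1 := min_le_left c c1
  have m2 := min_le_right c c1
  have := h D.an D.anL k (p k) ⟨by linarith [hk.1], by linarith [hk.2]⟩ D.ap
    ⟨by linarith [hz.1], by linarith [hz.2]⟩
  rw [D.g_an, D.g_an, D.αk_ap] at this
  rw [dist_eq]
  have e : (D.α ^ k) (p k) - (k * D.m : ℤ) - (D.ap - (k * D.m : ℤ)) = (D.α ^ k) (p k) - D.ap := by ring
  rw [e] at this
  refine this.trans ?_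
  have hh : |p k - D.ap| ≤ 1 := by
    rw [abs_le]; constructor <;> linarith [hk.1, hk.2, D.an_lt, D.ap_lt]
  have := pow_nonneg D.θ0.le k
  calc _ ≤ C * D.θ ^ k * 1 := by gcongr
    _ = _ := by ring

lemma ld_αk_tendsto {c w : ℝ} (hc : 0 < c) {p : ℕ → ℝ} (hw : w ∈ Arc D.an)
    (hp : ∀ᶠ k in atTop, p k ∈ Mid c D.an) (hpw : Tendsto p atTop (𝓝 w)) :
    Tendsto (fun k => ld (D.α ^ k : Perm ℝ) (p k) - k * log D.lam) atTop
      (𝓝 (D.Dl D.an w D.ap)) := by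
  obtain ⟨c1, hc1, hc2, hz⟩ := exists_c D.ap_mem
  obtain ⟨C, τ, C0, t0, t1, h⟩ := D.Dl_rate (min c c1) (lt_min hc hc1)
  have m1 := min_le_left c c1
  have m2 := min_le_right c c1
  have ht := (tendsto_pow_atTop_nhds_zero_of_lt_one t0.le t1).const_mul C
  have e : Tendsto (fun k => (ld (D.α ^ k : Perm ℝ) (p k) - k * log D.lam)
      - D.Dl D.an (p k) D.ap) atTop (𝓝 0) := by
    refine squeeze_zero_norm' ?_ (by simpa using ht)
    filter_upwards [hp] with k hk
    have := h D.an D.anL k (p k) ⟨by linarith [hk.1], by linarith [hk.2]⟩ D.ap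
      ⟨by linarith [hz.1], by linarith [hz.2]⟩
    have e1 : ∀ x, ld (D.g D.an k) x = ld (D.α ^ k : Perm ℝ) x := fun x => by
      unfold ld; rw [D.deriv_g_an]
    rw [e1, e1, D.ld_αk_ap] at this
    exact this
  simpa using e.add ((D.Dl_continuousAt D.ap D.anL hw).tendsto.comp hpw)

/-- For large `k`, `δ α^k` has an attracting fixed point near `δ ap`, whose multiplier is known. -/
lemma fix_seq {δ : Perm ℝ} (hδ : δ ∈ D.G) (h : δ D.ap ∈ Arc D.an) :
    ∃ p : ℕ → ℝ, Tendsto p atTop (𝓝 (δ D.ap)) ∧ (∀ᶠ k in atTop, (δ * D.α ^ k) (p k) = p k) ∧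
    Tendsto (fun k => ld (δ * D.α ^ k : Perm ℝ) (p k) - k * log D.lam) atTop
      (𝓝 (ld δ D.ap + D.Dl D.an (δ D.ap) D.ap)) := by
  obtain ⟨c, hc, hc2, hw⟩ := exists_c h
  set w := δ D.ap with hwdef
  obtain ⟨c1, hc1, hc2, hz⟩ := exists_c D.ap_mem
  set J := Mid c D.an with hJ
  have gδ := D.good δ hδ
  have key : ∀ᶠ k : ℕ in atTop, ∃ p ∈ J, (δ * D.α ^ k) p = p := by
    have n1 := D.αk_tendsto hc (p := fun _ => D.an + c)
      (Eventually.of_forall fun k => ⟨le_rfl, by linarith⟩)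
    have n2 := D.αk_tendsto hc (p := fun _ => D.an + 1 - c)
      (Eventually.of_forall fun k => ⟨by linarith, le_rfl⟩)
    have o1 := (gδ.cont.continuousAt.tendsto.comp n1).eventually (Ioi_mem_nhds (hwdef ▸ hw.1))
    have o2 := (gδ.cont.continuousAt.tendsto.comp n2).eventually (Iio_mem_nhds (hwdef ▸ hw.2))
    filter_upwards [o1, o2] with k h1 h2
    have gk := (D.good _ (D.αkG k))
    have mono : StrictMono (δ * D.α ^ k : Perm ℝ) := gδ.mono.comp gk.mono
    have maps : MapsTo (δ * D.α ^ k : Perm ℝ) J J := fun z hz =>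
      ⟨(le_of_lt h1).trans (mono.monotone hz.1), (mono.monotone hz.2).trans (le_of_lt h2)⟩
    obtain ⟨p, hp, hf⟩ := exists_mem_Icc_isFixedPt_of_mapsTo
      (gδ.cont.comp gk.cont).continuousOn (by linarith) maps
    exact ⟨p, hp, hf⟩
  obtain ⟨p, hp⟩ := key.choice
  have hpJ : ∀ᶠ k in atTop, p k ∈ J := hp.mono fun k h => h.1
  have hpf : ∀ᶠ k in atTop, (δ * D.α ^ k) (p k) = p k := hp.mono fun k h => h.2
  have lim1 := D.αk_tendsto hc hpJ
  have limp : Tendsto p atTop (𝓝 w) :=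
    (gδ.cont.continuousAt.tendsto.comp lim1).congr' (hpf.mono fun k h => h)
  refine ⟨p, limp, hpf, ?_⟩
  refine (((gδ.ld_smooth.continuous.continuousAt.tendsto.comp lim1)).add (D.ld_αk_tendsto hc h hpJ limp)).congr fun k => ?_
  rw [D.ld_mul hδ (D.αkG k)]
  simp only [comp_apply]; ring

/-- The spectral condition applied to `δ α^k` as `k → ∞`. -/
lemma dagger {δ : Perm ℝ} (hδ : δ ∈ D.G) (h : δ D.ap ∈ Arc D.an) :
    ld δ D.ap + D.Dl D.an (δ D.ap) D.ap
      = ld (δ⁻¹ : Perm ℝ) (D.an + 1) + D.Dl D.ap (δ⁻¹ (D.an + 1)) (D.an + 1) := by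
  obtain ⟨p, hp, hpf, hpl⟩ := D.fix_seq hδ h
  have gδ := D.good δ hδ
  have hd' : δ⁻¹ D.swap.ap ∈ Arc D.swap.an := by
    change δ⁻¹ (D.an + 1) ∈ Arc D.ap
    constructor <;> rw [← gδ.mono.lt_iff_lt] <;> simp [gδ.per, h.2, h.1]
  obtain ⟨q, hq, hqf, hql⟩ := D.swap.fix_seq (inv_mem hδ) hd'
  have e1 : D.swap.ap = D.an + 1 := rfl
  have e2 : D.swap.an = D.ap := rfl
  have e3 : ∀ k, D.swap.α ^ k = (D.α ^ k)⁻¹ := fun k => by rw [swap_α, inv_pow]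
  have e4 : ∀ y z z', D.swap.Dl y z z' = D.Dl y z z' := fun _ _ _ => rfl
  simp only [e1, e2, e3, e4, D.swap_lam] at hq hqf hql
  have hn : Tendsto (fun k => δ (q k)) atTop (𝓝 (D.an + 1)) := by
    have := gδ.cont.continuousAt.tendsto.comp hq
    rw [pinv'] at this
    exact this
  set ε := min (δ D.ap - D.an) (D.an + 1 - δ D.ap) / 2
  have ε0 : 0 < ε := by
    have := lt_min (sub_pos.2 h.1) (sub_pos.2 h.2); simp only [ε]; linarith
  have ε1 : 2 * ε ≤ δ D.ap - D.an := by
    have := min_le_left (δ D.ap - D.an) (D.an + 1 - δ D.ap); simp only [ε]; linarith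
  have ε2 : 2 * ε ≤ D.an + 1 - δ D.ap := by
    have := min_le_right (δ D.ap - D.an) (D.an + 1 - δ D.ap); simp only [ε]; linarith
  have hneg : Tendsto (fun k : ℕ => ld (δ * D.α ^ k : Perm ℝ) (p k)) atTop atBot := by
    have hl : Tendsto (fun k : ℕ => (k:ℝ) * log D.lam) atTop atBot :=
      tendsto_natCast_atTop_atTop.atTop_mul_const_of_neg (log_neg D.lam_pos D.lam_lt)
    simpa using hpl.add_atBot hl
  have heq : ∀ᶠ k : ℕ in atTop, ld (δ * D.α ^ k : Perm ℝ) (p k)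
      = ld (δ⁻¹ * (D.α ^ k)⁻¹ : Perm ℝ) (q k) := by
    filter_upwards [hpf, hqf, hneg.eventually (eventually_lt_atBot 0),
      hp.eventually (Metric.ball_mem_nhds _ ε0), hn.eventually (Metric.ball_mem_nhds _ ε0)]
      with k h1 h2 h3 h4 h5
    set F := δ * D.α ^ k with hF
    have FG : F ∈ D.G := mul_mem hδ (D.αkG k)
    have hFn : F (δ (q k)) = δ (q k) := by
      have h2' : (D.α ^ k) (δ (q k)) = q k := by
        rw [Equiv.Perm.mul_apply, Equiv.Perm.inv_eq_iff_eq, Equiv.Perm.inv_eq_iff_eq] at h2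
        exact h2.symm
      rw [hF, Equiv.Perm.mul_apply, h2']
    have h4' := abs_lt.1 (dist_eq _ _ ▸ Metric.mem_ball.1 h4)
    have h5' := abs_lt.1 (dist_eq _ _ ▸ Metric.mem_ball.1 h5)
    have hdF : deriv F (p k) < 1 := by
      rw [← (D.good F FG).exp_ld]; rw [← exp_zero]; exact exp_lt_exp.2 h3
    have sp := D.spectral F FG (p k) (δ (q k)) h1 hFn (fun j hj => not_int (x := p k - δ (q k) + 1)
      (by linarith [h4'.1, h5'.2]) (by linarith [h4'.2, h5'.1]) (j + 1) (by push_cast; linarith)) hdF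
    have sp2 : ld F (p k) + ld F (δ (q k)) = 0 := by
      unfold ld
      rw [← log_mul ((D.good F FG).dpos _).ne' ((D.good F FG).dpos _).ne', sp, log_one]
    have conj : δ⁻¹ * (D.α ^ k)⁻¹ = δ⁻¹ * F⁻¹ * δ := by rw [hF]; group
    have hFi : F⁻¹ (δ (q k)) = δ (q k) := by rw [Equiv.Perm.inv_eq_iff_eq, hFn]
    rw [conj, D.ld_mul (mul_mem (inv_mem hδ) (inv_mem FG)) hδ, D.ld_mul (inv_mem hδ) (inv_mem FG),
      hFi, D.ld_inv hδ, D.ld_inv' FG, hFi]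
    linarith
  refine tendsto_nhds_unique (hpl.congr' ?_) hql
  filter_upwards [heq] with k hk
  rw [hk]

end Dyn

/-! ### The invariant potential on pairs with one point in the limit set -/

namespace Dyn
variable {S : Type} (D : Dyn S)

lemma exists_nbr {y : ℝ} (hy : y ∈ D.L) {ε : ℝ} (hε : 0 < ε) :
    ∃ y' ∈ D.L, y' ∈ Arc y ∧ (y' < y + ε ∨ y + 1 - ε < y') := by
  obtain ⟨y', h1, h2, h3⟩ := D.perfect y hy (min ε (1/2)) (by positivity)
  have h3' := abs_lt.1 h3
  have m1 := min_le_left ε (1/2)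
  have m2 := min_le_right ε (1/2)
  rcases lt_or_gt_of_ne h2 with h | h
  · refine ⟨y' + 1, by simpa using D.Lper y' h1 1, ⟨by linarith, by linarith⟩, Or.inr (by linarith)⟩
  · exact ⟨y', h1, ⟨h, by linarith⟩, Or.inl (by linarith)⟩

lemma arc_nhds {y z : ℝ} (h : z ∈ Arc y) : ∀ᶠ y' in 𝓝 y, z ∈ Arc y' := by
  filter_upwards [Ioo_mem_nhds (show z - 1 < y by linarith [h.2]) h.1] with y' h
  exact ⟨h.2, by linarith [h.1]⟩

lemma arc_flip {y z : ℝ} (h : z ∈ Arc y) : y ∈ Ioo (z - 1) (z - 1 + 1) :=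
  ⟨by linarith [h.2], by linarith [h.1]⟩

lemma Lm {y : ℝ} (hy : y ∈ D.L) : y - 1 ∈ D.L := by
  simpa [sub_eq_add_neg] using D.Lper y hy (-1)

lemma exists_μ {y : ℝ} (hy : y ∈ D.L) : ∃ μ ∈ D.G, μ D.ap ∈ Arc y := by
  obtain ⟨y', h1, h2, -⟩ := D.exists_nbr hy one_pos
  obtain ⟨F, hF, h⟩ := D.dense_ap y' h1 (min (y' - y) (y + 1 - y'))
    (lt_min (sub_pos.2 h2.1) (sub_pos.2 h2.2))
  have h' := abs_lt.1 h
  have m1 := min_le_left (y' - y) (y + 1 - y')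
  have m2 := min_le_right (y' - y) (y + 1 - y')
  exact ⟨F, hF, by linarith, by linarith⟩

lemma freq {a : ℝ} (ha : a ∈ D.L) (d : ∀ y ∈ D.L, ∀ ε > 0, ∃ F ∈ D.G, |F a - y| < ε) {y : ℝ}
    (hy : y ∈ D.L) : ∃ᶠ y' in 𝓝[D.L] y, ∃ ν ∈ D.G, y' = ν a := by
  rw [frequently_iff]
  intro U hU
  obtain ⟨ε, hε, h⟩ := Metric.mem_nhdsWithin_iff.1 hU
  obtain ⟨F, hF, h2⟩ := d y hy ε hε
  exact ⟨F a, h ⟨by rwa [Metric.mem_ball, dist_eq], D.LG F hF _ ha⟩, F, hF, rfl⟩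

lemma freq_an {y : ℝ} (hy : y ∈ D.L) : ∃ᶠ y' in 𝓝[D.L] y, ∃ ν ∈ D.G, y' = ν D.an :=
  D.freq D.anL D.dense_an hy

lemma freq_ap {y : ℝ} (hy : y ∈ D.L) : ∃ᶠ y' in 𝓝[D.L] y, ∃ ν ∈ D.G, y' = ν D.ap :=
  D.freq D.apL D.dense_ap hy

/-- The normalizing constant of the potential based at `μ ap`. -/
def cc (μ : Perm ℝ) (y : ℝ) : ℝ :=
  D.Dl D.ap (μ⁻¹ (y + 1)) (D.an + 1) + ld (μ⁻¹ : Perm ℝ) y - ld μ D.ap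

/-- The potential based at `μ ap`. -/
def uu (μ : Perm ℝ) (x y : ℝ) : ℝ := D.Dl y x (μ D.ap) + D.cc μ y

/-- Pairs `(x, y)` with `y ∈ L` and `y < x < y + 1`. -/
def W : Set (ℝ × ℝ) := {p | p.2 ∈ D.L ∧ p.1 ∈ Ioo p.2 (p.2 + 1)}

lemma inv_mem_Ioo {μ : Perm ℝ} (hμ : μ ∈ D.G) {y z : ℝ} (h : μ z ∈ Arc y) :
    μ⁻¹ (y + 1) ∈ Arc z := by
  have g := D.good μ hμ
  constructor <;> rw [← g.mono.lt_iff_lt] <;> simp [g.per, h.2, h.1]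

lemma inv_mem_Ioo' {μ : Perm ℝ} (hμ : μ ∈ D.G) {y z : ℝ} (h : μ z ∈ Arc y) :
    μ⁻¹ y ∈ Ioo (z - 1) (z - 1 + 1) := by
  have := D.inv_mem_Ioo hμ h
  rw [(D.good _ (inv_mem hμ)).per] at this
  exact ⟨by linarith [this.1], by linarith [this.2]⟩

variable [Finite S]

lemma Dl_contW {y z z' : ℝ} (hy : y ∈ D.L) (hz : z ∈ Arc y) (hz' : z' ∈ Arc y) :
    ContinuousWithinAt (fun p : ℝ × ℝ => D.Dl p.2 p.1 z') D.W (z, y) := by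
  obtain ⟨c, hc, -, h1⟩ := exists_c hz
  obtain ⟨c', hc', -, h2⟩ := exists_c hz'
  set d := min c c' / 2 with hd
  have m1 := min_le_left c c'
  have m2 := min_le_right c c'
  have d0 : 0 < d := by positivity
  rw [Metric.continuousWithinAt_iff]
  intro ε hε
  obtain ⟨r, hr, H⟩ := D.Dl_cont d (ε / 2) d0 (by positivity)
  have hc0 := Metric.continuousAt_iff.1 (D.Dl_continuousAt z' hy hz) (ε / 2) (by positivity)
  obtain ⟨r', hr', H'⟩ := hc0
  refine ⟨min (min r r') (d / 2), by positivity, ?_⟩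
  rintro ⟨w, y'⟩ ⟨hy', hw⟩ hdist
  simp only at hy' hw ⊢
  rw [Prod.dist_eq, max_lt_iff] at hdist
  obtain ⟨n1, n2⟩ := hdist
  simp only [dist_eq] at n1 n2
  have k1 := min_le_left (min r r') (d / 2)
  have k2 := min_le_right (min r r') (d / 2)
  have k3 := min_le_left r r'
  have k4 := min_le_right r r'
  have a1 := abs_lt.1 (lt_of_lt_of_le n1 k2)
  have a2 := abs_lt.1 (lt_of_lt_of_le n2 k2)
  have e1 := H y' hy' y hy (by linarith) w ⟨by linarith [h1.1], by linarith [h1.2]⟩ z'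
    ⟨by linarith [h2.1], by linarith [h2.2]⟩ ⟨by linarith [h1.1], by linarith [h1.2]⟩
    ⟨by linarith [h2.1], by linarith [h2.2]⟩
  have e2 := H' (x := w) (by rw [dist_eq]; linarith)
  rw [dist_eq] at e2 ⊢
  have := abs_add_le (D.Dl y' w z' - D.Dl y w z') (D.Dl y w z' - D.Dl y z z')
  have e : D.Dl y' w z' - D.Dl y w z' + (D.Dl y w z' - D.Dl y z z')
    = D.Dl y' w z' - D.Dl y z z' := by ring
  rw [e] at this
  linarith

lemma cc_cont {μ : Perm ℝ} (hμ : μ ∈ D.G) {y : ℝ} (h : μ D.ap ∈ Arc y) :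
    ContinuousAt (D.cc μ) y := by
  have g' := D.good _ (inv_mem hμ)
  unfold cc
  have h1 : ContinuousAt (fun y => μ⁻¹ (y + 1)) y :=
    (g'.cont.comp (continuous_id.add continuous_const)).continuousAt
  have h2 := D.Dl_continuousAt (D.an + 1) D.apL (D.inv_mem_Ioo hμ h)
  have h3 : ContinuousAt (fun y => D.Dl D.ap (μ⁻¹ (y + 1)) (D.an + 1)) y :=
    ContinuousAt.comp (g := fun z => D.Dl D.ap z (D.an + 1)) h2 h1
  exact (h3.add g'.ld_smooth.continuous.continuousAt).sub continuousAt_const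

lemma uu_cont {μ : Perm ℝ} (hμ : μ ∈ D.G) {x y : ℝ} (hy : y ∈ D.L) (hx : x ∈ Arc y)
    (h : μ D.ap ∈ Arc y) :
    ContinuousWithinAt (fun p : ℝ × ℝ => D.uu μ p.1 p.2) D.W (x, y) := by
  unfold uu
  have h1 : ContinuousAt (fun p : ℝ × ℝ => D.cc μ p.2) (x, y) :=
    ContinuousAt.comp (g := D.cc μ) (f := Prod.snd) (x := (x, y)) (D.cc_cont hμ h) continuousAt_snd
  exact (D.Dl_contW hy hx h).add h1.continuousWithinAt

/-- On the orbit of `an`, the potential does not depend on `μ`; this is the spectral condition. -/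
lemma uu_an {μ ν : Perm ℝ} (hμ : μ ∈ D.G) (hν : ν ∈ D.G) {x : ℝ}
    (h : μ D.ap ∈ Ioo (ν D.an) (ν D.an + 1)) (hx : x ∈ Ioo (ν D.an) (ν D.an + 1)) :
    D.uu μ x (ν D.an) = D.Dl D.an (ν⁻¹ x) D.ap + ld (ν⁻¹ : Perm ℝ) x - ld ν D.an := by
  have gν := D.good ν hν
  have hν' := inv_mem hν
  have hδ : (ν⁻¹ * μ) D.ap ∈ Arc D.an := by
    simpa using (D.ioo_map hν' h)
  have e := D.dagger (mul_mem hν' hμ) hδ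
  have e1 : (ν⁻¹ * μ)⁻¹ = μ⁻¹ * ν := by group
  rw [D.ld_mul hν' hμ, e1, D.ld_mul (inv_mem hμ) hν, Equiv.Perm.mul_apply, Equiv.Perm.mul_apply,
    gν.per] at e
  have e2 := D.Dl_equiv _ hν' _ (D.LG ν hν _ D.anL) x hx _ h
  rw [pinv] at e2
  have e3 := gν.ld_per D.an 1
  have e4 := (D.good _ (inv_mem hμ)).ld_per (ν D.an) 1
  push_cast at e3 e4
  have e5 := D.Dl_add D.an (ν⁻¹ x) (ν⁻¹ (μ D.ap)) D.ap
  unfold uu cc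
  rw [e3, e4] at e
  linarith

lemma tend_W {x y : ℝ} (hx : x ∈ Arc y) :
    Tendsto (fun y' => ((x, y') : ℝ × ℝ)) (𝓝[D.L] y) (𝓝[D.W] (x, y)) := by
  refine tendsto_nhdsWithin_iff.2 ⟨(Continuous.prodMk_right x).continuousWithinAt, ?_⟩
  filter_upwards [nhdsWithin_le_nhds (arc_nhds hx), self_mem_nhdsWithin] with y' h1 h2
  exact ⟨h2, h1⟩

lemma uu_indep {μ μ' : Perm ℝ} (hμ : μ ∈ D.G) (hμ' : μ' ∈ D.G) {x y : ℝ} (hy : y ∈ D.L)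
    (hx : x ∈ Arc y) (h : μ D.ap ∈ Arc y) (h' : μ' D.ap ∈ Arc y) :
    D.uu μ x y = D.uu μ' x y := by
  have n {z : ℝ} (hz : z ∈ Arc y) : ∀ᶠ y' in 𝓝[D.L] y, z ∈ Arc y' :=
    nhdsWithin_le_nhds (arc_nhds hz)
  refine tendsto_nhds_unique_of_frequently_eq ((D.uu_cont hμ hy hx h).tendsto.comp (D.tend_W hx))
    ((D.uu_cont hμ' hy hx h').tendsto.comp (D.tend_W hx)) (((D.freq_an hy).and_eventually
    ((n h).and ((n h').and (n hx)))).mono ?_)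
  rintro _ ⟨⟨ν, hν, rfl⟩, a1, a2, a3⟩
  exact (D.uu_an hμ hν a1 a3).trans (D.uu_an hμ' hν a2 a3).symm

/-- The invariant potential `u (x, y)`, defined for `y ∈ L` and `y < x < y + 1`. -/
def u (x y : ℝ) : ℝ := if h : ∃ μ ∈ D.G, μ D.ap ∈ Arc y then D.uu h.choose x y else 0

/-- The companion potential `v (x, y)`, defined for `x ∈ L` and `x - 1 < y < x`. -/
def v (x y : ℝ) : ℝ := D.swap.u y (x - 1)

lemma u_eq {μ : Perm ℝ} (hμ : μ ∈ D.G) {x y : ℝ} (hy : y ∈ D.L) (hx : x ∈ Arc y)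
    (h : μ D.ap ∈ Arc y) : D.u x y = D.uu μ x y := by
  have hh : ∃ μ ∈ D.G, μ D.ap ∈ Arc y := ⟨μ, hμ, h⟩
  unfold u
  rw [dif_pos hh]
  exact D.uu_indep hh.choose_spec.1 hμ hy hx hh.choose_spec.2 h

lemma u_diff {x x' y : ℝ} (hy : y ∈ D.L) (hx : x ∈ Arc y) (hx' : x' ∈ Arc y) :
    D.u x y - D.u x' y = D.Dl y x x' := by
  obtain ⟨μ, hμ, h⟩ := D.exists_μ hy
  rw [D.u_eq hμ hy hx h, D.u_eq hμ hy hx' h]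
  unfold uu Dl; ring

lemma u_νan {ν : Perm ℝ} (hν : ν ∈ D.G) {x : ℝ} (hx : x ∈ Ioo (ν D.an) (ν D.an + 1)) :
    D.u x (ν D.an) = D.Dl D.an (ν⁻¹ x) D.ap + ld (ν⁻¹ : Perm ℝ) x - ld ν D.an := by
  obtain ⟨μ, hμ, h⟩ := D.exists_μ (D.LG ν hν _ D.anL)
  rw [D.u_eq hμ (D.LG ν hν _ D.anL) hx h, D.uu_an hμ hν h hx]

lemma u_an {x : ℝ} (hx : x ∈ Arc D.an) : D.u x D.an = D.Dl D.an x D.ap := by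
  have := D.u_νan (one_mem D.G) (x := x) (by simpa using hx)
  simp only [inv_one] at this
  rw [ld_one x, ld_one D.an] at this
  simpa using this

lemma u_contW {x y : ℝ} (hy : y ∈ D.L) (hx : x ∈ Arc y) :
    ContinuousWithinAt (fun p : ℝ × ℝ => D.u p.1 p.2) D.W (x, y) := by
  obtain ⟨μ, hμ, h⟩ := D.exists_μ hy
  refine (D.uu_cont hμ hy hx h).congr_of_eventuallyEq ?_ (D.u_eq hμ hy hx h)
  filter_upwards [nhdsWithin_le_nhds ((continuousAt_snd (p := (x, y))).eventually (arc_nhds h)),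
    self_mem_nhdsWithin] with p h1 h2
  exact D.u_eq hμ h2.1 h2.2 h1

lemma u_inv {F : Perm ℝ} (hF : F ∈ D.G) {x y : ℝ} (hy : y ∈ D.L) (hx : x ∈ Arc y) :
    D.u (F x) (F y) + ld F x + ld F y = D.u x y := by
  obtain ⟨μ, hμ, h⟩ := D.exists_μ hy
  rw [D.u_eq hμ hy hx h, D.u_eq (mul_mem hF hμ) (D.LG F hF y hy) (D.ioo_map hF hx) (D.ioo_map hF h)]
  have e1 := D.Dl_equiv F hF y hy x hx _ h
  unfold uu cc
  have e2 : (F * μ)⁻¹ = μ⁻¹ * F⁻¹ := by group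
  rw [e2, D.ld_mul (inv_mem hμ) (inv_mem hF), D.ld_mul hF hμ, ← (D.good F hF).per,
    Equiv.Perm.mul_apply, Equiv.Perm.mul_apply, pinv, pinv, D.ld_inv hF]
  linarith

lemma u_tr {x y : ℝ} (hy : y ∈ D.L) (hx : x ∈ Arc y) (m : ℤ) :
    D.u (x + m) (y + m) = D.u x y := by
  simpa [ld_tr] using (D.u_inv (D.trG m) hy hx)

lemma swap_L : D.swap.L = D.L := rfl
lemma swap_Dl (y z z' : ℝ) : D.swap.Dl y z z' = D.Dl y z z' := rfl

/-- The two potentials agree on `L × L`. -/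
lemma uv {x y : ℝ} (hx : x ∈ D.L) (hy : y ∈ D.L) (h : x ∈ Arc y) : D.u x y = D.v x y := by
  have hx1 := D.Lm hx
  have h1 := arc_flip h
  have nb : ∀ᶠ y' in 𝓝[D.L] y, x ∈ Arc y' := nhdsWithin_le_nhds (arc_nhds h)
  have c1 := (D.u_contW hy h).tendsto.comp (D.tend_W h)
  have t : Tendsto (fun y' => ((y', x - 1) : ℝ × ℝ)) (𝓝[D.L] y) (𝓝[D.swap.W] (y, x - 1)) := by
    refine tendsto_nhdsWithin_iff.2 ⟨(Continuous.prodMk_left (x - 1)).continuousWithinAt, ?_⟩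
    filter_upwards [nb, self_mem_nhdsWithin] with y' h1 h2
    exact ⟨hx1, arc_flip h1⟩
  have c2 := (D.swap.u_contW hx1 h1).tendsto.comp t
  refine tendsto_nhds_unique_of_frequently_eq c1 c2 ?_
  refine ((D.freq_an hy).and_eventually nb).mono ?_
  rintro y' ⟨⟨ν, hν, e⟩, h2⟩
  subst e
  change D.u _ _ = D.v _ _
  rw [D.u_νan hν h2]
  have h3 := arc_flip h2
  have h4 : (ν * tr (-1)) D.swap.ap = ν D.an := by
    have : D.swap.ap = D.an + 1 := rfl
    rw [this]; simp
  unfold v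
  rw [D.swap.u_eq (mul_mem hν (D.trG _)) hx1 h3 (by rw [h4]; exact h3)]
  unfold uu cc
  rw [h4, D.swap.ld_mul hν (D.trG _), D.swap.Dl_self]
  have e1 : (ν * tr (-1))⁻¹ = tr 1 * ν⁻¹ := by
    rw [mul_inv_rev, tr_inv]; simp
  rw [e1, D.swap.ld_mul (D.trG _) (inv_mem hν)]
  have e2 : D.swap.ap = D.an + ((1:ℤ):ℝ) := by push_cast; rfl
  have e3 : D.swap.an + 1 = D.ap + ((1:ℤ):ℝ) := by push_cast; rfl
  have e4 := (D.good _ (inv_mem hν)).ld_per x (-1)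
  have e5 : x + ((-1 : ℤ) : ℝ) = x - 1 := by push_cast; ring
  rw [e5] at e4
  have hx' : ν⁻¹ x ∈ Arc D.an := by
    have := D.ioo_map (inv_mem hν) h2; simpa using this
  have e6 := D.Dl_equiv _ (D.trG 1) _ D.anL _ hx' _ D.ap_mem
  simp only [ld_tr, tr_apply] at e6
  rw [ld_tr, ld_tr, e2, e3, e4]
  simp only [Equiv.Perm.mul_apply, tr_apply, sub_add_cancel, swap_Dl]
  have e7 : D.an + ((1:ℤ):ℝ) + ((-1 : ℤ):ℝ) = D.an := by push_cast; ring
  rw [e7]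
  linarith

lemma v_tr {x w : ℝ} (hx : x ∈ D.L) (hw : w ∈ Ioo (x - 1) (x - 1 + 1)) :
    D.swap.u (w + 1) x = D.v x w := by
  simpa [v] using D.swap.u_tr (D.Lm hx) hw 1

lemma u_bound (c : ℝ) (hc : 0 < c) :
    ∃ C, ∀ y ∈ D.L, ∀ x ∈ Mid c y, |D.u x y| ≤ C := by
  set K : Set (ℝ × ℝ) := {p | p.2 ∈ D.L ∩ Icc 0 1 ∧ p.1 - p.2 ∈ Icc c (1 - c)} with hK
  have hcl : IsClosed K := by
    refine ((D.closed.inter isClosed_Icc).preimage continuous_snd).inter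
      (isClosed_Icc.preimage (continuous_fst.sub continuous_snd))
  have hKc : IsCompact K := by
    refine (isCompact_Icc (a := (0:ℝ)) (b := 2)).prod (isCompact_Icc (a := (0:ℝ)) (b := 1))
      |>.of_isClosed_subset hcl ?_
    rintro ⟨p, q⟩ ⟨⟨-, h1⟩, h2⟩
    simp only [mem_Icc] at h1 h2
    simp only [mem_prod, mem_Icc]
    refine ⟨⟨?_, ?_⟩, h1⟩ <;> linarith
  have hco : ContinuousOn (fun p : ℝ × ℝ => D.u p.1 p.2) K := by
    rintro ⟨p, q⟩ ⟨⟨h0, h1⟩, h2⟩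
    simp only [mem_Icc] at h0 h1 h2
    refine (D.u_contW h0 ⟨by linarith, by linarith⟩).mono ?_
    rintro ⟨p', q'⟩ ⟨⟨h0, h1⟩, h2⟩
    simp only [mem_Icc] at h0 h1 h2
    exact ⟨h0, by constructor <;> simp only <;> linarith⟩
  obtain ⟨C, hC⟩ := hKc.exists_bound_of_continuousOn hco
  refine ⟨C, fun y hy x hx => ?_⟩
  rw [← (D.u_tr hy (x := x) ⟨by linarith [hx.1], by linarith [hx.2]⟩ (-⌊y⌋))]
  refine hC (x + (-⌊y⌋ : ℤ), y + (-⌊y⌋ : ℤ)) ⟨⟨D.Lper y hy _, ?_⟩, ?_⟩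
  · push_cast
    rw [← sub_eq_add_neg]
    exact ⟨Int.fract_nonneg y, (Int.fract_lt_one y).le⟩
  · simp only [mem_Icc]; constructor <;> linarith [hx.1, hx.2]

lemma u_hasDeriv {x y : ℝ} (hy : y ∈ D.L) (hx : x ∈ Arc y) :
    HasDerivAt (fun x => D.u x y) (D.V y 1 x) x := by
  refine ((D.V_hasDeriv hy hx 0).sub_const (D.V y 0 x - D.u x y)).congr_of_eventuallyEq ?_
  filter_upwards [Ioo_mem_nhds hx.1 hx.2] with z hz
  have := D.u_diff hy hz hx
  unfold Dl at this
  linarith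

end Dyn

/-! ### Second order expansions at the marked fixed points -/

open Asymptotics in
lemma second_order {f f' X X' : ℝ → ℝ} {a f2 X2 : ℝ}
    (hf : ∀ᶠ x in 𝓝 a, HasDerivAt f (f' x) x) (hf2 : HasDerivAt f' f2 a) (f0 : f a = 0)
    (hX : ∀ᶠ x in 𝓝 a, HasDerivAt X (X' x) x) (hX2 : HasDerivAt X' X2 a) (X0 : X a = 0)
    (X1 : X' a = 1) :
    (fun x => f x - (f' a * X x + 1/2 * (f2 - f' a * X2) * X x ^ 2)) =o[𝓝 a]
      fun x => X x ^ 2 := by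
  set p := f2 - f' a * X2 with hp
  set h : ℝ → ℝ := fun x => f x - (f' a * X x + 1/2 * p * X x ^ 2) with hh
  set h' : ℝ → ℝ := fun x => f' x - (f' a * X' x + p * X x * X' x) with hh'
  have hd : ∀ᶠ x in 𝓝 a, HasDerivAt h (h' x) x := by
    filter_upwards [hf, hX] with x h1 h2
    refine (h1.sub ((h2.const_mul (f' a)).add ((h2.pow 2).const_mul (1/2 * p)))).congr_deriv ?_
    simp only [hh']; push_cast; ring
  have hXa := hX.self_of_nhds
  rw [X1] at hXa
  have hd2 : HasDerivAt h' 0 a := by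
    have := hf2.sub ((hX2.const_mul (f' a)).add ((hXa.mul hX2).const_mul p))
    refine (this.congr_of_eventuallyEq (Eventually.of_forall fun x => ?_)).congr_deriv ?_
    · simp [hh', mul_assoc]
    · rw [X0, X1]; simp only [hp]; ring
  have ha' : h' a = 0 := by simp [hh', X0, X1]
  have ha : h a = 0 := by simp [hh, X0, f0]
  have o1 : h' =o[𝓝 a] fun x => x - a := by
    have := hasDerivAt_iff_isLittleO.1 hd2
    simpa [ha'] using this
  have o2 : h =o[𝓝 a] fun x => (x - a) ^ 2 := by
    rw [isLittleO_iff]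
    intro c hc
    have := (isLittleO_iff.1 o1 hc).and hd
    obtain ⟨r, hr, hb⟩ := Metric.eventually_nhds_iff_ball.1 this
    filter_upwards [Metric.ball_mem_nhds a hr] with x hx
    have hseg : ∀ z ∈ uIcc a x, |z - a| ≤ |x - a| := fun z hz => by
      have := abs_sub_left_of_mem_uIcc hz; exact this
    have := (convex_uIcc a x).norm_image_sub_le_of_norm_hasDerivWithin_le (f := h) (f' := h')
      (C := c * |x - a|) (fun z hz => ((hb z ?_).2).hasDerivWithinAt) (fun z hz => ?_)
      (left_mem_uIcc) (right_mem_uIcc)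
    · rw [ha, sub_zero] at this
      rw [norm_pow, sq, ← mul_assoc]; exact this
    · rw [Metric.mem_ball, dist_eq] at hx ⊢
      exact (hseg z hz).trans_lt hx
    · have h3 := (hb z ?_).1
      · refine h3.trans ?_
        have := hseg z hz
        rw [norm_eq_abs]
        gcongr
      · rw [Metric.mem_ball, dist_eq] at hx ⊢
        exact (hseg z hz).trans_lt hx
  have o3 : (fun x => x - a) =O[𝓝 a] X := by
    have h1 : (fun x => X x - (x - a)) =o[𝓝 a] fun x => x - a := by
      simpa [X0] using (hasDerivAt_iff_isLittleO.1 hXa)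
    simpa using h1.right_isBigO_add
  exact o2.trans_isBigO (o3.pow 2)

open Asymptotics in
lemma cmp_orders {l A B A' B' : ℝ} (l0 : 0 < l) (l1 : l < 1)
    (h : (fun k : ℕ => (A * l ^ k + B * (l ^ k) ^ 2) - (A' * l ^ k + B' * (l ^ k) ^ 2)) =o[atTop]
      fun k => (l ^ k) ^ 2) : A = A' ∧ B = B' := by
  have ht := tendsto_pow_atTop_nhds_zero_of_lt_one l0.le l1
  have hd := h.tendsto_div_nhds_zero
  have e1 : A = A' := by
    have h1 := hd.mul ht
    have h2 : Tendsto (fun k : ℕ => (A - A') + (B - B') * l ^ k) atTop (𝓝 ((A - A') + (B - B') * 0)) :=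
      tendsto_const_nhds.add (ht.const_mul _)
    have := tendsto_nhds_unique (h1.congr fun k => ?_) h2
    · simp at this; linarith
    · field_simp
      ring
  refine ⟨e1, ?_⟩
  subst e1
  have := tendsto_nhds_unique (hd.congr fun k => ?_) (tendsto_const_nhds (x := B - B'))
  · linarith
  · have : l ^ k ≠ 0 := (pow_pos l0 k).ne'
    field_simp
    ring

namespace Dyn
variable {S : Type} (D : Dyn S) [Finite S]

lemma ld_hd {F : Perm ℝ} (hF : F ∈ D.G) (z : ℝ) : HasDerivAt (ld F) (deriv (ld F) z) z :=
  ((D.good F hF).ld_smooth.contDiffAt.differentiableAt (by simp)).hasDerivAt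

lemma V1_equiv {F : Perm ℝ} (hF : F ∈ D.G) {y z : ℝ} (hy : y ∈ D.L) (hz : z ∈ Arc y) :
    D.V (F y) 1 (F z) * deriv F z + deriv (ld F) z = D.V y 1 z := by
  have g := D.good F hF
  have h1 : HasDerivAt (fun x => D.V (F y) 0 (F x)) (D.V (F y) 1 (F z) * deriv F z) z :=
    (D.V_hasDeriv (D.LG F hF y hy) (D.ioo_map hF hz) 0).comp z (g.hd z)
  have h4 := (h1.add (D.ld_hd hF z)).sub_const (D.V (F y) 0 (F z) + ld F z - D.V y 0 z)
  refine (h4.congr_of_eventuallyEq ?_).unique (D.V_hasDeriv hy hz 0)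
  filter_upwards [Ioo_mem_nhds hz.1 hz.2] with w hw
  have := D.Dl_equiv F hF y hy w hw z hz
  unfold Dl at this
  simp only [Pi.add_apply]
  linarith

lemma V2_equiv {F : Perm ℝ} (hF : F ∈ D.G) {y z : ℝ} (hy : y ∈ D.L) (hz : z ∈ Arc y) :
    D.V (F y) 2 (F z) * deriv F z ^ 2 + D.V (F y) 1 (F z) * (deriv F z * deriv (ld F) z)
      + deriv (deriv (ld F)) z = D.V y 2 z := by
  have g := D.good F hF
  have h1 : HasDerivAt (fun x => D.V (F y) 1 (F x)) (D.V (F y) 2 (F z) * deriv F z) z :=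
    (D.V_hasDeriv (D.LG F hF y hy) (D.ioo_map hF hz) 1).comp z (g.hd z)
  have h2 := ((contDiff_infty_iff_deriv.1 g.ld_smooth).2.contDiffAt.differentiableAt (x := z)
    (by simp)).hasDerivAt
  have h5 : HasDerivAt (deriv F) (deriv F z * deriv (ld F) z) z := by
    have := (D.ld_hd hF z).exp
    rw [g.exp_ld] at this
    exact this.congr_of_eventuallyEq (Eventually.of_forall fun x => (g.exp_ld x).symm)
  have := ((((h1.mul h5).add h2)).congr_of_eventuallyEq (f₁ := D.V y 1) ?_).unique (D.V_hasDeriv hy hz 1)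
  · rw [← this]; ring
  · filter_upwards [Ioo_mem_nhds hz.1 hz.2] with w hw
    exact (D.V1_equiv hF hy hw).symm

/-- The (Schwarzian-like) projective connection defined by the potential based at `y`. -/
def σ (y z : ℝ) : ℝ := D.V y 2 z - 1/2 * D.V y 1 z ^ 2

lemma σ_equiv {F : Perm ℝ} (hF : F ∈ D.G) {y z : ℝ} (hy : y ∈ D.L) (hz : z ∈ Arc y) :
    D.σ (F y) (F z) * deriv F z ^ 2 + (deriv (deriv (ld F)) z - 1/2 * deriv (ld F) z ^ 2)
      = D.σ y z := by
  unfold σ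
  rw [← D.V1_equiv hF hy hz, ← D.V2_equiv hF hy hz]
  ring

/-- The linearizing coordinate of `α` at its attracting fixed point. -/
def X (x : ℝ) : ℝ := ∫ t in D.ap..x, exp (D.Dl D.an t D.ap)

lemma X_hasDeriv {x : ℝ} (hx : x ∈ Arc D.an) :
    HasDerivAt D.X (exp (D.Dl D.an x D.ap)) x := by
  have hc : ContinuousOn (fun t => exp (D.Dl D.an t D.ap)) (Arc D.an) := fun t ht =>
    (D.Dl_continuousAt D.ap D.anL ht).rexp.continuousWithinAt
  exact intervalIntegral.integral_hasDerivAt_right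
    ((hc.mono (ordConnected_Ioo.uIcc_subset D.ap_mem hx)).intervalIntegrable)
    (hc.stronglyMeasurableAtFilter isOpen_Ioo x hx) (D.Dl_continuousAt D.ap D.anL hx).rexp

lemma X_ap : D.X D.ap = 0 := intervalIntegral.integral_same

lemma αk_mem {x : ℝ} (hx : x ∈ Arc D.an) (k : ℕ) : (D.α ^ k) x ∈ Arc D.an := by
  have := D.ioo_map (D.αkG k) hx
  rwa [D.αk_an] at this

lemma αk_lim {x : ℝ} (hx : x ∈ Arc D.an) :
    Tendsto (fun k : ℕ => (D.α ^ k) x) atTop (𝓝 D.ap) := by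
  obtain ⟨c, hc, -, h⟩ := exists_c hx
  exact D.αk_tendsto hc (p := fun _ => x) (Eventually.of_forall fun k => ⟨h.1.le, h.2.le⟩)

lemma X_α {x : ℝ} (hx : x ∈ Arc D.an) : D.X (D.α x) = D.lam * D.X x := by
  have key : ∀ z ∈ Arc D.an, HasDerivAt (fun z => D.X (D.α z) - D.lam * D.X z) 0 z := by
    intro z hz
    have hz' : D.α z ∈ Arc D.an := by simpa using D.αk_mem hz 1
    have h2 := (D.X_hasDeriv hz).const_mul D.lam
    refine (((D.X_hasDeriv hz').comp z ((D.good _ D.αG).hd z)).sub h2).congr_deriv ?_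
    have e := D.Dl_equiv _ D.αG _ D.anL z hz _ D.ap_mem
    rw [D.α_an, D.α_ap, D.ld_α_ap] at e
    rw [← (D.good _ D.αG).exp_ld z, ← e, ← exp_add, exp_sub, exp_log D.lam_pos]
    have := D.lam_pos.ne'
    field_simp
    simp
  have := isOpen_Ioo.is_const_of_deriv_eq_zero (isPreconnected_Ioo)
    (fun z hz => (key z hz).differentiableAt.differentiableWithinAt)
    (fun z hz => (key z hz).deriv) hx D.ap_mem
  simp only [D.α_ap, D.X_ap] at this
  linarith

lemma X_αk {x : ℝ} (hx : x ∈ Arc D.an) (k : ℕ) : D.X ((D.α ^ k) x) = D.lam ^ k * D.X x := by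
  induction k with
  | zero => simp
  | succ k ih =>
    rw [pow_succ', Equiv.Perm.mul_apply, D.X_α (D.αk_mem hx k), ih]; ring

lemma X_ne {x : ℝ} (hx : x ∈ Arc D.an) (h : x ≠ D.ap) : D.X x ≠ 0 := by
  have mono : StrictMonoOn D.X (Arc D.an) := by
    refine strictMonoOn_of_deriv_pos (convex_Ioo _ _)
      (fun z hz => (D.X_hasDeriv hz).continuousAt.continuousWithinAt) fun z hz => ?_
    rw [interior_Ioo] at hz
    rw [(D.X_hasDeriv hz).deriv]; positivity
  intro h0
  exact h (mono.injOn hx D.ap_mem (by rw [h0, D.X_ap]))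

/-- Comparison of the distortions at `y` and at `an`, normalised at `ap`; `R` and `p2` are its derivative
at `ap` and its second derivative there in the coordinate `X`. -/
def P (y x : ℝ) : ℝ := D.Dl y x D.ap - D.Dl D.an x D.ap
def R (y : ℝ) : ℝ := D.V y 1 D.ap - D.V D.an 1 D.ap
def p2 (y : ℝ) : ℝ := D.V y 2 D.ap - D.V D.an 2 D.ap - D.R y * D.V D.an 1 D.ap

open Asymptotics in
lemma expand {y x0 : ℝ} (hyL : y ∈ D.L) (hy : y ∈ Ioo (D.ap - 1) D.ap)
    (hx : x0 ∈ Arc D.an) :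
    (fun k : ℕ => D.P y ((D.α ^ k) x0)
      - (D.R y * D.X x0 * D.lam ^ k + 1/2 * D.p2 y * D.X x0 ^ 2 * (D.lam ^ k) ^ 2)) =o[atTop]
      fun k => (D.lam ^ k) ^ 2 := by
  have hap : D.ap ∈ Arc y := ⟨hy.2, by linarith [hy.1]⟩
  have so := second_order (f := D.P y) (f' := fun x => D.V y 1 x - D.V D.an 1 x) (X := D.X)
    (X' := fun x => exp (D.Dl D.an x D.ap)) (a := D.ap)
    (f2 := D.V y 2 D.ap - D.V D.an 2 D.ap) (X2 := D.V D.an 1 D.ap) ?_ ?_ ?_ ?_ ?_ D.X_ap ?_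
  · have bo : ((fun x => D.X x ^ 2) ∘ fun k : ℕ => (D.α ^ k) x0) =O[atTop]
        fun k => (D.lam ^ k) ^ 2 := by
      refine IsBigO.of_bound (D.X x0 ^ 2) (Eventually.of_forall fun k => ?_)
      rw [comp_apply, D.X_αk hx, mul_pow, norm_mul, mul_comm]
      simp
    refine ((so.comp_tendsto (D.αk_lim hx)).trans_isBigO bo).congr_left fun k => ?_
    simp only [comp_apply, D.X_αk hx, R, p2]
    ring
  · filter_upwards [Ioo_mem_nhds hap.1 hap.2, Ioo_mem_nhds D.an_lt D.ap_lt] with x h1 h2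
    exact ((D.V_hasDeriv hyL h1 0).sub_const _).sub ((D.V_hasDeriv D.anL h2 0).sub_const _)
  · exact (D.V_hasDeriv hyL hap 1).sub (D.V_hasDeriv D.anL D.ap_mem 1)
  · simp [P, Dl_self]
  · filter_upwards [Ioo_mem_nhds D.an_lt D.ap_lt] with x h2
    exact D.X_hasDeriv h2
  · refine (((D.V_hasDeriv D.anL D.ap_mem 0).sub_const (D.V D.an 0 D.ap)).exp).congr_deriv ?_
    simp
  · simp [Dl_self]

lemma swap_lam' : D.swap.lam = D.lam := by
  exact log_injOn_pos D.swap.lam_pos D.lam_pos D.swap_lam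

/-- The cross-difference of the potential is invariant under `α`. -/
lemma P_swap {x0 y : ℝ} (hx0 : x0 ∈ D.L) (hx : x0 ∈ Arc D.an) (hyL : y ∈ D.L)
    (hy : y ∈ Ioo (D.ap - 1) D.ap) :
    ∀ᶠ k : ℕ in atTop, D.P y ((D.α ^ k) x0) = D.swap.P x0 ((D.swap.α ^ k) (y + 1)) := by
  have hap : D.ap ∈ Arc y := ⟨hy.2, by linarith [hy.1]⟩
  filter_upwards [(D.αk_lim hx).eventually (Ioo_mem_nhds hap.1 hap.2)] with k hk
  set A := D.α ^ k with hA
  have AG : A ∈ D.G := D.αkG k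
  have gA := D.good _ AG
  have hw := D.αk_mem hx k
  have Aap : A D.ap = D.ap := D.αk_ap k
  have Aan : A D.an = D.an := D.αk_an k
  set z := A⁻¹ y with hz
  have yz : A z = y := by simp [hz]
  have zL : z ∈ D.L := D.LG _ (inv_mem AG) _ hyL
  have inv {w : ℝ} (h : A w ∈ Arc y) : w ∈ Arc z := by
    have := D.ioo_map (inv_mem AG) h
    rwa [pinv] at this
  have hx0z := inv hk
  have hapz : D.ap ∈ Arc z := inv (by rwa [Aap])
  have e0 : (D.swap.α ^ k) (y + 1) = z + 1 := by
    rw [swap_α, inv_pow, (D.good _ (inv_mem AG)).per]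
  rw [e0]
  -- the left-hand side in terms of `u`
  have l3 : D.P y (A x0) = D.u (A x0) y - D.u D.ap y - D.u (A x0) D.an := by
    unfold P; rw [D.u_diff hyL hk hap, D.u_an hw]
  -- the right-hand side in terms of `v`
  have sw1 : D.swap.ap = D.an + 1 := rfl
  have sw2 : D.swap.an = D.ap := rfl
  have hz1 := arc_flip hx0z
  have hz2 := arc_flip hapz
  have hn1 := arc_flip hx
  have r1 := D.swap.u_diff (x := z + 1) (x' := D.an + 1) hx0
    ⟨by linarith [hz1.1], by linarith [hz1.2]⟩ ⟨by linarith [hn1.1], by linarith [hn1.2]⟩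
  have r2 := D.swap.u_an (x := z + 1) (by
    rw [sw2]; exact ⟨by linarith [hz2.1], by linarith [hz2.2]⟩)
  have r3 : D.swap.P x0 (z + 1) = D.u x0 z - D.u x0 D.an - D.u D.ap z := by
    unfold P
    rw [← r2, sw1, ← r1, sw2, D.v_tr hx0 hz1, D.v_tr hx0 hn1, D.v_tr D.apL hz2,
      D.uv hx0 zL hx0z, D.uv hx0 D.anL hx, D.uv D.apL zL hapz]
  rw [l3, r3]
  have i1 := D.u_inv AG zL hx0z
  have i2 := D.u_inv AG zL hapz
  have i3 := D.u_inv AG D.anL hx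
  have i4 := D.u_inv AG D.anL D.ap_mem
  rw [yz] at i1
  rw [yz, Aap] at i2
  rw [Aan] at i3
  rw [Aan, Aap] at i4
  linarith

open Asymptotics in
lemma coeffs {x0 y : ℝ} (hx0 : x0 ∈ D.L) (hx : x0 ∈ Arc D.an) (hyL : y ∈ D.L)
    (hy : y ∈ Ioo (D.ap - 1) D.ap) :
    D.R y * D.X x0 = D.swap.R x0 * D.swap.X (y + 1) ∧
    D.p2 y * D.X x0 ^ 2 = D.swap.p2 x0 * D.swap.X (y + 1) ^ 2 := by
  have sw1 : D.swap.ap = D.an + 1 := rfl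
  have sw2 : D.swap.an = D.ap := rfl
  have e1 := D.expand hyL hy hx
  have e2 := D.swap.expand (y := x0) (x0 := y + 1) hx0 (by rw [sw1]; simpa using hx)
    (by rw [sw2]; exact ⟨by linarith [hy.1], by linarith [hy.2]⟩)
  simp only [swap_lam'] at e2
  have := cmp_orders D.lam_pos D.lam_lt ((e2.sub e1).congr' ?_ EventuallyEq.rfl)
    (A := D.R y * D.X x0) (A' := D.swap.R x0 * D.swap.X (y + 1))
    (B := 1/2 * D.p2 y * D.X x0 ^ 2) (B' := 1/2 * D.swap.p2 x0 * D.swap.X (y + 1) ^ 2)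
  · exact ⟨this.1, by linarith⟩
  · filter_upwards [D.P_swap hx0 hx hyL hy] with k hk
    rw [hk]; ring

lemma exists_x0 : ∃ x0 ∈ D.L, x0 ∈ Arc D.an ∧ x0 ≠ D.ap := by
  obtain ⟨x0, h1, h2, h3⟩ := D.perfect D.ap D.apL (min (D.ap - D.an) (D.an + 1 - D.ap))
    (lt_min (sub_pos.2 D.an_lt) (sub_pos.2 D.ap_lt))
  have m1 := min_le_left (D.ap - D.an) (D.an + 1 - D.ap)
  have m2 := min_le_right (D.ap - D.an) (D.an + 1 - D.ap)
  have := abs_lt.1 h3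
  exact ⟨x0, h1, ⟨by linarith, by linarith⟩, h2⟩

/-- First and second order coefficients of the potential at the marked fixed points. -/
lemma core : ∃ κ c : ℝ,
    (∀ x ∈ D.L, x ∈ Arc D.an → D.swap.R x = κ * D.X x) ∧
    (∀ y ∈ D.L, y ∈ Ioo (D.ap - 1) D.ap → D.R y = κ * D.swap.X (y + 1)) ∧
    (∀ y ∈ D.L, y ∈ Ioo (D.ap - 1) D.ap →
      D.σ y D.ap - D.σ D.an D.ap = c * D.swap.X (y + 1) ^ 2) := by
  obtain ⟨x0, x0L, hx0, nx0⟩ := D.exists_x0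
  obtain ⟨y0, y0L, hy0, ny0⟩ := D.swap.exists_x0
  have sw2 : D.swap.an = D.ap := rfl
  have n1 := D.X_ne hx0 nx0
  have n2 := D.swap.X_ne hy0 ny0
  rw [sw2] at hy0
  have hy0' : y0 - 1 ∈ Ioo (D.ap - 1) D.ap := ⟨by linarith [hy0.1], by linarith [hy0.2]⟩
  have a1 : ∀ x ∈ D.L, x ∈ Arc D.an →
      D.swap.R x = (D.R (y0 - 1) / D.swap.X y0) * D.X x := by
    intro x hx hx'
    have := (D.coeffs hx hx' (D.Lm y0L) hy0').1
    rw [sub_add_cancel] at this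
    field_simp
    linarith
  have a2 : ∀ y ∈ D.L, y ∈ Ioo (D.ap - 1) D.ap →
      D.R y = (D.R (y0 - 1) / D.swap.X y0) * D.swap.X (y + 1) := by
    intro y hy hy'
    have := (D.coeffs x0L hx0 hy hy').1
    rw [a1 x0 x0L hx0] at this
    have h3 : (D.R y - (D.R (y0 - 1) / D.swap.X y0) * D.swap.X (y + 1)) * D.X x0 = 0 := by
      linear_combination this
    have := (mul_eq_zero.1 h3).resolve_right n1
    linarith
  refine ⟨D.R (y0 - 1) / D.swap.X y0,
    D.swap.p2 x0 / D.X x0 ^ 2 - 1/2 * (D.R (y0 - 1) / D.swap.X y0) ^ 2, a1, a2, ?_⟩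
  intro y hy hy'
  have h := (D.coeffs x0L hx0 hy hy').2
  have e1 : D.p2 y = D.swap.p2 x0 / D.X x0 ^ 2 * D.swap.X (y + 1) ^ 2 := by
    field_simp
    linarith
  have e3 : D.σ y D.ap - D.σ D.an D.ap = D.p2 y - 1/2 * D.R y ^ 2 := by
    unfold σ p2 R; ring
  rw [e3, e1, a2 y hy hy']; ring

end Dyn

/-! ### First and second derivatives of the potential at points of the limit set -/

namespace Dyn
variable {S : Type} (D : Dyn S) [Finite S]

lemma V1_tr {y z : ℝ} (hy : y ∈ D.L) (hz : z ∈ Arc y) (m : ℤ) :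
    D.V (y + m) 1 (z + m) = D.V y 1 z := by
  have := D.V1_equiv (D.trG m) hy hz
  have h2 : deriv (tr m) z = 1 := by
    have : (⇑(tr m)) = fun x => x + (m:ℝ) := rfl
    rw [this, deriv_add_const]; simp
  rw [(funext fun x => ld_tr m x), h2] at this
  simpa using this

lemma u_cont_on {y : ℝ} (hy : y ∈ D.L) : ContinuousOn (fun t => exp (D.u t y)) (Arc y) :=
  fun _ ht => (D.u_hasDeriv hy ht).continuousAt.rexp.continuousWithinAt

lemma u_int {y a b : ℝ} (hy : y ∈ D.L) (ha : a ∈ Arc y) (hb : b ∈ Arc y) :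
    IntervalIntegrable (fun t => exp (D.u t y)) volume a b :=
  ((D.u_cont_on hy).mono (ordConnected_Ioo.uIcc_subset ha hb)).intervalIntegrable

lemma int_inv {F : Perm ℝ} (hF : F ∈ D.G) {y a b : ℝ} (hy : y ∈ D.L)
    (ha : a ∈ Arc y) (hb : b ∈ Arc y) :
    (∫ t in (F a)..(F b), exp (D.u t (F y))) * deriv F y
      = ∫ t in a..b, exp (D.u t y) := by
  have g := D.good F hF
  have hs := ordConnected_Ioo.uIcc_subset ha hb
  have c := D.u_cont_on (D.LG F hF y hy)
  have h := intervalIntegral.integral_comp_mul_deriv''' (a := a) (b := b) (f := F)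
    (f' := deriv F) (g := fun t => exp (D.u t (F y))) g.cont.continuousOn
    (fun x _ => (g.hd x).hasDerivWithinAt) ?_ ?_ ?_
  · rw [← h, ← intervalIntegral.integral_mul_const]
    refine intervalIntegral.integral_congr fun t ht => ?_
    simp only [comp_apply]
    rw [← (D.u_inv hF hy (hs ht)), exp_add, exp_add, g.exp_ld, g.exp_ld]
  · refine c.mono ?_
    rintro _ ⟨t, ht, rfl⟩
    exact D.ioo_map hF (hs (Ioo_subset_Icc_self ht))
  · refine (c.mono ?_).integrableOn_compact (isCompact_uIcc.image g.cont)
    rintro _ ⟨t, ht, rfl⟩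
    exact D.ioo_map hF (hs ht)
  · exact ((c.comp g.cont.continuousOn fun t ht => D.ioo_map hF (hs ht)).mul
      g.deriv_smooth.continuous.continuousOn).integrableOn_compact isCompact_uIcc

lemma int_cont {y a b : ℝ} (hy : y ∈ D.L) (ha : a ∈ Arc y) (hb : b ∈ Arc y) :
    Tendsto (fun y' => ∫ t in a..b, exp (D.u t y')) (𝓝[D.L] y)
      (𝓝 (∫ t in a..b, exp (D.u t y))) := by
  obtain ⟨c, hc, -, ha'⟩ := exists_c ha
  obtain ⟨c', hc', -, hb'⟩ := exists_c hb
  set d := min c c' / 2 with hd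
  have m1 := min_le_left c c'
  have m2 := min_le_right c c'
  have d0 : 0 < d := by positivity
  have hs2 : uIcc a b ⊆ Icc (y + 2 * d) (y + 1 - 2 * d) := ordConnected_Icc.uIcc_subset
    ⟨by linarith [ha'.1], by linarith [ha'.2]⟩ ⟨by linarith [hb'.1], by linarith [hb'.2]⟩
  obtain ⟨C, hC⟩ := D.u_bound d d0
  have near : ∀ᶠ y' in 𝓝[D.L] y, y' ∈ D.L ∧ uIcc a b ⊆ Mid d y' := by
    filter_upwards [self_mem_nhdsWithin, nhdsWithin_le_nhds (Metric.ball_mem_nhds y d0)] with y' h1 h2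
    rw [Metric.mem_ball, dist_eq, abs_lt] at h2
    exact ⟨h1, hs2.trans (Icc_subset_Icc (by linarith) (by linarith))⟩
  refine intervalIntegral.tendsto_integral_filter_of_dominated_convergence (fun _ => exp C)
    ?_ ?_ (by simp) ?_
  · filter_upwards [near] with y' h
    refine (((D.u_cont_on h.1).mono (h.2.trans ?_)).mono uIoc_subset_uIcc).aestronglyMeasurable
      measurableSet_uIoc
    exact fun t ht => ⟨by linarith [ht.1], by linarith [ht.2]⟩
  · filter_upwards [near] with y' h
    refine Eventually.of_forall fun t ht => ?_
    rw [norm_eq_abs, abs_exp]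
    exact exp_le_exp.2 ((le_abs_self _).trans (hC y' h.1 t (h.2 (uIoc_subset_uIcc ht))))
  · refine Eventually.of_forall fun t ht => ?_
    have ht' := (ordConnected_Ioo.uIcc_subset ha hb) (uIoc_subset_uIcc ht)
    exact (continuous_exp.tendsto _).comp ((D.u_contW hy ht').tendsto.comp (D.tend_W ht'))

/-- The differences of first derivatives of the potential at `y` are given by the integrals of the
density, with constant `κ`. -/
def StarAt (κ y : ℝ) : Prop := ∀ ξ ∈ D.L, ∀ ξ' ∈ D.L, ξ ∈ Arc y → ξ' ∈ Arc y →
  D.V (ξ - 1) 1 y - D.V (ξ' - 1) 1 y = κ * ∫ t in ξ'..ξ, exp (D.u t y)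

/-- The identity `StarAt` at all points of `L`. -/
def Star (κ : ℝ) : Prop := ∀ y ∈ D.L, D.StarAt κ y

lemma V1_sub {x y : ℝ} (hx : x ∈ D.L) (hxy : x ∈ Arc y) :
    D.V x 1 (y + 1) = D.V (x - 1) 1 y := by
  simpa using D.V1_tr (D.Lm hx) (arc_flip hxy) 1

lemma star_of_base {κ : ℝ} (h : ∀ x ∈ D.L, x ∈ Arc D.an → D.swap.R x = κ * D.X x) :
    D.Star κ := by
  have sw1 : D.swap.ap = D.an + 1 := rfl
  have swV : ∀ y j z, D.swap.V y j z = D.V y j z := fun _ _ _ => rfl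
  -- the identity at `y = an`
  have b1 : D.StarAt κ D.an := by
    intro ξ hξ ξ' hξ' h1 h2
    have e1 := h ξ hξ h1
    have e2 := h ξ' hξ' h2
    have hX : ∀ x ∈ Arc D.an, D.X x = ∫ t in D.ap..x, exp (D.u t D.an) := by
      intro x hx
      refine intervalIntegral.integral_congr fun t ht => ?_
      rw [D.u_an (ordConnected_Ioo.uIcc_subset D.ap_mem hx ht)]
    unfold R at e1 e2
    rw [sw1, swV, swV, D.V1_sub hξ h1, hX ξ h1] at e1
    rw [sw1, swV, swV, D.V1_sub hξ' h2, hX ξ' h2] at e2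
    have e3 := intervalIntegral.integral_interval_sub_left (D.u_int D.anL D.ap_mem h1)
      (D.u_int D.anL D.ap_mem h2)
    rw [← e3]
    linarith
  -- transport by the group
  have b2 : ∀ ν ∈ D.G, D.StarAt κ (ν D.an) := by
    intro ν hν ξ hξ ξ' hξ' h1 h2
    have hν' := inv_mem hν
    have i1 := D.ioo_map hν' h1
    have i2 := D.ioo_map hν' h2
    rw [pinv] at i1 i2
    have e := b1 _ (D.LG _ hν' _ hξ) _ (D.LG _ hν' _ hξ') i1 i2
    have sub1 : ∀ x, (ν⁻¹ : Perm ℝ) (x - 1) = ν⁻¹ x - 1 := fun x => by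
      have := (D.good _ hν').per (x - 1); rw [sub_add_cancel] at this; linarith
    have v1 := D.V1_equiv hν' (D.Lm hξ) (arc_flip h1)
    have v2 := D.V1_equiv hν' (D.Lm hξ') (arc_flip h2)
    rw [pinv, sub1] at v1 v2
    have i := D.int_inv hν' (D.LG ν hν _ D.anL) h2 h1
    rw [pinv] at i
    rw [← i, ← v1, ← v2]
    linear_combination (deriv (ν⁻¹ : Perm ℝ) (ν D.an)) * e
  intro y hy ξ hξ ξ' hξ' h1 h2
  have c {x : ℝ} (hx : x ∈ D.L) (hxy : x ∈ Arc y) :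
      Tendsto (D.V (x - 1) 1) (𝓝[D.L] y) (𝓝 (D.V (x - 1) 1 y)) :=
    (D.V_hasDeriv (D.Lm hx) (arc_flip hxy) 1).continuousAt.continuousWithinAt
  refine tendsto_nhds_unique_of_frequently_eq ((c hξ h1).sub (c hξ' h2))
    ((D.int_cont hy h2 h1).const_mul κ) ?_
  refine ((D.freq_an hy).and_eventually (nhdsWithin_le_nhds ((arc_nhds h1).and
    (arc_nhds h2)))).mono ?_
  rintro y' ⟨⟨ν, hν, rfl⟩, n1, n2⟩
  exact b2 ν hν ξ hξ ξ' hξ' n1 n2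

lemma exists_star : ∃ κ, D.Star κ ∧ D.swap.Star κ := by
  obtain ⟨κ, c, h1, h2, -⟩ := D.core
  refine ⟨κ, D.star_of_base h1, D.swap.star_of_base ?_⟩
  intro x hx hx'
  change x ∈ Arc D.ap at hx'
  have := h2 (x - 1) (D.Lm hx) ⟨by linarith [hx'.1], by linarith [hx'.2]⟩
  rw [sub_add_cancel] at this
  rw [← this]
  have t2 := D.V1_tr D.anL D.ap_mem 1
  push_cast at t2
  change D.V x 1 (D.ap + 1) - D.V (D.an + 1) 1 (D.ap + 1) = D.V (x - 1) 1 D.ap - D.V D.an 1 D.ap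
  rw [D.V1_sub hx hx', t2]

/-- An element of the group moving `ap` into the fundamental interval above `an`. -/
lemma exists_μ' : ∃ μ ∈ D.G, μ D.ap ∈ Arc D.an ∧ μ D.an ≠ D.an := by
  set n : ℤ := ⌊D.μ D.ap - D.an⌋
  refine ⟨tr (-n) * D.μ, mul_mem (D.trG _) D.μG, ?_, ?_⟩
  · have f1 := Int.fract_nonneg (D.μ D.ap - D.an)
    have f2 := Int.fract_lt_one (D.μ D.ap - D.an)
    have f3 : Int.fract (D.μ D.ap - D.an) = D.μ D.ap - D.an - n := rfl
    have f4 : Int.fract (D.μ D.ap - D.an) ≠ 0 := fun h => D.μ_ap_an n (by rw [f3] at h; linarith)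
    have f5 := lt_of_le_of_ne f1 f4.symm
    rw [f3] at f5 f2
    simp only [Equiv.Perm.mul_apply, tr_apply]
    push_cast
    constructor <;> linarith
  · intro h
    simp only [Equiv.Perm.mul_apply, tr_apply] at h
    push_cast at h
    exact D.μ_an n (by linarith)

lemma σ_cont {x y : ℝ} (hy : y ∈ D.L) (h : x ∈ Arc y) : ContinuousAt (D.σ y) x :=
  (D.V_hasDeriv hy h 2).continuousAt.sub
    (continuousAt_const.mul ((D.V_hasDeriv hy h 1).continuousAt.pow 2))

/-- The projective connections `σ y` agree at `ap`: the quadratic coefficient must vanish, since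
otherwise it would produce terms of order `λ^k` in an identity valid up to order `λ^{2k}`. -/
lemma σ_ap {y : ℝ} (hy : y ∈ D.L) (hy' : y ∈ Ioo (D.ap - 1) D.ap) : D.σ y D.ap = D.σ D.an D.ap := by
  obtain ⟨κ, c, -, -, h⟩ := D.core
  suffices hc : c = 0 by
    have := h y hy hy'
    rw [hc] at this; linarith
  obtain ⟨μ, hμ, hμ1, hμ2⟩ := D.exists_μ'
  obtain ⟨x1, x1L, hx1, nx1⟩ := D.swap.exists_x0
  have sw1 : D.swap.ap = D.an + 1 := rfl
  have sw2 : D.swap.an = D.ap := rfl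
  have X1 := D.swap.X_ne hx1 nx1
  rw [sw2] at hx1
  set y1 := x1 - 1 with hy1
  have y1L : y1 ∈ D.L := D.Lm x1L
  have hy1' : y1 ∈ Ioo (D.ap - 1) D.ap := ⟨by linarith [hx1.1], by linarith [hx1.2]⟩
  have hap : D.ap ∈ Ioo y1 (y1 + 1) := ⟨hy1'.2, by linarith [hy1'.1]⟩
  obtain ⟨c0, hc0, -, hw'⟩ := exists_c hμ1
  have lim := D.αk_lim hμ1
  have gμi := D.good _ (inv_mem hμ)
  -- the function `Z = Y ∘ μ⁻¹`, where `Y` linearizes `α⁻¹` at `an`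
  set Z : ℝ → ℝ := fun y => D.swap.X (μ⁻¹ y + 1) with hZ
  have hμan : μ⁻¹ D.an + 1 ∈ Arc D.ap := by
    have := D.inv_mem_Ioo hμ hμ1
    rwa [gμi.per] at this
  have μL : ∀ y ∈ D.L, (μ⁻¹ : Perm ℝ) y ∈ D.L := fun y hy => D.LG _ (inv_mem hμ) y hy
  have key : ∀ᶠ k : ℕ in atTop, (D.σ y1 ((D.α ^ k) (μ D.ap)) - D.σ D.an ((D.α ^ k) (μ D.ap)))
      * deriv (D.α ^ k * μ : Perm ℝ) D.ap ^ 2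
      = c * (Z ((D.swap.α ^ k) x1 - 1) ^ 2 - Z D.an ^ 2) := by
    filter_upwards [lim.eventually (Ioo_mem_nhds hap.1 hap.2)] with k hk
    set A := D.α ^ k with hA
    have AG : A ∈ D.G := D.αkG k
    have gA := D.good _ AG
    have gAi := D.good _ (inv_mem AG)
    have e0 : (D.swap.α ^ k) x1 - 1 = A⁻¹ y1 := by
      have := gAi.per y1
      rw [hy1, sub_add_cancel] at this
      rw [swap_α, inv_pow, ← hA, this, hy1]; ring
    rw [e0]
    have hμk : A * μ ∈ D.G := mul_mem AG hμ
    have i1 := D.inv_mem_Ioo' hμk (y := y1) (z := D.ap) hk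
    have i2 := D.inv_mem_Ioo' hμ (y := D.an) (z := D.ap) hμ1
    have e1 : (A * μ)⁻¹ y1 = μ⁻¹ (A⁻¹ y1) := by rw [mul_inv_rev]; rfl
    rw [e1, sub_add_cancel] at i1
    rw [sub_add_cancel] at i2
    have L1 : (μ⁻¹ : Perm ℝ) (A⁻¹ y1) ∈ D.L := μL _ (D.LG _ (inv_mem AG) _ y1L)
    have L2 := μL _ D.anL
    have h1 := h _ L1 i1
    have h2 := h _ L2 i2
    have s1 := D.σ_equiv hμk L1 (z := D.ap) ⟨i1.2, by linarith [i1.1]⟩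
    have s2 := D.σ_equiv hμk L2 (z := D.ap) ⟨i2.2, by linarith [i2.1]⟩
    have f1 : (A * μ) (μ⁻¹ (A⁻¹ y1)) = y1 := by simp
    have f2 : (A * μ) (μ⁻¹ D.an) = D.an := by
      rw [Equiv.Perm.mul_apply, pinv', hA, D.αk_an]
    rw [f1] at s1
    rw [f2] at s2
    rw [Equiv.Perm.mul_apply] at s1 s2
    simp only [hZ]
    linear_combination s1 - s2 + h1 - h2
  -- divide by `λ^k` and pass to the limit
  have l0 := D.lam_pos
  have tl := tendsto_pow_atTop_nhds_zero_of_lt_one l0.le D.lam_lt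
  have d1 : Tendsto (fun k : ℕ => deriv (D.α ^ k * μ : Perm ℝ) D.ap / D.lam ^ k) atTop
      (𝓝 (exp (D.Dl D.an (μ D.ap) D.ap) * deriv μ D.ap)) := by
    have := D.ld_αk_tendsto hc0 hμ1 (p := fun _ => μ D.ap)
      (Eventually.of_forall fun k => ⟨hw'.1.le, hw'.2.le⟩) tendsto_const_nhds
    have := ((continuous_exp.tendsto _).comp this).mul_const (deriv μ D.ap)
    refine this.congr fun k => ?_
    have e : deriv (D.α ^ k * μ : Perm ℝ) D.ap
        = deriv (D.α ^ k : Perm ℝ) (μ D.ap) * deriv μ D.ap := by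
      have : (⇑(D.α ^ k * μ)) = (D.α ^ k : Perm ℝ) ∘ μ := rfl
      rw [this, deriv_comp _ ((D.good _ (D.αkG k)).diff _) ((D.good _ hμ).diff _)]
    rw [e, comp_apply, exp_sub, (D.good _ (D.αkG k)).exp_ld, mul_comm (k:ℝ), exp_mul,
      exp_log l0, rpow_natCast]
    ring
  have d2 : Tendsto (fun k : ℕ => D.σ y1 ((D.α ^ k) (μ D.ap)) - D.σ D.an ((D.α ^ k) (μ D.ap)))
      atTop (𝓝 (D.σ y1 D.ap - D.σ D.an D.ap)) :=
    ((D.σ_cont y1L hap).sub (D.σ_cont D.anL D.ap_mem)).tendsto.comp lim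
  have d3 : Tendsto (fun k : ℕ => c * (Z ((D.swap.α ^ k) x1 - 1) ^ 2 - Z D.an ^ 2) / D.lam ^ k)
      atTop (𝓝 0) := by
    have := (d2.mul ((d1.pow 2))).mul tl
    rw [mul_zero] at this
    refine this.congr' ?_
    filter_upwards [key] with k hk
    rw [← hk]
    have : D.lam ^ k ≠ 0 := (pow_pos l0 k).ne'
    field_simp
  -- the same limit by differentiating `Z ^ 2` at `an`
  have dZ : HasDerivAt Z (exp (D.swap.Dl D.swap.an (μ⁻¹ D.an + 1) D.swap.ap)
      * deriv (μ⁻¹ : Perm ℝ) D.an) D.an := by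
    have := (D.swap.X_hasDeriv (x := μ⁻¹ D.an + 1) hμan)
    exact HasDerivAt.comp D.an this ((gμi.hd D.an).add_const 1)
  have dX : HasDerivAt (fun y => D.swap.X (y + 1)) 1 D.an := by
    have := (D.swap.X_hasDeriv D.swap.ap_mem)
    rw [sw1] at this
    have := HasDerivAt.comp D.an this ((hasDerivAt_id D.an).add_const 1)
    refine this.congr_deriv ?_
    rw [D.swap.Dl_self]; simp
  have ne1 : ∀ k : ℕ, (D.swap.α ^ k) x1 - 1 ≠ D.an := by
    intro k hk
    have : (D.swap.α ^ k) x1 = (D.swap.α ^ k) D.swap.ap := by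
      rw [D.swap.αk_ap, sw1]; linarith
    exact nx1 ((D.swap.α ^ k).injective this)
  have lim2 : Tendsto (fun k : ℕ => (D.swap.α ^ k) x1 - 1) atTop (𝓝[≠] D.an) := by
    refine tendsto_nhdsWithin_iff.2 ⟨?_, Eventually.of_forall ne1⟩
    simpa [sw1] using (D.swap.αk_lim hx1).sub_const 1
  have sl1 := (hasDerivAt_iff_tendsto_slope.1 (dZ.pow 2)).comp lim2
  have sl2 := (hasDerivAt_iff_tendsto_slope.1 dX).comp lim2
  have hXk : ∀ k : ℕ, D.swap.X ((D.swap.α ^ k) x1) = D.lam ^ k * D.swap.X x1 := by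
    intro k
    rw [D.swap.X_αk (by rw [sw2]; exact hx1), swap_lam']
  have quot := ((sl1.div sl2 one_ne_zero).mul_const (D.swap.X x1)).const_mul c
  have fin := tendsto_nhds_unique (quot.congr fun k => ?_) d3
  · have hp1 := exp_pos (D.swap.Dl D.swap.an (μ⁻¹ D.an + 1) D.swap.ap)
    have hp2 := gμi.dpos D.an
    have hZan : Z D.an ≠ 0 := by
      refine D.swap.X_ne (by rw [sw2]; exact hμan) fun h => ?_
      rw [sw1] at h
      have h' : (μ⁻¹ : Perm ℝ) D.an = D.an := by linarith
      rw [Equiv.Perm.inv_eq_iff_eq] at h'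
      exact hμ2 h'.symm
    by_contra hc
    have := mul_ne_zero hc (mul_ne_zero (mul_ne_zero (mul_ne_zero two_ne_zero hZan)
      (mul_ne_zero hp1.ne' hp2.ne')) X1)
    apply this
    rw [← fin]
    push_cast
    ring
  · have hX0 : D.swap.X (D.an + 1) = 0 := D.swap.X_ap
    have : D.lam ^ k ≠ 0 := (pow_pos l0 k).ne'
    have n := sub_ne_zero.2 (ne1 k)
    simp only [comp_apply, Pi.div_apply, slope_def_field, sub_add_cancel, hXk, hX0, sub_zero, Pi.pow_apply]
    field_simp

/-- The projective connections `σ y` all agree on the limit set. -/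
lemma σ_eq {x y y' : ℝ} (hx : x ∈ D.L) (hy : y ∈ D.L) (hy' : y' ∈ D.L) (h : x ∈ Arc y)
    (h' : x ∈ Arc y') : D.σ y x = D.σ y' x := by
  refine tendsto_nhds_unique_of_frequently_eq (l := 𝓝[D.L] x) (D.σ_cont hy h).continuousWithinAt
    (D.σ_cont hy' h').continuousWithinAt ?_
  refine ((D.freq_ap hx).and_eventually (nhdsWithin_le_nhds
    (inter_mem (Ioo_mem_nhds h.1 h.2) (Ioo_mem_nhds h'.1 h'.2)))).mono ?_
  rintro x' ⟨⟨ν, hν, rfl⟩, m1, m2⟩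
  have hνi := inv_mem hν
  have t : ∀ y ∈ D.L, ν D.ap ∈ Arc y → D.σ y (ν D.ap)
      = D.σ D.an D.ap * deriv (ν⁻¹ : Perm ℝ) (ν D.ap) ^ 2
        + (deriv (deriv (ld (ν⁻¹ : Perm ℝ))) (ν D.ap)
          - 1/2 * deriv (ld (ν⁻¹ : Perm ℝ)) (ν D.ap) ^ 2) := by
    intro y hy m
    have i := D.inv_mem_Ioo' hν m
    rw [sub_add_cancel] at i
    rw [← D.σ_equiv hνi hy m, pinv, D.σ_ap (D.LG _ hνi _ hy) i]
  rw [t y hy m1, t y' hy' m2]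

end Dyn

/-! ### Moderate families of smooth functions of two variables -/

/-- The coordinate directions of the plane. -/
def ev : Bool → ℝ × ℝ
  | false => (1, 0)
  | true => (0, 1)
/-- The coordinates of a point of the plane. -/
def pr : Bool → ℝ × ℝ →L[ℝ] ℝ
  | false => ContinuousLinearMap.fst ℝ ℝ ℝ
  | true => ContinuousLinearMap.snd ℝ ℝ ℝ
/-- Partial derivative. -/
def dv (b : Bool) (f : ℝ × ℝ → ℝ) (p : ℝ × ℝ) : ℝ := fderiv ℝ f p (ev b)

/-- Iterated partial derivative along a word. -/
def Dw : List Bool → (ℝ × ℝ → ℝ) → (ℝ × ℝ → ℝ)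
  | [], f => f
  | b :: w, f => dv b (Dw w f)

lemma fderiv_eq_dv (f : ℝ × ℝ → ℝ) (p : ℝ × ℝ) : fderiv ℝ f p = dv false f p • pr false + dv true f p • pr true := by
  ext <;> simp [dv, ev, pr]

section
variable {O : Set (ℝ × ℝ)} {f g : ℝ × ℝ → ℝ}

/-- A family of functions closed under partial differentiation consists of smooth functions. -/
lemma smooth_of_jets (hO : IsOpen O) {G : List Bool → ℝ × ℝ → ℝ} (h : ∀ w, ∀ p ∈ O, DifferentiableAt ℝ (G w) p)
    (hd : ∀ w, ∀ p ∈ O, ∀ b, dv b (G w) p = G (b :: w) p) : ContDiffOn ℝ ∞ (G []) O := by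
  have sm : ∀ n : ℕ, ∀ w, ContDiffOn ℝ n (G w) O := by
    intro n
    induction n with
    | zero => exact fun w => contDiffOn_zero.2 fun p hp => (h w p hp).continuousAt.continuousWithinAt
    | succ n ih =>
      intro w
      rw [show ((n + 1 : ℕ) : WithTop ℕ∞) = n + 1 by simp, contDiffOn_succ_iff_fderiv_of_isOpen hO]
      refine ⟨fun p hp => (h w p hp).differentiableWithinAt, by simp, ?_⟩
      refine (((ih (false :: w)).smul (contDiffOn_const (c := pr false))).add
        ((ih (true :: w)).smul (contDiffOn_const (c := pr true)))).congr fun p hp => ?_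
      rw [fderiv_eq_dv, hd w p hp, hd w p hp]; rfl
  exact contDiffOn_infty.2 fun n => sm n []

lemma smooth_diff (hO : IsOpen O) (h : ContDiffOn ℝ ∞ f O) {p} (hp : p ∈ O) :
    DifferentiableAt ℝ f p :=
  (h.contDiffAt (hO.mem_nhds hp)).differentiableAt (by simp)
lemma Dw_smooth (hO : IsOpen O) (h : ContDiffOn ℝ ∞ f O) : ∀ w, ContDiffOn ℝ ∞ (Dw w f) O
  | [] => h
  | _ :: w => ((Dw_smooth hO h w).fderiv_of_isOpen hO (by simp)).clm_apply contDiffOn_const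

lemma Dw_congr (hO : IsOpen O) (h : EqOn f g O) : ∀ w, EqOn (Dw w f) (Dw w g) O
  | [] => h
  | _ :: w => fun p hp => by
      simp only [Dw, dv, ((Dw_congr hO h w).eventuallyEq_of_mem (hO.mem_nhds hp)).fderiv_eq]

lemma Dw_add (hO : IsOpen O) (hf : ContDiffOn ℝ ∞ f O) (hg : ContDiffOn ℝ ∞ g O) :
    ∀ w, EqOn (Dw w (fun p => f p + g p)) (fun p => Dw w f p + Dw w g p) O
  | [] => fun _ _ => rfl
  | _ :: w => fun p hp => by
      simp only [Dw, dv, ((Dw_add hO hf hg w).eventuallyEq_of_mem (hO.mem_nhds hp)).fderiv_eq, add_apply,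
        fderiv_fun_add (smooth_diff hO (Dw_smooth hO hf w) hp) (smooth_diff hO (Dw_smooth hO hg w) hp)]

lemma Dw_sub (hO : IsOpen O) (hf : ContDiffOn ℝ ∞ f O) (hg : ContDiffOn ℝ ∞ g O) :
    ∀ w, EqOn (Dw w (fun p => f p - g p)) (fun p => Dw w f p - Dw w g p) O
  | [] => fun _ _ => rfl
  | _ :: w => fun p hp => by
      simp only [Dw, dv, ((Dw_sub hO hf hg w).eventuallyEq_of_mem (hO.mem_nhds hp)).fderiv_eq, sub_apply,
        fderiv_fun_sub (smooth_diff hO (Dw_smooth hO hf w) hp) (smooth_diff hO (Dw_smooth hO hg w) hp)]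
end

/-- Index data for a family of functions on small squares: the square around `q i` of radius `ε i`,
inside the open set `O i` on which the functions are smooth. -/
structure Fam (ι : Type) where
  ε : ι → ℝ
  q : ι → ℝ × ℝ
  O : ι → Set (ℝ × ℝ)
  pos : ∀ i, 0 < ε i
  le : ∀ i, ε i ≤ 1
  op : ∀ i, IsOpen (O i)
  sub : ∀ i p, |p.1 - (q i).1| ≤ ε i → |p.2 - (q i).2| ≤ ε i → p ∈ O i

namespace Fam
variable {ι : Type} (A : Fam ι)

/-- The square around `q i`. -/
def K (i : ι) : Set (ℝ × ℝ) := {p | |p.1 - (A.q i).1| ≤ A.ε i ∧ |p.2 - (A.q i).2| ≤ A.ε i}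

lemma KO {i p} (h : p ∈ A.K i) : p ∈ A.O i := A.sub i p h.1 h.2
lemma qK (i) : A.q i ∈ A.K i := by
  constructor <;> simp [(A.pos i).le]

/-- Bounded on the squares by a power of `1 / ε`. -/
def B0 (f : ι → ℝ × ℝ → ℝ) : Prop :=
  ∃ B : ℝ, ∃ M : ℕ, 0 ≤ B ∧ ∀ i, ∀ p ∈ A.K i, |f i p| ≤ B * (A.ε i)⁻¹ ^ M

/-- Partial derivatives up to order `k` exist and are moderate. -/
def Mo : ℕ → (ι → ℝ × ℝ → ℝ) → Prop
  | 0, f => A.B0 f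
  | k + 1, f => A.B0 f ∧ (∀ i, ∀ p ∈ A.O i, DifferentiableAt ℝ (f i) p) ∧ ∀ b, Mo k fun i => dv b (f i)

/-- Moderate smooth families. -/
def MS (f : ι → ℝ × ℝ → ℝ) : Prop := ∀ k, A.Mo k f

/-- Families that are smaller than every power of `ε`. -/
def Neg (f : ι → ℝ × ℝ → ℝ) : Prop :=
  ∀ N : ℕ, ∃ C : ℝ, 0 ≤ C ∧ ∀ i, ∀ p ∈ A.K i, |f i p| ≤ C * A.ε i ^ N

variable {A} {f g : ι → ℝ × ℝ → ℝ}

lemma one_le_inv (i : ι) : 1 ≤ (A.ε i)⁻¹ := (one_le_inv₀ (A.pos i)).2 (A.le i)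

lemma Mo.pred : ∀ {k f}, A.Mo (k + 1) f → A.Mo k f
  | 0, _, h => h.1
  | _ + 1, _, h => ⟨h.1, h.2.1, fun b => (h.2.2 b).pred⟩

lemma B0.congr (h : A.B0 f) (e : ∀ i, EqOn (g i) (f i) (A.O i)) : A.B0 g := by
  obtain ⟨B, M, hB, h⟩ := h
  exact ⟨B, M, hB, fun i p hp => by rw [e i (A.KO hp)]; exact h i p hp⟩

lemma Mo.congr : ∀ {k f g}, A.Mo k f → (∀ i, EqOn (g i) (f i) (A.O i)) → A.Mo k g
  | 0, _, _, h, e => B0.congr h e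
  | _ + 1, _, _, h, e => ⟨B0.congr h.1 e, fun i p hp =>
      (h.2.1 i p hp).congr_of_eventuallyEq ((e i).eventuallyEq_of_mem ((A.op i).mem_nhds hp)),
      fun b => (h.2.2 b).congr fun i => Dw_congr (A.op i) (e i) [b]⟩

lemma MS.congr (h : A.MS f) (e : ∀ i, EqOn (g i) (f i) (A.O i)) : A.MS g := fun k => (h k).congr e

lemma MS.diff (h : A.MS f) {i p} (hp : p ∈ A.O i) : HasFDerivAt (f i) (fderiv ℝ (f i) p) p :=
  ((h 1).2.1 i p hp).hasFDerivAt
lemma MS.b0 (h : A.MS f) : A.B0 f := h 0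
lemma MS.dv (h : A.MS f) (b : Bool) : A.MS fun i => dv b (f i) := fun k => (h (k + 1)).2.2 b
lemma MS.Dw (h : A.MS f) : ∀ w, A.MS fun i => Dw w (f i)
  | [] => h
  | b :: w => (h.Dw w).dv b
lemma MS.smooth (h : A.MS f) (i : ι) : ContDiffOn ℝ ∞ (f i) (A.O i) :=
  smooth_of_jets (G := fun w => AP.Dw w (f i)) (A.op i) (fun w _ hp => ((h.Dw w).diff hp).differentiableAt)
    fun _ _ _ _ => rfl

lemma B0.add (hf : A.B0 f) (hg : A.B0 g) : A.B0 fun i p => f i p + g i p := by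
  obtain ⟨B, M, hB, hf⟩ := hf
  obtain ⟨B', M', hB', hg⟩ := hg
  refine ⟨B + B', max M M', by positivity, fun i p hp => ?_⟩
  have h1 := pow_le_pow_right₀ (one_le_inv (A := A) i) (le_max_left M M')
  have h2 := pow_le_pow_right₀ (one_le_inv (A := A) i) (le_max_right M M')
  calc _ ≤ |f i p| + |g i p| := abs_add_le _ _
    _ ≤ B * (A.ε i)⁻¹ ^ M + B' * (A.ε i)⁻¹ ^ M' := add_le_add (hf i p hp) (hg i p hp)
    _ ≤ B * (A.ε i)⁻¹ ^ (max M M') + B' * (A.ε i)⁻¹ ^ (max M M') := by gcongr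
    _ = _ := by ring

lemma B0.mul (hf : A.B0 f) (hg : A.B0 g) : A.B0 fun i p => f i p * g i p := by
  obtain ⟨B, M, hB, hf⟩ := hf
  obtain ⟨B', M', hB', hg⟩ := hg
  refine ⟨B * B', M + M', by positivity, fun i p hp => ?_⟩
  rw [abs_mul]
  calc _ ≤ (B * (A.ε i)⁻¹ ^ M) * (B' * (A.ε i)⁻¹ ^ M') :=
        mul_le_mul (hf i p hp) (hg i p hp) (abs_nonneg _) ((abs_nonneg _).trans (hf i p hp))
    _ = _ := by ring

lemma Mo.of_D {L : ι → ℝ × ℝ → ℝ × ℝ →L[ℝ] ℝ} {k : ℕ} (h0 : A.B0 f)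
    (h : ∀ i, ∀ p ∈ A.O i, HasFDerivAt (f i) (L i p) p) (h1 : ∀ b, A.Mo k fun i p => L i p (ev b)) :
    A.Mo (k + 1) f :=
  ⟨h0, fun i p hp => (h i p hp).differentiableAt, fun b => (h1 b).congr fun i p hp => by
    rw [AP.dv, (h i p hp).fderiv]⟩

/-- A family with moderate values whose partial derivatives are moderate smooth families is one. -/
lemma MS.of_D {L : ι → ℝ × ℝ → ℝ × ℝ →L[ℝ] ℝ} (h0 : A.B0 f)
    (h : ∀ i, ∀ p ∈ A.O i, HasFDerivAt (f i) (L i p) p) (h1 : ∀ b, A.MS fun i p => L i p (ev b)) : A.MS f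
  | 0 => h0
  | k + 1 => Mo.of_D h0 h fun b => h1 b k

lemma Mo.add : ∀ {k f g}, A.Mo k f → A.Mo k g → A.Mo k fun i p => f i p + g i p
  | 0, _, _, hf, hg => B0.add hf hg
  | _ + 1, _, _, hf, hg => Mo.of_D (hf.1.add hg.1)
      (fun i p hp => (hf.2.1 i p hp).hasFDerivAt.add (hg.2.1 i p hp).hasFDerivAt)
      fun b => (hf.2.2 b).add (hg.2.2 b)

lemma MS.add (hf : A.MS f) (hg : A.MS g) : A.MS fun i p => f i p + g i p := fun k => (hf k).add (hg k)

lemma Mo.mul : ∀ {k f g}, A.Mo k f → A.Mo k g → A.Mo k fun i p => f i p * g i p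
  | 0, _, _, hf, hg => B0.mul hf hg
  | _ + 1, _, _, hf, hg => Mo.of_D (hf.1.mul hg.1)
      (fun i p hp => (hf.2.1 i p hp).hasFDerivAt.mul (hg.2.1 i p hp).hasFDerivAt)
      fun b => (hf.pred.mul (hg.2.2 b)).add (hg.pred.mul (hf.2.2 b))

lemma MS.mul (hf : A.MS f) (hg : A.MS g) : A.MS fun i p => f i p * g i p := fun k => (hf k).mul (hg k)

lemma Mo.zero : ∀ k, A.Mo k fun _ _ => 0
  | 0 => ⟨0, 0, le_rfl, by simp⟩
  | k + 1 => Mo.of_D (L := 0) ⟨0, 0, le_rfl, by simp⟩ (fun _ p _ => hasFDerivAt_const 0 p) fun _ => Mo.zero k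

lemma MS.const {c : ι → ℝ} (h : A.B0 fun i _ => c i) : A.MS fun i _ => c i :=
  MS.of_D (L := 0) h (fun i p _ => hasFDerivAt_const (c i) p) fun _ => Mo.zero

lemma B0.of_bound {B : ℝ} (h : ∀ i, ∀ p ∈ A.K i, |f i p| ≤ B) : A.B0 f :=
  ⟨|B|, 0, abs_nonneg _, fun i p hp => by simpa using (h i p hp).trans (le_abs_self B)⟩

lemma MS.const' (c : ℝ) : A.MS fun _ _ => c := MS.const (B0.of_bound (B := |c|) fun _ _ _ => le_rfl)

lemma MS.sub (hf : A.MS f) (hg : A.MS g) : A.MS fun i p => f i p - g i p :=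
  (hf.add ((MS.const' (-1)).mul hg)).congr fun i p _ => by ring

lemma bdd_of_cont {h : ℝ → ℝ} (hh : Continuous h) (B : ℝ) : ∃ C, ∀ t, |t| ≤ B → |h t| ≤ C := by
  obtain ⟨C, hC⟩ := (isCompact_Icc (a := -B) (b := B)).exists_bound_of_continuousOn hh.continuousOn
  exact ⟨C, fun t ht => hC t (abs_le.1 ht)⟩

lemma MS.comp (hf : A.MS f) {B : ℝ} (hB : ∀ i, ∀ p ∈ A.K i, |f i p| ≤ B) {h : ℝ → ℝ}
    (hh : ContDiff ℝ ∞ h) : A.MS fun i p => h (f i p) := by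
  intro k
  have b0 : ∀ h : ℝ → ℝ, ContDiff ℝ ∞ h → A.B0 fun i p => h (f i p) := fun h hh => by
    obtain ⟨C, hC⟩ := bdd_of_cont hh.continuous B
    exact B0.of_bound fun i p hp => hC _ (hB i p hp)
  induction k generalizing h with
  | zero => exact b0 h hh
  | succ k ih =>
    exact Mo.of_D (b0 h hh) (fun i p hp => HasDerivAt.comp_hasFDerivAt p
      (hh.contDiffAt.differentiableAt (by simp)).hasDerivAt (hf.diff hp))
      fun b => (ih (contDiff_infty_iff_deriv.1 hh).2).mul (hf.dv b k)

lemma pr_F {h : ℝ → ℝ} {h' : ℝ} {p : ℝ × ℝ} (b : Bool) (hd : HasDerivAt h h' (pr b p)) :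
    HasFDerivAt (fun p => h (pr b p)) (h' • pr b) p := hd.comp_hasFDerivAt p (pr b).hasFDerivAt

/-- Functions of one variable with a moderate sequence of derivatives. -/
lemma MS.of_pr {h : ι → ℕ → ℝ → ℝ} (b : Bool)
    (hd : ∀ i j, ∀ p ∈ A.O i, HasDerivAt (h i j) (h i (j + 1) (pr b p)) (pr b p))
    (hb : ∀ j, A.B0 fun i p => h i j (pr b p)) (j : ℕ) : A.MS fun i p => h i j (pr b p) := by
  intro k
  induction k generalizing j with
  | zero => exact hb j
  | succ k ih =>
    exact Mo.of_D (hb j) (fun i p hp => pr_F b (hd i j p hp))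
      fun c => (ih (j + 1)).mul (MS.const' (pr b (ev c)) k)

lemma Neg.mul_left (hg : A.Neg g) (hf : A.B0 f) : A.Neg fun i p => f i p * g i p := fun N => by
  obtain ⟨B, M, h0, h⟩ := hf
  obtain ⟨C', h0', h'⟩ := hg (N + M)
  refine ⟨B * C', by positivity, fun i p hp => ?_⟩
  rw [abs_mul]
  have := A.pos i
  calc _ ≤ (B * (A.ε i)⁻¹ ^ M) * (C' * A.ε i ^ (N + M)) :=
        mul_le_mul (h i p hp) (h' i p hp) (abs_nonneg _) ((abs_nonneg _).trans (h i p hp))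
    _ = _ := by rw [pow_add, inv_pow]; field_simp

/-- One variable interpolation: a small function with controlled second derivative has a small
derivative at an end point of an interval. -/
lemma interp {h h' h'' : ℝ → ℝ} {t Bd d : ℝ} (ht : 0 < t) (h1 : ∀ r ∈ Icc 0 t, HasDerivAt h (h' r) r)
    (h2 : ∀ r ∈ Icc 0 t, HasDerivAt h' (h'' r) r) (hb : ∀ r ∈ Icc 0 t, |h'' r| ≤ Bd)
    (hd : ∀ r ∈ Icc 0 t, |h r| ≤ d) : |h' 0| ≤ 2 * d / t + Bd * t := by
  have e1 : ∀ r ∈ Icc 0 t, |h' r - h' 0| ≤ Bd * t := by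
    intro r hr
    have := (convex_Icc 0 t).norm_image_sub_le_of_norm_hasDerivWithin_le (f' := h'')
      (fun r hr => (h2 r hr).hasDerivWithinAt) hb (left_mem_Icc.2 ht.le) hr
    rw [sub_zero, norm_eq_abs, norm_eq_abs, abs_of_nonneg hr.1] at this
    exact this.trans (mul_le_mul_of_nonneg_left hr.2 ((abs_nonneg _).trans (hb r hr)))
  have e2 := (convex_Icc 0 t).norm_image_sub_le_of_norm_hasDerivWithin_le
      (f := fun r => h r - h' 0 * r) (f' := fun r => h' r - h' 0)
      (fun r hr => ((h1 r hr).sub (by simpa using (hasDerivAt_id r).const_mul (h' 0))).hasDerivWithinAt)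
      e1 (left_mem_Icc.2 ht.le) (right_mem_Icc.2 ht.le)
  simp only [mul_zero, sub_zero, norm_eq_abs, abs_of_pos ht] at e2
  have e3 := abs_le.1 (hd 0 (left_mem_Icc.2 ht.le))
  have e4 := abs_le.1 (hd t (right_mem_Icc.2 ht.le))
  rw [abs_le] at e2
  have e5 : |h' 0 * t| ≤ Bd * t * t + d + d := abs_le.2 ⟨by linarith, by linarith⟩
  rw [abs_mul, abs_of_pos ht] at e5
  rw [show 2 * d / t + Bd * t = (Bd * t * t + d + d) / t by field_simp; ring, le_div_iff₀ ht]
  exact e5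

lemma exists_sign {a q e : ℝ} (h : |a - q| ≤ e) : ∃ s : ℝ, |s| = 1 ∧ ∀ r ∈ Icc (0:ℝ) e, |a + s * r - q| ≤ e := by
  rw [abs_le] at h
  by_cases h0 : a ≤ q
  · exact ⟨1, by simp, fun r hr => abs_le.2 ⟨by linarith [hr.1], by linarith [hr.2]⟩⟩
  · exact ⟨-1, by simp, fun r hr => abs_le.2 ⟨by linarith [hr.2], by linarith [hr.1]⟩⟩

lemma neg_aux {f f' : ι → ℝ × ℝ → ℝ} (hf : A.Neg f) (h : ∃ B : ℝ, ∃ M : ℕ, 0 ≤ B ∧ ∀ i, ∀ p ∈ A.K i,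
    ∀ t, 0 < t → t ≤ A.ε i → ∀ d, (∀ p ∈ A.K i, |f i p| ≤ d) →
      |f' i p| ≤ 2 * d / t + B * (A.ε i)⁻¹ ^ M * t) : A.Neg f' := fun N => by
  obtain ⟨B, M, B0, h⟩ := h
  obtain ⟨C, C0, hC⟩ := hf (N + (N + M + 1))
  refine ⟨2 * C + B, by positivity, fun i p hp => ?_⟩
  have e0 := A.pos i
  refine (h i p hp (A.ε i ^ (N + M + 1)) (by positivity)
    (pow_le_of_le_one e0.le (A.le i) (by omega)) _ (hC i)).trans ?_
  have : 2 * (C * A.ε i ^ (N + (N + M + 1))) / A.ε i ^ (N + M + 1) = 2 * C * A.ε i ^ N := by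
    rw [pow_add _ N]; field_simp
  rw [this]
  have e2 : B * (A.ε i)⁻¹ ^ M * A.ε i ^ (N + M + 1) = B * A.ε i ^ (N + 1) := by
    rw [show N + M + 1 = M + (N + 1) by ring, pow_add _ M, inv_pow]; field_simp
  rw [e2, add_mul]
  refine add_le_add le_rfl ?_
  exact mul_le_mul_of_nonneg_left (pow_le_pow_of_le_one e0.le (A.le i) (Nat.le_succ N)) B0

lemma Neg.dv (hm : A.MS f) (hf : A.Neg f) (b : Bool) : A.Neg fun i => dv b (f i) := by
  obtain ⟨B, M, B0, hB⟩ := ((hm.dv b).dv b).b0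
  refine neg_aux hf ⟨B, M, B0, fun i p hp t ht hte d hd => ?_⟩
  obtain ⟨s, hs, inK⟩ : ∃ s : ℝ, |s| = 1 ∧ ∀ r ∈ Icc 0 t, p + r • s • ev b ∈ A.K i := by
    cases b
    · obtain ⟨s, hs, h⟩ := exists_sign hp.1
      exact ⟨s, hs, fun r hr => ⟨by simpa [ev, mul_comm] using h r ⟨hr.1, hr.2.trans hte⟩, by simpa [ev] using hp.2⟩⟩
    · obtain ⟨s, hs, h⟩ := exists_sign hp.2
      exact ⟨s, hs, fun r hr => ⟨by simpa [ev] using hp.1, by simpa [ev, mul_comm] using h r ⟨hr.1, hr.2.trans hte⟩⟩⟩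
  have der : ∀ {g}, A.MS g → ∀ r ∈ Icc 0 t, HasDerivAt (fun r => g i (p + r • s • ev b))
      (s * AP.dv b (g i) (p + r • s • ev b)) r := fun hg r hr => by
    have := (hg.diff (A.KO (inK r hr))).comp_hasDerivAt r (((hasDerivAt_id r).smul_const (s • ev b)).const_add p)
    simp only [one_smul, map_smul] at this
    exact this
  have := interp (Bd := B * (A.ε i)⁻¹ ^ M) ht (der hm) (fun r hr => (der (hm.dv b) r hr).const_mul s)
    (fun r hr => by rw [abs_mul, abs_mul, hs, one_mul, one_mul]; exact hB i _ (inK r hr))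
    (fun r hr => hd _ (inK r hr))
  simpa [abs_mul, hs] using this

/-- A moderate smooth family with negligible values has negligible derivatives. -/
lemma Neg.Dw (hm : A.MS f) (hf : A.Neg f) : ∀ w, A.Neg fun i => Dw w (f i)
  | [] => hf
  | b :: w => Neg.dv (hm.Dw w) (Neg.Dw hm hf w) b

end Fam

/-- Gluing: if `U q = F q q` where the smooth germs `F q` agree with `F p` at `q` up to `o(|q - p|)`
with all derivatives, then `U` is smooth. -/
lemma glue {Ω : Set (ℝ × ℝ)} (hΩ : IsOpen Ω) (F : ℝ × ℝ → ℝ × ℝ → ℝ) (O : ℝ × ℝ → Set (ℝ × ℝ))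
    (hO : ∀ p ∈ Ω, IsOpen (O p) ∧ p ∈ O p ∧ ContDiffOn ℝ ∞ (F p) (O p))
    (h : ∀ p ∈ Ω, ∀ w, ∃ C : ℝ, ∀ᶠ q in 𝓝 p, |Dw w (F q) q - Dw w (F p) q| ≤ C * dist q p ^ 2) :
    ContDiffOn ℝ ∞ (fun q => F q q) Ω := by
  have key : ∀ w, ∀ p ∈ Ω, HasFDerivAt (fun q => Dw w (F q) q) (fderiv ℝ (Dw w (F p)) p) p := by
    intro w p hp
    obtain ⟨ho, hpo, hs⟩ := hO p hp
    obtain ⟨C, hC⟩ := h p hp w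
    have h2 : HasFDerivAt (fun q => Dw w (F q) q - Dw w (F p) q) (0 : ℝ × ℝ →L[ℝ] ℝ) p := by
      have : (fun q => Dw w (F q) q - Dw w (F p) q) =O[𝓝 p] fun q => ‖q - p‖ ^ 2 := by
        refine Asymptotics.IsBigO.of_bound C ?_
        filter_upwards [hC] with q hq
        rwa [norm_pow, norm_norm, ← dist_eq_norm]
      exact this.hasFDerivAt one_lt_two
    have := (smooth_diff ho (Dw_smooth ho hs w) hpo).hasFDerivAt.fun_add h2
    simpa only [add_zero, add_sub_cancel] using this
  exact smooth_of_jets (G := fun w q => Dw w (F q) q) hΩ (fun w p hp => (key w p hp).differentiableAt)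
    fun w p hp b => by rw [dv, (key w p hp).fderiv]; rfl

/-! ### Invariant potentials over the limit set -/

/-- A family of potentials `u η` on `(η, η + 1)` for `η ∈ L`, with all its derivatives
(`u η j` is the `j`-th one), such that `exp (u η x) dx dη` is formally `G`-invariant. -/
structure Half (L : Set ℝ) (G : Subgroup (Perm ℝ)) where
  u : ℝ → ℕ → ℝ → ℝ
  der : ∀ η ∈ L, ∀ j, ∀ x ∈ Arc η, HasDerivAt (u η j) (u η (j + 1) x) x
  bd : ∀ j, ∀ c > 0, ∃ C, ∀ η ∈ L, ∀ x ∈ Mid c η, |u η j x| ≤ C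
  inv : ∀ F ∈ G, ∀ η ∈ L, ∀ x ∈ Arc η, u (F η) 0 (F x) + ld F x + ld F η = u η 0 x
  int_inv : ∀ F ∈ G, ∀ η ∈ L, ∀ a ∈ Arc η, ∀ b ∈ Arc η,
    (∫ t in (F a)..(F b), exp (u (F η) 0 t)) * deriv F η = ∫ t in a..b, exp (u η 0 t)
  sig : ∀ η ∈ L, ∀ η' ∈ L, ∀ x ∈ L, x ∈ Arc η → x ∈ Arc η' →
    u η 2 x - (u η 1 x) ^ 2 / 2 = u η' 2 x - (u η' 1 x) ^ 2 / 2
  bl1 : ∀ η ∈ L, ∀ x ∈ Arc η, ∀ R : ℝ, ∃ δ > 0, ∀ η' ∈ L, η - δ < η' → η' < η →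
    R ≤ ∫ t in η..x, exp (u η' 0 t)
  bl2 : ∀ η ∈ L, ∀ x ∈ Arc η, ∀ R : ℝ, ∃ δ > 0, ∀ η' ∈ L, η < η' → η' < η + δ →
    R ≤ ∫ t in x..(η + 1), exp (u η' 0 t)

/-- Two families of potentials, one in each variable, which agree on `L × L` and satisfy there the
integrated constant curvature relation `star`, together with the expanding maps `g η k`. -/
structure Form where
  L : Set ℝ
  G : Subgroup (Perm ℝ)
  closed : IsClosed L
  per : ∀ y ∈ L, ∀ m : ℤ, y + m ∈ L
  perfect : ∀ y ∈ L, ∀ ε > 0, ∃ y' ∈ L, y' ≠ y ∧ |y' - y| < ε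
  ne : L.Nonempty
  good : ∀ F ∈ G, Good F
  LG : ∀ F ∈ G, ∀ y ∈ L, F y ∈ L
  trG : ∀ m, tr m ∈ G
  hu : Half L G
  hw : Half L G
  κ : ℝ
  uw : ∀ η ∈ L, ∀ ζ ∈ L, ζ + 1 ∈ Arc η → hu.u η 0 (ζ + 1) = hw.u ζ 0 η
  star : ∀ y ∈ L, ∀ ζ ∈ L, ∀ ζ' ∈ L, ζ + 1 ∈ Arc y → ζ' + 1 ∈ Arc y →
    hw.u ζ 1 y - hw.u ζ' 1 y = κ * ∫ t in (ζ' + 1)..(ζ + 1), exp (hu.u y 0 t)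
  star' : ∀ y ∈ L, ∀ ζ ∈ L, ∀ ζ' ∈ L, ζ + 1 ∈ Arc y → ζ' + 1 ∈ Arc y →
    hu.u ζ 1 y - hu.u ζ' 1 y = κ * ∫ t in (ζ' + 1)..(ζ + 1), exp (hw.u y 0 t)
  g : ℝ → ℕ → Perm ℝ
  gG : ∀ η k, g η k ∈ G
  g0 : ∀ η, g η 0 = 1
  Λ : ℝ
  Λ1 : 1 < Λ
  glip : ∀ η k x x', |g η (k + 1) x - g η (k + 1) x'| ≤ Λ * |g η k x - g η k x'|
  θ : ℝ
  θ0 : 0 < θ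
  θ1 : θ < 1
  contr : ∀ c > 0, ∃ C, 0 < C ∧ ∀ y ∈ L, ∀ k, ∀ z ∈ Mid c y,
    ∀ z' ∈ Mid c y, |g y k z - g y k z'| ≤ C * θ ^ k * |z - z'|
  sep : ∀ c > 0, ∃ c' > 0, ∀ y ∈ L, ∀ k, ∀ z ∈ Mid c y,
    g y k z ∈ Mid c' (g y k y)
  expansive : ∃ r > 0, ∀ y ∈ L, ∀ y' ∈ L, y ≠ y' → ∃ k, r ≤ |g y k y - g y k y'|

namespace Form

lemma pm (A : Form) {l : ℝ} (h : l ∈ A.L) : l - 1 ∈ A.L := by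
  simpa [sub_eq_add_neg] using A.per l h (-1)
lemma pp (A : Form) {l : ℝ} (h : l ∈ A.L) : l + 1 ∈ A.L := by simpa using A.per l h 1

/-- Exchange of the two variables, `(x, y) ↦ (y, x - 1)`. -/
def swap (A : Form) : Form :=
  { A with
    hu := A.hw
    hw := A.hu
    star := A.star'
    star' := A.star
    uw := by
      intro η hη ζ hζ h
      have h1 := A.pm hη
      have h2 := A.uw ζ hζ (η - 1) h1 ⟨by linarith [h.2], by linarith [h.1]⟩
      have h3 := A.hw.inv (tr 1) (A.trG 1) (η - 1) h1 ζ ⟨by linarith [h.1], by linarith [h.2]⟩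
      rw [ld_tr, ld_tr] at h3
      simp only [tr_apply, Int.cast_one, sub_add_cancel, add_zero] at h2 h3
      rw [h3, h2] }

end Form

namespace Dyn
variable {S : Type} (D : Dyn S) [Finite S]

/-- The expansion at the base point makes the mass of `exp (u t η) dt` infinite at both ends of
`(η, η + 1)`. -/
lemma mass_big {η x : ℝ} (hη : η ∈ D.L) (hx : x ∈ Arc η) (R : ℝ) :
    (∃ a ∈ Ioo η x, R ≤ ∫ t in a..x, exp (D.u t η)) ∧
    (∃ b ∈ Ioo x (η + 1), R ≤ ∫ t in x..b, exp (D.u t η)) := by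
  obtain ⟨c, hc, hc2, hxc⟩ := exists_c hx
  have hxc' : x ∈ Mid c η := ⟨hxc.1.le, hxc.2.le⟩
  obtain ⟨c', hc', hsep⟩ := D.sep c hc
  obtain ⟨C, hC⟩ := D.contr c hc
  obtain ⟨B, hB⟩ := D.u_bound c' hc'
  obtain ⟨B', hB'⟩ := D.u_bound (c' / 2) (by linarith)
  have hsep0 := fun k => hsep η hη k x hxc'
  set M := max C 1 with hM
  have hMp : 0 < M := lt_of_lt_of_le one_pos (le_max_right _ _)
  -- lower bound for the derivative at the expanding point
  have hder : ∀ k, exp (D.u x η - B) ≤ deriv (D.g η k) η * (M * D.θ ^ k) := by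
    intro k
    have h1 := D.u_inv (D.gG η k) hη hx
    have h2 := hB _ (D.gL hη k) _ (hsep0 k)
    have h3 : deriv (D.g η k) x ≤ M * D.θ ^ k :=
      (hC η hη k x hxc').trans (mul_le_mul_of_nonneg_right (le_max_left _ _) (pow_nonneg D.θ0.le _))
    have gg := D.good_g η k
    calc exp (D.u x η - B) ≤ exp (ld (D.g η k) η + ld (D.g η k) x) := by
          apply exp_le_exp.2
          have := (abs_le.1 h2).2
          change D.u ((D.g η k) x) ((D.g η k) η) ≤ B at this
          linarith
      _ = deriv (D.g η k) η * deriv (D.g η k) x := by rw [exp_add, gg.exp_ld, gg.exp_ld]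
      _ ≤ _ := mul_le_mul_of_nonneg_left h3 (gg.dpos _).le
  obtain ⟨k, hk⟩ : ∃ k : ℕ, D.θ ^ k < exp (D.u x η - B) / M * (c' / 4 * exp (-B')) / (|R| + 1) :=
    exists_pow_lt_of_lt_one (by positivity) D.θ1
  have hbig : |R| + 1 ≤ (c' / 4 * exp (-B')) * deriv (D.g η k) η := by
    have h1 := hder k
    rw [lt_div_iff₀ (by positivity), div_mul_eq_mul_div, lt_div_iff₀ hMp] at hk
    have hθ := pow_pos D.θ0 k
    have h2 : exp (D.u x η - B) * (c' / 4 * exp (-B')) ≤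
        deriv (D.g η k) η * (M * D.θ ^ k) * (c' / 4 * exp (-B')) :=
      by gcongr
    have h3 : (|R| + 1) * (M * D.θ ^ k) ≤
        (c' / 4 * exp (-B')) * deriv (D.g η k) η * (M * D.θ ^ k) := by nlinarith
    exact le_of_mul_le_mul_right h3 (by positivity)
  have hR : R ≤ |R| + 1 := by linarith [le_abs_self R]
  set F := D.g η k with hF
  have gg := D.good_g η k
  -- mass of a piece of definite size after zooming
  have piece : ∀ s t, s ≤ t → t - s = c' / 4 → F η + c' / 2 ≤ s → t ≤ F η + 1 - c' / 2 →
      |R| + 1 ≤ ∫ r in (F⁻¹ s)..(F⁻¹ t), exp (D.u r η) := by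
    intro s t hst e h1 h2
    have hs : F⁻¹ s ∈ Arc η := by
      refine ⟨gg.mono.lt_iff_lt.1 ?_, gg.mono.lt_iff_lt.1 ?_⟩
      · rw [← hF, pinv']; linarith
      · rw [gg.per, ← hF, pinv']; linarith
    have ht : F⁻¹ t ∈ Arc η := by
      refine ⟨gg.mono.lt_iff_lt.1 ?_, gg.mono.lt_iff_lt.1 ?_⟩
      · rw [← hF, pinv']; linarith
      · rw [gg.per, ← hF, pinv']; linarith
    rw [← D.int_inv (D.gG η k) hη hs ht, pinv', pinv']
    refine hbig.trans (mul_le_mul_of_nonneg_right ?_ (gg.dpos η).le)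
    have hyk := D.gL hη k
    have : ∫ r in s..t, exp (-B') ≤ ∫ r in s..t, exp (D.u r (F η)) := by
      refine intervalIntegral.integral_mono_on hst (by simp) (D.u_int hyk ⟨?_, ?_⟩ ⟨?_, ?_⟩) ?_
      · change F η < s; linarith
      · change s < F η + 1; linarith
      · change F η < t; linarith
      · change t < F η + 1; linarith
      · intro r hr
        apply exp_le_exp.2
        linarith [(abs_le.1 (hB' (F η) hyk r ⟨by linarith [hr.1], by linarith [hr.2]⟩)).1]
    rw [intervalIntegral.integral_const, smul_eq_mul, e] at this
    exact this
  have x1 : F η + c' ≤ F x := (hsep0 k).1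
  have x2 : F x ≤ F η + 1 - c' := (hsep0 k).2
  have sub : ∀ a b p q, η < p → p ≤ a → a ≤ b → b ≤ q → q < η + 1 →
      ∫ r in a..b, exp (D.u r η) ≤ ∫ r in p..q, exp (D.u r η) := by
    intro a b p q h0 h1 h2 h3 h4
    refine intervalIntegral.integral_mono_interval h1 h2 h3 (ae_of_all _ fun _ => (exp_pos _).le)
      (D.u_int hη ⟨h0, by linarith⟩ ⟨by linarith, h4⟩)
  have lt_of : ∀ a b, F a < F b → a < b := fun a b h => gg.mono.lt_iff_lt.1 h
  constructor
  · have h := piece (F η + c' / 2) (F η + 3 * c' / 4) (by linarith) (by ring) le_rfl (by linarith)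
    have a1 : η < F⁻¹ (F η + c' / 2) := lt_of _ _ (by rw [pinv']; linarith)
    have a2 : F⁻¹ (F η + c' / 2) < F⁻¹ (F η + 3 * c' / 4) := lt_of _ _ (by rw [pinv', pinv']; linarith)
    have a3 : F⁻¹ (F η + 3 * c' / 4) < x := lt_of _ _ (by rw [pinv']; linarith)
    exact ⟨_, ⟨a1, a2.trans a3⟩, hR.trans (h.trans (sub _ _ _ _ a1 le_rfl a2.le a3.le hx.2))⟩
  · have h := piece (F η + 1 - 3 * c' / 4) (F η + 1 - c' / 2) (by linarith) (by ring) (by linarith) le_rfl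
    have a1 : x < F⁻¹ (F η + 1 - 3 * c' / 4) := lt_of _ _ (by rw [pinv']; linarith)
    have a2 : F⁻¹ (F η + 1 - 3 * c' / 4) < F⁻¹ (F η + 1 - c' / 2) := lt_of _ _ (by rw [pinv', pinv']; linarith)
    have a3 : F⁻¹ (F η + 1 - c' / 2) < η + 1 := lt_of _ _ (by rw [pinv', gg.per]; linarith)
    exact ⟨_, ⟨a1.trans a2, a3⟩, hR.trans (h.trans (sub _ _ _ _ hx.1 a1.le a2.le le_rfl a3))⟩

/-- The potentials `u` of an expanding system as a `Half`. -/
def half : Half D.L D.G where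
  u η j x := if j = 0 then D.u x η else D.V η j x
  der η hη j x hx := by
    rcases j with _ | j
    · simpa using D.u_hasDeriv hη hx
    · simpa using D.V_hasDeriv hη hx (j + 1)
  bd j c hc := by
    rcases j with _ | j
    · simpa using D.u_bound c hc
    · simpa using D.V_bound (j + 1) c hc
  inv F hF η hη x hx := by simpa using D.u_inv hF hη hx
  int_inv F hF η hη a ha b hb := by simpa using D.int_inv hF hη ha hb
  sig η hη η' hη' x hx h h' := by
    have := D.σ_eq hx hη hη' h h'
    simp only [σ] at this
    simp only [OfNat.ofNat_ne_zero, one_ne_zero, if_false]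
    linarith
  bl1 η hη x hx R := by
    obtain ⟨a, ha, hm⟩ := (D.mass_big hη hx (R + 1)).1
    have t := D.int_cont hη (a := a) (b := x) ⟨ha.1, ha.2.trans hx.2⟩ hx
    have ev := t.eventually (lt_mem_nhds (lt_of_lt_of_le (by linarith) hm : R < _))
    rw [eventually_nhdsWithin_iff, Metric.eventually_nhds_iff] at ev
    obtain ⟨δ, hδ, ev⟩ := ev
    refine ⟨min δ (η + 1 - x), lt_min hδ (by linarith [hx.2]), fun η' h' h1 h2 => ?_⟩
    have b1 := min_le_left δ (η + 1 - x)
    have b2 := min_le_right δ (η + 1 - x)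
    have := ev (y := η') (by rw [dist_eq, abs_lt]; constructor <;> linarith) h'
    refine this.le.trans ?_
    simp only [if_true]
    exact intervalIntegral.integral_mono_interval ha.1.le ha.2.le le_rfl
      (ae_of_all _ fun _ => (exp_pos _).le)
      (D.u_int h' ⟨h2, by linarith [hx.1]⟩ ⟨by linarith [hx.1], by linarith⟩)
  bl2 η hη x hx R := by
    obtain ⟨b, hb, hm⟩ := (D.mass_big hη hx (R + 1)).2
    have t := D.int_cont hη (a := x) (b := b) hx ⟨hx.1.trans hb.1, hb.2⟩
    have ev := t.eventually (lt_mem_nhds (lt_of_lt_of_le (by linarith) hm : R < _))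
    rw [eventually_nhdsWithin_iff, Metric.eventually_nhds_iff] at ev
    obtain ⟨δ, hδ, ev⟩ := ev
    refine ⟨min δ (x - η), lt_min hδ (by linarith [hx.1]), fun η' h' h1 h2 => ?_⟩
    have b1 := min_le_left δ (x - η)
    have b2 := min_le_right δ (x - η)
    have := ev (y := η') (by rw [dist_eq, abs_lt]; constructor <;> linarith) h'
    refine this.le.trans ?_
    simp only [if_true]
    exact intervalIntegral.integral_mono_interval le_rfl hb.1.le hb.2.le
      (ae_of_all _ fun _ => (exp_pos _).le)
      (D.u_int h' ⟨by linarith, by linarith [hx.2]⟩ ⟨by linarith [hx.2], by linarith⟩)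

lemma exists_form : ∃ A : Form, A.L = D.L ∧ A.G = D.G := by
  obtain ⟨κ, h1, h2⟩ := D.exists_star
  obtain ⟨Λ, hΛ, hl⟩ := D.lip
  refine ⟨{ L := D.L, G := D.G, closed := D.closed, per := D.Lper, perfect := D.perfect
            ne := ⟨_, D.apL⟩, good := D.good, LG := D.LG, trG := D.trG
            hu := D.half, hw := D.swap.half, κ := κ
            uw := fun η hη ζ hζ h => ?_
            star := fun y hy ζ hζ ζ' hζ' h h' => ?_
            star' := fun y hy ζ hζ ζ' hζ' h h' => ?_
            g := D.g, gG := D.gG, g0 := fun _ => rfl, Λ := Λ, Λ1 := hΛ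
            glip := fun η k x x' => hl _ _ _
            θ := D.θ, θ0 := D.θ0, θ1 := D.θ1, contr := D.g_contr, sep := D.sep
            expansive := D.expansive }, rfl, rfl⟩
  · simpa [half, v] using (D.uv (x := ζ + 1) (by simpa using D.Lper ζ hζ 1) hη h)
  · have := h1 y hy (ζ + 1) (by simpa using D.Lper ζ hζ 1) (ζ' + 1) (by simpa using D.Lper ζ' hζ' 1) h h'
    simp only [add_sub_cancel_right] at this
    simp only [half, one_ne_zero, if_false, if_true]
    exact this
  · have := h2 y hy (ζ + 1) (by simpa using D.swap.Lper ζ hζ 1) (ζ' + 1)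
      (by simpa using D.swap.Lper ζ' hζ' 1) h h'
    simp only [add_sub_cancel_right] at this
    simp only [half, one_ne_zero, if_false, if_true]
    exact this
end Dyn

/-! ### Local models -/

lemma exists_psi (κ : ℝ) : ∃ ψ : ℝ → ℝ, ContDiff ℝ ∞ ψ ∧ ψ 0 = 0 ∧ deriv ψ 0 = κ ∧
    ∃ s₀ > 0, ∀ s, |s| < s₀ → deriv (deriv ψ) s = (deriv ψ s) ^ 2 / 2 := by
  let β : ContDiffBump (0 : ℝ) := ⟨1 / (2 * (1 + |κ|)), 1 / (1 + |κ|), by positivity, by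
    apply one_div_lt_one_div_of_lt <;> linarith [abs_nonneg κ]⟩
  have hpos : ∀ s, 0 < 1 - κ * s * β s / 2 := by
    intro s
    by_cases h : s ∈ Metric.ball (0:ℝ) (1 / (1 + |κ|))
    · rw [mem_ball_zero_iff, norm_eq_abs, lt_div_iff₀ (by positivity)] at h
      have h1 : |κ * s * β s| ≤ 1 := by
        rw [abs_mul, abs_mul, abs_of_nonneg β.nonneg]
        have h2 := β.le_one (x := s)
        have h3 : |κ| * |s| ≤ 1 := by nlinarith [abs_nonneg κ, abs_nonneg s]
        have := mul_le_mul h3 h2 β.nonneg zero_le_one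
        linarith
      linarith [(abs_le.1 h1).2]
    · have : β s = 0 := β.zero_of_le_dist (by
        rw [Metric.mem_ball, not_lt] at h; exact h)
      rw [this]; norm_num
  refine ⟨fun s => -2 * log (1 - κ * s * β s / 2), ?_, by simp, ?_⟩
  · refine contDiff_const.mul (ContDiff.log ?_ fun s => (hpos s).ne')
    exact contDiff_const.sub (((contDiff_const.mul contDiff_id).mul β.contDiff).div_const 2)
  have hin : ∀ s, |s| < 1 / (2 * (1 + |κ|)) →
      (fun s => -2 * log (1 - κ * s * β s / 2)) =ᶠ[𝓝 s] fun s => -2 * log (1 - κ * s / 2) := by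
    intro s hs
    filter_upwards [(Metric.isOpen_ball.mem_nhds (by rwa [mem_ball_zero_iff]))] with t ht
    rw [β.one_of_mem_closedBall (Metric.ball_subset_closedBall ht), mul_one]
  have pos' : ∀ s, |s| < 1 / (2 * (1 + |κ|)) → 0 < 1 - κ * s / 2 := by
    intro s hs
    have := hpos s
    have b1 : β s = 1 := β.one_of_mem_closedBall (by
      rw [mem_closedBall_zero_iff]; exact hs.le)
    rwa [b1, mul_one] at this
  have d1 : ∀ s, |s| < 1 / (2 * (1 + |κ|)) →
      HasDerivAt (fun s => -2 * log (1 - κ * s / 2)) (κ / (1 - κ * s / 2)) s := by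
    intro s hs
    have p := pos' s hs
    have := ((((hasDerivAt_id s).const_mul κ).div_const 2).const_sub 1).log (by simpa using p.ne')
    refine (this.const_mul (-2)).congr_deriv ?_
    simp only [id]
    field_simp
  have d2 : ∀ s, |s| < 1 / (2 * (1 + |κ|)) →
      deriv (fun s => -2 * log (1 - κ * s * β s / 2)) s = κ / (1 - κ * s / 2) := by
    intro s hs
    rw [(hin s hs).deriv_eq, (d1 s hs).deriv]
  refine ⟨by rw [d2 0 (by simp; positivity)]; simp, _, β.rIn_pos, ?_⟩
  intro s hs
  change |s| < 1 / (2 * (1 + |κ|)) at hs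
  have : deriv (fun s => -2 * log (1 - κ * s * β s / 2)) =ᶠ[𝓝 s] fun s => κ / (1 - κ * s / 2) := by
    filter_upwards [(Metric.isOpen_ball.mem_nhds (by rwa [mem_ball_zero_iff]))] with t ht
    exact d2 t (by rwa [mem_ball_zero_iff] at ht)
  rw [this.deriv_eq, d2 s hs]
  have p := pos' s hs
  have h := (((((hasDerivAt_id s).const_mul κ).div_const 2).const_sub 1)).inv (by simpa using p.ne')
  have e : (fun s => κ / (1 - κ * s / 2)) = fun s => κ * (1 - κ * s / 2)⁻¹ := rfl
  rw [e]
  have h' : HasDerivAt (fun s => κ * (1 - κ * s / 2)⁻¹) _ s := h.const_mul κ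
  rw [h'.deriv]
  simp only [id]
  field_simp

namespace Half
variable {L : Set ℝ} {G : Subgroup (Perm ℝ)} (H : Half L G)

/-- Primitive of `exp (u η)` based at `a`. -/
def J (η a x : ℝ) : ℝ := ∫ t in a..x, exp (H.u η 0 t)

lemma cont {η : ℝ} (hη : η ∈ L) : ContinuousOn (fun t => exp (H.u η 0 t)) (Arc η) :=
  fun t ht => (H.der η hη 0 t ht).continuousAt.rexp.continuousWithinAt

lemma integ {η a b : ℝ} (hη : η ∈ L) (ha : a ∈ Arc η) (hb : b ∈ Arc η) :
    IntervalIntegrable (fun t => exp (H.u η 0 t)) volume a b :=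
  ((H.cont hη).mono (ordConnected_Ioo.uIcc_subset ha hb)).intervalIntegrable

lemma J_self (η a : ℝ) : H.J η a a = 0 := intervalIntegral.integral_same

lemma J_add {η a b c : ℝ} (hη : η ∈ L) (ha : a ∈ Arc η) (hb : b ∈ Arc η)
    (hc : c ∈ Arc η) : H.J η a b + H.J η b c = H.J η a c :=
  intervalIntegral.integral_add_adjacent_intervals (H.integ hη ha hb) (H.integ hη hb hc)

lemma J_der {η a x : ℝ} (hη : η ∈ L) (ha : a ∈ Arc η) (hx : x ∈ Arc η) :
    HasDerivAt (H.J η a) (exp (H.u η 0 x)) x :=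
  intervalIntegral.integral_hasDerivAt_right (H.integ hη ha hx)
    ((H.cont hη).stronglyMeasurableAtFilter isOpen_Ioo x hx)
    ((H.cont hη).continuousAt (isOpen_Ioo.mem_nhds hx))

lemma J_bd {c : ℝ} (hc : 0 < c) : ∃ C, 0 ≤ C ∧ ∀ η ∈ L, ∀ a ∈ Mid c η,
    ∀ x ∈ Mid c η, exp (H.u η 0 x) ≤ C ∧ |H.J η a x| ≤ C * |x - a| := by
  obtain ⟨B, hB⟩ := H.bd 0 c hc
  refine ⟨exp B, (exp_pos _).le, fun η hη a ha x hx => ⟨?_, ?_⟩⟩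
  · exact exp_le_exp.2 (abs_le.1 (hB η hη x hx)).2
  · refine intervalIntegral.norm_integral_le_of_norm_le_const (f := fun t => exp (H.u η 0 t))
      fun t ht => ?_
    have : t ∈ Mid c η := ordConnected_Icc.uIcc_subset ha hx (uIoc_subset_uIcc ht)
    rw [norm_eq_abs, abs_of_pos (exp_pos _)]
    exact exp_le_exp.2 (abs_le.1 (hB η hη t this)).2

lemma J_low {c : ℝ} (hc : 0 < c) : ∃ C > 0, ∀ η ∈ L, ∀ a ∈ Mid c η,
    ∀ x ∈ Mid c η, a ≤ x → C * (x - a) ≤ H.J η a x := by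
  obtain ⟨B, hB⟩ := H.bd 0 c hc
  refine ⟨exp (-B), exp_pos _, fun η hη a ha x hx hax => ?_⟩
  have : ∫ t in a..x, exp (-B) ≤ ∫ t in a..x, exp (H.u η 0 t) := by
    refine intervalIntegral.integral_mono_on hax (by simp) (H.integ hη
      ⟨by linarith [ha.1], by linarith [ha.2]⟩ ⟨by linarith [hx.1], by linarith [hx.2]⟩) fun t ht => ?_
    exact exp_le_exp.2 (abs_le.1 (hB η hη t ⟨by linarith [ha.1, ht.1], by linarith [hx.2, ht.2]⟩)).1
  rw [intervalIntegral.integral_const, smul_eq_mul, mul_comm] at this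
  exact this

lemma J_inv {F : Perm ℝ} (hF : F ∈ G) {η a b : ℝ} (hη : η ∈ L)
    (ha : a ∈ Arc η) (hb : b ∈ Arc η) :
    H.J (F η) (F a) (F b) * deriv F η = H.J η a b := H.int_inv F hF η hη a ha b hb

end Half

lemma uIcc_sub {a s t : ℝ} (ht : t ∈ uIcc a s) : |t - a| ≤ |s - a| :=
  abs_sub_left_of_mem_uIcc ht

/-- Mean value inequality along the segment from `a` to `b`. -/
lemma mvt_seg {f f' : ℝ → ℝ} {a b M : ℝ} (h : ∀ t ∈ uIcc a b, HasDerivAt f (f' t) t)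
    (hM : ∀ t ∈ uIcc a b, |f' t| ≤ M) : |f b - f a| ≤ M * |b - a| :=
  (convex_uIcc a b).norm_image_sub_le_of_norm_hasDerivWithin_le
    (fun t ht => (h t ht).hasDerivWithinAt) hM left_mem_uIcc right_mem_uIcc

/-- A solution of a linear equation with zero initial value and a flat source term is flat. -/
lemma ode_flat (N : ℕ) (Q C E : ℝ) (hQ : 0 ≤ Q) (hC : 0 ≤ C) (hE : 0 ≤ E) : ∃ K, 0 ≤ K ∧
    ∀ (a y : ℝ) (e q b : ℝ → ℝ), |y - a| ≤ 1 → e a = 0 →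
    (∀ t ∈ uIcc a y, HasDerivAt e (q t * e t + b t) t) → (∀ t ∈ uIcc a y, |q t| ≤ Q) →
    (∀ t ∈ uIcc a y, |b t| ≤ C * |t - a| ^ N) → (∀ t ∈ uIcc a y, |e t| ≤ E) →
    ∀ t ∈ uIcc a y, |e t| ≤ K * |t - a| ^ N := by
  have main : ∀ k ≤ N, ∃ K, 0 ≤ K ∧
    ∀ (a y : ℝ) (e q b : ℝ → ℝ), |y - a| ≤ 1 → e a = 0 →
    (∀ t ∈ uIcc a y, HasDerivAt e (q t * e t + b t) t) → (∀ t ∈ uIcc a y, |q t| ≤ Q) →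
    (∀ t ∈ uIcc a y, |b t| ≤ C * |t - a| ^ N) → (∀ t ∈ uIcc a y, |e t| ≤ E) →
    ∀ t ∈ uIcc a y, |e t| ≤ K * |t - a| ^ k := by
    intro k hk
    induction k with
    | zero => exact ⟨E, hE, fun a y e q b _ _ _ _ _ h t ht => by simpa using h t ht⟩
    | succ k ih =>
      obtain ⟨K, hK, ih⟩ := ih (by omega)
      refine ⟨Q * K + C, by positivity, fun a y e q b h1 h2 h3 h4 h5 h6 t ht => ?_⟩
      have ih := ih a y e q b h1 h2 h3 h4 h5 h6
      have hs : uIcc a t ⊆ uIcc a y := uIcc_subset_uIcc_left ht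
      have := mvt_seg (f := e) (f' := fun t => q t * e t + b t) (a := a) (b := t)
        (M := (Q * K + C) * |t - a| ^ k) (fun s hs' => h3 s (hs hs')) fun s hs' => by
          have l2 := uIcc_sub (hs hs')
          have l3 : |s - a| ^ N ≤ |s - a| ^ k := pow_le_pow_of_le_one (abs_nonneg _) (l2.trans h1) (by omega)
          have l4 : |s - a| ^ k ≤ |t - a| ^ k := pow_le_pow_left₀ (abs_nonneg _) (uIcc_sub hs') k
          calc |q s * e s + b s| ≤ |q s| * |e s| + |b s| := by
                rw [← abs_mul]; exact abs_add_le _ _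
            _ ≤ Q * (K * |s - a| ^ k) + C * |s - a| ^ k := by
                refine add_le_add (mul_le_mul (h4 s (hs hs')) (ih s (hs hs')) (abs_nonneg _) hQ)
                  ((h5 s (hs hs')).trans (mul_le_mul_of_nonneg_left l3 hC))
            _ = (Q * K + C) * |s - a| ^ k := by ring
            _ ≤ _ := by gcongr
      rw [h2, sub_zero] at this
      rw [pow_succ, ← mul_assoc]; exact this
  exact main N le_rfl

/-- Uniform boundedness away from the end points of a family `h ζ` on `(ζ, ζ + 1)`, `ζ ∈ L`. -/
def Reg0 (L : Set ℝ) (h : ℝ → ℝ → ℝ) : Prop :=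
  ∀ c > 0, ∃ C, ∀ ζ ∈ L, ∀ t ∈ Mid c ζ, |h ζ t| ≤ C

/-- Families `h ζ` on `(ζ, ζ + 1)`, `ζ ∈ L`, with `k` derivatives that are bounded uniformly in `ζ`
away from the end points. -/
def Reg (L : Set ℝ) : ℕ → (ℝ → ℝ → ℝ) → Prop
  | 0, h => Reg0 L h
  | k + 1, h => Reg0 L h ∧ ∃ h', (∀ ζ ∈ L, ∀ t ∈ Arc ζ, HasDerivAt (h ζ) (h' ζ t) t) ∧
      Reg L k h'

namespace Reg
variable {L : Set ℝ}
lemma zero : ∀ {k h}, Reg L k h → Reg L 0 h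
  | 0, _, hh => hh
  | _ + 1, _, hh => hh.1
lemma pred : ∀ {k h}, Reg L (k + 1) h → Reg L k h
  | 0, _, hh => hh.1
  | _ + 1, _, ⟨h0, h', hd, hr⟩ => ⟨h0, h', hd, hr.pred⟩
lemma add0 {h1 h2 : ℝ → ℝ → ℝ} (a : Reg L 0 h1) (b : Reg L 0 h2) :
    Reg L 0 fun ζ t => h1 ζ t + h2 ζ t := fun c hc => by
  obtain ⟨C, hC⟩ := a c hc
  obtain ⟨C', hC'⟩ := b c hc
  exact ⟨C + C', fun ζ hζ t ht => (abs_add_le _ _).trans (add_le_add (hC ζ hζ t ht) (hC' ζ hζ t ht))⟩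
lemma add : ∀ {k h1 h2}, Reg L k h1 → Reg L k h2 → Reg L k fun ζ t => h1 ζ t + h2 ζ t
  | 0, _, _, a, b => a.add0 b
  | k + 1, _, _, ⟨a, a', da, ra⟩, ⟨b, b', db, rb⟩ =>
    ⟨add0 a b, _, fun ζ hζ t ht => (da ζ hζ t ht).add (db ζ hζ t ht), ra.add rb⟩
lemma mul0 {h1 h2 : ℝ → ℝ → ℝ} (a : Reg L 0 h1) (b : Reg L 0 h2) :
    Reg L 0 fun ζ t => h1 ζ t * h2 ζ t := fun c hc => by
  obtain ⟨C, hC⟩ := a c hc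
  obtain ⟨C', hC'⟩ := b c hc
  refine ⟨C * C', fun ζ hζ t ht => ?_⟩
  rw [abs_mul]
  exact mul_le_mul (hC ζ hζ t ht) (hC' ζ hζ t ht) (abs_nonneg _) ((abs_nonneg _).trans (hC ζ hζ t ht))
lemma mul : ∀ {k h1 h2}, Reg L k h1 → Reg L k h2 → Reg L k fun ζ t => h1 ζ t * h2 ζ t
  | 0, _, _, a, b => a.mul0 b
  | k + 1, _, _, ⟨a, a', da, ra⟩, ⟨b, b', db, rb⟩ =>
    ⟨mul0 a b, _, fun ζ hζ t ht => (da ζ hζ t ht).mul (db ζ hζ t ht),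
      (ra.mul (pred ⟨b, b', db, rb⟩)).add ((pred ⟨a, a', da, ra⟩).mul rb)⟩
lemma const : ∀ k (c : ℝ), Reg L k fun _ _ => c
  | 0, c => fun _ _ => ⟨|c|, fun _ _ _ _ => le_rfl⟩
  | k + 1, c => ⟨fun _ _ => ⟨|c|, fun _ _ _ _ => le_rfl⟩, fun _ _ => 0,
      fun _ _ _ _ => hasDerivAt_const _ _, const k 0⟩
lemma half {G : Subgroup (Perm ℝ)} (H : Half L G) : ∀ k j, Reg L k fun ζ t => H.u ζ j t
  | 0, j => H.bd j
  | k + 1, j => ⟨H.bd j, _, fun ζ hζ t ht => H.der ζ hζ j t ht, half H k (j + 1)⟩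

/-- If all members of a regular family agree on the perfect set `L`, they agree to infinite order
there. -/
lemma flat (hp : ∀ y ∈ L, ∀ ε > 0, ∃ y' ∈ L, y' ≠ y ∧ |y' - y| < ε) {c : ℝ} (hc : 0 < c) :
    ∀ (N : ℕ) (h : ℝ → ℝ → ℝ), Reg L N h →
    (∀ ζ ∈ L, ∀ ζ' ∈ L, ∀ x ∈ L, x ∈ Arc ζ → x ∈ Arc ζ' → h ζ x = h ζ' x) →
    ∃ C, 0 ≤ C ∧ ∀ ζ ∈ L, ∀ ζ' ∈ L, ∀ η ∈ L, ∀ t, η ∈ Mid c ζ →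
      η ∈ Mid c ζ' → t ∈ Mid c ζ → t ∈ Mid c ζ' →
      |h ζ t - h ζ' t| ≤ C * |t - η| ^ N := by
  have io : ∀ {ζ t : ℝ}, t ∈ Mid c ζ → t ∈ Arc ζ := fun h =>
    ⟨by linarith [h.1], by linarith [h.2]⟩
  intro N
  induction N with
  | zero =>
    intro h hr _
    obtain ⟨C, hC⟩ := hr c hc
    refine ⟨2 * |C|, by positivity, fun ζ hζ ζ' hζ' η hη t _ _ h1 h2 => ?_⟩
    have := abs_sub (h ζ t) (h ζ' t)
    have := hC ζ hζ t h1
    have := hC ζ' hζ' t h2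
    have := le_abs_self C
    rw [pow_zero]; linarith
  | succ N ih =>
    rintro h ⟨-, h', hd, hr⟩ heq
    have heq' : ∀ ζ ∈ L, ∀ ζ' ∈ L, ∀ x ∈ L, x ∈ Arc ζ → x ∈ Arc ζ' →
        h' ζ x = h' ζ' x := by
      intro ζ hζ ζ' hζ' x hx h1 h2
      have hdd := (hd ζ hζ x h1).sub (hd ζ' hζ' x h2)
      have fr : ∃ᶠ z in 𝓝[≠] x, (h ζ - h ζ') z = 0 := by
        rw [frequently_nhdsWithin_iff]
        have ev : ∀ᶠ z in 𝓝 x, z ∈ Arc ζ ∧ z ∈ Arc ζ' :=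
          Filter.Eventually.and (Ioo_mem_nhds h1.1 h1.2) (Ioo_mem_nhds h2.1 h2.2)
        have fr0 : ∃ᶠ z in 𝓝 x, z ∈ L ∧ z ≠ x := by
          rw [Metric.nhds_basis_ball.frequently_iff]
          intro ε hε
          obtain ⟨z, hz, hzx, hzε⟩ := hp x hx ε hε
          exact ⟨z, by rwa [Metric.mem_ball, dist_eq], hz, hzx⟩
        refine (fr0.and_eventually ev).mono fun z hz => ⟨?_, hz.1.2⟩
        simp only [Pi.sub_apply]
        rw [heq ζ hζ ζ' hζ' z hz.1.1 hz.2.1 hz.2.2, sub_self]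
      have h0 : (h ζ - h ζ') x = 0 := by
        simp only [Pi.sub_apply]; rw [heq ζ hζ ζ' hζ' x hx h1 h2, sub_self]
      by_contra hne
      have hne' : h' ζ x - h' ζ' x ≠ 0 := sub_ne_zero.2 hne
      obtain ⟨z, hz1, hz2⟩ := (fr.and_eventually (hdd.tendsto_slope.eventually_ne hne')).exists
      apply hz2
      rw [slope_def_field]
      rw [hz1, h0]; simp
    obtain ⟨C, hC, ih⟩ := ih h' hr heq'
    refine ⟨C, hC, fun ζ hζ ζ' hζ' η hη t a1 a2 b1 b2 => ?_⟩
    have := mvt_seg (f := fun t => h ζ t - h ζ' t) (f' := fun t => h' ζ t - h' ζ' t) (a := η) (b := t)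
      (M := C * |t - η| ^ N) (fun s hs => ?_) (fun s hs => ?_)
    · simp only [heq ζ hζ ζ' hζ' η hη (io a1) (io a2), sub_self, sub_zero] at this
      rw [pow_succ, ← mul_assoc]; exact this
    · have s1 := io (ordConnected_Icc.uIcc_subset a1 b1 hs)
      have s2 := io (ordConnected_Icc.uIcc_subset a2 b2 hs)
      exact (hd ζ hζ s s1).sub (hd ζ' hζ' s s2)
    · have s1 := ordConnected_Icc.uIcc_subset a1 b1 hs
      have s2 := ordConnected_Icc.uIcc_subset a2 b2 hs
      refine (ih ζ hζ ζ' hζ' η hη s a1 a2 s1 s2).trans (mul_le_mul_of_nonneg_left ?_ hC)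
      exact pow_le_pow_left₀ (abs_nonneg _) (uIcc_sub hs) N
end Reg

lemma Icc_Ioo {c a t : ℝ} (hc : 0 < c) (h : t ∈ Mid c a) : t ∈ Arc a :=
  ⟨by linarith [h.1], by linarith [h.2]⟩

namespace Form
variable (A : Form)

/-- The profile of the constant curvature local model, `ψ s = -2 log (1 - κ s / 2)` near `0`. -/
def ψ : ℝ → ℝ := (exists_psi A.κ).choose
lemma ψ_smooth : ContDiff ℝ ∞ A.ψ := (exists_psi A.κ).choose_spec.1
lemma ψ0 : A.ψ 0 = 0 := (exists_psi A.κ).choose_spec.2.1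
lemma ψ1 : deriv A.ψ 0 = A.κ := (exists_psi A.κ).choose_spec.2.2.1
lemma ψ2 : ∃ s₀ > 0, ∀ s, |s| < s₀ → deriv (deriv A.ψ) s = (deriv A.ψ s) ^ 2 / 2 :=
  (exists_psi A.κ).choose_spec.2.2.2
lemma ψ1_smooth : ContDiff ℝ ∞ (deriv A.ψ) := (contDiff_infty_iff_deriv.1 A.ψ_smooth).2
lemma ψ_der (s : ℝ) : HasDerivAt A.ψ (deriv A.ψ s) s :=
  (A.ψ_smooth.contDiffAt.differentiableAt (by simp)).hasDerivAt
lemma ψ1_der (s : ℝ) : HasDerivAt (deriv A.ψ) (deriv (deriv A.ψ) s) s :=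
  (A.ψ1_smooth.contDiffAt.differentiableAt (by simp)).hasDerivAt

/-- Normalised first coordinate of the local model. -/
def As (ζ η x : ℝ) : ℝ := A.hu.J η (ζ + 1) x * exp (-A.hu.u η 0 (ζ + 1))

/-- The local model of the invariant density at the corner `(ζ + 1, η) ∈ L × L`, in logarithmic
form. It has the prescribed traces `u η` on `y = η` and `w ζ` on `x = ζ + 1`. -/
def lam (ζ η : ℝ) (p : ℝ × ℝ) : ℝ :=
  A.hu.u η 0 p.1 + A.hw.u ζ 0 p.2 - A.hu.u η 0 (ζ + 1) + A.ψ (A.As ζ η p.1 * A.hw.J ζ η p.2)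

/-- The point `(x, y)` lies at distance at least `c` from the boundary of the domain of the local
model with corner `(ζ + 1, η)`. -/
structure Adm (c ζ η x y : ℝ) : Prop where
  ζL : ζ ∈ A.L
  ηL : η ∈ A.L
  zc : ζ + 1 ∈ Mid c η
  xc : x ∈ Mid c η
  yc : y ∈ Mid c ζ

variable {A} {c ζ η x y : ℝ}
lemma Adm.ec (h : A.Adm c ζ η x y) : η ∈ Mid c ζ :=
  ⟨by linarith [h.zc.2], by linarith [h.zc.1]⟩
lemma Adm.x1 (hc : 0 < c) (h : A.Adm c ζ η x y) : |x - (ζ + 1)| ≤ 1 :=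
  abs_le.2 ⟨by linarith [h.xc.1, h.zc.2], by linarith [h.xc.2, h.zc.1]⟩
lemma Adm.y1 (hc : 0 < c) (h : A.Adm c ζ η x y) : |y - η| ≤ 1 :=
  abs_le.2 ⟨by linarith [h.yc.1, h.zc.1], by linarith [h.yc.2, h.zc.2]⟩
lemma Adm.mono (h : A.Adm c ζ η x y) {c' : ℝ} (hc : c' ≤ c) : A.Adm c' ζ η x y :=
  ⟨h.ζL, h.ηL, ⟨by linarith [h.zc.1], by linarith [h.zc.2]⟩,
    ⟨by linarith [h.xc.1], by linarith [h.xc.2]⟩, ⟨by linarith [h.yc.1], by linarith [h.yc.2]⟩⟩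
lemma Adm.swap (h : A.Adm c ζ η x y) : A.swap.Adm c (η - 1) ζ y (x - 1) where
  ζL := A.pm h.ηL
  ηL := h.ζL
  zc := by simpa using h.ec
  xc := h.yc
  yc := ⟨by linarith [h.xc.1], by linarith [h.xc.2]⟩
variable (A)

lemma deriv_tr (m : ℤ) (x : ℝ) : deriv (tr m) x = 1 := by
  show deriv (fun x => x + (m : ℝ)) x = 1
  simp

lemma As_swap (hc : 0 < c) (h : A.Adm c ζ η x y) :
    A.swap.As (η - 1) ζ y * A.swap.hw.J (η - 1) ζ (x - 1) = A.As ζ η x * A.hw.J ζ η y := by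
  have e2 := A.hu.J_inv (A.trG 1) h.swap.ζL (a := ζ) (b := x - 1)
    ⟨by linarith [h.zc.1], by linarith [h.zc.2]⟩ ⟨by linarith [h.xc.1], by linarith [h.xc.2]⟩
  rw [deriv_tr, mul_one] at e2
  simp only [tr_apply, Int.cast_one, sub_add_cancel] at e2
  change A.hw.J ζ (η - 1 + 1) y * exp (-A.hw.u ζ 0 (η - 1 + 1)) * A.hu.J (η - 1) ζ (x - 1) = _
  rw [← e2, sub_add_cancel, ← (A.uw η h.ηL ζ h.ζL (Icc_Ioo hc h.zc))]
  simp only [As]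
  ring

lemma lam_swap (hc : 0 < c) (h : A.Adm c ζ η x y) :
    A.swap.lam (η - 1) ζ (y, x - 1) = A.lam ζ η (x, y) := by
  have hη1 : η - 1 ∈ A.L := h.swap.ζL
  have e2 := A.hu.inv (tr 1) (A.trG 1) (η - 1) hη1 (x - 1) ⟨by linarith [h.xc.1], by linarith [h.xc.2]⟩
  rw [ld_tr, ld_tr] at e2
  simp only [tr_apply, Int.cast_one, sub_add_cancel, add_zero] at e2
  simp only [lam]
  rw [A.As_swap hc h]
  change A.hw.u ζ 0 y + A.hu.u (η - 1) 0 (x - 1) - A.hw.u ζ 0 (η - 1 + 1) + A.ψ _ = _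
  rw [← e2, sub_add_cancel, ← (A.uw η h.ηL ζ h.ζL (Icc_Ioo hc h.zc))]
  ring

lemma lam_inv (hc : 0 < c) (h : A.Adm c ζ η x y) {F : Perm ℝ} (hF : F ∈ A.G) :
    A.lam (F ζ) (F η) (F x, F y) + ld F x + ld F y = A.lam ζ η (x, y) := by
  have g := A.good F hF
  have zi := Icc_Ioo hc h.zc
  have e1 := A.hu.inv F hF η h.ηL x (Icc_Ioo hc h.xc)
  have e2 := A.hw.inv F hF ζ h.ζL y (Icc_Ioo hc h.yc)
  have e3 := A.hu.inv F hF η h.ηL (ζ + 1) zi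
  have e4 : ld F (ζ + 1) = ld F ζ := by simpa using g.ld_per ζ 1
  have e5 := A.hu.J_inv hF h.ηL zi (Icc_Ioo hc h.xc)
  have e6 := A.hw.J_inv hF h.ζL (Icc_Ioo hc h.ec) (Icc_Ioo hc h.yc)
  rw [g.per] at e3 e5
  have e7 : A.As (F ζ) (F η) (F x) * A.hw.J (F ζ) (F η) (F y) = A.As ζ η x * A.hw.J ζ η y := by
    have : -A.hu.u (F η) 0 (F ζ + 1) = -A.hu.u η 0 (ζ + 1) + ld F ζ + ld F η := by
      rw [e4] at e3; linarith
    simp only [As]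
    rw [← e5, ← e6, this, exp_add, exp_add, g.exp_ld, g.exp_ld]
    ring
  simp only [lam]
  rw [e7]
  linarith

lemma bounds (hc : 0 < c) : ∃ B, 1 ≤ B ∧ ∀ ζ η x y, A.Adm c ζ η x y →
    |A.hu.u η 0 x| ≤ B ∧ |A.hw.u ζ 0 y| ≤ B ∧ |A.hw.u ζ 1 y| ≤ B ∧ exp (A.hw.u ζ 0 y) ≤ B ∧
    |A.As ζ η x| ≤ B ∧ |A.As ζ η x| ≤ B * |x - (ζ + 1)| ∧ |A.hw.J ζ η y| ≤ B * |y - η| ∧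
    |A.As ζ η x * A.hw.J ζ η y| ≤ B * B := by
  obtain ⟨B1, h1⟩ := A.hu.bd 0 c hc
  obtain ⟨B2, h2⟩ := A.hw.bd 0 c hc
  obtain ⟨B3, h3⟩ := A.hw.bd 1 c hc
  obtain ⟨C1, p1, q1⟩ := A.hu.J_bd hc
  obtain ⟨C2, p2, q2⟩ := A.hw.J_bd hc
  obtain ⟨B, hB⟩ : ∃ B, B = 1 + |B1| + |B2| + |B3| + C1 * exp (|B1|) + C2 := ⟨_, rfl⟩
  have P : 0 ≤ C1 * exp (|B1|) := by positivity
  have n1 := abs_nonneg B1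
  have n2 := abs_nonneg B2
  have n3 := abs_nonneg B3
  refine ⟨B, by linarith, fun ζ η x y h => ?_⟩
  have b1 := h1 η h.ηL x h.xc
  have b1' := (h1 η h.ηL (ζ + 1) h.zc).trans (le_abs_self _)
  have b2 := h2 ζ h.ζL y h.yc
  have b3 := h3 ζ h.ζL y h.yc
  have r1 := (q1 η h.ηL (ζ + 1) h.zc x h.xc).2
  have r2 := q2 ζ h.ζL η h.ec y h.yc
  have k1 := le_abs_self B1
  have k2 := le_abs_self B2
  have k3 := le_abs_self B3
  have as : |A.As ζ η x| ≤ C1 * exp (|B1|) * |x - (ζ + 1)| := by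
    unfold As
    rw [abs_mul, abs_of_pos (exp_pos _)]
    calc _ ≤ (C1 * |x - (ζ + 1)|) * exp |B1| :=
          mul_le_mul r1 (exp_le_exp.2 (by linarith [(abs_le.1 b1').1])) (exp_pos _).le (by positivity)
      _ = _ := by ring
  have as' : |A.As ζ η x| ≤ B * |x - (ζ + 1)| :=
    as.trans (mul_le_mul_of_nonneg_right (by linarith) (abs_nonneg _))
  have B0 : 0 ≤ B := by linarith
  have jj : |A.hw.J ζ η y| ≤ B * |y - η| :=
    r2.2.trans (mul_le_mul_of_nonneg_right (by linarith) (abs_nonneg _))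
  have as1 := as'.trans (mul_le_of_le_one_right B0 (h.x1 hc))
  refine ⟨by linarith, by linarith, by linarith, r2.1.trans (by linarith), as1, as', jj, ?_⟩
  rw [abs_mul]
  exact mul_le_mul as1 (jj.trans (mul_le_of_le_one_right B0 (h.y1 hc))) (abs_nonneg _) B0

lemma lam_bd (hc : 0 < c) : ∃ B, 0 ≤ B ∧ ∀ ζ η x y, A.Adm c ζ η x y → |A.lam ζ η (x, y)| ≤ B := by
  obtain ⟨B, hB, h⟩ := A.bounds hc
  obtain ⟨C, hC⟩ := Fam.bdd_of_cont A.ψ_smooth.continuous (B * B)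
  refine ⟨3 * B + |C|, by positivity, fun ζ η x y ha => ?_⟩
  obtain ⟨h1, h2, -, -, -, -, -, h8⟩ := h ζ η x y ha
  have h1' := (h ζ η (ζ + 1) y ⟨ha.ζL, ha.ηL, ha.zc, ha.zc, ha.yc⟩).1
  have h9 := hC _ h8
  simp only [lam]
  have k := le_abs_self C
  rw [abs_le] at *
  constructor <;> linarith [h1.1, h1.2, h2.1, h2.2, h1'.1, h1'.2, h9.1, h9.2]

/-- The derivative of `lam ζ η (x, ·)`. -/
def lp (ζ η x t : ℝ) : ℝ :=
  A.hw.u ζ 1 t + deriv A.ψ (A.As ζ η x * A.hw.J ζ η t) * (A.As ζ η x * exp (A.hw.u ζ 0 t))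

lemma lam_der2 (hc : 0 < c) (h : A.Adm c ζ η x y) :
    HasDerivAt (fun t => A.lam ζ η (x, t)) (A.lp ζ η x y) y := by
  have yi := Icc_Ioo hc h.yc
  have d2 := (A.hw.J_der h.ζL (Icc_Ioo hc h.ec) yi).const_mul (A.As ζ η x)
  have d3 := (A.ψ_der (A.As ζ η x * A.hw.J ζ η y)).comp y d2
  exact (((A.hw.der ζ h.ζL 0 y yi).const_add (A.hu.u η 0 x)).sub_const (A.hu.u η 0 (ζ + 1))).add d3

lemma lp_der (hc : 0 < c) (h : A.Adm c ζ η x y)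
    (hs : deriv (deriv A.ψ) (A.As ζ η x * A.hw.J ζ η y) = (deriv A.ψ (A.As ζ η x * A.hw.J ζ η y)) ^ 2 / 2) :
    HasDerivAt (A.lp ζ η x) ((A.lp ζ η x y) ^ 2 / 2 + (A.hw.u ζ 2 y - (A.hw.u ζ 1 y) ^ 2 / 2)) y := by
  have yi := Icc_Ioo hc h.yc
  have d2 := (A.hw.J_der h.ζL (Icc_Ioo hc h.ec) yi).const_mul (A.As ζ η x)
  have d3 := (A.ψ1_der (A.As ζ η x * A.hw.J ζ η y)).comp y d2
  have d4 := (A.hw.der ζ h.ζL 1 y yi).add (d3.mul ((A.hw.der ζ h.ζL 0 y yi).exp.const_mul (A.As ζ η x)))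
  refine HasDerivAt.congr_deriv d4 ?_
  simp only [Function.comp, lp]
  rw [hs]
  ring

/-- On `y = η` the local models with the same `η` agree to first order. -/
lemma lp_base (hc : 0 < c) {ζ' : ℝ} (h : A.Adm c ζ η x y) (h' : A.Adm c ζ' η x y) :
    A.lp ζ η x η = A.lp ζ' η x η := by
  have z := Icc_Ioo hc h.zc
  have z' := Icc_Ioo hc h'.zc
  have s := A.star η h.ηL ζ h.ζL ζ' h'.ζL z z'
  have base : ∀ ζ, ζ ∈ A.L → ζ + 1 ∈ Arc η →
      A.lp ζ η x η = A.hw.u ζ 1 η + A.κ * A.hu.J η (ζ + 1) x := by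
    intro ζ hζ z
    simp only [lp, Half.J_self, mul_zero, A.ψ1, As, ← A.uw η h.ηL ζ hζ z]
    rw [mul_assoc, ← exp_add]; simp
  rw [base ζ h.ζL z, base ζ' h'.ζL z', ← A.hu.J_add h.ηL z' z (Icc_Ioo hc h.xc)]
  have : A.hw.u ζ 1 η - A.hw.u ζ' 1 η = A.κ * A.hu.J η (ζ' + 1) (ζ + 1) := s
  linarith

/-- Local models with the same `η` agree to infinite order along `y = η`. -/
lemma est1 (hc : 0 < c) (N : ℕ) : ∃ C, 0 ≤ C ∧ ∀ ζ ζ' η x y, A.Adm c ζ η x y → A.Adm c ζ' η x y →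
    |A.lam ζ η (x, y) - A.lam ζ' η (x, y)| ≤ C * |y - η| ^ N := by
  obtain ⟨B, hB, hb⟩ := A.bounds hc
  obtain ⟨Bl, hBl, hbl⟩ := A.lam_bd hc
  obtain ⟨s0, hs0, hψ⟩ := A.ψ2
  obtain ⟨P, hP⟩ := Fam.bdd_of_cont A.ψ1_smooth.continuous (B * B)
  have rg : Reg A.L N fun ζ t => A.hw.u ζ 2 t + (-(1/2)) * (A.hw.u ζ 1 t * A.hw.u ζ 1 t) :=
    (Reg.half A.hw N 2).add ((Reg.const N _).mul ((Reg.half A.hw N 1).mul (Reg.half A.hw N 1)))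
  obtain ⟨C, hC, hfl⟩ := rg.flat A.perfect hc N _ (fun ζ hζ ζ' hζ' x hx h h' => by
    have := A.hw.sig ζ hζ ζ' hζ' x hx h h'
    linarith)
  set Q := B + |P| * (B * B) with hQd
  obtain ⟨K, hK, ode⟩ := ode_flat N Q C (2 * Q) (by positivity) hC (by positivity)
  set ρ := s0 / (B * B) with hρ
  have hρ0 : 0 < ρ := by positivity
  refine ⟨max K (2 * Bl / ρ ^ N), le_max_of_le_left hK, fun ζ ζ' η x y h h' => ?_⟩
  by_cases hy : ρ ≤ |y - η|
  · have h1 := hbl _ _ _ _ h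
    have h2 := hbl _ _ _ _ h'
    have h3 : ρ ^ N ≤ |y - η| ^ N := pow_le_pow_left₀ hρ0.le hy N
    have hρN : 0 < ρ ^ N := pow_pos hρ0 N
    calc _ ≤ |A.lam ζ η (x, y)| + |A.lam ζ' η (x, y)| := abs_sub _ _
      _ ≤ 2 * Bl := by linarith
      _ = 2 * Bl / ρ ^ N * ρ ^ N := by field_simp
      _ ≤ 2 * Bl / ρ ^ N * |y - η| ^ N := by gcongr
      _ ≤ _ := mul_le_mul_of_nonneg_right (le_max_right _ _) (by positivity)
  · push Not at hy
    have adm : ∀ t ∈ uIcc η y, A.Adm c ζ η x t := fun t ht =>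
      ⟨h.ζL, h.ηL, h.zc, h.xc, ordConnected_Icc.uIcc_subset h.ec h.yc ht⟩
    have adm' : ∀ t ∈ uIcc η y, A.Adm c ζ' η x t := fun t ht =>
      ⟨h'.ζL, h.ηL, h'.zc, h'.xc, ordConnected_Icc.uIcc_subset h'.ec h'.yc ht⟩
    have hsm : ∀ ζ t, A.Adm c ζ η x t → t ∈ uIcc η y → |A.As ζ η x * A.hw.J ζ η t| < s0 := by
      intro ζ t ha ht
      obtain ⟨-, -, -, -, h5, -, h7, -⟩ := hb ζ η x t ha
      have l := uIcc_sub ht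
      rw [abs_mul]
      calc _ ≤ B * (B * |t - η|) := by gcongr
        _ = B * B * |t - η| := by ring
        _ < B * B * ρ := mul_lt_mul_of_pos_left (lt_of_le_of_lt l hy) (by positivity)
        _ = s0 := by rw [hρ]; field_simp
    have hlp : ∀ ζ t, A.Adm c ζ η x t → |A.lp ζ η x t| ≤ Q := by
      intro ζ t ha
      obtain ⟨-, -, h3, h4, h5, -, -, h8⟩ := hb ζ η x t ha
      have h9 := (hP _ h8).trans (le_abs_self P)
      refine (abs_add_le _ _).trans (add_le_add h3 ?_)
      rw [abs_mul, abs_mul, abs_of_pos (exp_pos _)]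
      gcongr
    have key := ode η y (fun t => A.lp ζ η x t - A.lp ζ' η x t)
      (fun t => (A.lp ζ η x t + A.lp ζ' η x t) / 2)
      (fun t => (A.hw.u ζ 2 t + (-(1/2)) * (A.hw.u ζ 1 t * A.hw.u ζ 1 t)) -
        (A.hw.u ζ' 2 t + (-(1/2)) * (A.hw.u ζ' 1 t * A.hw.u ζ' 1 t))) (h.y1 hc)
      (sub_eq_zero.2 (A.lp_base hc h h')) (fun t ht => ?_) (fun t ht => ?_) (fun t ht => ?_) (fun t ht => ?_)
    · have := mvt_seg (f := fun t => A.lam ζ η (x, t) - A.lam ζ' η (x, t))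
        (f' := fun t => A.lp ζ η x t - A.lp ζ' η x t) (a := η) (b := y) (M := K * |y - η| ^ N)
        (fun t ht => (A.lam_der2 hc (adm t ht)).sub (A.lam_der2 hc (adm' t ht)))
        (fun t ht => (key t ht).trans (mul_le_mul_of_nonneg_left
          (pow_le_pow_left₀ (abs_nonneg _) (uIcc_sub ht) N) hK))
      have e0 : A.lam ζ η (x, η) - A.lam ζ' η (x, η) = 0 := by
        simp only [lam, Half.J_self, mul_zero, A.ψ0, A.uw η h.ηL ζ h.ζL (Icc_Ioo hc h.zc),
          A.uw η h.ηL ζ' h'.ζL (Icc_Ioo hc h'.zc)]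
        ring
      simp only [e0, sub_zero] at this
      calc _ ≤ _ := this
        _ ≤ K * |y - η| ^ N := mul_le_of_le_one_right (by positivity) (h.y1 hc)
        _ ≤ _ := mul_le_mul_of_nonneg_right (le_max_left _ _) (by positivity)
    · refine ((A.lp_der hc (adm t ht) (hψ _ (hsm ζ t (adm t ht) ht))).sub (A.lp_der hc (adm' t ht) (hψ _ (hsm ζ' t (adm' t ht) ht)))).congr_deriv ?_
      ring
    · have l1 := hlp ζ t (adm t ht)
      have l2 := hlp ζ' t (adm' t ht)
      rw [abs_le] at *
      constructor <;> linarith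
    · exact hfl ζ h.ζL ζ' h'.ζL η h.ηL t h.ec h'.ec (adm t ht).yc (adm' t ht).yc
    · have l1 := hlp ζ t (adm t ht)
      have l2 := hlp ζ' t (adm' t ht)
      exact (abs_sub _ _).trans (by linarith)

lemma est1' (hc : 0 < c) (N : ℕ) : ∃ C, 0 ≤ C ∧ ∀ ζ η η' x y, A.Adm c ζ η x y → A.Adm c ζ η' x y →
    |A.lam ζ η (x, y) - A.lam ζ η' (x, y)| ≤ C * |x - (ζ + 1)| ^ N := by
  obtain ⟨C, hC, h⟩ := A.swap.est1 hc N
  refine ⟨C, hC, fun ζ η η' x y h1 h2 => ?_⟩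
  have := h _ _ _ _ _ h1.swap h2.swap
  rwa [A.lam_swap hc h1, A.lam_swap hc h2, show x - 1 - ζ = x - (ζ + 1) by ring] at this

lemma g_lip (η : ℝ) (k : ℕ) (x x' : ℝ) : |A.g η k x - A.g η k x'| ≤ A.Λ ^ k * |x - x'| := by
  induction k with
  | zero => simp [A.g0]
  | succ k ih =>
    refine (A.glip η k x x').trans ?_
    rw [pow_succ', mul_assoc]
    exact mul_le_mul_of_nonneg_left ih (by linarith [A.Λ1])

/-- Local models with the same `ζ` agree to infinite order where `y, η, η'` come together. -/
lemma est2 (hc : 0 < c) (N : ℕ) : ∃ C, 0 ≤ C ∧ ∀ ζ η η' x y d, A.Adm c ζ η x y → A.Adm c ζ η' x y →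
    |y - η| ≤ d → |y - η'| ≤ d → |A.lam ζ η (x, y) - A.lam ζ η' (x, y)| ≤ C * d ^ N := by
  obtain ⟨B, hB, hb⟩ := A.lam_bd hc
  obtain ⟨c', hc', hsep⟩ := A.sep c hc
  obtain ⟨C1, hC1, hcontr⟩ := A.contr c hc
  obtain ⟨r, hr, hexp⟩ := A.expansive
  have hΛ := A.Λ1
  have hΛ0 : 0 < A.Λ := by linarith
  obtain ⟨n, hn⟩ : ∃ n : ℕ, A.θ ^ n < (A.Λ ^ N)⁻¹ := exists_pow_lt_of_lt_one (by positivity) A.θ1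
  obtain ⟨C2, hC2, he⟩ := A.est1' (c := c' / 2) (by linarith) n
  set c0 := min (r / 2) (c' / (4 * A.Λ)) with hc0
  have c0p : 0 < c0 := lt_min (by linarith) (by positivity)
  have c0r : 2 * c0 ≤ r := by linarith [min_le_left (r / 2) (c' / (4 * A.Λ))]
  have c0c : A.Λ * c0 ≤ c' / 4 := by
    have := min_le_right (r / 2) (c' / (4 * A.Λ))
    calc A.Λ * c0 ≤ A.Λ * (c' / (4 * A.Λ)) := mul_le_mul_of_nonneg_left this hΛ0.le
      _ = c' / 4 := by field_simp
  refine ⟨max (2 * B) (C2 * C1 ^ n) / c0 ^ N, by positivity, fun ζ η η' x y d h h' hd hd' => ?_⟩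
  have hd0 : 0 ≤ d := (abs_nonneg _).trans hd
  by_cases hηη : η = η'
  · subst hηη; rw [sub_self, abs_zero]; positivity
  let g := A.g η
  have ex : ∃ m, c0 ≤ |g m y - g m η| ∨ c0 ≤ |g m y - g m η'| := by
    obtain ⟨k, hk⟩ := hexp η h.ηL η' h'.ηL hηη
    refine ⟨k, ?_⟩
    by_contra! hcon
    have t := abs_sub_le (A.g η k η) (A.g η k y) (A.g η k η')
    have e := abs_sub_comm (A.g η k η) (A.g η k y)
    have h1 : |A.g η k y - A.g η k η| < c0 := hcon.1
    have h2 : |A.g η k y - A.g η k η'| < c0 := hcon.2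
    linarith
  obtain ⟨m, hm, hmin⟩ : ∃ m, (c0 ≤ |g m y - g m η| ∨ c0 ≤ |g m y - g m η'|) ∧
      ∀ m' < m, ¬ (c0 ≤ |g m' y - g m' η| ∨ c0 ≤ |g m' y - g m' η'|) :=
    ⟨Nat.find ex, Nat.find_spec ex, fun m' h => Nat.find_min ex h⟩
  have hmd : c0 ≤ A.Λ ^ m * d := by
    have p : 0 ≤ A.Λ ^ m := by positivity
    rcases hm with hm | hm
    · exact hm.trans ((A.g_lip η m y η).trans (mul_le_mul_of_nonneg_left hd p))
    · exact hm.trans ((A.g_lip η m y η').trans (mul_le_mul_of_nonneg_left hd' p))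
  have fin : c0 ^ N ≤ (A.Λ ^ N) ^ m * d ^ N := by
    calc c0 ^ N ≤ (A.Λ ^ m * d) ^ N := by gcongr
      _ = _ := by rw [mul_pow, ← pow_mul, ← pow_mul, mul_comm m N]
  have fin2 : ∀ T : ℝ, 0 ≤ T → T ≤ max (2 * B) (C2 * C1 ^ n) →
      T * ((A.Λ ^ N)⁻¹) ^ m ≤ max (2 * B) (C2 * C1 ^ n) / c0 ^ N * d ^ N := by
    intro T hT hT2
    rw [div_mul_eq_mul_div, le_div_iff₀ (pow_pos c0p N)]
    calc T * ((A.Λ ^ N)⁻¹) ^ m * c0 ^ N ≤ T * ((A.Λ ^ N)⁻¹) ^ m * ((A.Λ ^ N) ^ m * d ^ N) :=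
          by gcongr
      _ = T * d ^ N * ((A.Λ ^ N)⁻¹ * A.Λ ^ N) ^ m := by rw [mul_pow]; ring
      _ = T * d ^ N := by rw [inv_mul_cancel₀ (by positivity), one_pow, mul_one]
      _ ≤ _ := mul_le_mul_of_nonneg_right hT2 (by positivity)
  rcases m with _ | m
  · have := fin2 (2 * B) (by positivity) (le_max_left _ _)
    rw [pow_zero, mul_one] at this
    exact (abs_sub _ _).trans (le_trans (by linarith [hb _ _ _ _ h, hb _ _ _ _ h']) this)
  · have hlt := hmin m (by omega)
    push Not at hlt
    set F := A.g η (m + 1) with hF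
    have hFG : F ∈ A.G := A.gG η (m + 1)
    have gF := A.good F hFG
    have kk : ∀ e, |g m y - g m e| < c0 → |F y - F e| ≤ c' / 4 := fun e h =>
      (A.glip η m y e).trans ((mul_le_mul_of_nonneg_left h.le hΛ0.le).trans c0c)
    have k1 := abs_le.1 (kk η hlt.1)
    have sx := hsep η h.ηL (m + 1) x h.xc
    have sz := hsep η h.ηL (m + 1) (ζ + 1) h.zc
    rw [← hF] at sx sz
    rw [gF.per] at sz
    have ad : ∀ e ∈ A.L, |g m y - g m e| < c0 → A.Adm (c' / 2) (F ζ) (F e) (F x) (F y) := by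
      intro e eL hl
      have k := abs_le.1 (kk e hl)
      exact ⟨A.LG F hFG _ h.ζL, A.LG F hFG _ eL, ⟨by linarith [sz.1], by linarith [sz.2]⟩,
        ⟨by linarith [sx.1], by linarith [sx.2]⟩, ⟨by linarith [sz.2], by linarith [sz.1]⟩⟩
    have i1 := A.lam_inv hc h hFG
    have i2 := A.lam_inv hc h' hFG
    have e := he _ _ _ _ _ (ad η h.ηL hlt.1) (ad η' h'.ηL hlt.2)
    have eq : A.lam ζ η (x, y) - A.lam ζ η' (x, y) =
        A.lam (F ζ) (F η) (F x, F y) - A.lam (F ζ) (F η') (F x, F y) := by linarith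
    rw [eq]
    have ct : |F x - (F ζ + 1)| ≤ C1 * A.θ ^ (m + 1) := by
      rw [← gF.per]
      exact (hcontr η h.ηL (m + 1) x h.xc (ζ + 1) h.zc).trans
        (mul_le_of_le_one_right (mul_nonneg hC1.le (pow_nonneg A.θ0.le _)) (h.x1 hc))
    refine le_trans (e.trans ?_) (fin2 (C2 * C1 ^ n) (by positivity) (le_max_right _ _))
    have hθ := A.θ0
    calc C2 * |F x - (F ζ + 1)| ^ n ≤ C2 * (C1 * A.θ ^ (m + 1)) ^ n :=
          mul_le_mul_of_nonneg_left (pow_le_pow_left₀ (abs_nonneg _) ct n) hC2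
      _ = C2 * C1 ^ n * (A.θ ^ n) ^ (m + 1) := by
          rw [mul_pow, ← pow_mul, ← pow_mul, mul_comm (m + 1) n]; ring
      _ ≤ _ := mul_le_mul_of_nonneg_left (pow_le_pow_left₀ (by positivity) hn.le _) (by positivity)

end Form

/-! ### Blending the local models -/

/-- Smooth step, `0` on `s ≤ 1/4` and `1` on `3/4 ≤ s`. -/
def chi (s : ℝ) : ℝ := Real.smoothTransition (2 * s - 1 / 2)
lemma chi_smooth : ContDiff ℝ ∞ chi := Real.smoothTransition.contDiff.comp (by fun_prop)
lemma chi0 {s : ℝ} (h : s ≤ 1 / 4) : chi s = 0 := Real.smoothTransition.zero_of_nonpos (by linarith)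
lemma chi1 {s : ℝ} (h : 3 / 4 ≤ s) : chi s = 1 := Real.smoothTransition.one_of_one_le (by linarith)
lemma chi_nn (s : ℝ) : 0 ≤ chi s := Real.smoothTransition.nonneg _
lemma chi_le (s : ℝ) : chi s ≤ 1 := Real.smoothTransition.le_one _

namespace Fam
variable {ι : Type} {T : Fam ι} {f g m : ι → ℝ × ℝ → ℝ}
/-- Moderate smooth families that are uniformly bounded. -/
def BS (T : Fam ι) (f : ι → ℝ × ℝ → ℝ) : Prop := (∃ B, ∀ i, ∀ p ∈ T.K i, |f i p| ≤ B) ∧ T.MS f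
lemma BS.chi (h : T.BS f) : T.MS fun i p => chi (f i p) := h.2.comp h.1.choose_spec chi_smooth
lemma BS.mix (hm : T.MS m) (h0 : ∀ i p, 0 ≤ m i p ∧ m i p ≤ 1) (hf : T.BS f) (hg : T.BS g) :
    T.BS fun i p => (1 - m i p) * f i p + m i p * g i p := by
  obtain ⟨⟨B, hB⟩, hf⟩ := hf
  obtain ⟨⟨B', hB'⟩, hg⟩ := hg
  refine ⟨⟨B + B', fun i p hp => (abs_add_le _ _).trans ?_⟩, (((MS.const' 1).sub hm).mul hf).add (hm.mul hg)⟩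
  obtain ⟨h0, h1⟩ := h0 i p
  rw [abs_mul, abs_mul, abs_of_nonneg h0, abs_of_nonneg (by linarith : 0 ≤ 1 - m i p)]
  nlinarith [abs_nonneg (f i p), abs_nonneg (g i p), hB i p hp, hB' i p hp]
end Fam

namespace Half
variable {L : Set ℝ} {G : Subgroup (Perm ℝ)} (H : Half L G)

/-- Relative mass of `[a, x]` in `[a, b]`. For `a = b` it is `0`. -/
def r (η a b x : ℝ) : ℝ := H.J η a x / H.J η a b

lemma r_eq (η a x : ℝ) : H.r η a a x = 0 := by rw [r, J_self, div_zero]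

lemma r_inv {F : Perm ℝ} (gF : Good F) (hF : F ∈ G) {η a b x : ℝ} (hη : η ∈ L)
    (ha : a ∈ Arc η) (hb : b ∈ Arc η) (hx : x ∈ Arc η) :
    H.r (F η) (F a) (F b) (F x) = H.r η a b x := by
  rw [r, r, ← H.J_inv hF hη ha hx, ← H.J_inv hF hη ha hb, mul_div_mul_right _ _ (gF.dpos η).ne']

section
variable {ι : Type} {T : Fam ι} {c : ℝ} {η a b : ι → ℝ} (hc : 0 < c) (bo : Bool) (hη : ∀ i, η i ∈ L)
  (hK : ∀ i, ∀ p ∈ T.K i, pr bo p ∈ Mid c (η i))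
  (hO : ∀ i, ∀ p ∈ T.O i, pr bo p ∈ Ioo (η i) (η i + 1))
include hc hη hK hO

lemma MS_u (j : ℕ) : T.MS fun i p => H.u (η i) j (pr bo p) := by
  refine Fam.MS.of_pr (h := fun i j => H.u (η i) j) bo (fun i j p hp => H.der _ (hη i) j _ (hO i p hp))
    (fun j => ?_) j
  obtain ⟨C, hC⟩ := H.bd j c hc
  exact Fam.B0.of_bound fun i p hp => hC _ (hη i) _ (hK i p hp)

variable (ha : ∀ i, a i ∈ Mid c (η i))
include ha

lemma MS_J : T.MS fun i p => H.J (η i) (a i) (pr bo p) := by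
  obtain ⟨C, hC, h⟩ := H.J_bd hc
  obtain ⟨B, hB⟩ := H.bd 0 c hc
  have he : T.MS fun i p => exp (H.u (η i) 0 (pr bo p)) :=
    (H.MS_u hc bo hη hK hO 0).comp (fun i p hp => hB _ (hη i) _ (hK i p hp)) contDiff_exp
  refine Fam.MS.of_D (Fam.B0.of_bound (B := C) fun i p hp => ?_)
    (fun i p hp => Fam.pr_F bo (H.J_der (hη i) (Icc_Ioo hc (ha i)) (hO i p hp)))
    fun b => he.mul (Fam.MS.const' (pr bo (ev b)))
  have h1 := hK i p hp
  have h2 := ha i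
  refine (h _ (hη i) _ h2 _ h1).2.trans (mul_le_of_le_one_right hC ?_)
  exact abs_le.2 ⟨by linarith [h1.1, h2.2], by linarith [h1.2, h2.1]⟩

/-- The relative position is bounded and moderate on families whose scale is at most the size of
the cell, with the convention for degenerate cells made in `Half.r`. -/
lemma BS_r (hb : ∀ i, b i ∈ Mid c (η i)) (hab : ∀ i, a i = b i ∨
      T.ε i ≤ b i - a i ∧ ∀ p ∈ T.K i, |pr bo p - a i| ≤ 2 * (b i - a i)) :
    T.BS fun i p => H.r (η i) (a i) (b i) (pr bo p) := by
  obtain ⟨D, hD, h'⟩ := H.J_bd hc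
  obtain ⟨C, hC, h⟩ := H.J_low hc
  have low : ∀ i, a i = b i ∨ C * T.ε i ≤ H.J (η i) (a i) (b i) ∧ C * (b i - a i) ≤ H.J (η i) (a i) (b i) :=
    fun i => (hab i).imp id fun e => by
      have := T.pos i
      have h1 := h _ (hη i) _ (ha i) _ (hb i) (by linarith)
      exact ⟨le_trans (by gcongr; exact e.1) h1, h1⟩
  have pos : ∀ i, 0 < C * T.ε i := fun i => mul_pos hC (T.pos i)
  refine ⟨⟨2 * D / C, fun i p hp => ?_⟩, ?_⟩
  · beta_reduce
    rcases low i with e | e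
    · rw [e, r_eq, abs_zero]; positivity
    have h4 := (pos i).trans_le e.1
    rw [r, abs_div, abs_of_pos h4, div_le_div_iff₀ h4 hC]
    have h1 := (h' _ (hη i) _ (ha i) _ (hK i p hp)).2
    rcases hab i with f | f
    · rw [f, J_self] at h4; exact absurd h4 (lt_irrefl 0)
    calc |H.J (η i) (a i) (pr bo p)| * C ≤ D * (2 * (b i - a i)) * C := by
          gcongr; exact h1.trans (by gcongr; exact f.2 p hp)
      _ = 2 * D * (C * (b i - a i)) := by ring
      _ ≤ _ := by gcongr; exact e.2
  · have : T.MS fun i p => (H.J (η i) (a i) (b i))⁻¹ := by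
      refine Fam.MS.const ⟨C⁻¹, 1, by positivity, fun i p hp => ?_⟩
      have := T.pos i
      beta_reduce
      rcases low i with e | e
      · rw [e, J_self, inv_zero, abs_zero]; positivity
      · rw [pow_one, ← mul_inv, abs_of_pos (inv_pos.2 ((pos i).trans_le e.1))]
        exact inv_anti₀ (pos i) e.1
    exact ((H.MS_J hc bo hη hK hO ha).mul this).congr fun i p _ => by rw [r, div_eq_mul_inv]
end

end Half

/-- A cell `[a, b] × [c, d]` of the grid cut out by `L × L`, possibly degenerate. -/
@[ext] structure Cf where
  a : ℝ
  b : ℝ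
  c : ℝ
  d : ℝ

namespace Cf
/-- First coordinates of the corners. -/
def xi (C : Cf) : Bool → ℝ
  | false => C.a
  | true => C.b
/-- Second coordinates of the corners. -/
def et (C : Cf) : Bool → ℝ
  | false => C.c
  | true => C.d
/-- The domain on which the local models of all four corners are defined. -/
def O (C : Cf) : Set (ℝ × ℝ) :=
  {p | (∀ t, p.1 ∈ Ioo (C.et t) (C.et t + 1)) ∧ ∀ s, p.2 ∈ Ioo (C.xi s - 1) (C.xi s)}
lemma O_open (C : Cf) : IsOpen C.O := by
  have e : C.O = ⋂ t, ⋂ s, {p : ℝ × ℝ | p.1 ∈ Ioo (C.et t) (C.et t + 1) ∧ p.2 ∈ Ioo (C.xi s - 1) (C.xi s)} := by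
    ext p
    simp only [O, mem_iInter, mem_ofPred_eq]
    exact ⟨fun h t s => ⟨h.1 t, h.2 s⟩, fun h => ⟨fun t => (h t true).1, fun s => (h true s).2⟩⟩
  rw [e]
  refine isOpen_iInter_of_finite fun t => isOpen_iInter_of_finite fun s => ?_
  exact (isOpen_Ioo.preimage continuous_fst).inter (isOpen_Ioo.preimage continuous_snd)
/-- Effect of `(x, y) ↦ (y, x - 1)` on cells. -/
def swap (C : Cf) : Cf := ⟨C.c, C.d, C.a - 1, C.b - 1⟩
/-- Image of a cell. -/
def map (F : Perm ℝ) (C : Cf) : Cf := ⟨F C.a, F C.b, F C.c, F C.d⟩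
lemma map_xi (F : Perm ℝ) (C : Cf) : ∀ s, (C.map F).xi s = F (C.xi s)
  | false => rfl
  | true => rfl
lemma map_et (F : Perm ℝ) (C : Cf) : ∀ s, (C.map F).et s = F (C.et s)
  | false => rfl
  | true => rfl
lemma swap_xi (C : Cf) : ∀ s, C.swap.xi s = C.et s
  | false => rfl
  | true => rfl
lemma swap_et (C : Cf) : ∀ s, C.swap.et s = C.xi s - 1
  | false => rfl
  | true => rfl
end Cf

namespace Form
variable (A : Form)

/-- `p` is at distance at least `k` from the boundary of the domains of the four corner models. -/
def Rg (k : ℝ) (C : Cf) (p : ℝ × ℝ) : Prop := ∀ s t, A.Adm k (C.xi s - 1) (C.et t) p.1 p.2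

variable {A} {k : ℝ} {C : Cf} {p : ℝ × ℝ}
lemma Rg.O (h : A.Rg k C p) (hk : 0 < k) : p ∈ C.O :=
  ⟨fun t => Icc_Ioo hk (h true t).xc, fun s => by simpa using Icc_Ioo hk (h s true).yc⟩
lemma Rg.swap (h : A.Rg k C p) : A.swap.Rg k C.swap (p.2, p.1 - 1) := fun s t => by
  rw [Cf.swap_xi, Cf.swap_et]; exact (h t s).swap
lemma Rg.mono (h : A.Rg k C p) {k' : ℝ} (hk : k' ≤ k) : A.Rg k' C p := fun s t => (h s t).mono hk
lemma Rg.mem {s t : Bool} (h : A.Rg k C p) : C.xi s ∈ Mid k (C.et t) := by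
  simpa using (h s t).zc
lemma Rg.mem' {s t : Bool} (h : A.Rg k C p) : C.et t ∈ Mid k (C.xi s - 1) :=
  (h s t).ec
lemma Rg.near (h : A.Rg k C p) {q : ℝ × ℝ} {e : ℝ} (h1 : |q.1 - p.1| ≤ e) (h2 : |q.2 - p.2| ≤ e) (he : e ≤ k / 2)
    (hk : 0 < k) : A.Rg (k / 2) C q := fun s t => by
  have := h s t
  rw [abs_le] at h1 h2
  exact ⟨this.ζL, this.ηL, ⟨by linarith [this.zc.1], by linarith [this.zc.2]⟩,
    ⟨by linarith [this.xc.1], by linarith [this.xc.2]⟩, ⟨by linarith [this.yc.1], by linarith [this.yc.2]⟩⟩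
variable (A)

/-- Auxiliary weight of `b` against `a`. -/
def w0x (C : Cf) (p : ℝ × ℝ) : ℝ := chi (A.hu.r C.c C.a C.b p.1)
/-- Auxiliary weight of `d` against `c`. -/
def w0y (C : Cf) (p : ℝ × ℝ) : ℝ := chi (A.hw.r (C.a - 1) C.c C.d p.2)
/-- Blended relative position of `x` in `[a, b]`. -/
def mx (C : Cf) (p : ℝ × ℝ) : ℝ :=
  (1 - A.w0y C p) * A.hu.r C.c C.a C.b p.1 + A.w0y C p * A.hu.r C.d C.a C.b p.1
/-- Blended relative position of `y` in `[c, d]`. -/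
def my (C : Cf) (p : ℝ × ℝ) : ℝ :=
  (1 - A.w0x C p) * A.hw.r (C.a - 1) C.c C.d p.2 + A.w0x C p * A.hw.r (C.b - 1) C.c C.d p.2
/-- Weight of `b` against `a`. -/
def wx (C : Cf) (p : ℝ × ℝ) : ℝ := chi (A.mx C p)
/-- Weight of `d` against `c`. -/
def wy (C : Cf) (p : ℝ × ℝ) : ℝ := chi (A.my C p)
/-- Local model at a corner. -/
def cor (C : Cf) (s t : Bool) (p : ℝ × ℝ) : ℝ := A.lam (C.xi s - 1) (C.et t) p

/-- The weight `v` or its complement. -/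
def bw : Bool → ℝ → ℝ
  | false, v => 1 - v
  | true, v => v

/-- Blend of the four corner models of a cell. -/
def Φ (C : Cf) (p : ℝ × ℝ) : ℝ :=
  (1 - A.wx C p) * ((1 - A.wy C p) * A.cor C false false p + A.wy C p * A.cor C false true p) +
  A.wx C p * ((1 - A.wy C p) * A.cor C true false p + A.wy C p * A.cor C true true p)

/-- Data of a cell, a point and a scale. -/
structure Ix where
  C : Cf
  p : ℝ × ℝ
  m : ℝ

/-- Standing assumptions on the data. -/
structure Base (k : ℝ) (i : Ix) : Prop where
  k0 : 0 < k
  rg : A.Rg k i.C i.p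
  m0 : 0 < i.m
  m1 : i.m ≤ 1

variable {A} in
lemma Base.km {i : Ix} (h : A.Base k i) : k / 2 * i.m ≤ i.m := by
  have hm := h.rg.mem (s := true) (t := true)
  have : k ≤ 1 := by linarith [hm.1.trans hm.2]
  nlinarith [h.m0]
variable {A} in
lemma Base.near {i : Ix} (h : A.Base k i) {q : ℝ × ℝ} (h1 : |q.1 - i.p.1| ≤ k / 2 * i.m)
    (h2 : |q.2 - i.p.2| ≤ k / 2 * i.m) : A.Rg (k / 2) i.C q :=
  h.rg.near h1 h2 (mul_le_of_le_one_right (half_pos h.k0).le h.m1) h.k0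

/-- Squares of size comparable to `m` about `p`. -/
def fam (k : ℝ) (P : Ix → Prop) : Fam {i // A.Base k i ∧ P i} where
  ε i := k / 2 * i.1.m
  q i := i.1.p
  O i := i.1.C.O
  pos i := mul_pos (half_pos i.2.1.k0) i.2.1.m0
  le i := i.2.1.km.trans i.2.1.m1
  op i := i.1.C.O_open
  sub i _ h1 h2 := (i.2.1.near h1 h2).O (half_pos i.2.1.k0)

variable {A}
section
variable {P : Ix → Prop}

lemma fam_rg {i} {q : ℝ × ℝ} (h : q ∈ (A.fam k P).K i) : A.Rg (k / 2) i.1.C q := i.2.1.near h.1 h.2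

lemma fam_near {i} {q : ℝ × ℝ} (h : q ∈ (A.fam k P).K i) : ∀ b, |pr b q - pr b i.1.p| ≤ i.1.m
  | false => h.1.trans i.2.1.km
  | true => h.2.trans i.2.1.km

lemma fam_R (i : {i // A.Base k i ∧ P i}) : A.Rg (k / 2) i.1.C i.1.p :=
  i.2.1.rg.mono (by linarith [i.2.1.k0])

lemma MS_cor (hk : 0 < k) (s t : Bool) : (A.fam k P).MS fun i => A.cor i.1.C s t := by
  set T := A.fam k P
  have hk2 := half_pos hk
  have hη := fun i : {i // A.Base k i ∧ P i} => (fam_R i s t).ηL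
  have hζ := fun i : {i // A.Base k i ∧ P i} => (fam_R i s t).ζL
  have K1 : ∀ i, ∀ p ∈ T.K i, pr false p ∈ Icc (i.1.C.et t + k / 2) (i.1.C.et t + 1 - k / 2) :=
    fun i p hp => (fam_rg hp s t).xc
  have K2 : ∀ i, ∀ p ∈ T.K i, pr true p ∈ Icc (i.1.C.xi s - 1 + k / 2) (i.1.C.xi s - 1 + 1 - k / 2) :=
    fun i p hp => (fam_rg hp s t).yc
  have O1 : ∀ i, ∀ p ∈ T.O i, pr false p ∈ Ioo (i.1.C.et t) (i.1.C.et t + 1) := fun i p hp => hp.1 t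
  have O2 : ∀ i, ∀ p ∈ T.O i, pr true p ∈ Ioo (i.1.C.xi s - 1) (i.1.C.xi s - 1 + 1) := fun i p hp => by
    have := hp.2 s
    rwa [sub_add_cancel]
  have Z1 := fun i : {i // A.Base k i ∧ P i} => (fam_R i s t).zc
  obtain ⟨B, hB, hb⟩ := A.bounds hk2
  obtain ⟨Bu, hBu⟩ := A.hu.bd 0 (k / 2) hk2
  have c1 : T.MS fun i _ => A.hu.u (i.1.C.et t) 0 (i.1.C.xi s - 1 + 1) :=
    Fam.MS.const (Fam.B0.of_bound fun i _ _ => hBu _ (hη i) _ (Z1 i))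
  have c2 : T.MS fun i _ => exp (- A.hu.u (i.1.C.et t) 0 (i.1.C.xi s - 1 + 1)) :=
    Fam.MS.const (Fam.B0.of_bound (B := exp Bu) fun i _ _ => by
      rw [abs_of_pos (exp_pos _)]
      exact exp_le_exp.2 (by linarith [(abs_le.1 (hBu _ (hη i) _ (Z1 i))).1]))
  have j1 := A.hu.MS_J hk2 false hη K1 O1 Z1
  have j2 := A.hw.MS_J hk2 true hζ K2 O2 (a := fun i => i.1.C.et t) (fun i => (fam_R i).mem')
  have psi := ((j1.mul c2).mul j2).comp (B := B * B) (fun i p hp => by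
    obtain ⟨-, -, -, -, -, -, -, h8⟩ := hb _ _ _ _ (fam_rg hp s t)
    exact h8) A.ψ_smooth
  exact (((A.hu.MS_u hk2 false hη K1 O1 0).add (A.hw.MS_u hk2 true hζ K2 O2 0)).sub c1).add psi

/-- `p` lies in the cell, in the non-degenerate directions. -/
structure Pos (C : Cf) (p : ℝ × ℝ) : Prop where
  ab : C.a ≤ C.b
  cd : C.c ≤ C.d
  px : C.a = C.b ∨ p.1 ∈ Icc C.a C.b
  py : C.c = C.d ∨ p.2 ∈ Icc C.c C.d

/-- The scale does not exceed the size of the cell. -/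
structure Wt (A : Form) (k : ℝ) (i : Ix) : Prop extends A.Base k i where
  pos : Pos i.C i.p
  mx : i.C.a = i.C.b ∨ i.m ≤ i.C.b - i.C.a
  my : i.C.c = i.C.d ∨ i.m ≤ i.C.d - i.C.c

lemma MS_bw {ι} {T : Fam ι} {f : ι → ℝ × ℝ → ℝ} (h : T.MS f) (s : Bool) : T.MS fun i p => bw s (f i p) := by
  cases s
  · exact (Fam.MS.const' 1).sub h
  · exact h
lemma near2 {a b x q m : ℝ} (hm : 0 < m) (h : a = b ∨ x ∈ Icc a b) (n : |q - x| ≤ m) (e : m ≤ b - a) :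
    |q - a| ≤ 2 * (b - a) := by
  have h := h.resolve_left (by linarith)
  rw [abs_le] at n ⊢
  exact ⟨by linarith [h.1], by linarith [h.2]⟩

section
variable (hk : 0 < k) (hW : ∀ i, P i → A.Wt k i)
include hk hW
lemma BS_rx (t : Bool) : (A.fam k P).BS fun i p => A.hu.r (i.1.C.et t) i.1.C.a i.1.C.b p.1 := by
  refine A.hu.BS_r (half_pos hk) false (fun i => (fam_R i true t).ηL) (fun i p hp => (fam_rg hp true t).xc)
    (fun i p hp => hp.1 t) (fun i => (fam_R i).mem (s := false)) (fun i => (fam_R i).mem (s := true)) fun i => ?_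
  have w := hW _ i.2.2
  exact w.mx.imp id fun h => ⟨i.2.1.km.trans h, fun p hp => near2 w.m0 w.pos.px (fam_near hp false) h⟩
lemma BS_ry (s : Bool) : (A.fam k P).BS fun i p => A.hw.r (i.1.C.xi s - 1) i.1.C.c i.1.C.d p.2 := by
  refine A.hw.BS_r (half_pos hk) true (fun i => (fam_R i s true).ζL) (fun i p hp => (fam_rg hp s true).yc)
    (fun i p hp => by have := hp.2 s; rwa [sub_add_cancel]) (fun i => (fam_R i).mem' (t := false))
    (fun i => (fam_R i).mem' (t := true)) fun i => ?_
  have w := hW _ i.2.2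
  exact w.my.imp id fun h => ⟨i.2.1.km.trans h, fun p hp => near2 w.m0 w.pos.py (fam_near hp true) h⟩

lemma MS_w0 : (A.fam k P).MS (fun i => A.w0x i.1.C) ∧ (A.fam k P).MS (fun i => A.w0y i.1.C) :=
  ⟨(BS_rx hk hW false).chi, (BS_ry hk hW false).chi⟩

lemma MS_wx : (A.fam k P).MS fun i => A.wx i.1.C :=
  (Fam.BS.mix (MS_w0 hk hW).2 (fun _ _ => ⟨chi_nn _, chi_le _⟩) (BS_rx hk hW false) (BS_rx hk hW true)).chi
lemma MS_wy : (A.fam k P).MS fun i => A.wy i.1.C :=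
  (Fam.BS.mix (MS_w0 hk hW).1 (fun _ _ => ⟨chi_nn _, chi_le _⟩) (BS_ry hk hW false) (BS_ry hk hW true)).chi
lemma MS_Φ : (A.fam k P).MS fun i => A.Φ i.1.C := by
  have b := fun s => (((MS_bw (MS_wy hk hW) false).mul (MS_cor hk s false)).add ((MS_wy hk hW).mul (MS_cor hk s true)))
  exact ((MS_bw (MS_wx hk hW) false).mul (b false)).add ((MS_wx hk hW).mul (b true))
end
end
end Form

/-! ### Flatness of the differences between blends -/

lemma Dw_zero : ∀ (w : List Bool) (p : ℝ × ℝ), Dw w (fun _ => 0) p = 0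
  | [], _ => rfl
  | b :: w, p => by
    simp [Dw, dv, funext (Dw_zero w)]

lemma Dw_of_ev {f g : ℝ × ℝ → ℝ} {p : ℝ × ℝ} (h : f =ᶠ[𝓝 p] g) (w : List Bool) : Dw w f p = Dw w g p := by
  obtain ⟨O, h1, h2, h3⟩ := mem_nhds_iff.1 h
  exact Dw_congr h2 (fun q hq => h1 hq) w h3

namespace Form
variable {A : Form} {k : ℝ} {C : Cf} {p : ℝ × ℝ}

lemma est2x (A : Form) {c : ℝ} (hc : 0 < c) (N : ℕ) : ∃ C, 0 ≤ C ∧ ∀ ζ ζ' η x y d, A.Adm c ζ η x y → A.Adm c ζ' η x y →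
    |x - (ζ + 1)| ≤ d → |x - (ζ' + 1)| ≤ d → |A.lam ζ η (x, y) - A.lam ζ' η (x, y)| ≤ C * d ^ N := by
  obtain ⟨C, hC, h⟩ := A.swap.est2 hc N
  refine ⟨C, hC, fun ζ ζ' η x y d h1 h2 h3 h4 => ?_⟩
  have := h _ _ _ _ _ d h1.swap h2.swap (by rwa [show x - 1 - ζ = x - (ζ + 1) by ring])
    (by rwa [show x - 1 - ζ' = x - (ζ' + 1) by ring])
  rwa [A.lam_swap hc h1, A.lam_swap hc h2] at this

section
variable {P : Ix → Prop} {f : {i // A.Base k i ∧ P i} → ℝ × ℝ → ℝ}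

/-- Negligibility from two estimates, each of which is available at some of the indices. -/
lemma Neg_of {z : {i // A.Base k i ∧ P i} → ℝ} {a : Bool → {i // A.Base k i ∧ P i} → ℝ} (bo t t' : Bool)
    (h1 : ∀ N, ∃ C, 0 ≤ C ∧ ∀ i, ∀ p ∈ (A.fam k P).K i, ∀ d, |pr bo p - a t i| ≤ d → |pr bo p - a t' i| ≤ d →
      |f i p| ≤ C * d ^ N)
    (h2 : ∀ N, ∃ C, 0 ≤ C ∧ ∀ i, ∀ p ∈ (A.fam k P).K i, |f i p| ≤ C * |pr (!bo) p - z i| ^ N)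
    (h : ∀ i, (∀ t, |pr bo i.1.p - a t i| ≤ i.1.m) ∨ |pr (!bo) i.1.p - z i| ≤ i.1.m) :
    (A.fam k P).Neg f := fun N => by
  obtain ⟨C1, hC1, h1⟩ := h1 N
  obtain ⟨C2, hC2, h2⟩ := h2 N
  refine ⟨max C1 C2 * |4 / k| ^ N, by positivity, fun i p hp => ?_⟩
  have k0 := i.2.1.k0
  have e : 2 * i.1.m = |4 / k| * (k / 2 * i.1.m) := by rw [abs_of_pos (by positivity)]; field_simp; ring
  have near : ∀ b y, |pr b i.1.p - y| ≤ i.1.m → |pr b p - y| ≤ 2 * i.1.m := fun b y hy => by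
    linarith [abs_sub_le (pr b p) (pr b i.1.p) y, fam_near hp b]
  have m0 := i.2.1.m0
  show _ ≤ max C1 C2 * |4 / k| ^ N * (k / 2 * i.1.m) ^ N
  rw [mul_assoc, ← mul_pow, ← e]
  rcases h i with h | h
  · exact (h1 i p hp _ (near _ _ (h t)) (near _ _ (h t'))).trans (by gcongr; exact le_max_left _ _)
  · exact (h2 i p hp).trans (by gcongr; exacts [le_max_right _ _, near _ _ h])

lemma Neg_y (hk : 0 < k) (s : Bool)
    (h : ∀ i, P i → (∀ t, |i.p.2 - i.C.et t| ≤ i.m) ∨ |i.p.1 - i.C.xi s| ≤ i.m) (t t' : Bool) :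
    (A.fam k P).Neg fun i p => A.cor i.1.C s t p - A.cor i.1.C s t' p :=
  Neg_of (a := fun t i => i.1.C.et t) true t t' (fun N => (A.est2 (half_pos hk) N).imp fun _ h => ⟨h.1, fun i p hp d =>
      h.2 _ _ _ _ _ d (fam_rg hp s t) (fam_rg hp s t')⟩)
    (fun N => (A.est1' (half_pos hk) N).imp fun _ h => ⟨h.1, fun i p hp => by
      simpa [cor, pr] using h.2 _ _ _ _ _ (fam_rg hp s t) (fam_rg hp s t')⟩) fun i => h _ i.2.2

lemma Neg_x (hk : 0 < k) (t : Bool)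
    (h : ∀ i, P i → (∀ s, |i.p.1 - i.C.xi s| ≤ i.m) ∨ |i.p.2 - i.C.et t| ≤ i.m) (s s' : Bool) :
    (A.fam k P).Neg fun i p => A.cor i.1.C s t p - A.cor i.1.C s' t p :=
  Neg_of (a := fun s i => i.1.C.xi s) false s s' (fun N => (A.est2x (half_pos hk) N).imp fun _ h => ⟨h.1, fun i p hp d => by
      simpa [cor, pr] using h.2 _ _ _ _ _ d (fam_rg hp s t) (fam_rg hp s' t)⟩)
    (fun N => (A.est1 (half_pos hk) N).imp fun _ h => ⟨h.1, fun i p hp =>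
      h.2 _ _ _ _ _ (fam_rg hp s t) (fam_rg hp s' t)⟩) fun i => h _ i.2.2

lemma Neg_use (hm : (A.fam k P).MS f) (hf : (A.fam k P).Neg f) (w : List Bool) :
    ∃ K, 0 ≤ K ∧ ∀ i, |Dw w (f i) i.1.p| ≤ K * i.1.m ^ 2 := by
  obtain ⟨K, hK, h⟩ := Fam.Neg.Dw hm hf w 2
  refine ⟨K * (k / 2) ^ 2, by positivity, fun i => (h i _ ((A.fam k P).qK i)).trans (le_of_eq ?_)⟩
  show K * (k / 2 * i.1.m) ^ 2 = _
  ring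
end

lemma Rg.small (h : A.Rg k C p) (hk : 0 < k) (t : Bool) : |p.2 - C.et t| ≤ 1 ∧ C.d - C.c ≤ 1 := by
  have h1 := h true t
  have m := h.mem' (s := true) (t := t)
  have n := h.mem' (s := true) (t := true)
  have n' := h.mem' (s := true) (t := false)
  dsimp only [Cf.et] at n n'
  refine ⟨abs_le.2 ⟨?_, ?_⟩, ?_⟩ <;> linarith [h1.yc.1, h1.yc.2, m.1, m.2, n.2, n'.1]

lemma near1 {a b x : ℝ} (h : a = b ∨ x ∈ Icc a b) (l : a < b) : |x - a| ≤ b - a ∧ |x - b| ≤ b - a := by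
  have e := h.resolve_left l.ne
  exact ⟨abs_le.2 ⟨by linarith [e.1], by linarith [e.2]⟩, abs_le.2 ⟨by linarith [e.1], by linarith [e.2]⟩⟩

lemma scale1 {a b x e : ℝ} (hab : a ≤ b) (h : a = b ∨ x ∈ Icc a b) (e0 : 0 < e) : ∃ m, 0 < m ∧ m ≤ e ∧
    (a = b ∨ m ≤ b - a) ∧ (m = e ∨ |x - a| ≤ m ∧ |x - b| ≤ m) := by
  rcases hab.eq_or_lt with l | l
  · exact ⟨e, e0, le_rfl, .inl l, .inl rfl⟩
  refine ⟨min e (b - a), lt_min e0 (sub_pos.2 l), min_le_left _ _, .inr (min_le_right _ _), ?_⟩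
  exact (min_choice e (b - a)).imp id fun e => by rw [e]; exact near1 h l

/-- A scale adapted to the cell. -/
lemma exists_m (hk : 0 < k) (h : A.Rg k C p) (hp : Pos C p) {e : ℝ} (e0 : 0 < e) (e1 : e ≤ 1) :
    ∃ m, A.Wt k ⟨C, p, m⟩ ∧ m ≤ e ∧ (m = e ∨ (∀ s, |p.1 - C.xi s| ≤ m) ∨ ∀ t, |p.2 - C.et t| ≤ m) := by
  obtain ⟨n, n0, ne, nab, nx⟩ := scale1 hp.ab hp.px e0
  obtain ⟨m, m0, mn, mcd, my⟩ := scale1 hp.cd hp.py n0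
  refine ⟨m, ⟨⟨hk, h, m0, by linarith⟩, hp, nab.imp id mn.trans, mcd⟩, mn.trans ne, ?_⟩
  rcases my with rfl | my
  · exact nx.imp id fun h => .inl fun s => by cases s; exacts [h.1, h.2]
  · exact .inr (.inr fun t => by cases t; exacts [my.1, my.2])

lemma smooth_all (hk : 0 < k) (h : A.Rg k C p) (hp : Pos C p) :
    ContDiffOn ℝ ∞ (A.wx C) C.O ∧ ContDiffOn ℝ ∞ (A.wy C) C.O ∧ ContDiffOn ℝ ∞ (A.Φ C) C.O ∧
    ContDiffOn ℝ ∞ (A.w0x C) C.O ∧ (∀ s, ContDiffOn ℝ ∞ (fun p => A.hw.r (C.xi s - 1) C.c C.d p.2) C.O) ∧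
    ∀ s t, ContDiffOn ℝ ∞ (A.cor C s t) C.O := by
  obtain ⟨m, hm, -⟩ := exists_m hk h hp one_pos le_rfl
  have hW : ∀ i, i = ⟨C, p, m⟩ → A.Wt k i := fun i hi => hi ▸ hm
  let i0 : {i : Ix // A.Base k i ∧ i = ⟨C, p, m⟩} := ⟨_, hm.toBase, rfl⟩
  exact ⟨(MS_wx hk hW).smooth i0, (MS_wy hk hW).smooth i0, (MS_Φ hk hW).smooth i0, (MS_w0 hk hW).1.smooth i0,
    fun s => (BS_ry hk hW s).2.smooth i0, fun s t => (MS_cor hk s t).smooth i0⟩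

lemma bw_smooth (s : Bool) : ContDiff ℝ ∞ (bw s) := by
  cases s
  exacts [contDiff_const.sub contDiff_id, contDiff_id]

/-- Difference between two corners over the same `ξ`, weighted. -/
def TA (A : Form) (C : Cf) (s t : Bool) (p : ℝ × ℝ) : ℝ :=
  bw s (A.wx C p) * bw t (A.wy C p) * (A.cor C s t p - A.cor C s (!t) p)
/-- Difference between two corners over the same `η`, weighted. -/
def TB (A : Form) (C : Cf) (t : Bool) (p : ℝ × ℝ) : ℝ :=
  A.wx C p * (A.cor C true t p - A.cor C false t p)

lemma Φ_eq (C : Cf) (t : Bool) (p : ℝ × ℝ) :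
    A.Φ C p = (A.TA C false (!t) p + A.TA C true (!t) p) + A.TB C t p + A.cor C false t p := by
  cases t <;> simp only [Φ, TA, TB, bw, Bool.not_false, Bool.not_true] <;> ring

lemma TA_est (A : Form) (hk : 0 < k) (s t : Bool) (w : List Bool) : ∃ K, 0 ≤ K ∧ ∀ C p e, A.Rg k C p → Pos C p →
    0 < e → e ≤ 1 → (∀ t, |p.2 - C.et t| ≤ e) → |Dw w (A.TA C s t) p| ≤ K * e ^ 2 := by
  let P : Ix → Prop := fun i => A.Wt k i ∧ ((∀ t, |i.p.2 - i.C.et t| ≤ i.m) ∨ |i.p.1 - i.C.xi s| ≤ i.m)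
  have hW : ∀ i, P i → A.Wt k i := fun i hi => hi.1
  have wm := (MS_bw (MS_wx hk hW) s).mul (MS_bw (MS_wy hk hW) t)
  obtain ⟨K, hK, h⟩ := Neg_use (wm.mul ((MS_cor hk s t).sub (MS_cor hk s (!t))))
    ((Neg_y hk s (fun i hi => hi.2) t (!t)).mul_left wm.b0) w
  refine ⟨K, hK, fun C p e hR hp e0 e1 he => ?_⟩
  obtain ⟨m, hm, hme, hc⟩ := exists_m hk hR hp e0 e1
  have m0 : 0 < m := hm.m0
  refine (h ⟨⟨C, p, m⟩, hm.toBase, hm, ?_⟩).trans (show K * m ^ 2 ≤ _ by gcongr)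
  rcases hc with rfl | h | h
  exacts [.inl he, .inr (h s), .inl h]

lemma TB_est (A : Form) (hk : 0 < k) (t : Bool) (w : List Bool) : ∃ K, 0 ≤ K ∧ ∀ C p e, A.Rg k C p → Pos C p →
    0 < e → e ≤ 1 → |p.2 - C.et t| ≤ e → |Dw w (A.TB C t) p| ≤ K * e ^ 2 := by
  let P : Ix → Prop := fun i => A.Wt k i ∧ ((∀ s, |i.p.1 - i.C.xi s| ≤ i.m) ∨ |i.p.2 - i.C.et t| ≤ i.m)
  have wm := MS_wx (P := P) hk (fun i hi => hi.1)
  obtain ⟨K, hK, h⟩ := Neg_use (wm.mul ((MS_cor hk true t).sub (MS_cor hk false t)))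
    ((Neg_x hk t (fun i hi => hi.2) true false).mul_left wm.b0) w
  refine ⟨K, hK, fun C p e hR hp e0 e1 he => ?_⟩
  obtain ⟨m, hm, hme, hc⟩ := exists_m hk hR hp e0 e1
  have m0 : 0 < m := hm.m0
  refine (h ⟨⟨C, p, m⟩, hm.toBase, hm, ?_⟩).trans (show K * m ^ 2 ≤ _ by gcongr)
  rcases hc with rfl | h | h
  exacts [.inr he, .inl h, .inr (h t)]

lemma TC_est (A : Form) (hk : 0 < k) (w : List Bool) : ∃ K, 0 ≤ K ∧ ∀ C p e, A.Rg k C p →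
    0 < e → e ≤ 1 → (∀ t, |p.2 - C.et t| ≤ e) →
    |Dw w (fun q => A.cor C false false q - A.cor C false true q) p| ≤ K * e ^ 2 := by
  obtain ⟨K, hK, h⟩ := Neg_use ((MS_cor hk false false).sub (MS_cor hk false true))
    (Neg_y (P := fun i => ∀ t, |i.p.2 - i.C.et t| ≤ i.m) hk false (fun i hi => Or.inl hi) false true) w
  exact ⟨K, hK, fun C p e hR e0 e1 he => h ⟨⟨C, p, e⟩, ⟨hk, hR, e0, e1⟩, he⟩⟩

/-- The far corner only contributes where the distance to the near one is comparable with the size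
of the cell. -/
lemma active (A : Form) (hk : 0 < k) : ∃ K, 0 ≤ K ∧ ∀ C p, A.Rg k C p → Pos C p → C.c < C.d → ∀ s t,
    (C.d - C.c ≤ K * |p.2 - C.et (!t)| ∨ A.TA C s t =ᶠ[𝓝 p] fun _ => 0) := by
  obtain ⟨B, hB, h1⟩ := A.hw.J_bd hk
  obtain ⟨B', hB', h2⟩ := A.hw.J_low hk
  refine ⟨8 * B / B', by positivity, fun C p hR hp hcd s t => ?_⟩
  by_cases hmy : 1 / 4 ≤ bw t (A.my C p)
  · left
    obtain ⟨s, hs⟩ : ∃ s, 1 / 8 ≤ bw t (A.hw.r (C.xi s - 1) C.c C.d p.2) := by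
      by_contra! hc
      have c1 := hc false
      have c2 := hc true
      have v0 : 0 ≤ A.w0x C p := chi_nn _
      have v1 : A.w0x C p ≤ 1 := chi_le _
      cases t <;> simp only [bw, my, Cf.xi] at hmy c1 c2 <;> nlinarith
    have hR' := hR s true
    have t0 := h2 _ hR'.ζL _ (hR.mem' (t := false)) _ (hR.mem' (t := true)) hcd.le
    simp only [Cf.et] at t0
    have tp := (mul_pos hB' (sub_pos.2 hcd)).trans_le t0
    rw [div_mul_eq_mul_div, le_div_iff₀ hB']
    suffices bw t (A.hw.r (C.xi s - 1) C.c C.d p.2) * A.hw.J (C.xi s - 1) C.c C.d ≤ B * |p.2 - C.et (!t)| by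
      have := mul_le_mul_of_nonneg_right hs tp.le
      linarith
    cases t
    · have j2 := (h1 _ hR'.ζL _ hR'.yc _ (hR.mem' (s := s) (t := true))).2
      have ja := A.hw.J_add hR'.ζL (Icc_Ioo hk (hR.mem' (t := false))) (Icc_Ioo hk hR'.yc)
        (Icc_Ioo hk (hR.mem' (t := true)))
      rw [bw, Half.r, sub_mul, div_mul_cancel₀ _ tp.ne', one_mul, abs_sub_comm]
      refine le_trans ?_ ((le_abs_self _).trans j2)
      simp only [Cf.et] at ja ⊢
      linarith
    · rw [bw, Half.r, div_mul_cancel₀ _ tp.ne']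
      exact (le_abs_self _).trans (h1 _ hR'.ζL _ (hR.mem' (s := s) (t := false)) _ hR'.yc).2
  · right
    obtain ⟨-, -, -, s1, s2, -⟩ := smooth_all hk hR hp
    have hO := C.O_open.mem_nhds (hR.O hk)
    have e1 := s1.continuousOn.continuousAt hO
    have cmy : ContinuousAt (A.my C) p := ((continuousAt_const.sub e1).mul
      ((s2 false).continuousOn.continuousAt hO)).add (e1.mul ((s2 true).continuousOn.continuousAt hO))
    filter_upwards [((bw_smooth t).continuous.continuousAt.comp cmy).eventually_lt_const (not_le.1 hmy)] with q hq
    have : bw t (A.wy C q) = 0 := by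
      cases t
      · change 1 - A.my C q < 1 / 4 at hq
        rw [bw, wy, chi1 (by linarith), sub_self]
      · exact chi0 (le_of_lt hq)
    rw [TA, this, mul_zero, zero_mul]

/-- Degenerating a cell in the second variable changes the blend to second order only. -/
lemma masterY (A : Form) (hk : 0 < k) (w : List Bool) : ∃ K, 0 ≤ K ∧ ∀ (C : Cf) (p : ℝ × ℝ) (y0 : ℝ),
    A.Rg k C p → A.Rg k ⟨C.a, C.b, y0, y0⟩ p → Pos C p → (C.c = C.d → p.2 = C.c) → (p.2 = y0 → C.c = C.d) →
    (y0 ≤ C.c ∨ C.d ≤ y0) →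
    |Dw w (A.Φ C) p - Dw w (A.Φ ⟨C.a, C.b, y0, y0⟩) p| ≤ K * |p.2 - y0| ^ 2 := by
  choose KA hKA ha using fun s t => A.TA_est hk s t w
  choose KB hKB hb using fun t => A.TB_est hk t w
  obtain ⟨KC, hKC, hc⟩ := A.TC_est hk w
  obtain ⟨Q, hQ, hact⟩ := A.active hk
  obtain ⟨M, hM⟩ := (finite_range fun x : Bool × Bool => KA x.1 x.2 + KB x.2 + KC).bddAbove
  replace hM : ∀ s t, KA s t + KB t + KC ≤ M := fun s t => hM ⟨(s, t), rfl⟩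
  have M0 : 0 ≤ M := by linarith [hM true true, hKA true true, hKB true]
  refine ⟨2 * (M * (Q ^ 2 + 1)) + 3 * M, by positivity, fun C p y0 hR hR0 hp hd hy hy0 => ?_⟩
  set C0 : Cf := ⟨C.a, C.b, y0, y0⟩ with hC0
  by_cases hyy : p.2 = y0
  · have e := hy hyy
    have : C = C0 := by
      have e' := hd e
      ext
      exacts [rfl, rfl, show C.c = y0 by linarith, show C.d = y0 by linarith]
    rw [← this, sub_self, abs_zero]; positivity
  set e := |p.2 - y0| with he
  have e0 : 0 < e := abs_pos.2 (sub_ne_zero.2 hyy)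
  have e1 : e ≤ 1 := (hR0.small hk true).1
  have yI : p.2 ∈ Icc C.c C.d := by
    rcases hp.py with h | h
    · rw [← h, hd h]; exact ⟨le_rfl, le_rfl⟩
    · exact h
  obtain ⟨t, ht⟩ : ∃ t, |p.2 - C.et t| ≤ e := by
    rcases hy0 with h | h
    · refine ⟨false, ?_⟩
      show |p.2 - C.c| ≤ _
      rw [he, abs_of_nonneg (by linarith [yI.1]), abs_of_nonneg (by linarith [yI.1])]; linarith
    · refine ⟨true, ?_⟩
      show |p.2 - C.d| ≤ _
      rw [he, abs_of_nonpos (by linarith [yI.2]), abs_of_nonpos (by linarith [yI.2])]; linarith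
  have hp0 : Pos C0 p := ⟨hp.ab, le_rfl, hp.px, Or.inl rfl⟩
  let C1 : Cf := ⟨C.a, C.a, C.et t, y0⟩
  have hR1 : A.Rg k C1 p := fun s t' => by
    rw [show C1.xi s = C.xi false by cases s <;> rfl]
    cases t'
    exacts [hR false t, hR0 false true]
  -- smoothness on a common neighbourhood
  obtain ⟨s1, s2, s3, -, -, sc⟩ := smooth_all hk hR hp
  obtain ⟨r1, r2, r3, -, -, rc⟩ := smooth_all hk hR0 hp0
  have oU : IsOpen (C.O ∩ C0.O) := C.O_open.inter C0.O_open
  have pU : p ∈ C.O ∩ C0.O := ⟨hR.O hk, hR0.O hk⟩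
  have l1 : C.O ∩ C0.O ⊆ C.O := inter_subset_left
  have l2 : C.O ∩ C0.O ⊆ C0.O := inter_subset_right
  have sTA : ∀ s, ContDiffOn ℝ ∞ (A.TA C s (!t)) (C.O ∩ C0.O) := fun s =>
    ((((bw_smooth s).comp_contDiffOn s1).mul ((bw_smooth (!t)).comp_contDiffOn s2)).mul
      ((sc s (!t)).sub (sc s _))).mono l1
  have sTB : ContDiffOn ℝ ∞ (A.TB C t) (C.O ∩ C0.O) := (s1.mul ((sc true t).sub (sc false t))).mono l1
  have sTB0 : ContDiffOn ℝ ∞ (A.TB C0 true) (C.O ∩ C0.O) := (r1.mul ((rc true true).sub (rc false true))).mono l2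
  have sTC : ContDiffOn ℝ ∞ (fun q => A.cor C1 false false q - A.cor C1 false true q) (C.O ∩ C0.O) :=
    ((sc false t).mono l1).sub ((rc false true).mono l2)
  have eqn : (fun q => A.Φ C q - A.Φ C0 q) = fun q => (((A.TA C false (!t) q + A.TA C true (!t) q) +
      A.TB C t q) + (A.cor C1 false false q - A.cor C1 false true q)) - A.TB C0 true q := by
    funext q
    have z : ∀ s, A.TA C0 s (!true) q = 0 := fun s => by
      rw [TA, show A.cor C0 s (!true) q = A.cor C0 s (!!true) q from rfl, sub_self, mul_zero]
    rw [Φ_eq C t, Φ_eq C0 true, z, z, show A.cor C1 false false q = A.cor C false t q from rfl,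
      show A.cor C1 false true q = A.cor C0 false true q from rfl]
    ring
  have a1 := (sTA false).add (sTA true)
  have a2 := a1.add sTB
  have sub : ∀ {f g}, ContDiffOn ℝ ∞ f _ → ContDiffOn ℝ ∞ g _ → Dw w (fun q => f q - g q) p = Dw w f p - Dw w g p :=
    fun hf hg => Dw_sub oU hf hg w pU
  have add : ∀ {f g}, ContDiffOn ℝ ∞ f _ → ContDiffOn ℝ ∞ g _ → Dw w (fun q => f q + g q) p = Dw w f p + Dw w g p :=
    fun hf hg => Dw_add oU hf hg w pU
  rw [← sub (s3.mono l1) (r3.mono l2), eqn, sub (a2.add sTC) sTB0, add a2 sTC, add a1 sTB, add (sTA false) (sTA true)]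
  have bA : ∀ s, |Dw w (A.TA C s (!t)) p| ≤ M * (Q ^ 2 + 1) * e ^ 2 := fun s => by
    have hK : KA s (!t) ≤ M := by linarith [hM s (!t), hKB (!t)]
    have hK0 := hKA s (!t)
    rcases hp.cd.eq_or_lt with h | h
    · refine (ha s (!t) C p e hR hp e0 e1 fun t' => ?_).trans ?_
      · rwa [show C.et t' = C.et t by cases t <;> cases t' <;> simp [Cf.et, h]]
      · gcongr
        nlinarith [mul_nonneg M0 (sq_nonneg Q)]
    rcases hact C p hR hp h s (!t) with h' | h'
    · rw [Bool.not_not] at h'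
      refine (ha s (!t) C p (C.d - C.c) hR hp (sub_pos.2 h) (hR.small hk t).2 fun t' => ?_).trans ?_
      · have := near1 hp.py h
        cases t'
        exacts [this.1, this.2]
      · have : C.d - C.c ≤ Q * e := h'.trans (by gcongr)
        calc KA s (!t) * (C.d - C.c) ^ 2 ≤ M * (Q * e) ^ 2 := by
              have := sub_pos.2 h
              gcongr
          _ ≤ _ := by nlinarith [mul_nonneg M0 (sq_nonneg e)]
    · rw [Dw_of_ev h' w, Dw_zero, abs_zero]; positivity
  have b1 := bA false
  have b2 := bA true
  have b3 := hb t C p e hR hp e0 e1 ht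
  have b4 := hb true C0 p e hR0 hp0 e0 e1 le_rfl
  have b5 := hc C1 p e hR1 e0 e1 fun t' => by cases t'; exacts [ht, le_rfl]
  have k3 : KB t * e ^ 2 ≤ M * e ^ 2 := by gcongr; linarith [hM true t, hKA true t]
  have k4 : KB true * e ^ 2 ≤ M * e ^ 2 := by gcongr; linarith [hM true true, hKA true true]
  have k5 : KC * e ^ 2 ≤ M * e ^ 2 := by gcongr; linarith [hM true t, hKA true t, hKB t]
  rw [abs_le] at *
  constructor <;> linarith

end Form

/-! ### Symmetries of the blends -/

lemma fderiv_sw (f : ℝ × ℝ → ℝ) (p v : ℝ × ℝ) :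
    fderiv ℝ (fun q : ℝ × ℝ => f (q.2, q.1 - 1)) p v = fderiv ℝ f (p.2, p.1 - 1) (v.2, v.1) := by
  let σ := ContinuousLinearEquiv.prodComm ℝ ℝ ℝ
  have e : (fun q : ℝ × ℝ => f (q.2, q.1 - 1)) = (fun q => f (q - (0, 1))) ∘ σ := by
    funext q
    have : (q.2, q.1 - 1) = σ q - (0, 1) := Prod.ext (sub_zero _).symm rfl
    rw [this]; rfl
  rw [e, σ.comp_right_fderiv]
  have : fderiv ℝ (fun q => f (q - (0, 1))) (σ p) = fderiv ℝ f (σ p - (0, 1)) := fderiv_comp_sub _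
  rw [this]
  have e2 : σ p - (0, 1) = (p.2, p.1 - 1) := Prod.ext (sub_zero _) rfl
  rw [e2]; rfl

lemma Dw_sw (f : ℝ × ℝ → ℝ) : ∀ (w : List Bool) (p : ℝ × ℝ),
    Dw w (fun q : ℝ × ℝ => f (q.2, q.1 - 1)) p = Dw (w.map not) f (p.2, p.1 - 1)
  | [], _ => rfl
  | b :: w, p => by
    have : Dw w (fun q : ℝ × ℝ => f (q.2, q.1 - 1)) = fun q => Dw (w.map not) f (q.2, q.1 - 1) :=
      funext (Dw_sw f w)
    cases b <;> simp only [Dw, this, dv, List.map, Bool.not_false, Bool.not_true, ev] <;> rw [fderiv_sw]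

namespace Form
variable {A : Form} {k : ℝ} {C : Cf} {p : ℝ × ℝ}

lemma Rg.xI (h : A.Rg k C p) (hk : 0 < k) (t : Bool) : p.1 ∈ Ioo (C.et t) (C.et t + 1) := Icc_Ioo hk (h true t).xc
lemma Rg.yI (h : A.Rg k C p) (hk : 0 < k) (s : Bool) : p.2 ∈ Ioo (C.xi s - 1) (C.xi s - 1 + 1) :=
  Icc_Ioo hk (h s true).yc

lemma r_sh (H : Half A.L A.G) {η a b x : ℝ} (hη : η ∈ A.L) (ha : a ∈ Arc η) (hb : b ∈ Arc η)
    (hx : x ∈ Arc η) : H.r (η - 1) (a - 1) (b - 1) (x - 1) = H.r η a b x := by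
  have := H.r_inv (good_tr (-1)) (A.trG (-1)) hη ha hb hx
  simpa [sub_eq_add_neg] using this

lemma Φ_swap (hk : 0 < k) (h : A.Rg k C p) : A.swap.Φ C.swap (p.2, p.1 - 1) = A.Φ C p := by
  have e1 : A.swap.w0x C.swap (p.2, p.1 - 1) = A.w0y C p := rfl
  have rs : ∀ t, A.hu.r (C.et t - 1) (C.a - 1) (C.b - 1) (p.1 - 1) = A.hu.r (C.et t) C.a C.b p.1 := fun t =>
    r_sh A.hu (h true t).ηL (Icc_Ioo hk (h.mem (s := false))) (Icc_Ioo hk (h.mem (s := true))) (h.xI hk t)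
  have e2 : A.swap.w0y C.swap (p.2, p.1 - 1) = A.w0x C p := congrArg chi (rs false)
  have e3 : A.swap.mx C.swap (p.2, p.1 - 1) = A.my C p := by
    show (1 - A.swap.w0y C.swap (p.2, p.1 - 1)) * A.hw.r (C.a - 1) C.c C.d p.2 +
      A.swap.w0y C.swap (p.2, p.1 - 1) * A.hw.r (C.b - 1) C.c C.d p.2 = _
    rw [e2, my]
  have e4 : A.swap.my C.swap (p.2, p.1 - 1) = A.mx C p := by
    show (1 - A.swap.w0x C.swap (p.2, p.1 - 1)) * A.hu.r (C.et false - 1) (C.a - 1) (C.b - 1) (p.1 - 1) +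
      A.swap.w0x C.swap (p.2, p.1 - 1) * A.hu.r (C.et true - 1) (C.a - 1) (C.b - 1) (p.1 - 1) = _
    rw [e1, rs, rs]; rfl
  have e5 : ∀ s t, A.swap.cor C.swap s t (p.2, p.1 - 1) = A.cor C t s p := fun s t => by
    show A.swap.lam (C.swap.xi s - 1) (C.swap.et t) (p.2, p.1 - 1) = _
    rw [Cf.swap_xi, Cf.swap_et]
    exact A.lam_swap hk (h t s)
  simp only [Φ, wx, wy, e3, e4, e5]
  ring

lemma Φ_inv (hk : 0 < k) (h : A.Rg k C p) {F : Perm ℝ} (hF : F ∈ A.G) :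
    A.Φ (C.map F) (F p.1, F p.2) + ld F p.1 + ld F p.2 = A.Φ C p := by
  have g := A.good F hF
  have s1 : ∀ x, F x - 1 = F (x - 1) := fun x => by
    have := g.per (x - 1)
    rw [sub_add_cancel] at this; linarith
  have rx : ∀ t, A.hu.r (F (C.et t)) (F C.a) (F C.b) (F p.1) = A.hu.r (C.et t) C.a C.b p.1 := fun t =>
    A.hu.r_inv g hF (h true t).ηL (Icc_Ioo hk (h.mem (s := false))) (Icc_Ioo hk (h.mem (s := true))) (h.xI hk t)
  have ry : ∀ s, A.hw.r (F (C.xi s) - 1) (F C.c) (F C.d) (F p.2) = A.hw.r (C.xi s - 1) C.c C.d p.2 := fun s => by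
    rw [s1]
    exact A.hw.r_inv g hF (h s true).ζL (Icc_Ioo hk (h.mem' (t := false))) (Icc_Ioo hk (h.mem' (t := true)))
      (h.yI hk s)
  have e1 : A.w0x (C.map F) (F p.1, F p.2) = A.w0x C p := congrArg chi (rx false)
  have e2 : A.w0y (C.map F) (F p.1, F p.2) = A.w0y C p := congrArg chi (ry false)
  have e3 : A.mx (C.map F) (F p.1, F p.2) = A.mx C p := by
    show (1 - A.w0y (C.map F) (F p.1, F p.2)) * A.hu.r (F (C.et false)) (F C.a) (F C.b) (F p.1) +
      A.w0y (C.map F) (F p.1, F p.2) * A.hu.r (F (C.et true)) (F C.a) (F C.b) (F p.1) = _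
    rw [e2, rx, rx]; rfl
  have e4 : A.my (C.map F) (F p.1, F p.2) = A.my C p := by
    show (1 - A.w0x (C.map F) (F p.1, F p.2)) * A.hw.r (F (C.xi false) - 1) (F C.c) (F C.d) (F p.2) +
      A.w0x (C.map F) (F p.1, F p.2) * A.hw.r (F (C.xi true) - 1) (F C.c) (F C.d) (F p.2) = _
    rw [e1, ry, ry]; rfl
  have e5 : ∀ s t, A.cor (C.map F) s t (F p.1, F p.2) + ld F p.1 + ld F p.2 = A.cor C s t p := fun s t => by
    show A.lam ((C.map F).xi s - 1) ((C.map F).et t) (F p.1, F p.2) + _ + _ = _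
    rw [Cf.map_xi, Cf.map_et, s1]
    exact A.lam_inv hk (h s t) hF
  have a1 := e5 false false
  have a2 := e5 false true
  have a3 := e5 true false
  have a4 := e5 true true
  simp only [Φ, wx, wy, e3, e4, ← a1, ← a2, ← a3, ← a4]
  ring

lemma Rg.ev (hk : 0 < k) (h : A.Rg k C p) : ∀ᶠ q in 𝓝 p, A.Rg (k / 2) C q := by
  filter_upwards [Metric.closedBall_mem_nhds p (half_pos hk)] with q hq
  rw [Metric.mem_closedBall, Prod.dist_eq, max_le_iff, dist_eq, dist_eq] at hq
  exact h.near hq.1 hq.2 le_rfl hk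

lemma Dw_Φ_swap (hk : 0 < k) (h : A.Rg k C p) (w : List Bool) :
    Dw w (A.Φ C) p = Dw (w.map not) (A.swap.Φ C.swap) (p.2, p.1 - 1) := by
  rw [← Dw_sw]
  refine Dw_of_ev ?_ w
  filter_upwards [h.ev hk] with q hq
  exact (Φ_swap (half_pos hk) hq).symm

lemma Pos.swap (h : Pos C p) : Pos C.swap (p.2, p.1 - 1) where
  ab := h.cd
  cd := by show C.a - 1 ≤ C.b - 1; linarith [h.ab]
  px := h.py
  py := h.px.imp (fun h => by show C.a - 1 = C.b - 1; rw [h])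
    fun h => ⟨by show C.a - 1 ≤ p.1 - 1; linarith [h.1], by show p.1 - 1 ≤ C.b - 1; linarith [h.2]⟩

lemma masterX (A : Form) (hk : 0 < k) (w : List Bool) : ∃ K, 0 ≤ K ∧ ∀ (C : Cf) (p : ℝ × ℝ) (x0 : ℝ),
    A.Rg k C p → A.Rg k ⟨x0, x0, C.c, C.d⟩ p → Pos C p → (C.a = C.b → p.1 = C.a) → (p.1 = x0 → C.a = C.b) →
    (x0 ≤ C.a ∨ C.b ≤ x0) →
    |Dw w (A.Φ C) p - Dw w (A.Φ ⟨x0, x0, C.c, C.d⟩) p| ≤ K * |p.1 - x0| ^ 2 := by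
  obtain ⟨K, hK, h⟩ := A.swap.masterY hk (w.map not)
  refine ⟨K, hK, fun C p x0 h1 h2 h3 h4 h5 h6 => ?_⟩
  have := h C.swap (p.2, p.1 - 1) (x0 - 1) h1.swap h2.swap h3.swap
    (fun e => by
      have e : C.a - 1 = C.b - 1 := e
      show p.1 - 1 = C.a - 1
      rw [h4 (by linarith)])
    (fun e => by
      have e : p.1 - 1 = x0 - 1 := e
      show C.a - 1 = C.b - 1
      rw [h5 (by linarith)])
    (h6.imp (fun h => by show x0 - 1 ≤ C.a - 1; linarith) fun h => by show C.b - 1 ≤ x0 - 1; linarith)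
  rw [Dw_Φ_swap hk h1, Dw_Φ_swap hk h2]
  have e : p.1 - x0 = (p.1 - 1) - (x0 - 1) := by ring
  rw [e]
  exact this

end Form

/-! ### The invariant function on the cylinder -/

namespace Half
variable {L : Set ℝ} {G : Subgroup (Perm ℝ)} (H : Half L G)

/-- When the base point tends to the left end of a gap from the left, relative positions in the gap
tend to `1`. -/
lemma big1 {a m b : ℝ} (ha : a ∈ L) (h1 : a < m) (h2 : m < b) (h3 : b < a + 1) : ∃ δ > 0, ∀ η ∈ L,
    a - δ < η → η < a → ∀ x ∈ Icc m b, 3 / 4 ≤ H.r η a b x := by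
  set c := min (m - a) (a + 1 - b) / 2
  have c0 : 0 < c := half_pos (lt_min (by linarith) (by linarith))
  have c1 : 2 * c ≤ m - a := by have := min_le_left (m - a) (a + 1 - b); simp only [c]; linarith
  have c2 : 2 * c ≤ a + 1 - b := by have := min_le_right (m - a) (a + 1 - b); simp only [c]; linarith
  obtain ⟨B, hB, hb⟩ := H.J_bd c0
  obtain ⟨B', hB', hl⟩ := H.J_low c0
  obtain ⟨δ, hδ, h⟩ := H.bl1 a ha m ⟨h1, by linarith⟩ (3 * B + 1)
  refine ⟨min δ c, lt_min hδ c0, fun η hη e1 e2 x hx => ?_⟩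
  have l1 := min_le_left δ c
  have l2 := min_le_right δ c
  have hI : ∀ x ∈ Icc m b, x ∈ Mid c η := fun x hx =>
    ⟨by linarith [hx.1], by linarith [hx.2]⟩
  have mI := hI m ⟨le_rfl, h2.le⟩
  have bI := hI b ⟨h2.le, le_rfl⟩
  have xI := hI x hx
  have aI : a ∈ Arc η := ⟨e2, by linarith⟩
  have j1 : 3 * B + 1 ≤ H.J η a m := h η hη (by linarith) e2
  have j2 := hl η hη m mI x xI hx.1
  have j4 := H.J_add hη aI (Icc_Ioo c0 mI) (Icc_Ioo c0 xI)
  have j5 := H.J_add hη aI (Icc_Ioo c0 xI) (Icc_Ioo c0 bI)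
  have j6 : B * |b - x| ≤ B := mul_le_of_le_one_right hB (abs_le.2 ⟨by linarith [hx.2], by linarith [hx.1]⟩)
  have j7 : 0 ≤ B' * (x - m) := mul_nonneg hB'.le (by linarith [hx.1])
  have j8 := abs_le.1 (((hb η hη x xI b bI).2).trans j6)
  rw [r, le_div_iff₀ (by linarith)]
  linarith

lemma big2 {a m b : ℝ} (hb1 : b - 1 ∈ L) (h1 : a < m) (h2 : m < b) (h3 : b < a + 1) : ∃ δ > 0, ∀ ζ ∈ L,
    b - 1 < ζ → ζ < b - 1 + δ → ∀ x ∈ Icc a m, H.r ζ a b x ≤ 1 / 4 := by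
  set c := min (b - m) (a + 1 - b) / 2
  have c0 : 0 < c := half_pos (lt_min (by linarith) (by linarith))
  have c1 : 2 * c ≤ b - m := by have := min_le_left (b - m) (a + 1 - b); simp only [c]; linarith
  have c2 : 2 * c ≤ a + 1 - b := by have := min_le_right (b - m) (a + 1 - b); simp only [c]; linarith
  obtain ⟨B, hB, hb⟩ := H.J_bd c0
  obtain ⟨B', hB', hl⟩ := H.J_low c0
  obtain ⟨δ, hδ, h⟩ := H.bl2 (b - 1) hb1 m ⟨by linarith, by linarith⟩ (3 * B + 1)
  refine ⟨min δ c, lt_min hδ c0, fun ζ hζ e1 e2 x hx => ?_⟩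
  have l1 := min_le_left δ c
  have l2 := min_le_right δ c
  have hI : ∀ x ∈ Icc a m, x ∈ Mid c ζ := fun x hx =>
    ⟨by linarith [hx.1], by linarith [hx.2]⟩
  have mI := hI m ⟨h1.le, le_rfl⟩
  have aI := hI a ⟨le_rfl, h1.le⟩
  have xI := hI x hx
  have bI : b ∈ Arc ζ := ⟨by linarith, by linarith⟩
  have j1 : 3 * B + 1 ≤ H.J ζ m (b - 1 + 1) := h ζ hζ e1 (by linarith)
  rw [sub_add_cancel] at j1
  have j2 := hl ζ hζ x xI m mI hx.2
  have j4 := H.J_add hζ (Icc_Ioo c0 xI) (Icc_Ioo c0 mI) bI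
  have j5 := H.J_add hζ (Icc_Ioo c0 aI) (Icc_Ioo c0 xI) bI
  have j6 : B * |x - a| ≤ B := mul_le_of_le_one_right hB (abs_le.2 ⟨by linarith [hx.1], by linarith [hx.2]⟩)
  have j7 : 0 ≤ B' * (m - x) := mul_nonneg hB'.le (by linarith [hx.2])
  have j8 := abs_le.1 (((hb ζ hζ a aI x xI).2).trans j6)
  rw [r, div_le_iff₀ (by linarith)]
  linarith
end Half

namespace Form
variable (A : Form)

/-- The last point of `L` before `x`. -/
def lo (x : ℝ) : ℝ := sSup (A.L ∩ Iic x)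
/-- The first point of `L` after `x`. -/
def hi (x : ℝ) : ℝ := sInf (A.L ∩ Ici x)

lemma lo_ne (x : ℝ) : (A.L ∩ Iic x).Nonempty := by
  obtain ⟨y, hy⟩ := A.ne
  obtain ⟨n, hn⟩ := exists_int_gt (y - x)
  exact ⟨y + ((-n : ℤ) : ℝ), A.per y hy _, by simp only [mem_Iic]; push_cast; linarith⟩
lemma hi_ne (x : ℝ) : (A.L ∩ Ici x).Nonempty := by
  obtain ⟨y, hy⟩ := A.ne
  obtain ⟨n, hn⟩ := exists_int_gt (x - y)
  exact ⟨y + n, A.per y hy _, by simp only [mem_Ici]; linarith⟩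
lemma lo_mem (x : ℝ) : A.lo x ∈ A.L ∩ Iic x :=
  (A.closed.inter isClosed_Iic).csSup_mem (A.lo_ne x) ⟨x, fun _ h => h.2⟩
lemma hi_mem (x : ℝ) : A.hi x ∈ A.L ∩ Ici x :=
  (A.closed.inter isClosed_Ici).csInf_mem (A.hi_ne x) ⟨x, fun _ h => h.2⟩
lemma loL (x : ℝ) : A.lo x ∈ A.L := (A.lo_mem x).1
lemma hiL (x : ℝ) : A.hi x ∈ A.L := (A.hi_mem x).1
lemma lo_le (x : ℝ) : A.lo x ≤ x := (A.lo_mem x).2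
lemma le_hi (x : ℝ) : x ≤ A.hi x := (A.hi_mem x).2
variable {A}
lemma le_lo {l x : ℝ} (hl : l ∈ A.L) (h : l ≤ x) : l ≤ A.lo x := le_csSup ⟨x, fun _ h => h.2⟩ ⟨hl, h⟩
lemma hi_le {l x : ℝ} (hl : l ∈ A.L) (h : x ≤ l) : A.hi x ≤ l := csInf_le ⟨x, fun _ h => h.2⟩ ⟨hl, h⟩
lemma lo_self {x : ℝ} (h : x ∈ A.L) : A.lo x = x := le_antisymm (A.lo_le x) (le_lo h le_rfl)
lemma hi_self {x : ℝ} (h : x ∈ A.L) : A.hi x = x := le_antisymm (hi_le h le_rfl) (A.le_hi x)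
lemma no_mid {l x : ℝ} (hl : l ∈ A.L) : l ≤ A.lo x ∨ A.hi x ≤ l :=
  (le_total l x).imp (le_lo hl) (hi_le hl)
lemma lo_eq {a b x : ℝ} (ha : a ∈ A.L) (hab : ∀ l ∈ A.L, l ≤ a ∨ b ≤ l) (h : a ≤ x) (h' : x < b) : A.lo x = a := by
  refine le_antisymm ?_ (le_lo ha h)
  rcases hab _ (A.loL x) with h2 | h2
  · exact h2
  · linarith [A.lo_le x]
lemma hi_eq {a b x : ℝ} (hb : b ∈ A.L) (hab : ∀ l ∈ A.L, l ≤ a ∨ b ≤ l) (h : a < x) (h' : x ≤ b) : A.hi x = b := by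
  refine le_antisymm (hi_le hb h') ?_
  rcases hab _ (A.hiL x) with h2 | h2
  · linarith [A.le_hi x]
  · exact h2
lemma lo_sub (x : ℝ) : A.lo (x - 1) = A.lo x - 1 := by
  refine le_antisymm ?_ (le_lo (A.pm (A.loL x)) (by linarith [A.lo_le x]))
  have := le_lo (x := x) (A.pp (A.loL (x - 1))) (by linarith [A.lo_le (x - 1)])
  linarith
lemma hi_sub (x : ℝ) : A.hi (x - 1) = A.hi x - 1 := by
  refine le_antisymm (hi_le (A.pm (A.hiL x)) (by linarith [A.le_hi x])) ?_
  have := hi_le (x := x) (A.pp (A.hiL (x - 1))) (by linarith [A.le_hi (x - 1)])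
  linarith
section inv
variable {F : Perm ℝ} (hF : F ∈ A.G)
include hF
lemma L_iff (x : ℝ) : F x ∈ A.L ↔ x ∈ A.L :=
  ⟨fun h => by simpa using A.LG F⁻¹ (inv_mem hF) _ h, A.LG F hF x⟩
lemma lo_F (x : ℝ) : A.lo (F x) = F (A.lo x) := by
  have m := (A.good F hF).mono
  refine le_antisymm ?_ (le_lo (A.LG F hF _ (A.loL x)) (m.monotone (A.lo_le x)))
  obtain ⟨z, hz⟩ := F.surjective (A.lo (F x))
  have h1 := A.loL (F x)
  have h2 := A.lo_le (F x)
  rw [← hz] at h1 h2 ⊢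
  exact m.monotone (le_lo ((L_iff hF z).1 h1) (m.le_iff_le.1 h2))
lemma hi_F (x : ℝ) : A.hi (F x) = F (A.hi x) := by
  have m := (A.good F hF).mono
  refine le_antisymm (hi_le (A.LG F hF _ (A.hiL x)) (m.monotone (A.le_hi x))) ?_
  obtain ⟨z, hz⟩ := F.surjective (A.hi (F x))
  have h1 := A.hiL (F x)
  have h2 := A.le_hi (F x)
  rw [← hz] at h1 h2 ⊢
  exact m.monotone (hi_le ((L_iff hF z).1 h1) (m.le_iff_le.1 h2))
end inv

variable (A)
/-- No point of `L` strictly between `y` and `x`. -/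
def c1 (q : ℝ × ℝ) : Prop := ∀ l ∈ A.L, l ≤ q.2 ∨ q.1 ≤ l
/-- No point of `L` strictly between `x` and `y + 1`. -/
def c2 (q : ℝ × ℝ) : Prop := ∀ l ∈ A.L, l ≤ q.1 ∨ q.2 + 1 ≤ l

/-- The cell attached to a point: the product of the gaps of `L` containing the coordinates, reduced to a
single corner when both coordinates are in the same gap. -/
def cfg (q : ℝ × ℝ) : Cf :=
  if A.c1 q then ⟨A.hi q.1, A.hi q.1, A.lo q.2, A.lo q.2⟩
  else if A.c2 q then ⟨A.lo q.1, A.lo q.1, A.hi q.2, A.hi q.2⟩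
  else ⟨A.lo q.1, A.hi q.1, A.lo q.2, A.hi q.2⟩

/-- The open band `y < x < y + 1`, universal cover of the cylinder. -/
def Ω : Set (ℝ × ℝ) := {q | q.2 < q.1 ∧ q.1 < q.2 + 1}
lemma Ω_open : IsOpen Ω :=
  (isOpen_lt continuous_snd continuous_fst).inter (isOpen_lt continuous_fst (continuous_snd.add continuous_const))

variable {A}
lemma two {u v : ℝ} (h : ∃ l ∈ A.L, u < l ∧ l < v) : ∃ l ∈ A.L, ∃ l' ∈ A.L, u < l ∧ l < l' ∧ l' < v := by
  obtain ⟨l, hl, h1, h2⟩ := h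
  obtain ⟨l', hl', ne, hd⟩ := A.perfect l hl (min (l - u) (v - l)) (lt_min (by linarith) (by linarith))
  have e1 := hd.trans_le (min_le_left _ _)
  have e2 := hd.trans_le (min_le_right _ _)
  rw [abs_lt] at e1 e2
  rcases lt_or_gt_of_ne ne with h | h
  · exact ⟨l', hl', l, hl, by linarith, h, h2⟩
  · exact ⟨l, hl, l', hl', h1, h, by linarith⟩

lemma not_c1 {q : ℝ × ℝ} (h : ¬ A.c1 q) : ∃ l ∈ A.L, ∃ l' ∈ A.L, q.2 < l ∧ l < l' ∧ l' < q.1 := by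
  refine two ?_
  simpa only [c1, not_forall, not_or, not_le, exists_prop] using h
lemma not_c2 {q : ℝ × ℝ} (h : ¬ A.c2 q) : ∃ l ∈ A.L, ∃ l' ∈ A.L, q.1 < l ∧ l < l' ∧ l' < q.2 + 1 := by
  refine two ?_
  simpa only [c2, not_forall, not_or, not_le, exists_prop] using h

/-- Beyond a gap there is room for two more points of `L` before the next period. -/
lemma room {a b : ℝ} (ha : a ∈ A.L) (hb : b ∈ A.L) (hab : a < b) (h : ∀ l ∈ A.L, l ≤ a ∨ b ≤ l) :
    ∃ l ∈ A.L, ∃ l' ∈ A.L, b < l ∧ l < l' ∧ l' < a + 1 := by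
  refine two ?_
  obtain ⟨l, hl, ne, hd⟩ := A.perfect b hb (b - a) (by linarith)
  rw [abs_lt] at hd
  have hl' : b < l := by
    rcases h l hl with h | h
    · linarith
    · exact lt_of_le_of_ne h ne.symm
  have hb1 : b ≤ a + 1 := (h _ (A.pp ha)).resolve_left (by linarith)
  have lt : b < a + 1 := by
    refine lt_of_le_of_ne hb1 fun e => ?_
    -- the gap would be a whole period, against perfectness
    rcases h (l - 1) (A.pm hl) with h | h <;> linarith
  obtain ⟨l, hl, ne, hd⟩ := A.perfect b hb (min (b - a) (a + 1 - b)) (lt_min (by linarith) (by linarith))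
  have e1 := hd.trans_le (min_le_left _ _)
  have e2 := hd.trans_le (min_le_right _ _)
  rw [abs_lt] at e1 e2
  refine ⟨l, hl, ?_, by linarith⟩
  rcases h l hl with h | h
  · linarith
  · exact lt_of_le_of_ne h ne.symm

lemma c1_gap {q : ℝ × ℝ} (h : A.c1 q) : ∀ l ∈ A.L, l ≤ A.lo q.2 ∨ A.hi q.1 ≤ l := fun l hl =>
  (h l hl).imp (le_lo hl) (hi_le hl)

/-- The two one-corner cases exclude each other. -/
lemma not_both {q : ℝ × ℝ} (hq : q ∈ Ω) (h : A.c1 q) : ¬ A.c2 q := fun h2 => by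
  obtain ⟨l, hl, l', hl', e1, e2, e3⟩ := room (A.loL q.2) (A.hiL q.1)
    (by linarith [A.lo_le q.2, A.le_hi q.1, hq.1]) (c1_gap h)
  rcases h2 l hl with h | h <;> linarith [A.lo_le q.2, A.le_hi q.1]

lemma Rg_box {k l1 l1' l2 l2' a b c d x y : ℝ} (k1 : l1 + k ≤ l1') (k2 : l2 + k ≤ l2') (k3 : l1 + k ≤ x)
    (k4 : x + k ≤ l2') (k5 : y + k ≤ l1') (k6 : l2 + k ≤ y + 1) (aL : a ∈ A.L) (bL : b ∈ A.L) (cL : c ∈ A.L)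
    (dL : d ∈ A.L) (ha : l1' ≤ a ∧ a ≤ l2) (hb : l1' ≤ b ∧ b ≤ l2) (hc : l2' - 1 ≤ c ∧ c ≤ l1)
    (hd : l2' - 1 ≤ d ∧ d ≤ l1) : A.Rg k ⟨a, b, c, d⟩ (x, y) := by
  have key : ∀ ξ ∈ A.L, ∀ η ∈ A.L, l1' ≤ ξ ∧ ξ ≤ l2 → l2' - 1 ≤ η ∧ η ≤ l1 → A.Adm k (ξ - 1) η x y :=
    fun ξ hξ η hη h1 h2 => ⟨A.pm hξ, hη, ⟨by linarith, by linarith⟩,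
      ⟨by linarith, by linarith⟩, ⟨by linarith, by linarith⟩⟩
  intro s t
  cases s <;> cases t
  exacts [key _ aL _ cL ha hc, key _ aL _ dL ha hd, key _ bL _ cL hb hc, key _ bL _ dL hb hd]

lemma cfg_swap {q : ℝ × ℝ} (hq : q ∈ Ω) : A.swap.cfg (q.2, q.1 - 1) = (A.cfg q).swap := by
  have e1 : A.swap.c1 (q.2, q.1 - 1) ↔ A.c2 q := by
    refine ⟨fun h l hl => ?_, fun h l hl => ?_⟩
    · rcases h (l - 1) (A.pm hl) with h | h
      · left; have h : l - 1 ≤ q.1 - 1 := h; linarith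
      · right; have h : q.2 ≤ l - 1 := h; linarith
    · rcases h (l + 1) (A.pp hl) with h | h
      · left; show l ≤ q.1 - 1; linarith
      · right; show q.2 ≤ l; linarith
  have e2 : A.swap.c2 (q.2, q.1 - 1) ↔ A.c1 q := by
    refine forall₂_congr fun l _ => or_congr Iff.rfl ?_
    show q.1 - 1 + 1 ≤ l ↔ _
    rw [sub_add_cancel]
  have l1 : ∀ x, A.swap.lo x = A.lo x := fun _ => rfl
  have l2 : ∀ x, A.swap.hi x = A.hi x := fun _ => rfl
  unfold cfg
  rw [if_congr e1 rfl rfl]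
  by_cases h1 : A.c1 q
  · rw [if_neg (not_both hq h1), if_pos (e2.2 h1), if_pos h1]
    simp only [l1, l2, hi_sub, Cf.swap]
  · by_cases h2 : A.c2 q
    · rw [if_pos h2, if_neg h1, if_pos h2]
      simp only [l1, l2, lo_sub, Cf.swap]
    · rw [if_neg h2, if_neg (fun h => h1 (e2.1 h)), if_neg h1, if_neg h2]
      simp only [l1, l2, lo_sub, hi_sub, Cf.swap]

lemma cfg_F {F : Perm ℝ} (hF : F ∈ A.G) (q : ℝ × ℝ) : A.cfg (F q.1, F q.2) = (A.cfg q).map F := by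
  have m := (A.good F hF).mono
  have e1 : A.c1 (F q.1, F q.2) ↔ A.c1 q := by
    refine ⟨fun h l hl => ?_, fun h l hl => ?_⟩
    · exact (h (F l) (A.LG F hF l hl)).imp m.le_iff_le.1 m.le_iff_le.1
    · obtain ⟨z, rfl⟩ := F.surjective l
      exact (h z ((L_iff hF z).1 hl)).imp m.le_iff_le.2 m.le_iff_le.2
  have e2 : A.c2 (F q.1, F q.2) ↔ A.c2 q := by
    have s1 : F q.2 + 1 = F (q.2 + 1) := ((A.good F hF).per _).symm
    refine ⟨fun h l hl => ?_, fun h l hl => ?_⟩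
    · refine (h (F l) (A.LG F hF l hl)).imp m.le_iff_le.1 fun h => ?_
      have h : F q.2 + 1 ≤ F l := h
      rw [s1] at h; exact m.le_iff_le.1 h
    · obtain ⟨z, rfl⟩ := F.surjective l
      refine (h z ((L_iff hF z).1 hl)).imp m.le_iff_le.2 fun h => ?_
      show F q.2 + 1 ≤ F z
      rw [s1]; exact m.le_iff_le.2 h
  unfold cfg
  rw [if_congr e1 rfl rfl, if_congr e2 rfl rfl]
  simp only [lo_F hF, hi_F hF]
  split_ifs <;> rfl

end Form

namespace Form
variable {A : Form}

/-- The conditions of `Rg_box` that do not involve the cell. -/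
structure Box (k l1 l1' l2 l2' : ℝ) (q : ℝ × ℝ) : Prop where
  k1 : l1 + k ≤ l1'
  k2 : l2 + k ≤ l2'
  k3 : l1 + k ≤ q.1
  k4 : q.1 + k ≤ l2'
  k5 : q.2 + k ≤ l1'
  k6 : l2 + k ≤ q.2 + 1

lemma Box.rg {k l1 l1' l2 l2' : ℝ} {q : ℝ × ℝ} (h : Box k l1 l1' l2 l2' q) {a b c d : ℝ} (aL : a ∈ A.L)
    (bL : b ∈ A.L) (cL : c ∈ A.L) (dL : d ∈ A.L) (ha : l1' ≤ a ∧ a ≤ l2) (hb : l1' ≤ b ∧ b ≤ l2)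
    (hc : l2' - 1 ≤ c ∧ c ≤ l1) (hd : l2' - 1 ≤ d ∧ d ≤ l1) : A.Rg k ⟨a, b, c, d⟩ q :=
  Rg_box h.k1 h.k2 h.k3 h.k4 h.k5 h.k6 aL bL cL dL ha hb hc hd

lemma box_ev {l1 l1' l2 l2' : ℝ} {p : ℝ × ℝ} (k1 : l1 < l1') (k2 : l2 < l2') (k3 : l1 < p.1)
    (k4 : p.1 < l2') (k5 : p.2 < l1') (k6 : l2 < p.2 + 1) : ∃ k > 0, ∀ᶠ q in 𝓝 p, Box k l1 l1' l2 l2' q := by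
  have e : ∀ s : Finset ℝ, (∀ x ∈ s, 0 < x) → ∃ k > 0, ∀ x ∈ s, 2 * k ≤ x := by
    intro s
    induction s using Finset.induction_on with
    | empty => exact fun _ => ⟨1, one_pos, by simp⟩
    | insert a s _ ih =>
      intro h
      obtain ⟨k, hk, h'⟩ := ih fun x hx => h x (Finset.mem_insert_of_mem hx)
      have ha := h a (Finset.mem_insert_self _ _)
      refine ⟨min k (a / 2), lt_min hk (by linarith), fun x hx => ?_⟩
      rcases Finset.mem_insert.1 hx with rfl | hx
      · linarith [min_le_right k (x / 2)]
      · linarith [h' x hx, min_le_left k (a / 2)]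
  obtain ⟨k, hk, h⟩ := e {l1' - l1, l2' - l2, p.1 - l1, l2' - p.1, l1' - p.2, p.2 + 1 - l2} (by
    simp only [Finset.mem_insert, Finset.mem_singleton]
    rintro x (rfl | rfl | rfl | rfl | rfl | rfl) <;> linarith)
  simp only [Finset.mem_insert, Finset.mem_singleton, forall_eq_or_imp, forall_eq] at h
  obtain ⟨h1, h2, h3, h4, h5, h6⟩ := h
  refine ⟨k, hk, ?_⟩
  filter_upwards [Metric.closedBall_mem_nhds p hk] with q hq
  rw [Metric.mem_closedBall, Prod.dist_eq, max_le_iff, dist_eq, dist_eq, abs_le, abs_le] at hq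
  obtain ⟨⟨a, b⟩, c, d⟩ := hq
  exact ⟨by linarith, by linarith, by linarith, by linarith, by linarith, by linarith⟩

lemma lo_hi_eq {x : ℝ} (h : A.lo x = A.hi x) : x = A.lo x :=
  le_antisymm (h ▸ A.le_hi x) (A.lo_le x)

lemma Pos_gen {q : ℝ × ℝ} : Pos ⟨A.lo q.1, A.hi q.1, A.lo q.2, A.hi q.2⟩ q :=
  ⟨(A.lo_le _).trans (A.le_hi _), (A.lo_le _).trans (A.le_hi _), Or.inr ⟨A.lo_le _, A.le_hi _⟩,
    Or.inr ⟨A.lo_le _, A.le_hi _⟩⟩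

lemma cfg_good {q : ℝ × ℝ} (hq : q ∈ Ω) : ∃ k > 0, A.Rg k (A.cfg q) q ∧ Pos (A.cfg q) q := by
  have x1 := A.lo_le q.1
  have x2 := A.le_hi q.1
  have y1 := A.lo_le q.2
  have y2 := A.le_hi q.2
  have q1 := hq.1
  have q2 := hq.2
  unfold cfg
  by_cases h1 : A.c1 q
  · obtain ⟨l, hl, l', hl', e1, e2, e3⟩ := room (A.loL q.2) (A.hiL q.1) (by linarith) (c1_gap h1)
    obtain ⟨k, hk, hb⟩ := box_ev (l1 := A.lo q.2) (l1' := A.hi q.1) (l2 := l) (l2' := l') (p := q)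
      (by linarith) e2 (by linarith) (by linarith) (by linarith) (by linarith)
    rw [if_pos h1]
    exact ⟨k, hk, hb.self_of_nhds.rg (A.hiL _) (A.hiL _) (A.loL _) (A.loL _) ⟨le_rfl, e1.le⟩ ⟨le_rfl, e1.le⟩
      ⟨by linarith, le_rfl⟩ ⟨by linarith, le_rfl⟩, le_rfl, le_rfl, Or.inl rfl, Or.inl rfl⟩
  · obtain ⟨l1, hl1, l1', hl1', a1, a2, a3⟩ := not_c1 h1
    have b1 := le_lo hl1' a3.le
    have b2 := hi_le hl1 a1.le
    rw [if_neg h1]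
    by_cases h2 : A.c2 q
    · obtain ⟨k, hk, hb⟩ := box_ev (l1 := l1) (l1' := l1') (l2 := A.lo q.1) (l2' := A.hi q.2 + 1) (p := q)
        (by linarith) (by linarith) (by linarith) (by linarith) (by linarith) (by linarith)
      rw [if_pos h2]
      exact ⟨k, hk, hb.self_of_nhds.rg (A.loL _) (A.loL _) (A.hiL _) (A.hiL _) ⟨b1, le_rfl⟩ ⟨b1, le_rfl⟩
        ⟨by linarith, b2⟩ ⟨by linarith, b2⟩, le_rfl, le_rfl, Or.inl rfl, Or.inl rfl⟩
    · obtain ⟨l2, hl2, l2', hl2', c1, c2, c3⟩ := not_c2 h2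
      obtain ⟨k, hk, hb⟩ := box_ev (l1 := l1) (l1' := l1') (l2 := l2) (l2' := l2') (p := q)
        (by linarith) (by linarith) (by linarith) (by linarith) (by linarith) (by linarith)
      rw [if_neg h2]
      have d1 := le_lo (A.pm hl2') (show l2' - 1 ≤ q.2 by linarith)
      exact ⟨k, hk, hb.self_of_nhds.rg (A.loL _) (A.hiL _) (A.loL _) (A.hiL _) ⟨b1, by linarith⟩
        ⟨by linarith, hi_le hl2 c1.le⟩ ⟨d1, by linarith⟩ ⟨by linarith, b2⟩, Pos_gen⟩

/-- Locally, either the base coordinate is in `L` or the gap does not change. -/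
lemma lo_hi_ev (x0 : ℝ) : x0 ∈ A.L ∨ ∀ᶠ x in 𝓝 x0, A.lo x = A.lo x0 ∧ A.hi x = A.hi x0 := by
  by_cases h : x0 ∈ A.L
  · exact Or.inl h
  · right
    have h1 : A.lo x0 < x0 := lt_of_le_of_ne (A.lo_le _) fun e => h (e ▸ A.loL x0)
    have h2 : x0 < A.hi x0 := lt_of_le_of_ne (A.le_hi _) fun e => h (e ▸ A.hiL x0)
    filter_upwards [Ioo_mem_nhds h1 h2] with x hx
    exact ⟨lo_eq (A.loL _) (fun l hl => no_mid hl) hx.1.le hx.2, hi_eq (A.hiL _) (fun l hl => no_mid hl) hx.1 hx.2.le⟩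

lemma sq_dist {K : ℝ} (hK : 0 ≤ K) {d : ℝ} {q p : ℝ × ℝ} (h : |d| ≤ dist q p) : K * |d| ^ 2 ≤ K * dist q p ^ 2 := by
  gcongr
lemma d1 (q p : ℝ × ℝ) : |q.1 - p.1| ≤ dist q p := by
  rw [Prod.dist_eq, ← dist_eq]; exact le_max_left _ _
lemma d2 (q p : ℝ × ℝ) : |q.2 - p.2| ≤ dist q p := by
  rw [Prod.dist_eq, ← dist_eq]; exact le_max_right _ _

lemma flat_gen {p : ℝ × ℝ} (h1 : ¬ A.c1 p) (h2 : ¬ A.c2 p) (w : List Bool) :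
    ∃ C : ℝ, ∀ᶠ q in 𝓝 p, |Dw w (A.Φ (A.cfg q)) q - Dw w (A.Φ (A.cfg p)) q| ≤ C * dist q p ^ 2 := by
  obtain ⟨l1, hl1, l1', hl1', a1, a2, a3⟩ := not_c1 h1
  obtain ⟨l2, hl2, l2', hl2', e1, e2, e3⟩ := not_c2 h2
  obtain ⟨k, hk, hb⟩ := box_ev (l1 := l1) (l1' := l1') (l2 := l2) (l2' := l2') (p := p)
    (by linarith) (by linarith) (by linarith) (by linarith) (by linarith) (by linarith)
  obtain ⟨K1, hK1, mY⟩ := A.masterY hk w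
  obtain ⟨K2, hK2, mX⟩ := A.masterX hk w
  have near : ∀ᶠ q in 𝓝 p, q.2 < l1 ∧ l1' < q.1 ∧ q.1 < l2 ∧ l2' < q.2 + 1 := by
    have c1 : ContinuousAt (fun q : ℝ × ℝ => q.1) p := continuous_fst.continuousAt
    have c2 : ContinuousAt (fun q : ℝ × ℝ => q.2) p := continuous_snd.continuousAt
    have c3 : ContinuousAt (fun q : ℝ × ℝ => q.2 + 1) p := c2.add continuousAt_const
    filter_upwards [c2.eventually_lt_const a1, c1.eventually_const_lt a3, c1.eventually_lt_const e1,
      c3.eventually_const_lt e3] with q h1 h2 h3 h4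
    exact ⟨h1, h2, h3, h4⟩
  have X : p.1 ∈ A.L ∨ ∀ᶠ q in 𝓝 p, A.lo q.1 = A.lo p.1 ∧ A.hi q.1 = A.hi p.1 :=
    (lo_hi_ev p.1).imp id fun h => continuous_fst.continuousAt.eventually h
  have Y : p.2 ∈ A.L ∨ ∀ᶠ q in 𝓝 p, A.lo q.2 = A.lo p.2 ∧ A.hi q.2 = A.hi p.2 :=
    (lo_hi_ev p.2).imp id fun h => continuous_snd.continuousAt.eventually h
  have cg : ∀ q : ℝ × ℝ, q.2 < l1 ∧ l1' < q.1 ∧ q.1 < l2 ∧ l2' < q.2 + 1 →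
      A.cfg q = ⟨A.lo q.1, A.hi q.1, A.lo q.2, A.hi q.2⟩ := fun q h => by
    have n1 : ¬ A.c1 q := fun hc => by rcases hc l1 hl1 with h' | h' <;> linarith [h.1, h.2.1]
    have n2 : ¬ A.c2 q := fun hc => by rcases hc l2 hl2 with h' | h' <;> linarith [h.2.2.1, h.2.2.2]
    rw [cfg, if_neg n1, if_neg n2]
  have bx : ∀ q : ℝ × ℝ, q.2 < l1 ∧ l1' < q.1 ∧ q.1 < l2 ∧ l2' < q.2 + 1 →
      (l1' ≤ A.lo q.1 ∧ A.lo q.1 ≤ l2) ∧ (l1' ≤ A.hi q.1 ∧ A.hi q.1 ≤ l2) ∧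
      (l2' - 1 ≤ A.lo q.2 ∧ A.lo q.2 ≤ l1) ∧ (l2' - 1 ≤ A.hi q.2 ∧ A.hi q.2 ≤ l1) := fun q ⟨h1, h2, h3, h4⟩ => by
    have := A.lo_le q.1
    have := A.le_hi q.1
    have := A.lo_le q.2
    have := A.le_hi q.2
    exact ⟨⟨le_lo hl1' h2.le, by linarith⟩, ⟨by linarith, hi_le hl2 h3.le⟩,
      ⟨le_lo (A.pm hl2') (by linarith), by linarith⟩, ⟨by linarith, hi_le hl1 h1.le⟩⟩
  have bp := bx p near.self_of_nhds
  have SY : ∀ᶠ q in 𝓝 p, |Dw w (A.Φ ⟨A.lo q.1, A.hi q.1, A.lo q.2, A.hi q.2⟩) q -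
      Dw w (A.Φ ⟨A.lo q.1, A.hi q.1, A.lo p.2, A.hi p.2⟩) q| ≤ K1 * dist q p ^ 2 := by
    rcases Y with Y | Y
    · filter_upwards [near, hb] with q hq hb
      have b := bx q hq
      rw [lo_self Y, hi_self Y] at *
      refine (mY ⟨A.lo q.1, A.hi q.1, A.lo q.2, A.hi q.2⟩ q p.2
        (hb.rg (A.loL _) (A.hiL _) (A.loL _) (A.hiL _) b.1 b.2.1 b.2.2.1 b.2.2.2)
        (hb.rg (A.loL _) (A.hiL _) Y Y b.1 b.2.1 bp.2.2.1 bp.2.2.2) Pos_gen lo_hi_eq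
        (fun e => ?_) (no_mid Y)).trans (sq_dist hK1 (d2 q p))
      show A.lo q.2 = A.hi q.2
      rw [e, lo_self Y, hi_self Y]
    · filter_upwards [Y] with q hq
      rw [hq.1, hq.2, sub_self, abs_zero]; positivity
  have SX : ∀ᶠ q in 𝓝 p, |Dw w (A.Φ ⟨A.lo q.1, A.hi q.1, A.lo p.2, A.hi p.2⟩) q -
      Dw w (A.Φ ⟨A.lo p.1, A.hi p.1, A.lo p.2, A.hi p.2⟩) q| ≤ K2 * dist q p ^ 2 := by
    rcases X with X | X
    · have PY : ∀ᶠ q in 𝓝 p, A.lo p.2 = A.hi p.2 ∨ q.2 ∈ Icc (A.lo p.2) (A.hi p.2) := by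
        rcases Y with Y | Y
        · exact Eventually.of_forall fun q => Or.inl (by rw [lo_self Y, hi_self Y])
        · filter_upwards [Y] with q hq
          rw [← hq.1, ← hq.2]
          exact Or.inr ⟨A.lo_le _, A.le_hi _⟩
      filter_upwards [near, hb, PY] with q hq hb hy
      have b := bx q hq
      rw [lo_self X, hi_self X] at *
      refine (mX ⟨A.lo q.1, A.hi q.1, A.lo p.2, A.hi p.2⟩ q p.1
        (hb.rg (A.loL _) (A.hiL _) (A.loL _) (A.hiL _) b.1 b.2.1 bp.2.2.1 bp.2.2.2)
        (hb.rg X X (A.loL _) (A.hiL _) bp.1 bp.2.1 bp.2.2.1 bp.2.2.2)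
        ⟨(A.lo_le _).trans (A.le_hi _), (A.lo_le _).trans (A.le_hi _), Or.inr ⟨A.lo_le _, A.le_hi _⟩, hy⟩ lo_hi_eq
        (fun e => ?_) (no_mid X)).trans (sq_dist hK2 (d1 q p))
      show A.lo q.1 = A.hi q.1
      rw [e, lo_self X, hi_self X]
    · filter_upwards [X] with q hq
      rw [hq.1, hq.2, sub_self, abs_zero]; positivity
  refine ⟨K1 + K2, ?_⟩
  filter_upwards [SX, SY, near] with q h1 h2 h3
  rw [cg q h3, cg p near.self_of_nhds, add_mul]
  refine (abs_sub_le _ _ _).trans (add_le_add h2 h1)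

end Form

namespace Form
variable {A : Form}

lemma Φ_right {a b c d : ℝ} {p : ℝ × ℝ} (h1 : 3 / 4 ≤ A.hu.r c a b p.1) (h2 : 3 / 4 ≤ A.hu.r d a b p.1) :
    A.Φ ⟨a, b, c, d⟩ p = A.Φ ⟨b, b, c, d⟩ p := by
  have e1 : A.w0x ⟨a, b, c, d⟩ p = 1 := chi1 h1
  have e2 : A.wx ⟨a, b, c, d⟩ p = 1 := by
    refine chi1 ?_
    have n1 : 0 ≤ A.w0y ⟨a, b, c, d⟩ p := chi_nn _
    have n2 : A.w0y ⟨a, b, c, d⟩ p ≤ 1 := chi_le _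
    simp only [mx]
    nlinarith
  have e3 : A.wx ⟨b, b, c, d⟩ p = 0 := chi0 (by simp [mx, Half.r_eq])
  have e4 : A.wy ⟨a, b, c, d⟩ p = A.wy ⟨b, b, c, d⟩ p := by
    simp only [wy, my, e1]; congr 1; ring
  have e5 : ∀ t, A.cor ⟨a, b, c, d⟩ true t p = A.cor ⟨b, b, c, d⟩ false t p := fun t => rfl
  rw [Φ, Φ, e2, e3, e4, e5, e5]; ring

lemma Φ_left {a b c d : ℝ} {p : ℝ × ℝ} (h1 : A.hw.r (a - 1) c d p.2 ≤ 1 / 4) (h2 : A.hw.r (b - 1) c d p.2 ≤ 1 / 4) :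
    A.Φ ⟨a, b, c, d⟩ p = A.Φ ⟨a, b, c, c⟩ p := by
  have e1 : A.w0y ⟨a, b, c, d⟩ p = 0 := chi0 h1
  have e2 : A.wy ⟨a, b, c, d⟩ p = 0 := by
    refine chi0 ?_
    have n1 : 0 ≤ A.w0x ⟨a, b, c, d⟩ p := chi_nn _
    have n2 : A.w0x ⟨a, b, c, d⟩ p ≤ 1 := chi_le _
    simp only [my]
    nlinarith
  have e3 : A.wy ⟨a, b, c, c⟩ p = 0 := chi0 (by simp [my, Half.r_eq])
  have e4 : A.wx ⟨a, b, c, d⟩ p = A.wx ⟨a, b, c, c⟩ p := by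
    simp only [wx, mx, e1]; congr 1; ring
  have e5 : ∀ s, A.cor ⟨a, b, c, d⟩ s false p = A.cor ⟨a, b, c, c⟩ s false p := fun t => rfl
  rw [Φ, Φ, e2, e3, e4, e5, e5]; ring

/-- Points of `L` accumulate at the ends of a gap, from outside. -/
lemma accum {a b : ℝ} (ha : a ∈ A.L) (hb : b ∈ A.L) (hab : a < b) (h : ∀ l ∈ A.L, l ≤ a ∨ b ≤ l) {ε : ℝ} (hε : 0 < ε) :
    (∃ l ∈ A.L, a - ε < l ∧ l < a) ∧ ∃ l ∈ A.L, b < l ∧ l < b + ε := by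
  have h0 : 0 < min ε (b - a) := lt_min hε (by linarith)
  constructor
  · obtain ⟨l, hl, ne, hd⟩ := A.perfect a ha _ h0
    have e := abs_lt.1 (hd.trans_le (min_le_left _ _))
    have e' := abs_lt.1 (hd.trans_le (min_le_right _ _))
    refine ⟨l, hl, by linarith, lt_of_le_of_ne ((h l hl).resolve_right fun h => ?_) ne⟩
    linarith
  · obtain ⟨l, hl, ne, hd⟩ := A.perfect b hb _ h0
    have e := abs_lt.1 (hd.trans_le (min_le_left _ _))
    have e' := abs_lt.1 (hd.trans_le (min_le_right _ _))
    refine ⟨l, hl, lt_of_le_of_ne ((h l hl).resolve_left fun h => ?_) ne.symm, by linarith⟩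
    linarith

lemma flat1 {p : ℝ × ℝ} (hp : p ∈ Ω) (h1 : A.c1 p) (w : List Bool) :
    ∃ C : ℝ, ∀ᶠ q in 𝓝 p, |Dw w (A.Φ (A.cfg q)) q - Dw w (A.Φ (A.cfg p)) q| ≤ C * dist q p ^ 2 := by
  have hp1 := hp.1
  have cp : A.cfg p = ⟨A.hi p.1, A.hi p.1, A.lo p.2, A.lo p.2⟩ := by rw [cfg, if_pos h1]
  have gap := c1_gap h1
  have aL := A.loL p.2
  have bL := A.hiL p.1
  have ay := A.lo_le p.2
  have xb := A.le_hi p.1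
  rw [cp]
  generalize A.lo p.2 = a at *
  generalize A.hi p.1 = b at *
  have hab : a < b := by linarith
  obtain ⟨l, hl, l', hl', r1, r2, r3⟩ := room aL bL hab gap
  obtain ⟨k, hk, hb⟩ := box_ev (l1 := a) (l1' := b) (l2 := l) (l2' := l') (p := p)
    hab r2 (by linarith) (by linarith) (by linarith) (by linarith)
  obtain ⟨K1, hK1, mY⟩ := A.masterY hk w
  obtain ⟨K2, hK2, mX⟩ := A.masterX hk w
  have hm1 : p.2 < (p.2 + p.1) / 2 := by linarith
  have hm2 : (p.2 + p.1) / 2 < p.1 := by linarith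
  generalize (p.2 + p.1) / 2 = m at *
  obtain ⟨δ1, hδ1, B1⟩ := A.hu.big1 aL (show a < m by linarith) (show m < b by linarith) (by linarith)
  obtain ⟨δ2, hδ2, B2⟩ := A.hw.big2 (A.pm bL) (show a < m by linarith) (show m < b by linarith) (by linarith)
  obtain ⟨l3, hl3, u1, u2⟩ := (accum aL bL hab gap hδ1).1
  obtain ⟨l4, hl4, u3, u4⟩ := (accum aL bL hab gap hδ2).2
  have near : ∀ᶠ q in 𝓝 p, l3 < q.2 ∧ q.2 < m ∧ m < q.1 ∧ q.1 < l4 ∧ q.1 < l ∧ l' < q.2 + 1 := by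
    have c1 : ContinuousAt (fun q : ℝ × ℝ => q.1) p := continuous_fst.continuousAt
    have c2 : ContinuousAt (fun q : ℝ × ℝ => q.2) p := continuous_snd.continuousAt
    have c3 : ContinuousAt (fun q : ℝ × ℝ => q.2 + 1) p := c2.add continuousAt_const
    filter_upwards [c2.eventually_const_lt (show l3 < p.2 by linarith), c2.eventually_lt_const hm1,
      c1.eventually_const_lt hm2, c1.eventually_lt_const (show p.1 < l4 by linarith),
      c1.eventually_lt_const (show p.1 < l by linarith),
      c3.eventually_const_lt (show l' < p.2 + 1 by linarith)] with q h1 h2 h3 h4 h5 h6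
    exact ⟨h1, h2, h3, h4, h5, h6⟩
  refine ⟨K1 + K2, ?_⟩
  filter_upwards [near, hb] with q ⟨n1, n2, n3, n4, n5, n6⟩ hb
  have yl := A.lo_le q.2
  have yh := A.le_hi q.2
  have xl := A.lo_le q.1
  have xh := A.le_hi q.1
  have D0 := sq_nonneg (dist q p)
  have gen : (q.2 < a ∨ b < q.1) → A.cfg q = ⟨A.lo q.1, A.hi q.1, A.lo q.2, A.hi q.2⟩ := fun h => by
    have n1 : ¬ A.c1 q := fun hc => by
      rcases h with h | h
      · rcases hc a aL with h' | h' <;> linarith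
      · rcases hc b bL with h' | h' <;> linarith
    have n2 : ¬ A.c2 q := fun hc => by rcases hc l hl with h' | h' <;> linarith
    rw [cfg, if_neg n1, if_neg n2]
  have bx : b ≤ q.1 → (b ≤ A.lo q.1 ∧ A.lo q.1 ≤ l) ∧ (b ≤ A.hi q.1 ∧ A.hi q.1 ≤ l) := fun h =>
    ⟨⟨le_lo bL h, by linarith⟩, by linarith, hi_le hl n5.le⟩
  have byy : q.2 ≤ a → (l' - 1 ≤ A.lo q.2 ∧ A.lo q.2 ≤ a) ∧ (l' - 1 ≤ A.hi q.2 ∧ A.hi q.2 ≤ a) := fun h =>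
    ⟨⟨le_lo (A.pm hl') (by linarith), by linarith⟩, by linarith, hi_le aL h⟩
  have ba : b ≤ b ∧ b ≤ l := ⟨le_rfl, r1.le⟩
  have aa : l' - 1 ≤ a ∧ a ≤ a := ⟨by linarith, le_rfl⟩
  have disty : q.2 ≤ a → |q.2 - a| ≤ dist q p := fun h => by
    refine le_trans ?_ (d2 q p)
    rw [abs_of_nonpos (by linarith), abs_of_nonpos (by linarith)]; linarith
  have distx : b ≤ q.1 → |q.1 - b| ≤ dist q p := fun h => by
    refine le_trans ?_ (d1 q p)
    rw [abs_of_nonneg (by linarith), abs_of_nonneg (by linarith)]; linarith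
  have selfx : q.1 = b → A.lo q.1 = A.hi q.1 := fun e => by rw [e, lo_self bL, hi_self bL]
  have selfy : q.2 = a → A.lo q.2 = A.hi q.2 := fun e => by rw [e, lo_self aL, hi_self aL]
  rcases lt_or_ge q.2 a with hy | hy <;> rcases lt_or_ge q.1 b with hx | hx
  · -- only `y` has left the gap: the weights in `x` are saturated
    obtain ⟨z, hz, z1, z2⟩ := (accum aL bL hab gap (show 0 < a - q.2 by linarith)).1
    have dh : A.hi q.2 ≤ z := hi_le hz (by linarith)
    have ch : l3 ≤ A.lo q.2 := le_lo hl3 n1.le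
    rw [gen (Or.inl hy), lo_eq aL gap (by linarith) hx, hi_eq bL gap (by linarith) hx.le]
    have e : A.Φ ⟨a, b, A.lo q.2, A.hi q.2⟩ =ᶠ[𝓝 q] A.Φ ⟨b, b, A.lo q.2, A.hi q.2⟩ := by
      filter_upwards [continuous_fst.continuousAt.eventually (Ioo_mem_nhds n3 hx)] with q' hq'
      exact Φ_right (B1 _ (A.loL _) (by linarith) (by linarith) _ ⟨hq'.1.le, hq'.2.le⟩)
        (B1 _ (A.hiL _) (by linarith) (by linarith) _ ⟨hq'.1.le, hq'.2.le⟩)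
    rw [Dw_of_ev e]
    obtain ⟨g1, g2⟩ := byy hy.le
    refine (mY ⟨b, b, A.lo q.2, A.hi q.2⟩ q a (hb.rg bL bL (A.loL _) (A.hiL _) ba ba g1 g2)
      (hb.rg bL bL aL aL ba ba aa aa) ⟨le_rfl, yl.trans yh, Or.inl rfl, Or.inr ⟨yl, yh⟩⟩ lo_hi_eq selfy
      (no_mid aL)).trans ((sq_dist hK1 (disty hy.le)).trans ?_)
    nlinarith
  · obtain ⟨g1, g2⟩ := byy hy.le
    obtain ⟨f1, f2⟩ := bx hx
    rw [gen (Or.inl hy), add_mul]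
    refine (abs_sub_le _ (Dw w (A.Φ ⟨A.lo q.1, A.hi q.1, a, a⟩) q) _).trans (add_le_add
      ((mY ⟨A.lo q.1, A.hi q.1, A.lo q.2, A.hi q.2⟩ q a (hb.rg (A.loL _) (A.hiL _) (A.loL _) (A.hiL _) f1 f2 g1 g2)
        (hb.rg (A.loL _) (A.hiL _) aL aL f1 f2 aa aa) Pos_gen lo_hi_eq selfy (no_mid aL)).trans
        (sq_dist hK1 (disty hy.le)))
      ((mX ⟨A.lo q.1, A.hi q.1, a, a⟩ q b (hb.rg (A.loL _) (A.hiL _) aL aL f1 f2 aa aa)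
        (hb.rg bL bL aL aL ba ba aa aa) ⟨xl.trans xh, le_rfl, Or.inr ⟨xl, xh⟩, Or.inl rfl⟩ lo_hi_eq selfx
        (no_mid bL)).trans (sq_dist hK2 (distx hx))))
  · have : A.c1 q := fun t ht => (gap t ht).imp (fun h => by linarith) (fun h => by linarith)
    rw [cfg, if_pos this, lo_eq aL gap hy (by linarith), hi_eq bL gap (by linarith) hx.le, sub_self, abs_zero]
    positivity
  · rcases hx.eq_or_lt with hx | hx
    · have : A.c1 q := fun t ht => (gap t ht).imp (fun h => by linarith) (fun h => by linarith)
      rw [cfg, if_pos this, lo_eq aL gap hy (by linarith), hi_eq bL gap (by linarith) hx.ge, sub_self, abs_zero]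
      positivity
    obtain ⟨f1, f2⟩ := bx hx.le
    have eC : Dw w (A.Φ (A.cfg q)) q = Dw w (A.Φ ⟨A.lo q.1, A.hi q.1, a, a⟩) q := by
      rw [gen (Or.inr hx)]
      rcases hy.eq_or_lt with hy | hy
      · rw [← hy, lo_self aL, hi_self aL]
      obtain ⟨z, hz, z1, z2⟩ := (accum aL bL hab gap (show 0 < q.1 - b by linarith)).2
      have dh : z ≤ A.lo q.1 := le_lo hz (by linarith)
      have ch : A.hi q.1 ≤ l4 := hi_le hl4 n4.le
      rw [lo_eq aL gap hy.le (by linarith), hi_eq bL gap hy (by linarith)]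
      refine Dw_of_ev ?_ w
      filter_upwards [continuous_snd.continuousAt.eventually (Ioo_mem_nhds hy n2)] with q' hq'
      exact Φ_left (B2 _ (A.pm (A.loL _)) (by linarith) (by linarith) _ ⟨hq'.1.le, hq'.2.le⟩)
        (B2 _ (A.pm (A.hiL _)) (by linarith) (by linarith) _ ⟨hq'.1.le, hq'.2.le⟩)
    rw [eC]
    refine (mX ⟨A.lo q.1, A.hi q.1, a, a⟩ q b (hb.rg (A.loL _) (A.hiL _) aL aL f1 f2 aa aa)
        (hb.rg bL bL aL aL ba ba aa aa) ⟨xl.trans xh, le_rfl, Or.inr ⟨xl, xh⟩, Or.inl rfl⟩ lo_hi_eq selfx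
        (no_mid bL)).trans ((sq_dist hK2 (distx hx.le)).trans ?_)
    nlinarith

lemma flat2 {p : ℝ × ℝ} (hp : p ∈ Ω) (h2 : A.c2 p) (w : List Bool) :
    ∃ C : ℝ, ∀ᶠ q in 𝓝 p, |Dw w (A.Φ (A.cfg q)) q - Dw w (A.Φ (A.cfg p)) q| ≤ C * dist q p ^ 2 := by
  have hp1 := hp.1
  have hp2 := hp.2
  have hs : ((p.2, p.1 - 1) : ℝ × ℝ) ∈ Ω := ⟨by show p.1 - 1 < p.2; linarith, by show p.2 < p.1 - 1 + 1; linarith⟩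
  have hc : A.swap.c1 (p.2, p.1 - 1) := fun t ht => by
    rcases h2 (t + 1) (A.pp ht) with h | h
    · left; show t ≤ p.1 - 1; linarith
    · right; show p.2 ≤ t; linarith
  obtain ⟨C, hC⟩ := flat1 hs hc (w.map not)
  have ct : Tendsto (fun q : ℝ × ℝ => (q.2, q.1 - 1)) (𝓝 p) (𝓝 (p.2, p.1 - 1)) :=
    Continuous.tendsto (by fun_prop) p
  obtain ⟨k, hk, hR, -⟩ := A.cfg_good hp
  refine ⟨C, ?_⟩
  filter_upwards [ct.eventually hC, hR.ev hk, Ω_open.mem_nhds hp] with q h hR' hq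
  obtain ⟨k', hk', hq', -⟩ := A.cfg_good hq
  rw [Dw_Φ_swap hk' hq', Dw_Φ_swap (half_pos hk) hR', ← cfg_swap hq, ← cfg_swap hp]
  refine h.trans (le_of_eq ?_)
  congr 2
  rw [Prod.dist_eq, Prod.dist_eq, max_comm]
  simp [dist_eq]

variable (A)
/-- The invariant function: logarithm of the density of the invariant form, in the band. -/
def U (q : ℝ × ℝ) : ℝ := A.Φ (A.cfg q) q

lemma U_smooth : ContDiffOn ℝ ∞ A.U Ω := by
  refine glue Ω_open (fun p => A.Φ (A.cfg p)) (fun p => (A.cfg p).O) (fun p hp => ?_) fun p hp w => ?_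
  · obtain ⟨k, hk, hR, hP⟩ := A.cfg_good hp
    exact ⟨Cf.O_open _, hR.O hk, (smooth_all hk hR hP).2.2.1⟩
  · by_cases h1 : A.c1 p
    · exact flat1 hp h1 w
    by_cases h2 : A.c2 p
    · exact flat2 hp h2 w
    exact flat_gen h1 h2 w

lemma U_inv {F : Perm ℝ} (hF : F ∈ A.G) {q : ℝ × ℝ} (hq : q ∈ Ω) :
    A.U (F q.1, F q.2) + ld F q.1 + ld F q.2 = A.U q := by
  obtain ⟨k, hk, hR, -⟩ := A.cfg_good hq
  rw [U, U, cfg_F hF]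
  exact Φ_inv hk hR hF

end Form

/-! ### From finitely many contracting words to expanding dynamics -/

/-- Distance to the nearest integer. -/
def nd (t : ℝ) : ℝ := ‖(t : UnitAddCircle)‖

lemma nd_nn (t : ℝ) : 0 ≤ nd t := norm_nonneg _
lemma nd_tri (a b c : ℝ) : nd (a - c) ≤ nd (a - b) + nd (b - c) := by
  have := norm_add_le ((a - b : ℝ) : UnitAddCircle) ((b - c : ℝ) : UnitAddCircle)
  rwa [← AddCircle.coe_add, sub_add_sub_cancel] at this
lemma nd_comm (a b : ℝ) : nd (a - b) = nd (b - a) := by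
  rw [nd, nd, ← norm_neg, ← AddCircle.coe_neg, neg_sub]
lemma nd_int (t : ℝ) (m : ℤ) : nd (t + m) = nd t := by
  rw [nd, nd, UnitAddCircle.norm_eq, UnitAddCircle.norm_eq, round_add_intCast]
  push_cast; congr 1; ring
lemma nd_ex (t : ℝ) : ∃ m : ℤ, nd t = |t - m| := ⟨round t, UnitAddCircle.norm_eq⟩
lemma nd_le (t : ℝ) (m : ℤ) : nd t ≤ |t - m| := by
  rw [nd, UnitAddCircle.norm_eq]; exact round_le t m
lemma nd_le_abs (t : ℝ) : nd t ≤ |t| := by simpa using nd_le t 0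
lemma nd_cont : Continuous nd := continuous_norm.comp (AddCircle.continuous_mk' 1)
lemma nd_zero {t : ℝ} (h : nd t = 0) : ∃ m : ℤ, t = m := by
  obtain ⟨m, hm⟩ := nd_ex t
  exact ⟨m, by rw [h] at hm; linarith [abs_eq_zero.1 hm.symm]⟩

lemma nd_ge {c r z : ℝ} (hz : z ∈ Mid r c) : r ≤ nd (z - c) := by
  obtain ⟨k, hk⟩ := nd_ex (z - c)
  rw [hk, le_abs]
  rcases le_or_gt k 0 with h | h
  · have : (k : ℝ) ≤ 0 := by exact_mod_cast h
    left; linarith [hz.1]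
  · have : (1 : ℝ) ≤ k := by exact_mod_cast h
    right; linarith [hz.2]

/-- A marked family of lifts of circle diffeomorphisms such that reduced words of length between `M` and
`2 * M` contract the complement of an interval around the point attached to the inverse word. -/
structure Ping (S : Type) where
  inv : S → S
  f : S → Perm ℝ
  inv_inv : ∀ t, inv (inv t) = t
  inv_ne : ∀ t, inv t ≠ t
  good : ∀ t, Good (f t)
  inv_f : ∀ t, f (inv t) = (f t)⁻¹
  three : ∀ e e' : S, ∃ b, b ≠ e ∧ b ≠ e'
  M : ℕ
  M1 : 1 ≤ M
  r : ℝ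
  r0 : 0 < r
  A : List S → ℝ
  pp : ∀ w : List S, w.IsChain (fun s t => t ≠ inv s) → M ≤ w.length → w.length < 2 * M → ∀ z,
    r ≤ nd (z - A ((w.reverse.map inv).take M)) →
    nd ((w.map f).prod z - A (w.take M)) < r ∧ deriv (w.map f).prod z ≤ 1 / 2
  sepA : ∀ u v : List S, u.IsChain (fun s t => t ≠ inv s) → v.IsChain (fun s t => t ≠ inv s) →
    u.length = M → v.length = M → u.head? ≠ v.head? → 4 * r ≤ nd (A u - A v)

lemma good_one : Good (1 : Perm ℝ) := by
  have := good_tr 0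
  rwa [show tr 0 = 1 from Equiv.ext fun x => by simp] at this

lemma Good.mul {F H : Perm ℝ} (h : Good F) (h' : Good H) : Good (F * H : Perm ℝ) := h.comp h'

namespace Ping
variable {S : Type} (P : Ping S)

/-- Reduced words. -/
def red (w : List S) : Prop := w.IsChain (fun s t => t ≠ P.inv s)
/-- The lift attached to a word. -/
def fw (w : List S) : Perm ℝ := (w.map P.f).prod
/-- The inverse word. -/
def rev (w : List S) : List S := w.reverse.map P.inv

variable {P}

lemma fw_append (u v : List S) : P.fw (u ++ v) = P.fw u * P.fw v := by simp [fw]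
lemma rev_append (u v : List S) : P.rev (u ++ v) = P.rev v ++ P.rev u := by simp [rev]
lemma good_fw (w : List S) : Good (P.fw w) := by
  induction w with
  | nil => exact good_one
  | cons t w ih => exact (P.good t).mul ih
lemma fw_rev (w : List S) : P.fw (P.rev w) = (P.fw w)⁻¹ := by
  induction w with
  | nil => simp [fw, rev]
  | cons t w ih =>
    rw [← List.singleton_append, rev_append, fw_append, fw_append, mul_inv_rev, ih]
    simp [fw, rev, P.inv_f]
lemma rev_rev (w : List S) : P.rev (P.rev w) = w := by
  simp [rev, List.map_reverse, Function.comp_def, P.inv_inv]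
lemma red_rev {w : List S} (h : P.red w) : P.red (P.rev w) := by
  rw [red, rev, List.isChain_map, List.isChain_reverse]
  refine List.IsChain.imp (fun a b hab e => hab ?_) h
  rw [P.inv_inv] at e
  exact e.symm
lemma length_rev (w : List S) : (P.rev w).length = w.length := by simp [rev]
lemma red_take {w : List S} (h : P.red w) (k : ℕ) : P.red (w.take k) := List.IsChain.take h k

lemma far3 {w v : List S} (h : P.red (w ++ v)) (hw : P.M ≤ w.length) (hv : P.M ≤ v.length) {z : ℝ}
    (hz : nd (z - P.A (v.take P.M)) ≤ P.r) : 3 * P.r ≤ nd (z - P.A ((P.rev w).take P.M)) := by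
  obtain ⟨h1, h2, h3⟩ := List.isChain_append.1 h
  have := P.M1
  have e := P.sepA (v.take P.M) ((P.rev w).take P.M) (red_take h2 _) (red_take (red_rev h1) _)
    (by simp [hv]) (by simp [length_rev, hw]) (by
      rw [List.head?_take, List.head?_take, if_neg (by omega), if_neg (by omega), rev, List.head?_map,
        List.head?_reverse]
      intro e
      obtain ⟨s, hs⟩ : ∃ s, s ∈ w.getLast? := by
        cases hl : w.getLast? with
        | none => rw [List.getLast?_eq_none_iff] at hl; simp [hl] at hw; omega
        | some s => exact ⟨s, rfl⟩
      have hs' : w.getLast? = some s := hs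
      rw [hs'] at e
      exact h3 s hs (P.inv s) (by simp [e]) rfl)
  have t := nd_tri (P.A (v.take P.M)) z (P.A ((P.rev w).take P.M))
  rw [nd_comm] at hz
  linarith

lemma far {w v : List S} (h : P.red (w ++ v)) (hw : P.M ≤ w.length) (hv : P.M ≤ v.length) {z : ℝ}
    (hz : nd (z - P.A (v.take P.M)) ≤ P.r) : P.r ≤ nd (z - P.A ((P.rev w).take P.M)) := by
  linarith [far3 h hw hv hz, P.r0]

variable (P) in
lemma pinf : ∃ C > 0, ∃ θ, 0 < θ ∧ θ < 1 ∧ ∀ w, P.red w → P.M ≤ w.length → ∀ z,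
    P.r ≤ nd (z - P.A ((P.rev w).take P.M)) →
    nd (P.fw w z - P.A (w.take P.M)) < P.r ∧ deriv (P.fw w) z ≤ C * θ ^ w.length := by
  obtain ⟨θ, t0, t1, ht⟩ := exists_root_rate (θ := 1 / 2) (by norm_num) (by norm_num) P.M P.M1
  have tp := fun k : ℕ => pow_pos t0 k
  refine ⟨(θ ^ (2 * P.M))⁻¹, inv_pos.2 (tp _), θ, t0, t1, fun w => ?_⟩
  induction h : w.length using Nat.strong_induction_on generalizing w with
  | _ n ih =>
  intro hr hM z hz
  rcases lt_or_ge n (2 * P.M) with h2 | h2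
  · obtain ⟨a, b⟩ := P.pp w hr (h ▸ hM) (h ▸ h2) z hz
    refine ⟨a, b.trans ?_⟩
    have : θ ^ (2 * P.M) ≤ θ ^ n := pow_le_pow_of_le_one t0.le t1.le h2.le
    rw [← div_eq_inv_mul, le_div_iff₀ (tp _)]
    linarith [tp n]
  · have hw : w.take P.M ++ w.drop P.M = w := List.take_append_drop _ _
    set u := w.take P.M
    set v := w.drop P.M
    have lu : u.length = P.M := by simp [u]; omega
    have lv : v.length = n - P.M := by simp [v, h]
    have hr' : P.red (u ++ v) := hw.symm ▸ hr
    obtain ⟨r1, r2, -⟩ := List.isChain_append.1 hr'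
    have tk : (P.rev w).take P.M = (P.rev v).take P.M := by
      rw [← hw, rev_append, List.take_append_of_le_length (by rw [length_rev]; omega)]
    rw [tk] at hz
    obtain ⟨a, b⟩ := ih (n - P.M) (by have := P.M1; omega) v lv r2 (by omega) z hz
    have f := far hr' lu.ge (by omega) a.le
    obtain ⟨a', b'⟩ := P.pp u r1 lu.ge (by have := P.M1; omega) _ f
    rw [List.take_of_length_le lu.le] at a'
    have e : P.fw w = P.fw u * P.fw v := by rw [← fw_append, hw]
    refine ⟨by rw [e]; exact a', ?_⟩
    rw [e, Equiv.Perm.coe_mul, deriv_comp z ((good_fw u).diff _) ((good_fw v).diff _)]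
    calc deriv (P.fw u) (P.fw v z) * deriv (P.fw v) z ≤ θ ^ P.M * ((θ ^ (2 * P.M))⁻¹ * θ ^ (n - P.M)) :=
          mul_le_mul (b'.trans ht) b ((good_fw v).dpos _).le (tp _).le
      _ = _ := by
        rw [mul_left_comm, ← pow_add]; congr 2; omega

/-- Contraction constant. -/
def C (P : Ping S) : ℝ := P.pinf.choose
lemma C0 : 0 < P.C := P.pinf.choose_spec.1
/-- Contraction rate. -/
def θ (P : Ping S) : ℝ := P.pinf.choose_spec.2.choose
lemma θ0 : 0 < P.θ := P.pinf.choose_spec.2.choose_spec.1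
lemma θ1 : P.θ < 1 := P.pinf.choose_spec.2.choose_spec.2.1
lemma pinf' {w : List S} (hr : P.red w) (h : P.M ≤ w.length) {z : ℝ}
    (hz : P.r ≤ nd (z - P.A ((P.rev w).take P.M))) :
    nd (P.fw w z - P.A (w.take P.M)) < P.r ∧ deriv (P.fw w) z ≤ P.C * P.θ ^ w.length :=
  P.pinf.choose_spec.2.choose_spec.2.2 w hr h z hz

/-- Long words bring the points of the complementary arc together. -/
lemma arc {w : List S} (hr : P.red w) (h : P.M ≤ w.length) {p q : ℝ}
    (hp : P.r ≤ nd (p - P.A ((P.rev w).take P.M))) (hq : P.r ≤ nd (q - P.A ((P.rev w).take P.M))) :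
    nd (P.fw w p - P.fw w q) ≤ P.C * P.θ ^ w.length := by
  set c := P.A ((P.rev w).take P.M)
  have K : 0 ≤ P.C * P.θ ^ w.length := (mul_pos C0 (pow_pos θ0 _)).le
  have norm : ∀ p, P.r ≤ nd (p - c) → ∃ m : ℤ, p + m ∈ Mid P.r c := fun p hp => by
    refine ⟨-⌊p - c⌋, ?_⟩
    have e1 := nd_le (p - c) ⌊p - c⌋
    have e2 := nd_le (p - c) (⌊p - c⌋ + 1)
    have f0 := Int.floor_le (p - c)
    have f1 := Int.lt_floor_add_one (p - c)
    push_cast at e2 ⊢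
    rw [abs_of_nonneg (by linarith)] at e1
    rw [abs_of_nonpos (by linarith)] at e2
    constructor <;> linarith
  obtain ⟨m, hm⟩ := norm p hp
  obtain ⟨m', hm'⟩ := norm q hq
  have := (convex_Icc (c + P.r) (c + 1 - P.r)).norm_image_sub_le_of_norm_deriv_le
    (f := P.fw w) (fun z _ => (good_fw w).diff z) (C := P.C * P.θ ^ w.length)
    (fun z hz => by
      rw [norm_eq_abs, abs_of_pos ((good_fw w).dpos z)]
      exact (pinf' hr h (nd_ge hz)).2) hm' hm
  rw [(good_fw w).per_int, (good_fw w).per_int, norm_eq_abs, norm_eq_abs] at this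
  have l : |p + m - (q + m')| ≤ 1 := by
    rw [abs_le]; constructor <;> linarith [hm.1, hm.2, hm'.1, hm'.2, P.r0]
  calc nd (P.fw w p - P.fw w q) ≤ |P.fw w p - P.fw w q - ((m' - m : ℤ) : ℝ)| := nd_le _ _
    _ = |P.fw w p + m - (P.fw w q + m')| := by push_cast; congr 1; ring
    _ ≤ _ := this.trans (mul_le_of_le_one_right K l)

end Ping

/-- The letters of an infinite word from place `k` on, `m` of them. -/
def seg {S : Type} (x : ℕ → S) (k m : ℕ) : List S := List.ofFn fun i : Fin m => x (k + i)

namespace Ping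
variable {S : Type} {P : Ping S} {x x' : ℕ → S} {y y' : ℝ}

lemma seg_add (x : ℕ → S) (k a b : ℕ) : seg x k (a + b) = seg x k a ++ seg x (k + a) b := by
  simp only [seg, List.ofFn_add]
  congr 2
  ext i; simp [add_assoc]
lemma seg_length (x : ℕ → S) (k m : ℕ) : (seg x k m).length = m := by simp [seg]
lemma seg_take (x : ℕ → S) (k : ℕ) {a m : ℕ} (h : a ≤ m) : (seg x k m).take a = seg x k a := by
  obtain ⟨b, rfl⟩ := Nat.exists_eq_add_of_le h
  rw [seg_add, List.take_append_of_le_length (by rw [seg_length]), List.take_of_length_le (by rw [seg_length])]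
lemma seg_head (x : ℕ → S) (k : ℕ) {m : ℕ} (h : 1 ≤ m) : (seg x k m).head? = some (x k) := by
  obtain ⟨b, rfl⟩ := Nat.exists_eq_add_of_le' h
  simp [seg, List.ofFn_succ]

variable (P) in
/-- Reduced infinite words. -/
def Red (x : ℕ → S) : Prop := ∀ i, x (i + 1) ≠ P.inv (x i)

lemma red_seg (h : P.Red x) (k m : ℕ) : P.red (seg x k m) :=
  List.isChain_ofFn.2 fun i _ => h (k + i)

variable (P) in
/-- The word `x` is an itinerary of `y`: the limit of the contractions along `x`. -/
def It (x : ℕ → S) (y : ℝ) : Prop :=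
  P.Red x ∧ ∀ k, nd ((P.fw (seg x 0 k))⁻¹ y - P.A (seg x k P.M)) ≤ P.r

lemma far3_seg (h : P.Red x) {j k : ℕ} (hk : P.M ≤ k) {z : ℝ} (hz : nd (z - P.A (seg x (j + k) P.M)) ≤ P.r) :
    3 * P.r ≤ nd (z - P.A ((P.rev (seg x j k)).take P.M)) := by
  refine far3 (v := seg x (j + k) P.M) ?_ (by rwa [seg_length]) (by rw [seg_length]) ?_
  · rw [← seg_add]; exact red_seg h _ _
  · rwa [seg_take _ _ le_rfl]

lemma far_seg (h : P.Red x) {j k : ℕ} (hk : P.M ≤ k) {z : ℝ} (hz : nd (z - P.A (seg x (j + k) P.M)) ≤ P.r) :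
    P.r ≤ nd (z - P.A ((P.rev (seg x j k)).take P.M)) := by linarith [far3_seg h hk hz, P.r0]

lemma near_seg (h : P.Red x) {j k : ℕ} (hk : P.M ≤ k) {z : ℝ} (hz : nd (z - P.A (seg x (j + k) P.M)) ≤ P.r) :
    nd (P.fw (seg x j k) z - P.A (seg x j P.M)) ≤ P.r := by
  have := (pinf' (red_seg h j k) (by rwa [seg_length]) (far_seg h hk hz)).1
  rw [seg_take _ _ hk] at this
  exact this.le

lemma inv_fw_add (x : ℕ → S) (j k : ℕ) (y : ℝ) :
    (P.fw (seg x 0 j))⁻¹ y = P.fw (seg x j k) ((P.fw (seg x 0 (j + k)))⁻¹ y) := by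
  rw [seg_add, fw_append, mul_inv_rev, zero_add, Equiv.Perm.mul_apply, pinv']

/-- It is enough to know the itinerary far away. -/
lemma It.of_large (h : P.Red x) (hy : ∀ j, ∃ k ≥ j, nd ((P.fw (seg x 0 k))⁻¹ y - P.A (seg x k P.M)) ≤ P.r) :
    P.It x y := by
  refine ⟨h, fun j => ?_⟩
  obtain ⟨k, hk, hz⟩ := hy (j + P.M)
  obtain ⟨i, rfl⟩ := Nat.exists_eq_add_of_le (show j ≤ k by omega)
  rw [inv_fw_add x j i y]
  exact near_seg h (by omega) hz

/-- The word `x` preceded by the letter `t`. -/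
def pre (t : S) (x : ℕ → S) : ℕ → S
  | 0 => t
  | i + 1 => x i

lemma seg_pre (t : S) (x : ℕ → S) (k m : ℕ) : seg (pre t x) (k + 1) m = seg x k m := by
  simp only [seg]; congr 1; ext i
  rw [show k + 1 + (i : ℕ) = (k + i) + 1 by ring]; rfl
lemma seg_pre0 (t : S) (x : ℕ → S) (k : ℕ) : seg (pre t x) 0 (k + 1) = t :: seg x 0 k := by
  rw [add_comm, seg_add, zero_add, show (1 : ℕ) = 0 + 1 from rfl, seg_pre]; simp [seg, pre]

lemma It.cons (h : P.It x y) {t : S} (ht : x 0 ≠ P.inv t) : P.It (pre t x) (P.f t y) := by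
  refine It.of_large (fun i => ?_) fun j => ⟨j + 1, by omega, ?_⟩
  · cases i with
    | zero => exact ht
    | succ i => exact h.1 i
  · rw [seg_pre, seg_pre0]
    simpa [fw] using h.2 j

lemma It.shift (h : P.It x y) : P.It (fun i => x (i + 1)) ((P.f (x 0))⁻¹ y) := by
  have e : pre (x 0) (fun i => x (i + 1)) = x := by ext i; cases i <;> rfl
  refine ⟨fun i => h.1 _, fun k => ?_⟩
  have := h.2 (k + 1)
  rw [← e, seg_pre, seg_pre0] at this
  simpa [fw] using this

lemma It.head (h : P.It x y) (h' : P.It x' y') (hd : nd (y - y') < 2 * P.r) : x 0 = x' 0 := by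
  by_contra hne
  have h1 := h.2 0
  have h2 := h'.2 0
  have e : ∀ x : ℕ → S, P.fw (seg x 0 0) = 1 := fun x => by simp [seg, fw]
  rw [e, inv_one, Equiv.Perm.one_apply] at h1 h2
  have := P.sepA _ _ (red_seg h.1 0 P.M) (red_seg h'.1 0 P.M) (seg_length _ _ _) (seg_length _ _ _)
    (by rw [seg_head _ _ P.M1, seg_head _ _ P.M1]; simpa using hne)
  have t1 := nd_tri (P.A (seg x 0 P.M)) y (P.A (seg x' 0 P.M))
  have t2 := nd_tri y y' (P.A (seg x' 0 P.M))
  rw [nd_comm] at h1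
  linarith

lemma It.uniq (h : P.It x y) (h' : P.It x' y) : x = x' := by
  have : ∀ i x x' y, P.It x y → P.It x' y → x i = x' i := fun i => by
    induction i with
    | zero =>
      intro x x' y h h'
      refine h.head h' ?_
      rw [sub_self]; simp [nd, P.r0]
    | succ i ih =>
      intro x x' y h h'
      have e : x 0 = x' 0 := h.head h' (by rw [sub_self]; simp [nd, P.r0])
      have h1 := h.shift
      rw [e] at h1
      exact ih _ _ _ h1 h'.shift
  exact funext fun i => this i x x' y h h'

lemma It.add (h : P.It x y) (m : ℤ) : P.It x (y + m) := by
  refine ⟨h.1, fun k => ?_⟩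
  have := h.2 k
  rwa [← fw_rev, (good_fw _).per_int, add_sub_right_comm, nd_int, fw_rev]

lemma small {ε : ℝ} (hε : 0 < ε) : ∃ k ≥ P.M, P.C * P.θ ^ k < ε := by
  have : Tendsto (fun k : ℕ => P.C * P.θ ^ k) atTop (𝓝 (P.C * 0)) :=
    (tendsto_pow_atTop_nhds_zero_of_lt_one θ0.le θ1).const_mul _
  rw [mul_zero] at this
  obtain ⟨k, h1, h2⟩ := ((this.eventually_lt_const hε).and (eventually_ge_atTop P.M)).exists
  exact ⟨k, h2, h1⟩

/-- Points whose images under `k` steps along `x` are both far from the repelling arc are close. -/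
lemma It.close (h : P.It x y) {k : ℕ} (hk : P.M ≤ k) {q : ℝ}
    (hq : P.r ≤ nd (q - P.A ((P.rev (seg x 0 k)).take P.M))) : nd (P.fw (seg x 0 k) q - y) ≤ P.C * P.θ ^ k := by
  have := arc (red_seg h.1 0 k) (by rwa [seg_length]) hq (far_seg h.1 (j := 0) hk (by rw [zero_add]; exact h.2 k))
  rwa [pinv', seg_length] at this

lemma eq_of_small {t : ℝ} (h : ∀ ε > 0, nd t < ε) : ∃ m : ℤ, t = m :=
  nd_zero (le_antisymm (le_of_forall_pos_lt_add fun ε hε => by simpa using h ε hε) (nd_nn t))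

lemma It.point (h : P.It x y) (h' : P.It x y') : ∃ m : ℤ, y = y' + m := by
  obtain ⟨m, hm⟩ := eq_of_small (t := y - y') fun ε hε => by
    obtain ⟨k, hk, hs⟩ := P.small hε
    have := h'.close hk (far_seg h.1 (j := 0) hk (by rw [zero_add]; exact h.2 k))
    rw [pinv'] at this
    exact this.trans_lt hs
  exact ⟨m, by linarith⟩

/-- Points with an admissible next letter are attracted to `y` along its itinerary. -/
lemma It.approx (h : P.It x y) {k : ℕ} (hk : P.M ≤ k) {q : ℝ} (hq : P.It x' q) (hne : x' 0 ≠ P.inv (x (k - 1))) :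
    nd (P.fw (seg x 0 k) q - y) ≤ P.C * P.θ ^ k := by
  have := P.M1
  refine h.close hk (far (v := seg x' 0 P.M) ?_ (by rwa [seg_length]) (by rw [seg_length]) ?_)
  · refine List.isChain_append.2 ⟨red_seg h.1 _ _, red_seg hq.1 _ _, fun s hs t ht => ?_⟩
    rw [seg_head _ _ P.M1, Option.mem_some_iff] at ht
    obtain ⟨j, rfl⟩ := Nat.exists_eq_add_of_le' (show 1 ≤ k by omega)
    have : s = x j := by
      have e : seg x 0 (j + 1) = seg x 0 j ++ [x j] := by rw [seg_add]; simp [seg]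
      rw [e, List.getLast?_append] at hs
      simpa using hs.symm
    rw [this, ← ht]; simpa using hne
  · have := hq.2 0
    rw [show P.fw (seg x' 0 0) = 1 by simp [seg, fw]] at this
    rwa [seg_take _ _ le_rfl]

lemma exists_shift (t : ℝ) : ∃ m : ℤ, |t + m| = nd t := by
  obtain ⟨m, hm⟩ := nd_ex t
  exact ⟨-m, by rw [hm]; push_cast; ring_nf⟩

variable (P) in
lemma exists_point [Finite S] (h : P.Red x) : ∃ y, P.It x y := by
  have ex : ∀ k, ∃ y ∈ Icc (0 : ℝ) 1, nd ((P.fw (seg x 0 k))⁻¹ y - P.A (seg x k P.M)) ≤ P.r := fun k => by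
    let y := P.fw (seg x 0 k) (P.A (seg x k P.M))
    refine ⟨y + (-⌊y⌋ : ℤ), ⟨?_, ?_⟩, ?_⟩
    · push_cast; linarith [Int.floor_le y]
    · push_cast; linarith [Int.lt_floor_add_one y]
    · rw [← fw_rev, (good_fw _).per_int, add_sub_right_comm, nd_int, fw_rev, pinv, sub_self]
      simp [nd, P.r0.le]
  choose u hu hu' using ex
  obtain ⟨y, -, ψ, hψ, ht⟩ := isCompact_Icc.tendsto_subseq hu
  refine ⟨y, h, fun j => ?_⟩
  have c : Continuous fun y => nd ((P.fw (seg x 0 j))⁻¹ y - P.A (seg x j P.M)) := by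
    rw [← fw_rev]
    exact nd_cont.comp ((good_fw _).cont.sub continuous_const)
  refine le_of_tendsto ((c.tendsto y).comp ht) ?_
  filter_upwards [eventually_ge_atTop (j + P.M)] with i hi
  obtain ⟨l, hl⟩ := Nat.exists_eq_add_of_le (show j ≤ ψ i by have := hψ.id_le i; simp at this; omega)
  have := hu' (ψ i)
  show nd ((P.fw (seg x 0 j))⁻¹ (u (ψ i)) - P.A (seg x j P.M)) ≤ P.r
  rw [inv_fw_add x j l, ← hl]
  refine near_seg h ?_ (by rw [← hl]; exact this)
  have := hψ.id_le i; simp at this; omega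

end Ping

namespace Ping
variable {S : Type} {P : Ping S} {x x' : ℕ → S} {y y' z : ℝ}

variable (P) in
/-- The limit set on the line. -/
def L : Set ℝ := {y | ∃ x, P.It x y}

variable (P) in
/-- The expanding maps. -/
def φ (t : S) : Perm ℝ := P.f (P.inv t)

variable (P) in
/-- First letter of the itinerary; `a` off the limit set. -/
def s (a : S) (y : ℝ) : S := if h : ∃ x, P.It x y then h.choose 0 else a

lemma φ_eq (t : S) : P.φ t = (P.f t)⁻¹ := P.inv_f t

lemma It.s_eq (h : P.It x y) (a : S) : P.s a y = x 0 := by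
  have e : ∃ x, P.It x y := ⟨x, h⟩
  rw [s, dif_pos e, e.choose_spec.uniq h]

lemma seg_succ (x : ℕ → S) (k : ℕ) : seg x 0 (k + 1) = seg x 0 k ++ [x k] := by
  rw [seg_add]; simp [seg]

lemma fw_one (t : S) : P.fw [t] = P.f t := by simp [fw]

lemma It.shifts (h : P.It x y) (k : ℕ) : P.It (fun i => x (k + i)) ((P.fw (seg x 0 k))⁻¹ y) := by
  induction k with
  | zero => simpa [seg, fw] using h
  | succ k ih =>
    have := ih.shift
    rw [seg_succ, fw_append, mul_inv_rev, fw_one]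
    simp only [add_zero] at this
    rw [show (fun i => x (k + 1 + i)) = fun i => x (k + (i + 1)) from funext fun i => by rw [add_assoc, add_comm 1]]
    exact this

lemma It.gw_eq (h : P.It x y) (a : S) (k : ℕ) : gw P.φ (P.s a) y k = (P.fw (seg x 0 k))⁻¹ := by
  induction k with
  | zero => simp [seg, fw, gw]
  | succ k ih =>
    rw [gw, ih, (h.shifts k).s_eq a, φ_eq, seg_succ, fw_append, mul_inv_rev, fw_one]; rfl

lemma closedL [Finite S] : IsClosed P.L := by
  let : TopologicalSpace S := ⊥
  have : DiscreteTopology S := ⟨rfl⟩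
  have K : IsClosed {p : (ℕ → S) × ℝ | P.It p.1 p.2} := by
    have : {p : (ℕ → S) × ℝ | P.It p.1 p.2} = (⋂ i, {p | p.1 (i + 1) ≠ P.inv (p.1 i)}) ∩
        ⋂ k, {p | nd ((P.fw (seg p.1 0 k))⁻¹ p.2 - P.A (seg p.1 k P.M)) ≤ P.r} := by
      ext p; simp [It, Red]
    rw [this]
    refine (isClosed_iInter fun i => ?_).inter (isClosed_iInter fun k => ?_)
    · have c : Continuous fun p : (ℕ → S) × ℝ => (p.1 (i + 1), p.1 i) := by fun_prop
      exact (isClosed_discrete {q : S × S | q.1 ≠ P.inv q.2}).preimage c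
    · refine isClosed_le ?_ continuous_const
      let h : ((Fin k → S) × (Fin P.M → S)) × ℝ → ℝ := fun q =>
        nd ((P.fw (List.ofFn q.1.1))⁻¹ q.2 - P.A (List.ofFn q.1.2))
      have ch : Continuous h := by
        refine continuous_prod_of_discrete_left.2 fun w => ?_
        show Continuous fun b => nd ((P.fw (List.ofFn w.1))⁻¹ b - P.A (List.ofFn w.2))
        rw [← fw_rev]
        exact nd_cont.comp ((good_fw _).cont.sub continuous_const)
      have c : Continuous fun p : (ℕ → S) × ℝ =>
        (((fun i => p.1 (0 + i), fun i => p.1 (k + i)), p.2) : ((Fin k → S) × (Fin P.M → S)) × ℝ) := by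
        fun_prop
      refine (ch.comp c).congr fun p => rfl
  have e : P.L = Prod.snd '' {p : (ℕ → S) × ℝ | P.It p.1 p.2} := by ext y; simp [L]
  rw [e]
  exact isClosedMap_snd_of_compactSpace _ K

lemma L_f (t : S) (h : y ∈ P.L) : P.f t y ∈ P.L := by
  obtain ⟨x, hx⟩ := h
  by_cases e : x 0 = P.inv t
  · have := hx.shift
    rw [e, ← P.inv_f, P.inv_inv] at this
    exact ⟨_, this⟩
  · exact ⟨_, hx.cons e⟩

lemma L_fw (w : List S) (h : y ∈ P.L) : P.fw w y ∈ P.L := by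
  induction w with
  | nil => simpa [fw] using h
  | cons t w ih => simpa [fw] using L_f t ih

variable (P) in
lemma bound [Finite S] : ∃ B, 1 ≤ B ∧ ∀ w z, deriv (P.fw w) z ≤ B ^ w.length := by
  have : ∀ t, ∃ B, ∀ z, deriv (P.f t) z ≤ B := fun t => by
    obtain ⟨B, hB⟩ := periodic_bounded (P.good t).deriv_smooth.continuous (P.good t).deriv_per
    exact ⟨B, fun z => (le_abs_self _).trans (hB z)⟩
  choose B hB using this
  obtain ⟨K, hK⟩ := (Set.finite_range B).bddAbove
  refine ⟨max K 1, le_max_right _ _, fun w => ?_⟩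
  induction w with
  | nil => intro z; simp [fw]
  | cons t w ih =>
    intro z
    have e : P.fw (t :: w) = P.f t * P.fw w := by simp [fw]
    rw [e, Equiv.Perm.coe_mul, deriv_comp z ((P.good t).diff _) ((good_fw w).diff _), List.length_cons, pow_succ']
    exact mul_le_mul ((hB t _).trans ((hK ⟨t, rfl⟩).trans (le_max_left _ _))) (ih z)
      ((good_fw w).dpos _).le (by positivity)

/-- Points at distance `c` from `y` are expelled, within a bounded time, along the itinerary of `y`. -/
lemma escape {c : ℝ} (hc : 0 < c) : ∃ j, ∀ x y, P.It x y → ∀ z, c ≤ nd (z - y) → ∀ l ≥ P.M,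
    nd ((P.fw (seg x 0 (j + l)))⁻¹ z - P.A ((P.rev (seg x j l)).take P.M)) < P.r ∧
    deriv (P.fw (P.rev (seg x j l))) ((P.fw (seg x 0 j))⁻¹ z) ≤ P.C * P.θ ^ l := by
  obtain ⟨j, hj, hs⟩ := P.small hc
  refine ⟨j, fun x y h z hz l hl => ?_⟩
  have hr : P.r ≤ nd ((P.fw (seg x 0 j))⁻¹ z - P.A (seg x j P.M)) := by
    by_contra hlt
    have := h.close hj (far_seg h.1 (j := 0) hj (by rw [zero_add]; exact (not_le.1 hlt).le))
    rw [pinv'] at this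
    linarith
  have := pinf' (red_rev (red_seg h.1 j l)) (by rwa [length_rev, seg_length])
    (z := (P.fw (seg x 0 j))⁻¹ z) (by rw [rev_rev, seg_take _ _ hl]; exact hr)
  rw [length_rev, seg_length] at this
  refine ⟨?_, this.2⟩
  have e : (P.fw (seg x 0 (j + l)))⁻¹ z = P.fw (P.rev (seg x j l)) ((P.fw (seg x 0 j))⁻¹ z) := by
    rw [seg_add, fw_append, mul_inv_rev, zero_add, fw_rev]; rfl
  rw [e]; exact this.1

lemma contr_sep [Finite S] {c : ℝ} (hc : 0 < c) : ∃ C, ∃ c' > 0, ∀ x y, P.It x y → ∀ k, ∀ z ∈ Mid c y,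
    deriv ((P.fw (seg x 0 k))⁻¹ : Perm ℝ) z ≤ C * P.θ ^ k ∧
    (P.fw (seg x 0 k))⁻¹ z ∈ Icc ((P.fw (seg x 0 k))⁻¹ y + c') ((P.fw (seg x 0 k))⁻¹ y + 1 - c') := by
  obtain ⟨j, hj⟩ := P.escape hc
  obtain ⟨B, hB, hb⟩ := P.bound
  have tp := fun k : ℕ => pow_pos P.θ0 k
  have bp := fun k : ℕ => pow_pos (zero_lt_one.trans_le hB) k
  have C0 := P.C0
  refine ⟨(B ^ (j + P.M) + P.C * B ^ j) * (P.θ ^ (j + P.M))⁻¹, min (2 * P.r) (c / B ^ (j + P.M)),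
    lt_min (by linarith [P.r0]) (div_pos hc (bp _)), fun x y h k z hz => ?_⟩
  set g := (P.fw (seg x 0 k))⁻¹ with hg
  have gg : Good g := by rw [hg, ← fw_rev]; exact good_fw _
  have m1 : g y < g z := gg.mono (by linarith [hz.1])
  have m2 : g z < g y + 1 := by
    have := gg.mono (show z < y + 1 by linarith [hz.2])
    rwa [gg.per] at this
  rcases lt_or_ge k (j + P.M) with hk | hk
  · have pk : B ^ k ≤ B ^ (j + P.M) := pow_le_pow_right₀ hB hk.le
    have lip : ∀ p q, p ≤ q → c ≤ q - p → c / B ^ (j + P.M) ≤ g q - g p := fun p q hpq hcq => by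
      have hm := gg.mono.monotone hpq
      have := (convex_univ).norm_image_sub_le_of_norm_deriv_le (f := P.fw (seg x 0 k)) (C := B ^ k)
        (fun z _ => (good_fw _).diff z) (fun z _ => by
          rw [norm_eq_abs, abs_of_pos ((good_fw _).dpos z)]
          simpa [seg_length] using hb (seg x 0 k) z) (mem_univ (g p)) (mem_univ (g q))
      rw [hg, pinv', pinv', ← hg, norm_eq_abs, norm_eq_abs, abs_of_nonneg (by linarith),
        abs_of_nonneg (by linarith)] at this
      rw [div_le_iff₀ (bp _)]
      nlinarith
    have l1 := lip y z (by linarith [hz.1]) (by linarith [hz.1])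
    have l2 := lip z (y + 1) (by linarith [hz.2]) (by linarith [hz.2])
    rw [gg.per] at l2
    refine ⟨?_, ?_, ?_⟩
    · have d : deriv g z ≤ B ^ k := by
        have := hb (P.rev (seg x 0 k)) z
        rwa [fw_rev, length_rev, seg_length] at this
      have t := pow_le_pow_of_le_one P.θ0.le P.θ1.le hk.le
      calc deriv g z ≤ B ^ (j + P.M) * 1 := by linarith
        _ ≤ (B ^ (j + P.M) + P.C * B ^ j) * ((P.θ ^ (j + P.M))⁻¹ * P.θ ^ k) := by
          refine mul_le_mul (by linarith [mul_pos C0 (bp j)]) ?_ zero_le_one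
            (add_pos (bp _) (mul_pos C0 (bp j))).le
          rw [← div_eq_inv_mul, one_le_div (tp _)]; exact t
        _ = _ := by ring
    · linarith [min_le_right (2 * P.r) (c / B ^ (j + P.M))]
    · linarith [min_le_right (2 * P.r) (c / B ^ (j + P.M))]
  · obtain ⟨l, rfl⟩ := Nat.exists_eq_add_of_le (show j ≤ k by omega)
    obtain ⟨e1, e2⟩ := hj x y h z (nd_ge hz) l (by omega)
    have e3 := far3_seg h.1 (j := j) (k := l) (by omega) (h.2 (j + l))
    have e4 := nd_tri (g y) (g z) (P.A ((P.rev (seg x j l)).take P.M))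
    rw [nd_comm (g y) (g z)] at e4
    have n1 := nd_le (g z - g y) 0
    have n2 := nd_le (g z - g y) 1
    rw [Int.cast_zero, sub_zero, abs_of_pos (by linarith)] at n1
    rw [Int.cast_one, abs_of_neg (by linarith)] at n2
    have mm := min_le_left (2 * P.r) (c / B ^ (j + P.M))
    refine ⟨?_, by linarith, by linarith⟩
    have e : g = P.fw (P.rev (seg x j l)) * P.fw (P.rev (seg x 0 j)) := by
      rw [hg, seg_add, fw_append, mul_inv_rev, zero_add, fw_rev, fw_rev]
    rw [e, Equiv.Perm.coe_mul, deriv_comp z ((good_fw _).diff _) ((good_fw _).diff _)]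
    have b2 := hb (P.rev (seg x 0 j)) z
    rw [length_rev, seg_length] at b2
    rw [← fw_rev] at e2
    calc _ ≤ P.C * P.θ ^ l * B ^ j := mul_le_mul e2 b2 ((good_fw _).dpos _).le (mul_pos C0 (tp l)).le
      _ ≤ (B ^ (j + P.M) + P.C * B ^ j) * ((P.θ ^ (j + P.M))⁻¹ * P.θ ^ (j + l)) := by
        rw [mul_right_comm]
        refine mul_le_mul (by linarith [bp (j + P.M)]) ?_ (tp l).le (add_pos (bp _) (mul_pos C0 (bp j))).le
        rw [← div_eq_inv_mul, le_div_iff₀ (tp _), ← pow_add]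
        exact pow_le_pow_of_le_one P.θ0.le P.θ1.le (by omega)
      _ = _ := by ring

lemma expansive (h : P.It x y) (hne : y ≠ y') : ∃ k, min P.r (1 / 2) ≤
    |(P.fw (seg x 0 k))⁻¹ y - (P.fw (seg x 0 k))⁻¹ y'| := by
  by_contra hlt
  push Not at hlt
  obtain ⟨m, hm⟩ := eq_of_small (t := y' - y) fun ε hε => by
    obtain ⟨k, hk, hs⟩ := P.small hε
    have e3 := far3_seg h.1 (j := 0) (k := k) hk (by rw [zero_add]; exact h.2 k)
    have e := (nd_le_abs _).trans_lt (hlt k)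
    have t := nd_tri ((P.fw (seg x 0 k))⁻¹ y) ((P.fw (seg x 0 k))⁻¹ y') (P.A ((P.rev (seg x 0 k)).take P.M))
    have := h.close hk (q := (P.fw (seg x 0 k))⁻¹ y')
      (by linarith [P.r0, min_le_left P.r (1 / 2)])
    rw [pinv'] at this
    exact this.trans_lt hs
  have := hlt 0
  simp only [seg, List.ofFn_zero, fw, List.map_nil, List.prod_nil, inv_one, Equiv.Perm.one_apply] at this
  have h2 := this.trans_le (min_le_right P.r (1 / 2))
  rw [abs_sub_comm, hm] at h2
  have : |m| < 1 := by
    have : (|m| : ℝ) < 1 := by linarith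
    exact_mod_cast this
  rw [Int.abs_lt_one_iff] at this
  rw [this] at hm
  exact hne (by push_cast at hm; linarith)

lemma fG (t : S) : P.f t ∈ liftGroup P.φ :=
  Subgroup.subset_closure (Or.inl ⟨P.inv t, by rw [φ, P.inv_inv]⟩)

lemma fwG (w : List S) : P.fw w ∈ liftGroup P.φ := by
  induction w with
  | nil => exact one_mem _
  | cons t w ih => simpa [fw] using mul_mem (fG t) ih

/-- Every orbit of the limit set is dense in it. -/
lemma dense (h' : P.It x' y') (h : P.It x y) {ε : ℝ} (hε : 0 < ε) : ∃ F ∈ liftGroup P.φ, |F y' - y| < ε := by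
  obtain ⟨k, hk, hs⟩ := P.small hε
  obtain ⟨b, b1, b2⟩ := P.three (P.inv (x (k - 1))) (P.inv (x' 0))
  have hc := h'.cons (t := b) (fun e => b2 (by rw [e, P.inv_inv]))
  have := h.approx hk hc b1
  obtain ⟨m, hm⟩ := exists_shift (P.fw (seg x 0 k) (P.f b y') - y)
  refine ⟨tr m * (P.fw (seg x 0 k) * P.f b),
    mul_mem (Subgroup.subset_closure (Or.inr ⟨m, rfl⟩)) (mul_mem (fwG _) (fG _)), ?_⟩
  show |P.fw (seg x 0 k) (P.f b y') + m - y| < ε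
  rw [add_sub_right_comm, hm]; linarith

lemma perfectL [Finite S] (h : P.It x y) {ε : ℝ} (hε : 0 < ε) : ∃ y' ∈ P.L, y' ≠ y ∧ |y' - y| < ε := by
  obtain ⟨k, hk, hs⟩ := P.small hε
  obtain ⟨b, b1, b2⟩ := P.three (P.inv (x (k - 1))) (x k)
  obtain ⟨q, hq⟩ := P.exists_point (x := fun _ => b) fun _ => (P.inv_ne b).symm
  have := h.approx hk hq b1
  obtain ⟨m, hm⟩ := exists_shift (P.fw (seg x 0 k) q - y)
  obtain ⟨x1, h1⟩ := L_fw (P := P) (seg x 0 k) ⟨_, hq⟩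
  refine ⟨P.fw (seg x 0 k) q + m, ⟨x1, h1.add m⟩, fun e => b2 ?_, by rw [add_sub_right_comm, hm]; linarith⟩
  have hk := h.shifts k
  rw [← e, ← fw_rev, (good_fw _).per_int, fw_rev, pinv] at hk
  exact congrFun ((hq.add m).uniq hk) 0

variable (P) in
theorem exists_dyn [Finite S] (a : S) (hs : ∀ F ∈ liftGroup P.φ, ∀ p q, F p = p → F q = q →
    (∀ k : ℤ, p ≠ q + k) → deriv F p < 1 → deriv F p * deriv F q = 1) : ∃ D : Dyn S, D.φ = P.φ := by
  obtain ⟨p, hp⟩ := P.exists_point (x := fun _ => a) fun _ => (P.inv_ne a).symm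
  obtain ⟨n, hn⟩ := P.exists_point (x := fun _ => P.inv a) fun _ => (P.inv_ne _).symm
  have hne : ∀ m : ℤ, p ≠ n + m := fun m e => P.inv_ne a (congrFun ((hn.add m).uniq (e ▸ hp)) 0)
  have hn' := hn.add ⌊p - n⌋
  have l1 : n + ⌊p - n⌋ < p := lt_of_le_of_ne (by linarith [Int.floor_le (p - n)]) (hne _).symm
  have l2 : p < n + ⌊p - n⌋ + 1 := by linarith [Int.lt_floor_add_one (p - n)]
  generalize n + (⌊p - n⌋ : ℝ) = n' at hn' l1 l2
  obtain ⟨m, hm⟩ := hp.shift.point hp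
  obtain ⟨m', hm'⟩ := hn'.shift.point hn'
  have gi : Good ((P.f a)⁻¹ : Perm ℝ) := by rw [← P.inv_f]; exact P.good _
  have mm : m' = -m := by
    have e : (P.f a)⁻¹ n' = n' - m' := by
      rw [← P.inv_f, P.inv_inv] at hm'
      have := pinv (P.f a) n'
      rw [hm', gi.per_int] at this
      linarith
    have i1 := gi.mono l1
    have i2 := gi.mono l2
    rw [gi.per, e, hm] at i2
    rw [e, hm] at i1
    have j1 : ((-m' : ℤ) : ℝ) < ((m + 1 : ℤ) : ℝ) := by push_cast; linarith
    have j2 : (m : ℝ) < ((1 - m' : ℤ) : ℝ) := by push_cast; linarith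
    have := Int.cast_lt.1 j1
    have := Int.cast_lt.1 j2
    omega
  obtain ⟨b, b1, b2⟩ := P.three a (P.inv a)
  have c1 := hp.cons (t := b) fun e => b2 (by rw [e, P.inv_inv])
  have c2 := hn'.cons (t := b) fun e => b1 (by rw [← P.inv_inv a, e, P.inv_inv])
  exact ⟨{
    inv := P.inv, φ := P.φ, smooth := fun t => (P.good _).smooth, dpos := fun t => (P.good _).dpos,
    per := fun t => (P.good _).per, inv_φ := fun t => P.inv_f _, inv_inv := P.inv_inv, L := P.L,
    closed := closedL, Lper := fun y ⟨x, hx⟩ m => ⟨x, hx.add m⟩, Linv := fun t y hy => L_f _ hy,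
    perfect := fun y ⟨x, hx⟩ ε hε => perfectL hx hε, s := P.s a,
    s_per := fun y ⟨x, hx⟩ m => by rw [(hx.add m).s_eq, hx.s_eq],
    scode := fun y ⟨x, hx⟩ t ht => by
      rw [hx.s_eq] at ht
      exact (hx.cons (t := P.inv t) (by rw [P.inv_inv]; exact ht.symm)).s_eq a,
    sloc := ⟨2 * P.r, by linarith [P.r0], fun y ⟨x, hx⟩ y' ⟨x', hx'⟩ h => by
      rw [hx.s_eq, hx'.s_eq]; exact hx.head hx' ((nd_le_abs _).trans_lt h)⟩,
    θ := P.θ, θ0 := θ0, θ1 := θ1,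
    contr := fun c hc => by
      obtain ⟨C, c', -, h⟩ := P.contr_sep hc
      exact ⟨C, fun y ⟨x, hx⟩ k z hz => by rw [hx.gw_eq]; exact (h x y hx k z hz).1⟩,
    sep := fun c hc => by
      obtain ⟨C, c', h0, h⟩ := P.contr_sep hc
      exact ⟨c', h0, fun y ⟨x, hx⟩ k z hz => by rw [hx.gw_eq]; exact (h x y hx k z hz).2⟩,
    expansive := ⟨min P.r (1 / 2), lt_min P.r0 (by norm_num), fun y ⟨x, hx⟩ y' _ hne => by
      obtain ⟨k, hk⟩ := expansive hx hne
      exact ⟨k, by rw [hx.gw_eq]; exact hk⟩⟩,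
    ap := p, an := n', a := a, m := m, apL := ⟨_, hp⟩, anL := ⟨_, hn'⟩, an_lt := l1, ap_lt := l2,
    s_ap := hp.s_eq a, s_an := hn'.s_eq a, φ_ap := by rw [φ_eq]; exact hm,
    φ_an := by rw [φ_eq, hm', mm]; push_cast; ring,
    dense_ap := fun y ⟨x, hx⟩ ε hε => dense hp hx hε,
    dense_an := fun y ⟨x, hx⟩ ε hε => dense hn' hx hε,
    μ := P.f b, μG := fG b,
    μ_ap := fun k e => b1 (congrFun (c1.uniq (x' := fun _ => a) (e ▸ hp.add k)) 0),
    μ_ap_an := fun k e => b2 (congrFun (c1.uniq (x' := fun _ => P.inv a) (e ▸ hn'.add k)) 0),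
    μ_an := fun k e => b2 (congrFun (c2.uniq (x' := fun _ => P.inv a) (e ▸ hn'.add k)) 0),
    μ_an_ap := fun k e => b1 (congrFun (c2.uniq (x' := fun _ => a) (e ▸ hp.add k)) 0),
    spectral := hs }, rfl⟩

end Ping

/-! ### Lifts of circle maps and of Möbius maps -/

lemma para_eq {s t : ℝ} : para s = para t ↔ ∃ m : ℤ, s = t + m := by
  rw [para, para, Projectivization.mk_eq_mk_iff']
  constructor
  · rintro ⟨a, h⟩
    have h0 := congrFun h 0
    have h1 := congrFun h 1
    simp at h0 h1
    have : sin (π * s - π * t) = 0 := by rw [sin_sub, ← h0, ← h1]; ring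
    obtain ⟨m, hm⟩ := sin_eq_zero_iff.1 this
    exact ⟨m, by have := pi_pos; field_simp at hm; linarith⟩
  · rintro ⟨m, rfl⟩
    rcases Int.even_or_odd m with ⟨k, rfl⟩ | ⟨k, rfl⟩
    · refine ⟨1, ?_⟩
      have : π * (t + ((k + k : ℤ) : ℝ)) = π * t + k * (2 * π) := by push_cast; ring
      rw [this, cos_add_int_mul_two_pi, sin_add_int_mul_two_pi, one_smul]
    · refine ⟨-1, ?_⟩
      have : π * (t + ((2 * k + 1 : ℤ) : ℝ)) = π * t + π + k * (2 * π) := by push_cast; ring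
      rw [this, cos_add_int_mul_two_pi, sin_add_int_mul_two_pi, cos_add_pi, sin_add_pi]
      ext i; fin_cases i <;> simp

lemma para_add (t : ℝ) (m : ℤ) : para (t + m) = para t := para_eq.2 ⟨m, rfl⟩

lemma exists_polar {u v : ℝ} : ∃ t, u = √(u ^ 2 + v ^ 2) * cos (π * t) ∧ v = √(u ^ 2 + v ^ 2) * sin (π * t) := by
  have e : ‖(⟨u, v⟩ : ℂ)‖ = √(u ^ 2 + v ^ 2) := by rw [Complex.norm_def, Complex.normSq_mk]; ring_nf
  refine ⟨Complex.arg ⟨u, v⟩ / π, ?_, ?_⟩ <;> rw [mul_div_cancel₀ _ pi_ne_zero, ← e]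
  · rw [Complex.norm_mul_cos_arg]
  · rw [Complex.norm_mul_sin_arg]

lemma para_surj (X : RP1) : ∃ t, para t = X := by
  induction X using Projectivization.ind with
  | h v hv =>
    obtain ⟨t, h0, h1⟩ := exists_polar (u := v 0) (v := v 1)
    refine ⟨t, (Projectivization.mk_eq_mk_iff' ..).2 ⟨(√(v 0 ^ 2 + v 1 ^ 2))⁻¹, ?_⟩⟩
    have : √(v 0 ^ 2 + v 1 ^ 2) ≠ 0 := fun h => hv (by
      rw [h, zero_mul] at h0 h1
      ext i; fin_cases i <;> assumption)
    ext i; fin_cases i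
    · simp [inv_mul_eq_iff_eq_mul₀ this, ← h0]
    · simp [inv_mul_eq_iff_eq_mul₀ this, ← h1]

lemma lift_unique {f : RP1 → RP1} {F H : ℝ → ℝ} (hF : IsLift F f) (hH : IsLift H f) (cF : Continuous F)
    (cH : Continuous H) : ∃ m : ℤ, ∀ t, F t = H t + m := by
  have h : ∀ t, ∃ m : ℤ, F t = H t + m := fun t => para_eq.1 (by rw [← hF t, hH t])
  choose m hm using h
  refine ⟨m 0, fun t => ?_⟩
  have c : Continuous m := by
    refine Int.isClosedEmbedding_coe_real.isInducing.continuous_iff.2 ?_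
    refine (cF.sub cH).congr fun t => ?_
    simp [hm t]
  rw [hm t, PreconnectedSpace.constant inferInstance c (x := t) (y := 0)]

lemma circleDeriv_eq {f : RP1 → RP1} {F : ℝ → ℝ} (h : IsLift F f) (hF : Good F) (t : ℝ) :
    circleDeriv f (para t) = deriv F t := by
  have e : ∃ F : ℝ → ℝ, IsLift F f ∧ Differentiable ℝ F := ⟨F, h, hF.diff⟩
  obtain ⟨m, hm⟩ := lift_unique e.choose_spec.1 h e.choose_spec.2.continuous hF.cont
  rw [circleDeriv, dif_pos e, show e.choose = fun t => F t + m from funext hm, deriv_add_const]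
  obtain ⟨k, hk⟩ := para_eq.1 (Function.invFun_eq (f := para) ⟨t, rfl⟩)
  rw [hk, hF.deriv_per]

lemma Good.surj {F : ℝ → ℝ} (h : Good F) : Surjective F := fun y => by
  have e : ∀ m : ℤ, F m = F 0 + m := fun m => by simpa using h.per_int 0 m
  obtain ⟨t, -, ht⟩ := intermediate_value_Icc (a := (⌊y - F 0⌋ : ℝ)) (b := (⌊y - F 0⌋ + 1 : ℤ))
    (by push_cast; linarith) h.cont.continuousOn (show y ∈ _ by
      rw [e, e]; push_cast
      constructor <;> linarith [Int.floor_le (y - F 0), Int.lt_floor_add_one (y - F 0)])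
  exact ⟨t, ht⟩

lemma Good.perm {F : ℝ → ℝ} (h : Good F) : ∃ E : Perm ℝ, ⇑E = F :=
  ⟨Equiv.ofBijective F ⟨h.mono.injective, h.surj⟩, rfl⟩

lemma Good.inv {F : Perm ℝ} (h : Good F) : Good (F⁻¹ : Perm ℝ) := by
  let H : ℝ ≃ₜ ℝ := (h.mono.orderIsoOfSurjective F F.surjective).toHomeomorph
  have e : ⇑H.symm = (F⁻¹ : Perm ℝ) := funext fun x => by
    rw [Homeomorph.symm_apply_eq]; exact (pinv' F x).symm
  have s : ContDiff ℝ ∞ (F⁻¹ : Perm ℝ) := by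
    rw [← e]
    exact H.contDiff_symm_deriv (fun x => (h.dpos x).ne') h.hd h.smooth
  refine ⟨s, fun x => ?_, fun x => F.injective ?_⟩
  · have := deriv_comp x (h.diff ((F⁻¹ : Perm ℝ) x)) (s.contDiffAt.differentiableAt (by simp))
    rw [show ⇑F ∘ ⇑(F⁻¹ : Perm ℝ) = id from funext fun x => pinv' F x, deriv_id] at this
    exact pos_of_mul_pos_right (this ▸ one_pos) (h.dpos _).le
  · rw [pinv', h.per, pinv']

/-- A continuous increasing lift of an injective circle map has degree one. -/
lemma lift_per {f : RP1 → RP1} (hf : Injective f) {F : ℝ → ℝ} (h : IsLift F f) (c : Continuous F)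
    (hm : StrictMono F) (t : ℝ) : F (t + 1) = F t + 1 := by
  have h1 : ∀ t, para (t + 1) = para t := fun t => by simpa using para_add t 1
  obtain ⟨m, hm'⟩ := lift_unique (F := fun t => F (t + 1)) (H := F) (f := f)
    (fun t => by rw [← h, h1]) h (by fun_prop) c
  have m0 : 0 < m := by
    have := hm (show (0 : ℝ) < 0 + 1 by norm_num)
    rw [hm'] at this
    exact_mod_cast (by linarith : (0 : ℝ) < m)
  obtain ⟨s, hs, e⟩ := intermediate_value_Icc (show (0 : ℝ) ≤ 0 + 1 by norm_num) c.continuousOn (show F 0 + 1 ∈ _ by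
    rw [hm']; exact ⟨by linarith, by have : (1 : ℝ) ≤ m := by exact_mod_cast m0
                                     linarith⟩)
  obtain ⟨k, hk⟩ := para_eq.1 (hf (show f (para s) = f (para 0) by rw [h, h, e]; exact h1 _))
  have : s = 1 := by
    have k1 : k ≤ 1 := by exact_mod_cast (by linarith [hs.2] : (k : ℝ) ≤ 1)
    have k0 : 0 < k := by
      have : s ≠ 0 := fun h => by rw [h] at e; linarith
      exact_mod_cast (by linarith [lt_of_le_of_ne hs.1 this.symm] : (0 : ℝ) < k)
    rw [hk, show k = 1 by omega]; simp
  have e2 := hm' 0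
  rw [zero_add, ← this, e] at e2
  rw [hm' t]; linarith

/-- Square of the norm of the image of the unit vector of angle `π * t`. -/
def Qm (W : SL2) (t : ℝ) : ℝ :=
  (W 0 0 * cos (π * t) + W 0 1 * sin (π * t)) ^ 2 +
    (W 1 0 * cos (π * t) + W 1 1 * sin (π * t)) ^ 2

lemma detW (W : SL2) : W 0 0 * W 1 1 - W 0 1 * W 1 0 = 1 := by
  have := W.2; rwa [Matrix.det_fin_two] at this

lemma mobius_para {W : SL2} {t s : ℝ} (h : mobius W (para t) = para s) : ∃ l : ℝ, l ^ 2 = Qm W t ∧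
    W 0 0 * cos (π * t) + W 0 1 * sin (π * t) = l * cos (π * s) ∧
    W 1 0 * cos (π * t) + W 1 1 * sin (π * t) = l * sin (π * s) := by
  rw [mobius, para, para, Projectivization.map_mk, Projectivization.mk_eq_mk_iff'] at h
  obtain ⟨l, h⟩ := h
  have h0 := congrFun h 0
  have h1 := congrFun h 1
  simp [Matrix.SpecialLinearGroup.toLin'_apply, Matrix.mulVec, dotProduct, Fin.sum_univ_two] at h0 h1
  refine ⟨l, ?_, by linarith, by linarith⟩
  rw [Qm, ← h0, ← h1]
  linear_combination - l ^ 2 * (sin_sq_add_cos_sq (π * s))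

lemma Qm_pos (W : SL2) (t : ℝ) : 0 < Qm W t := by
  have h := detW W
  have e := sin_sq_add_cos_sq (π * t)
  rw [Qm]
  refine lt_of_le_of_ne (by positivity) fun h0 => ?_
  obtain ⟨h1, h2⟩ := (add_eq_zero_iff_of_nonneg (sq_nonneg _) (sq_nonneg _)).1 h0.symm
  have h1 := pow_eq_zero_iff (two_ne_zero) |>.1 h1
  have h2 := pow_eq_zero_iff (two_ne_zero) |>.1 h2
  have c0 : cos (π * t) = 0 := by linear_combination W 1 1 * h1 - W 0 1 * h2 - cos (π * t) * h
  have s0 : sin (π * t) = 0 := by linear_combination W 0 0 * h2 - W 1 0 * h1 - sin (π * t) * h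
  rw [c0, s0] at e; norm_num at e

lemma mobius_deriv {W : SL2} {F : ℝ → ℝ} (h : IsLift F (mobius W)) (hd : Differentiable ℝ F) (t : ℝ) :
    deriv F t = (Qm W t)⁻¹ := by
  have a0 : HasDerivAt (fun t => π * t) π t := by simpa using (hasDerivAt_id t).const_mul π
  have aF : HasDerivAt (fun t => π * F t) (π * deriv F t) t := (hd t).hasDerivAt.const_mul π
  have p : ∀ a b : ℝ, HasDerivAt (fun t => a * cos (π * t) + b * sin (π * t))
      (a * (-sin (π * t) * π) + b * (cos (π * t) * π)) t := fun a b =>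
    (a0.cos.const_mul a).add (a0.sin.const_mul b)
  have D := ((p (W 0 0) (W 0 1)).mul aF.sin).sub ((p (W 1 0) (W 1 1)).mul aF.cos)
  have z : ((fun t => W 0 0 * cos (π * t) + W 0 1 * sin (π * t)) * fun t => sin (π * F t)) -
      (fun t => W 1 0 * cos (π * t) + W 1 1 * sin (π * t)) * (fun t => cos (π * F t)) =
      fun _ => (0 : ℝ) := funext fun s => by
    obtain ⟨l, -, h0, h1⟩ := mobius_para (h s)
    simp only [Pi.sub_apply, Pi.mul_apply, h0, h1]; ring
  rw [z] at D
  have e := D.unique (hasDerivAt_const t (0 : ℝ))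
  obtain ⟨l, hl, h0, h1⟩ := mobius_para (h t)
  have s1 := sin_sq_add_cos_sq (π * F t)
  have s2 := sin_sq_add_cos_sq (π * t)
  refine eq_inv_of_mul_eq_one_left ?_
  rw [← hl]
  refine mul_left_cancel₀ pi_ne_zero ?_
  generalize cos (π * t) = c at *
  generalize sin (π * t) = s at *
  generalize cos (π * F t) = C at *
  generalize sin (π * F t) = S at *
  linear_combination l * e + (W 0 0 * (-s * π) + W 0 1 * (c * π) - l * S * π * deriv F t) * h1 -
    (W 1 0 * (-s * π) + W 1 1 * (c * π) + l * C * π * deriv F t) * h0 - l ^ 2 * π * deriv F t * s1 +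
    π * (s ^ 2 + c ^ 2) * detW W + π * s2

lemma mobius_inj (W : SL2) : Injective (mobius W) := Projectivization.map_injective _ _

lemma good_of_mobius {W : SL2} {F : ℝ → ℝ} (h : IsLift F (mobius W)) (hd : Differentiable ℝ F) : Good F := by
  have e : deriv F = fun t => (Qm W t)⁻¹ := funext (mobius_deriv h hd)
  have p : ∀ t, 0 < deriv F t := fun t => by rw [e]; exact inv_pos.2 (Qm_pos W t)
  refine ⟨contDiff_infty_iff_deriv.2 ⟨hd, ?_⟩, p, lift_per (mobius_inj W) h hd.continuous (strictMono_of_deriv_pos p)⟩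
  rw [e]
  refine ContDiff.inv ?_ fun t => (Qm_pos W t).ne'
  unfold Qm; fun_prop

/-! ### Hyperbolic geometry of convex cocompact free groups -/
section

open scoped UpperHalfPlane

/-- The squared Hilbert–Schmidt norm of a matrix. -/
def nsq (W : SL2) : ℝ := W 0 0 ^ 2 + W 0 1 ^ 2 + W 1 0 ^ 2 + W 1 1 ^ 2

lemma smul_re_im (W : SL2) (z : ℍ) :
    (W • z).re = ((W 0 0 * z.re + W 0 1) * (W 1 0 * z.re + W 1 1) + W 0 0 * W 1 0 * z.im ^ 2) /
      ((W 1 0 * z.re + W 1 1) ^ 2 + (W 1 0 * z.im) ^ 2) ∧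
    (W • z).im = z.im / ((W 1 0 * z.re + W 1 1) ^ 2 + (W 1 0 * z.im) ^ 2) := by
  rw [← UpperHalfPlane.coe_re, ← UpperHalfPlane.coe_im (W • z), UpperHalfPlane.coe_specialLinearGroup_apply,
    Complex.div_re, Complex.div_im, Complex.normSq_apply]
  constructor
  · simp
    ring
  · simp
    rw [← sub_div, sq, sq]
    congr 1
    linear_combination z.im * (detW W)

lemma nsq_eq (W : SL2) : nsq W = 2 * cosh (dist UpperHalfPlane.I (W • UpperHalfPlane.I)) := by
  have h := detW W
  obtain ⟨h1, h2⟩ := smul_re_im W UpperHalfPlane.I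
  have p : 0 < W 1 0 ^ 2 + W 1 1 ^ 2 := by
    by_contra hn
    have a : W 1 0 = 0 := by nlinarith [sq_nonneg (W 1 0), sq_nonneg (W 1 1)]
    have b : W 1 1 = 0 := by nlinarith [sq_nonneg (W 1 0), sq_nonneg (W 1 1)]
    rw [a, b] at h; norm_num at h
  rw [UpperHalfPlane.cosh_dist', h1, h2]
  simp only [UpperHalfPlane.I_re, UpperHalfPlane.I_im, nsq]
  have e : (W 1 0 * 0 + W 1 1) ^ 2 + (W 1 0 * 1) ^ 2 = W 1 0 ^ 2 + W 1 1 ^ 2 := by ring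
  rw [e]
  generalize W 0 0 = a at *
  generalize W 0 1 = b at *
  generalize W 1 0 = c at *
  generalize W 1 1 = d at *
  field_simp
  linear_combination (a * d - b * c + 1) * h

lemma nsq_inv_mul (W V : SL2) :
    nsq (W⁻¹ * V) = 2 * cosh (dist (W • UpperHalfPlane.I) (V • UpperHalfPlane.I)) := by
  rw [nsq_eq, mul_smul, ← dist_smul W, smul_inv_smul]

/-- The hyperbolic plane is a geodesic space. -/
lemma exists_geodesic (x y : ℍ) : ∃ p : ℝ → ℍ, Isometry p ∧ p 0 = x ∧ p (dist x y) = y := by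
  obtain ⟨g, hg⟩ := MulAction.exists_smul_eq SL2 x UpperHalfPlane.I
  obtain ⟨t, ht0, ht1⟩ := exists_polar (u := (1 - (g • y).re ^ 2 - (g • y).im ^ 2) / 2) (v := -(g • y).re)
  let k := rotSL (-(t / 2))
  have c2 : cos (π * t) = 2 * cos (π * (t / 2)) ^ 2 - 1 := by rw [← cos_two_mul]; ring_nf
  have s2 : sin (π * t) = 2 * sin (π * (t / 2)) * cos (π * (t / 2)) := by
    rw [← sin_two_mul]; ring_nf
  have sc := sin_sq_add_cos_sq (π * (t / 2))
  have k0 : k 0 0 = cos (π * (t / 2)) ∧ k 0 1 = sin (π * (t / 2)) ∧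
      k 1 0 = -sin (π * (t / 2)) ∧ k 1 1 = cos (π * (t / 2)) := by
    simp [k, rotSL]
  obtain ⟨k1, k2, k3, k4⟩ := k0
  set w := k • g • y with hw
  have kI : k • g • x = UpperHalfPlane.I := by
    obtain ⟨e1, e2⟩ := smul_re_im k UpperHalfPlane.I
    rw [hg]
    refine UpperHalfPlane.ext_re_im ?_ ?_
    · rw [e1, k1, k2, k3, k4]; simp; ring
    · rw [e2, k3, k4]; simp
  have w0 : w.re = 0 := by
    rw [hw, (smul_re_im k (g • y)).1, k1, k2, k3, k4, div_eq_zero_iff]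
    left
    rw [c2] at ht0
    rw [s2] at ht1
    generalize cos (π * (t / 2)) = c at *
    generalize sin (π * (t / 2)) = s at *
    generalize √(((1 - (g • y).re ^ 2 - (g • y).im ^ 2) / 2) ^ 2 + (-(g • y).re) ^ 2) = r at *
    linear_combination 2 * s * c * ht0 - (2 * c ^ 2 - 1) * ht1 - (g • y).re * sc
  have d : dist x y = dist UpperHalfPlane.I w := by rw [hw, ← kI, dist_smul, dist_smul]
  let P : ℝ → ℍ := fun y => UpperHalfPlane.mk ⟨0, exp y⟩ (exp_pos y)
  have L : Isometry P := UpperHalfPlane.isometry_vertical_line 0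
  have pI : P 0 = UpperHalfPlane.I := UpperHalfPlane.ext_re_im (by simp [P]) (by simp [P])
  have pw : P (log w.im) = w := UpperHalfPlane.ext_re_im (by simp [P, w0]) (by simp [P, exp_log w.im_pos])
  rw [← pI, ← pw, L.dist_eq, dist_eq, zero_sub, abs_neg] at d
  have ex : (k * g)⁻¹ • P 0 = x := by rw [inv_smul_eq_iff, mul_smul, kI, pI]
  have ey : (k * g)⁻¹ • P (log w.im) = y := by rw [inv_smul_eq_iff, mul_smul, pw]
  rw [d]
  rcases abs_cases (log w.im) with ⟨e, -⟩ | ⟨e, -⟩ <;> rw [e]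
  · exact ⟨fun s => (k * g)⁻¹ • P s, Isometry.of_dist_eq fun a b => by rw [dist_smul, L.dist_eq], ex, ey⟩
  · refine ⟨fun s => (k * g)⁻¹ • P (-s), Isometry.of_dist_eq fun a b => by
      rw [dist_smul, L.dist_eq, dist_neg_neg], by simpa using ex, by simpa using ey⟩

lemma mobius_mul (M N : SL2) (X : RP1) : mobius (M * N) X = mobius M (mobius N X) := by
  induction X using Projectivization.ind with
  | h v hv =>
    simp only [mobius, Projectivization.map_mk]
    congr 1
    simp

lemma mobius_eq {M N : SL2} (h : mobius M = mobius N) : M = N ∨ M = -N := by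
  have key : ∀ v : Fin 2 → ℝ, v ≠ 0 → ∃ l : ℝ, ∀ i, l * (N i 0 * v 0 + N i 1 * v 1) = M i 0 * v 0 + M i 1 * v 1 := by
    intro v hv
    have := congrFun h (Projectivization.mk ℝ v hv)
    rw [mobius, mobius, Projectivization.map_mk, Projectivization.map_mk, Projectivization.mk_eq_mk_iff'] at this
    obtain ⟨l, hl⟩ := this
    refine ⟨l, fun i => ?_⟩
    have := congrFun hl i
    fin_cases i <;> simpa [Matrix.SpecialLinearGroup.toLin'_apply, Matrix.mulVec, dotProduct, Fin.sum_univ_two] using this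
  obtain ⟨a, ha⟩ := key ![1, 0] (by simp)
  obtain ⟨b, hb⟩ := key ![0, 1] (by simp)
  obtain ⟨c, hc⟩ := key ![1, 1] (by simp)
  simp at ha hb hc
  have dN := detW N
  have dM := detW M
  have h1 := hc.1
  have h2 := hc.2
  rw [← ha.1, ← hb.1] at h1
  rw [← ha.2, ← hb.2] at h2
  have ac : a = c := by linear_combination N 0 1 * h2 - N 1 1 * h1 + (c - a) * dN
  have bc : b = c := by linear_combination N 1 0 * h1 - N 0 0 * h2 + (c - b) * dN
  subst ac bc
  rw [← ha.1, ← ha.2, ← hb.1, ← hb.2] at dM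
  have : (b - 1) * (b + 1) = 0 := by linear_combination dM - b ^ 2 * dN
  rcases mul_eq_zero.1 this with h | h
  · left
    ext i j; fin_cases i <;> fin_cases j <;> simp [← ha.1, ← ha.2, ← hb.1, ← hb.2, show b = 1 by linarith]
  · right
    ext i j; fin_cases i <;> fin_cases j <;> simp [← ha.1, ← ha.2, ← hb.1, ← hb.2, show b = -1 by linarith]

lemma mobius_smul {M N : SL2} (h : mobius M = mobius N) (z : ℍ) : M • z = N • z := by
  rcases mobius_eq h with h | h <;> rw [h]
  refine UpperHalfPlane.ext_re_im ?_ ?_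
  · rw [(smul_re_im _ _).1, (smul_re_im _ _).1]; simp; ring
  · rw [(smul_re_im _ _).2, (smul_re_im _ _).2]; simp; ring

/-- Two reduced words with different first letters: there is no cancellation in `w⁻¹ v`. -/
lemma toWord_inv_mul {n : ℕ} {x y : FreeGroup (Fin n)} (h : x.toWord.head? ≠ y.toWord.head?) :
    (x⁻¹ * y).toWord = FreeGroup.invRev x.toWord ++ y.toWord := by
  rw [FreeGroup.toWord_mul, FreeGroup.toWord_inv]
  refine FreeGroup.IsReduced.reduce_eq (List.isChain_append.2 ⟨?_, FreeGroup.isReduced_toWord, ?_⟩)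
  · rw [← FreeGroup.toWord_inv]; exact FreeGroup.isReduced_toWord
  · intro a ha b hb e
    rw [FreeGroup.invRev, List.getLast?_reverse, List.head?_map, Option.mem_def, Option.map_eq_some_iff] at ha
    obtain ⟨a', ha', rfl⟩ := ha
    rw [Option.mem_def] at hb
    rw [ha', hb] at h
    by_contra hne
    exact h (congrArg some (Prod.ext e (by simpa using hne)))

variable {n : ℕ} {ρ : FreeGroup (Fin n) →* Perm RP1}

/-- Matrices representing a convex cocompact free group: their norms tend to infinity and, up to a
constant, are multiplicative along products without cancellation. -/
lemma exists_matrices (h : IsConvexCocompact ρ) : ∃ M : FreeGroup (Fin n) → SL2, (∀ γ, ⇑(ρ γ) = mobius (M γ)) ∧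
    (∀ N : ℝ, {γ | nsq (M γ) ≤ N}.Finite) ∧ ∃ c > 0, ∀ x y : FreeGroup (Fin n),
      x.toWord.head? ≠ y.toWord.head? → c * nsq (M x) * nsq (M y) ≤ nsq ((M x)⁻¹ * M y) := by
  obtain ⟨-, hM, hp, -, -, C, ⟨o, ho⟩, -, hC, hCi, K, hK, hCK⟩ := h
  choose M hM using fun γ => show ∃ m : SL2, ⇑(ρ γ) = mobius m ∧ mobiusHAct (ρ γ) = fun z => m • z from
    ⟨(hM γ).choose, (hM γ).choose_spec, dif_pos (hM γ)⟩
  simp only [fun γ => (hM γ).2] at hp hCi hCK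
  have mul : ∀ x y (z : ℍ), M (x * y) • z = M x • M y • z := fun x y z => by
    rw [← mul_smul]
    refine mobius_smul ?_ z
    rw [← (hM _).1, map_mul]
    exact funext fun X => by rw [mobius_mul, ← (hM _).1, ← (hM _).1]; rfl
  have fin : ∀ (p : ℍ) (R : ℝ), {γ | dist p (M γ • p) ≤ R}.Finite := fun p R => by
    by_cases hR : 0 ≤ R
    · refine (hp _ (isCompact_closedBall p R)).subset fun γ hγ => ⟨M γ • p, ⟨p, by simpa, rfl⟩, ?_⟩
      rw [Metric.mem_closedBall, dist_comm]; exact hγ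
    · exact Set.finite_empty.subset fun γ hγ => hR (dist_nonneg.trans hγ)
  have inv : ∀ x y (z z' : ℍ), dist (M (x⁻¹ * y) • z) z' = dist (M y • z) (M x • z') := fun x y z z' => by
    rw [← dist_smul (M x) (M (x⁻¹ * y) • z) z', ← mul, mul_inv_cancel_left]
  refine ⟨M, fun γ => (hM γ).1, fun N => ?_, ?_⟩
  · refine (fin UpperHalfPlane.I (log N)).subset fun γ hγ => ?_
    rw [mem_ofPred_eq, nsq_eq] at hγ
    have := cosh_eq (dist UpperHalfPlane.I (M γ • UpperHalfPlane.I))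
    have := exp_pos (-dist UpperHalfPlane.I (M γ • UpperHalfPlane.I))
    have le : exp (dist UpperHalfPlane.I (M γ • UpperHalfPlane.I)) ≤ N := by linarith
    exact (le_log_iff_exp_le ((exp_pos _).trans_le le)).2 le
  obtain ⟨R, hR⟩ := hK.isBounded.subset_closedBall o
  have near : ∀ p ∈ C, ∃ γ, dist p (M γ • o) ≤ R := fun p hp => by
    obtain ⟨γ, k, hk, rfl⟩ := mem_iUnion.1 (hCK hp)
    exact ⟨γ, by rw [dist_smul]; exact hR hk⟩
  have oC : ∀ γ, M γ • o ∈ C := fun γ => (hCi γ).subset ⟨o, ho, rfl⟩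
  have T : (⋃ g ∈ {γ | dist o (M γ • o) ≤ 2 * R + 1}, FreeGroup.mk '' {u | u <+: g.toWord}).Finite :=
    (fin o _).biUnion fun g _ => ((List.finite_toSet g.toWord.inits).subset fun u hu => (List.mem_inits ..).2 hu).image _
  obtain ⟨D, hD⟩ := (T.image fun g => dist (M g • o) o).bddAbove
  have tri : ∀ x y : FreeGroup (Fin n), x.toWord.head? ≠ y.toWord.head? →
      dist (M x • o) o + dist o (M y • o) ≤ dist (M x • o) (M y • o) + 2 * (D + R) := fun x y hxy => by
    obtain ⟨p, ip, p0, p1⟩ := exists_geodesic (M x • o) (M y • o)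
    set d := dist (M x • o) (M y • o)
    have pC : ∀ s, 0 ≤ s → s ≤ d → p s ∈ C := fun s h0 h1 => hC _ (oC x) _ (oC y) _ (by
      rw [← p0, ← p1, ip.dist_eq, ip.dist_eq, ip.dist_eq, dist_comm, dist_eq, dist_comm, dist_eq, dist_comm, dist_eq,
        abs_of_nonneg, abs_of_nonneg, abs_of_nonneg] <;> linarith)
    have R0 : 0 ≤ R := dist_nonneg.trans (near _ (oC x)).choose_spec
    -- somewhere along the geodesic the first letter changes
    obtain ⟨s, h0, h1, a, b, ha, hb, hab⟩ : ∃ s, 0 ≤ s ∧ s ≤ d ∧ ∃ a b : FreeGroup (Fin n), dist (p s) (M a • o) ≤ R ∧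
        dist (p s) (M b • o) ≤ R + 1 ∧ a.toWord.head? ≠ b.toWord.head? := by
      by_contra! hn
      have Q : ∀ i : ℕ, ∃ a : FreeGroup (Fin n), dist (p (min i d)) (M a • o) ≤ R ∧ a.toWord.head? = x.toWord.head? := by
        intro i
        induction i with
        | zero => exact ⟨x, by rw [Nat.cast_zero, min_eq_left dist_nonneg, p0, dist_self]; exact R0, rfl⟩
        | succ i ih =>
          obtain ⟨a, ha, e⟩ := ih
          obtain ⟨b, hb⟩ := near _ (pC (min (i + 1 : ℕ) d) (by positivity) (min_le_right _ _))
          refine ⟨b, hb, ?_⟩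
          rw [← hn (min i d) (by positivity) (min_le_right _ _) a b ha ?_, e]
          refine (dist_triangle _ (p (min (i + 1 : ℕ) d)) _).trans ?_
          rw [ip.dist_eq, dist_eq]
          have := abs_min_sub_min_le_max (i : ℝ) d (i + 1 : ℕ) d
          have e : |(i : ℝ) - (i + 1 : ℕ)| = 1 := by push_cast; rw [sub_add_cancel_left]; simp
          rw [e, sub_self, abs_zero, max_eq_left zero_le_one] at this
          linarith
      obtain ⟨a, ha, e⟩ := Q ⌈d⌉₊
      rw [min_eq_right (Nat.le_ceil d)] at ha
      refine hxy (e.symm.trans (hn d dist_nonneg le_rfl a y ha ?_))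
      rw [p1, dist_self]; linarith
    have aD : dist o (M a • o) ≤ D := by
      have e := toWord_inv_mul hab
      have := hD ⟨a⁻¹, mem_biUnion (show a⁻¹ * b ∈ {γ | dist o (M γ • o) ≤ 2 * R + 1} from ?_)
        ⟨FreeGroup.invRev a.toWord, e ▸ List.prefix_append _ _, by rw [← FreeGroup.toWord_inv, FreeGroup.mk_toWord]⟩, rfl⟩
      · have h := inv a 1 o o
        rw [mul_one] at h
        have h1 : M 1 • o = o := by
          have := mul 1 1 o
          rwa [mul_one, eq_comm, smul_left_cancel_iff] at this
        rw [h1] at h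
        rw [← h]; exact this
      · show dist o (M (a⁻¹ * b) • o) ≤ _
        rw [dist_comm, inv]
        linarith [dist_triangle (M b • o) (p s) (M a • o), dist_comm (M b • o) (p s)]
    have e1 : dist (M x • o) (p s) = s := by rw [← p0, ip.dist_eq, dist_comm, dist_eq, sub_zero, abs_of_nonneg h0]
    have e2 : dist (p s) (M y • o) = d - s := by
      nth_rw 1 [← p1]; rw [ip.dist_eq, dist_comm, dist_eq, abs_of_nonneg (by linarith)]
    linarith [dist_triangle (M x • o) (p s) o, dist_triangle o (p s) (M y • o), dist_comm o (p s),
      dist_triangle o (M a • o) (p s), dist_comm (p s) (M a • o)]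
  refine ⟨exp (-(2 * (D + R) + 6 * dist o UpperHalfPlane.I)) / 4, by positivity, fun x y hxy => ?_⟩
  rw [nsq_inv_mul, nsq_eq, nsq_eq]
  generalize UpperHalfPlane.I = j at *
  have t1 := tri x y hxy
  have up : ∀ t : ℝ, 0 ≤ t → 2 * cosh t ≤ 2 * exp t := fun t ht => by
    rw [cosh_eq]; linarith [exp_le_exp.2 (by linarith : -t ≤ t)]
  have lo : ∀ t : ℝ, exp t ≤ 2 * cosh t := fun t => by
    rw [cosh_eq]; linarith [exp_pos (-t)]
  have dx := dist_triangle4 j o (M x • o) (M x • j)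
  have dy := dist_triangle4 j o (M y • o) (M y • j)
  have dxy := dist_triangle4 (M x • o) (M x • j) (M y • j) (M y • o)
  rw [dist_smul] at dx dy dxy
  rw [dist_smul] at dxy
  refine le_trans ?_ (lo _)
  refine (mul_le_mul (mul_le_mul_of_nonneg_left (up _ dist_nonneg) (by positivity)) (up _ dist_nonneg)
    (by positivity) (by positivity)).trans ?_
  have : ∀ a b c : ℝ, exp a / 4 * (2 * exp b) * (2 * exp c) = exp (a + b + c) := fun a b c => by
    rw [exp_add, exp_add]; ring
  rw [this]
  refine exp_le_exp.2 ?_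
  linarith [dist_comm o j, dist_comm (M x • o) o]
end

/-! ### Attracting directions of matrices -/

lemma nd_sin (t : ℝ) : 2 * nd t ≤ |sin (π * t)| ∧ |sin (π * t)| ≤ π * nd t := by
  have e : |sin (π * t)| = |sin (π * (t - round t))| := by
    rw [show π * (t - round t) = π * t - round t * π by ring, sin_sub_int_mul_pi, abs_mul]; simp
  have a : |π * (t - round t)| = π * nd t := by
    rw [abs_mul, abs_of_pos pi_pos, nd, UnitAddCircle.norm_eq]
  have h : π * nd t ≤ π / 2 := by
    rw [nd, UnitAddCircle.norm_eq]; nlinarith [abs_sub_round t, pi_pos]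
  rw [e]
  refine ⟨?_, a ▸ abs_sin_le_abs⟩
  have := mul_abs_le_abs_sin (x := π * (t - round t)) (by rwa [a])
  rwa [a, ← mul_assoc, div_mul_cancel₀ _ pi_ne_zero] at this

lemma nsq_pos (W : SL2) : 0 < nsq W := by rw [nsq_eq]; have := cosh_pos (dist UpperHalfPlane.I (W • UpperHalfPlane.I)); linarith

lemma exists_ang (W : SL2) : ∃ a : ℝ, ∃ (j : Fin 2) (l : ℝ), W 0 j = l * cos (π * a) ∧
    W 1 j = l * sin (π * a) ∧ nsq W ≤ 2 * l ^ 2 := by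
  have key : ∀ j : Fin 2, nsq W ≤ 2 * (W 0 j ^ 2 + W 1 j ^ 2) → ∃ a : ℝ, ∃ (j : Fin 2) (l : ℝ),
      W 0 j = l * cos (π * a) ∧ W 1 j = l * sin (π * a) ∧ nsq W ≤ 2 * l ^ 2 := fun j hj => by
    obtain ⟨a, h0, h1⟩ := exists_polar (u := W 0 j) (v := W 1 j)
    exact ⟨a, j, _, h0, h1, by rwa [sq_sqrt (by positivity)]⟩
  by_cases h : W 0 0 ^ 2 + W 1 0 ^ 2 ≤ W 0 1 ^ 2 + W 1 1 ^ 2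
  · exact key 1 (by rw [nsq]; linarith)
  · exact key 0 (by rw [nsq]; linarith)

/-- The direction (in the angular coordinate) of a longest column of a matrix; for a matrix of large
norm, it is close to the images of all vectors outside a small sector. -/
def ang (W : SL2) : ℝ := (exists_ang W).choose

lemma ang_spec (W : SL2) : ∃ (j : Fin 2) (l : ℝ), W 0 j = l * cos (π * ang W) ∧
    W 1 j = l * sin (π * ang W) ∧ nsq W ≤ 2 * l ^ 2 := (exists_ang W).choose_spec

/-- The component of `W (x, y)` orthogonal to the direction `ang W` is small. -/
lemma ang_wedge (W : SL2) (x y : ℝ) : (cos (π * ang W) * (W 1 0 * x + W 1 1 * y) -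
    sin (π * ang W) * (W 0 0 * x + W 0 1 * y)) ^ 2 * nsq W ≤ 2 * (x ^ 2 + y ^ 2) := by
  obtain ⟨j, l, h0, h1, hl⟩ := ang_spec W
  have d := detW W
  set k := cos (π * ang W) * (W 1 0 * x + W 1 1 * y) - sin (π * ang W) * (W 0 0 * x + W 0 1 * y) with hk
  have e : (l * k) ^ 2 ≤ x ^ 2 + y ^ 2 := by
    rw [hk, mul_sub, ← mul_assoc, ← mul_assoc, ← h0, ← h1]
    fin_cases j
    · have : W 0 0 * (W 1 0 * x + W 1 1 * y) - W 1 0 * (W 0 0 * x + W 0 1 * y) = y := by linear_combination y * d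
      simp only [Fin.zero_eta, this]; nlinarith [sq_nonneg x]
    · have : W 0 1 * (W 1 0 * x + W 1 1 * y) - W 1 1 * (W 0 0 * x + W 0 1 * y) = -x := by linear_combination -x * d
      simp only [Fin.mk_one, this]; nlinarith [sq_nonneg y]
  nlinarith [sq_nonneg k]

lemma ang_image {W : SL2} {s t : ℝ} (h : mobius W (para t) = para s) :
    sin (π * (s - ang W)) ^ 2 * (Qm W t * nsq W) ≤ 2 := by
  obtain ⟨l, hl, h0, h1⟩ := mobius_para h
  have := ang_wedge W (cos (π * t)) (sin (π * t))
  rw [h0, h1, cos_sq_add_sin_sq] at this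
  rw [← hl, mul_sub, sin_sub]
  linarith

lemma Qm_large {W V : SL2} (h : mobius V = mobius W⁻¹) (t : ℝ) :
    sin (π * (t - ang V)) ^ 2 * nsq V ≤ 2 * Qm W t := by
  have d := detW W
  have := ang_wedge V (W 0 0 * cos (π * t) + W 0 1 * sin (π * t)) (W 1 0 * cos (π * t) + W 1 1 * sin (π * t))
  rw [← Qm] at this
  refine le_trans (le_of_eq ?_) this
  rw [mul_sub, sin_sub]
  congr 1
  generalize cos (π * t) = c
  generalize sin (π * t) = s
  generalize ang V = a
  rcases mobius_eq h with rfl | rfl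
  · simp [Matrix.SpecialLinearGroup.SL2_inv_expl]
    congr 1
    linear_combination (c * sin (π * a) - s * cos (π * a)) * d
  · rw [← neg_sq]
    simp only [Matrix.SpecialLinearGroup.coe_neg, Matrix.neg_apply]
    simp [Matrix.SpecialLinearGroup.SL2_inv_expl]
    congr 1
    linear_combination (s * cos (π * a) - c * sin (π * a)) * d

lemma ang_mul {P U V : SL2} {c : ℝ} (h : mobius P = mobius (U * V)) (hc : c * nsq U * nsq V ≤ nsq P) :
    sin (π * (ang P - ang U)) ^ 2 * (c * nsq U ^ 2) ≤ 4 := by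
  obtain ⟨j, l, h0, h1, hl⟩ := ang_spec P
  have w := ang_wedge U (V 0 j) (V 1 j)
  have e : (cos (π * ang U) * (U 1 0 * V 0 j + U 1 1 * V 1 j) - sin (π * ang U) * (U 0 0 * V 0 j + U 0 1 * V 1 j)) ^ 2 =
      l ^ 2 * sin (π * (ang P - ang U)) ^ 2 := by
    have : (cos (π * ang U) * P 1 j - sin (π * ang U) * P 0 j) ^ 2 = l ^ 2 * sin (π * (ang P - ang U)) ^ 2 := by
      rw [h0, h1, mul_sub, sin_sub]; ring
    rw [← this]
    rcases mobius_eq h with h | h <;> simp [h, Matrix.mul_apply, Fin.sum_univ_two]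
    ring
  have v : V 0 j ^ 2 + V 1 j ^ 2 ≤ nsq V := by
    rw [nsq]; fin_cases j <;> simp <;> nlinarith [sq_nonneg (V 0 0), sq_nonneg (V 0 1), sq_nonneg (V 1 0), sq_nonneg (V 1 1)]
  rw [e] at w
  have := nsq_pos V
  have := nsq_pos U
  set s2 := sin (π * (ang P - ang U)) ^ 2
  have : 0 ≤ s2 := sq_nonneg _
  refine le_of_mul_le_mul_right ?_ (nsq_pos V)
  calc s2 * (c * nsq U ^ 2) * nsq V = (c * nsq U * nsq V) * (s2 * nsq U) := by ring
    _ ≤ (2 * l ^ 2) * (s2 * nsq U) := mul_le_mul_of_nonneg_right (hc.trans hl) (by positivity)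
    _ ≤ 4 * nsq V := by linarith

lemma ang_sep {U V : SL2} {c T : ℝ} (h : c * nsq U * nsq V ≤ nsq (U⁻¹ * V)) (T1 : 1 ≤ T) (hU : T ≤ nsq U) (hV : T ≤ nsq V) :
    c / 16 - 8 / T ^ 2 ≤ sin (π * (ang U - ang V)) ^ 2 := by
  set a := nsq U with ha
  set b := nsq V with hb
  have a0 : 0 < a := nsq_pos U
  have b0 : 0 < b := nsq_pos V
  set s := sin (π * (ang U - ang V)) with hs
  -- every wedge product of a column of `U` and a column of `V` is controlled
  have key : ∀ i j : Fin 2, (U 0 i * V 1 j - U 1 i * V 0 j) ^ 2 ≤ 4 * (a * b * s ^ 2 + 2 * a / b + 2 * b / a + 4 / (a * b)) := by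
    intro i j
    have bd : ∀ (W : SL2) (i : Fin 2), W 0 i ^ 2 + W 1 i ^ 2 ≤ nsq W ∧ (cos (π * ang W) * W 1 i - sin (π * ang W) * W 0 i) ^ 2 ≤ 2 / nsq W := by
      intro W i
      rw [le_div_iff₀ (nsq_pos W)]
      fin_cases i
      · have := ang_wedge W 1 0
        simp at this ⊢
        exact ⟨by rw [nsq]; nlinarith [sq_nonneg (W 0 1), sq_nonneg (W 1 1)], this⟩
      · have := ang_wedge W 0 1
        simp at this ⊢
        exact ⟨by rw [nsq]; nlinarith [sq_nonneg (W 0 0), sq_nonneg (W 1 0)], this⟩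
    obtain ⟨u1, u2⟩ := bd U i
    obtain ⟨v1, v2⟩ := bd V j
    have e1 := sin_sq_add_cos_sq (π * ang U)
    have e2 := sin_sq_add_cos_sq (π * ang V)
    set α := cos (π * ang U) * U 0 i + sin (π * ang U) * U 1 i with hα
    set β := cos (π * ang U) * U 1 i - sin (π * ang U) * U 0 i with hβ
    set α' := cos (π * ang V) * V 0 j + sin (π * ang V) * V 1 j with hα'
    set β' := cos (π * ang V) * V 1 j - sin (π * ang V) * V 0 j with hβ'
    have a1 : α ^ 2 ≤ a := by
      have : α ^ 2 + β ^ 2 = U 0 i ^ 2 + U 1 i ^ 2 := by rw [hα, hβ]; linear_combination (U 0 i ^ 2 + U 1 i ^ 2) * e1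
      linarith [sq_nonneg β]
    have a2 : α' ^ 2 ≤ b := by
      have : α' ^ 2 + β' ^ 2 = V 0 j ^ 2 + V 1 j ^ 2 := by rw [hα', hβ']; linear_combination (V 0 j ^ 2 + V 1 j ^ 2) * e2
      linarith [sq_nonneg β']
    set k := cos (π * (ang U - ang V)) with hk
    have w : U 0 i * V 1 j - U 1 i * V 0 j = -(α * α' + β * β') * s + (α * β' - β * α') * k := by
      rw [hs, hk, show π * (ang U - ang V) = π * ang U - π * ang V by ring, sin_sub, cos_sub, hα, hβ, hα', hβ']
      linear_combination -(U 0 i * V 1 j - U 1 i * V 0 j) * (sin (π * ang V) ^ 2 + cos (π * ang V) ^ 2) * e1 -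
        (U 0 i * V 1 j - U 1 i * V 0 j) * e2
    have s1 : s ^ 2 ≤ 1 := sin_sq_le_one _
    have k1 : k ^ 2 ≤ 1 := cos_sq_le_one _
    have q : ∀ p q r t : ℝ, (p + q + r + t) ^ 2 ≤ 4 * (p ^ 2 + q ^ 2 + r ^ 2 + t ^ 2) := fun p q r t => by
      nlinarith [sq_nonneg (p - q), sq_nonneg (p - r), sq_nonneg (p - t), sq_nonneg (q - r), sq_nonneg (q - t), sq_nonneg (r - t)]
    have := q (-(α * α') * s) (α * β' * k) (-(β * α') * k) (-(β * β') * s)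
    rw [w, show -(α * α' + β * β') * s + (α * β' - β * α') * k =
      -(α * α') * s + α * β' * k + -(β * α') * k + -(β * β') * s by ring]
    refine this.trans (mul_le_mul_of_nonneg_left ?_ (by norm_num))
    have m : ∀ x y z X Y Z : ℝ, x ^ 2 ≤ X → y ^ 2 ≤ Y → z ^ 2 ≤ Z → (x * y * z) ^ 2 ≤ X * Y * Z := fun x y z X Y Z hx hy hz => by
      rw [mul_pow, mul_pow]
      have := (sq_nonneg x).trans hx
      have := (sq_nonneg y).trans hy
      gcongr
    have m1 := m _ _ _ _ _ _ a1 a2 (le_refl (s ^ 2))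
    have m2 := m _ _ _ _ _ _ a1 v2 k1
    have m3 := m _ _ _ _ _ _ u2 a2 k1
    have m4 := m _ _ _ _ _ _ u2 v2 s1
    have r2 : a * (2 / b) * 1 = 2 * a / b := by ring
    have r3 : 2 / a * b * 1 = 2 * b / a := by ring
    have r4 : 2 / a * (2 / b) * 1 = 4 / (a * b) := by field_simp; norm_num
    rw [← r2, ← r3, ← r4]
    simp only [neg_mul, neg_sq]
    linarith
  have e : nsq (U⁻¹ * V) = (U 0 0 * V 1 0 - U 1 0 * V 0 0) ^ 2 + (U 0 0 * V 1 1 - U 1 0 * V 0 1) ^ 2 +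
      (U 0 1 * V 1 0 - U 1 1 * V 0 0) ^ 2 + (U 0 1 * V 1 1 - U 1 1 * V 0 1) ^ 2 := by
    have e : ((U⁻¹ : SL2) : Matrix (Fin 2) (Fin 2) ℝ) = !![U 1 1, -U 0 1; -U 1 0, U 0 0] := by
      rw [Matrix.SpecialLinearGroup.coe_inv, Matrix.adjugate_fin_two]
    simp only [nsq, Matrix.SpecialLinearGroup.coe_mul, e, Matrix.mul_apply, Fin.sum_univ_two]
    simp
    ring
  have : c * a * b ≤ 16 * (a * b * s ^ 2 + 2 * a / b + 2 * b / a + 4 / (a * b)) := by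
    linarith [key 0 0, key 0 1, key 1 0, key 1 1]
  have T0 : 0 < T := by linarith
  have i1 : 1 / a ≤ 1 / T := one_div_le_one_div_of_le T0 hU
  have i2 : 1 / b ≤ 1 / T := one_div_le_one_div_of_le T0 hV
  have i3 : 1 / T ≤ 1 := by rw [div_le_one T0]; exact T1
  have p1 : 0 < 1 / a := by positivity
  have p2 : 0 < 1 / b := by positivity
  have fin : c ≤ 16 * (s ^ 2 + 2 * (1 / b) ^ 2 + 2 * (1 / a) ^ 2 + 4 * (1 / a) ^ 2 * (1 / b) ^ 2) := by
    refine le_of_mul_le_mul_right (this.trans' (le_of_eq (mul_assoc ..).symm) |>.trans (le_of_eq ?_)) (mul_pos a0 b0)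
    field_simp
  have q1 : (1 / a) ^ 2 ≤ (1 / T) ^ 2 := by gcongr
  have q2 : (1 / b) ^ 2 ≤ (1 / T) ^ 2 := by gcongr
  have q3 : (1 / a) ^ 2 * (1 / b) ^ 2 ≤ (1 / T) ^ 2 * 1 := by
    refine mul_le_mul q1 ?_ (by positivity) (by positivity)
    exact pow_le_one₀ p2.le (i2.trans i3)
  rw [show 8 / T ^ 2 = 8 * (1 / T) ^ 2 by ring]
  linarith

/-! ### Contraction for the convex cocompact representation -/

lemma nsq_congr {V W : SL2} (h : mobius V = mobius W) : nsq V = nsq W := by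
  rcases mobius_eq h with h | h <;> simp [nsq, h]

lemma nsq_inv (W : SL2) : nsq W⁻¹ = nsq W := by
  have e : ((W⁻¹ : SL2) : Matrix (Fin 2) (Fin 2) ℝ) = !![W 1 1, -W 0 1; -W 1 0, W 0 0] := by
    rw [Matrix.SpecialLinearGroup.coe_inv, Matrix.adjugate_fin_two]
  simp only [nsq, e]
  simp
  ring

/-- The lifts of long reduced words of a convex cocompact group contract uniformly: with `A w` the
attracting direction of the word `w`, the image of the complement of the interval about
`A (w⁻¹)` is within `r / 2` of `A w`, where only the first `m` letters of a word matter. -/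
lemma exists_contracting {n : ℕ} {ρ : FreeGroup (Fin n) →* Perm RP1} (h : IsConvexCocompact ρ) :
    ∃ (m : ℕ) (r : ℝ) (A : List (Fin n × Bool) → ℝ), 1 ≤ m ∧ 0 < r ∧
      (∀ u v, FreeGroup.IsReduced u → FreeGroup.IsReduced v → u.length = m → v.length = m → u.head? ≠ v.head? →
        4 * r ≤ nd (A u - A v)) ∧
      ∀ w, FreeGroup.IsReduced w → m ≤ w.length → ∀ F : ℝ → ℝ, IsLift F (ρ (FreeGroup.mk w)) → Differentiable ℝ F →
        ∀ z, r / 2 ≤ nd (z - A ((FreeGroup.invRev w).take m)) → nd (F z - A (w.take m)) < r / 2 ∧ deriv F z ≤ 1 / 4 := by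
  obtain ⟨M, hM, fin, c, c0, hc⟩ := exists_matrices h
  have mul : ∀ x y, mobius (M (x * y)) = mobius (M x * M y) := fun x y => by
    rw [← hM, map_mul]; exact funext fun X => by rw [mobius_mul, ← hM, ← hM]; rfl
  have inv : ∀ x, mobius (M x⁻¹) = mobius (M x)⁻¹ := fun x => funext fun X => mobius_inj (M x) (by
    rw [← mobius_mul, ← mobius_mul, mul_inv_cancel, ← mul, mul_inv_cancel, ← hM, map_one, Equiv.Perm.one_apply]
    exact mobius_inj 1 (by rw [← mobius_mul, mul_one]))
  obtain ⟨r, r0, hr⟩ : ∃ r : ℝ, 0 < r ∧ (π * (4 * r)) ^ 2 = c / 32 :=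
    ⟨Real.sqrt (c / 32) / (4 * π), by positivity, by
      rw [← sq_sqrt (show 0 ≤ c / 32 by positivity)]; congr 1
      rw [sq_sqrt (by positivity)]; field_simp⟩
  set T := 1 + 32 / r ^ 2 + 16 / (r ^ 2 * c) + 256 / c with hT
  have p1 : 0 < 32 / r ^ 2 := by positivity
  have p2 : 0 < 16 / (r ^ 2 * c) := by positivity
  have p3 : 0 < 256 / c := by positivity
  have T1 : 1 ≤ T := by linarith
  have T2 : T ≤ T ^ 2 := by nlinarith
  have hT1 : 32 ≤ T * r ^ 2 := by rw [← div_le_iff₀ (by positivity)]; linarith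
  have hT2 : 16 ≤ T ^ 2 * (r ^ 2 * c) := by rw [← div_le_iff₀ (by positivity)]; linarith
  have hT3 : 8 / T ^ 2 ≤ c / 32 := by
    rw [div_le_iff₀ (by positivity)]
    have : 256 ≤ T ^ 2 * c := by rw [← div_le_iff₀ (by positivity)]; linarith
    linarith
  obtain ⟨m, hm⟩ := ((fin T).image fun g => g.toWord.length).bddAbove
  have tw : ∀ w : List (Fin n × Bool), FreeGroup.IsReduced w → (FreeGroup.mk w).toWord = w := fun w hw => by
    rw [FreeGroup.toWord_mk]; exact hw.reduce_eq
  have big : ∀ w : List (Fin n × Bool), FreeGroup.IsReduced w → m + 1 ≤ w.length → T ≤ nsq (M (FreeGroup.mk w)) := fun w hw hl => by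
    by_contra! hlt
    have := hm ⟨_, hlt.le, rfl⟩
    simp only [tw w hw] at this
    omega
  set A : List (Fin n × Bool) → ℝ := fun w => ang (M (FreeGroup.mk w)) with hA
  -- a long prefix determines the attracting direction
  have pre : ∀ w : List (Fin n × Bool), FreeGroup.IsReduced w → m + 1 ≤ w.length → nd (A w - A (w.take (m + 1))) ≤ r / 4 := by
    intro w hw hl
    obtain ⟨u, v, rfl, hu⟩ : ∃ u v, w = u ++ v ∧ u.length = m + 1 := ⟨_, _, (List.take_append_drop (m + 1) w).symm, by simp [hl]⟩
    rw [show (u ++ v).take (m + 1) = u by simp [← hu]]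
    have ch := List.isChain_append.1 hw
    have e := hc (FreeGroup.mk u)⁻¹ (FreeGroup.mk v) (by
      rw [FreeGroup.toWord_inv, tw u ch.1, tw v ch.2.1, FreeGroup.invRev, List.head?_reverse, List.getLast?_map]
      rcases List.eq_nil_or_concat u with rfl | ⟨u', a, rfl⟩
      · simp at hu
      rintro he
      rw [List.concat_eq_append, List.getLast?_append, List.getLast?_singleton] at he
      simp at he
      have := ch.2.2 a (by simp) _ he.symm rfl
      simp at this)
    rw [nsq_congr (inv _), nsq_inv] at e
    have g := ang_mul (P := M (FreeGroup.mk (u ++ v))) (c := c) (by rw [← FreeGroup.mul_mk, mul]) (e.trans_eq (nsq_congr (by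
      rw [← FreeGroup.mul_mk, mul]
      refine funext fun X => ?_
      rw [mobius_mul, mobius_mul, ← inv, inv_inv])))
    have hb := big u ch.1 hu.ge
    by_contra! hlt
    have s := (nd_sin (A (u ++ v) - A u)).1
    have : (r / 2) ^ 2 < sin (π * (A (u ++ v) - A u)) ^ 2 := by rw [← sq_abs (sin _)]; gcongr; linarith
    have : T ^ 2 ≤ nsq (M (FreeGroup.mk u)) ^ 2 := by gcongr
    have : (r / 2) ^ 2 * (c * T ^ 2) < sin (π * (A (u ++ v) - A u)) ^ 2 * (c * nsq (M (FreeGroup.mk u)) ^ 2) :=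
      mul_lt_mul ‹_› (mul_le_mul_of_nonneg_left this c0.le) (by positivity) (sq_nonneg _)
    linarith
  refine ⟨m + 1, r, A, by omega, r0, fun u v hu hv lu lv huv => ?_, fun w hw hl F hF dF z hz => ?_⟩
  · have := ang_sep (hc (FreeGroup.mk u) (FreeGroup.mk v) (by rwa [tw u hu, tw v hv])) T1 (big u hu lu.ge) (big v hv lv.ge)
    by_contra! hlt
    have : sin (π * (A u - A v)) ^ 2 < (π * (4 * r)) ^ 2 := by
      rw [← sq_abs (sin _)]
      gcongr
      exact (nd_sin _).2.trans_lt (by gcongr)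
    linarith
  set W := M (FreeGroup.mk w)
  have hw' : FreeGroup.IsReduced (FreeGroup.invRev w) := by
    have := FreeGroup.isReduced_toWord (x := (FreeGroup.mk w)⁻¹)
    rwa [FreeGroup.toWord_inv, tw w hw] at this
  have hl' : m + 1 ≤ (FreeGroup.invRev w).length := by simpa
  have hV := big _ hw' hl'
  have hW := big w hw hl
  have q := Qm_large (W := W) (V := M (FreeGroup.mk (FreeGroup.invRev w))) (by rw [← FreeGroup.inv_mk, inv]) z
  rw [hM] at hF
  have im := ang_image (hF z)
  have h1 : r / 4 ≤ nd (z - A (FreeGroup.invRev w)) := by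
    linarith [nd_tri z (A (FreeGroup.invRev w)) (A ((FreeGroup.invRev w).take (m + 1))), pre _ hw' hl']
  have h2 : (r / 2) ^ 2 ≤ sin (π * (z - A (FreeGroup.invRev w))) ^ 2 := by
    rw [← sq_abs (sin _)]; gcongr; linarith [(nd_sin (z - A (FreeGroup.invRev w))).1]
  have h3 : T * r ^ 2 ≤ 8 * Qm W z := by
    have : (r / 2) ^ 2 * T ≤ sin (π * (z - A (FreeGroup.invRev w))) ^ 2 * nsq (M (FreeGroup.mk (FreeGroup.invRev w))) := by gcongr
    linarith
  constructor
  · have : nd (F z - A w) < r / 4 := by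
      by_contra! hge
      have h4 : (r / 2) ^ 2 ≤ sin (π * (F z - A w)) ^ 2 := by
        rw [← sq_abs (sin _)]; gcongr; linarith [(nd_sin (F z - A w)).1]
      have : (r / 2) ^ 2 * (4 * T) ≤ sin (π * (F z - A w)) ^ 2 * (Qm W z * nsq W) := by gcongr <;> linarith
      linarith
    linarith [nd_tri (F z) (A w) (A (w.take (m + 1))), pre w hw hl]
  · rw [mobius_deriv hF dF]
    have : 4 ≤ Qm W z := by linarith
    rw [inv_eq_one_div]; gcongr

/-! ### Convex cocompact free groups with a Cantor limit set have rank at least two -/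

lemma isClosed_point (X : RP1) : IsClosed ({X} : Set RP1) := by
  induction X using Projectivization.ind with
  | h u hu =>
    have q : IsQuotientMap (fun v : { v : Fin 2 → ℝ // v ≠ 0 } => (Projectivization.mk ℝ v.1 v.2 : RP1)) := isQuotientMap_quotient_mk'
    rw [← q.isClosed_preimage]
    have : (fun v : { v : Fin 2 → ℝ // v ≠ 0 } => (Projectivization.mk ℝ v.1 v.2 : RP1)) ⁻¹' {Projectivization.mk ℝ u hu} =
        {v | v.1 0 * u 1 = v.1 1 * u 0} := by
      ext v
      simp only [mem_preimage, mem_singleton_iff, mem_ofPred_eq, Projectivization.mk_eq_mk_iff']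
      constructor
      · rintro ⟨a, ha⟩
        rw [← ha]; simp; ring
      · intro h
        by_cases u0 : u 0 = 0
        · have u1 : u 1 ≠ 0 := fun h1 => hu (funext fun i => by fin_cases i <;> simp [u0, h1])
          refine ⟨v.1 1 / u 1, funext fun i => ?_⟩
          fin_cases i <;> simp [u0, u1] at h ⊢
          exact h.symm
        · refine ⟨v.1 0 / u 0, funext fun i => ?_⟩
          fin_cases i <;> simp [u0]
          field_simp; linarith
    rw [this]
    exact isClosed_eq (((continuous_apply 0).comp continuous_subtype_val).mul continuous_const)
      (((continuous_apply 1).comp continuous_subtype_val).mul continuous_const)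

/-- A matrix with a non-definite quadratic form `v ↦ v ∧ W v` has a fixed direction; otherwise its powers are bounded. -/
lemma fixed_or_bounded (W : SL2) : (∃ X, mobius W X = X) ∨ ∃ N, ∀ k : ℕ, nsq (W ^ k) ≤ N := by
  have d := detW W
  set a := W 0 0
  set b := W 0 1
  set c := W 1 0
  set e := W 1 1
  set D := (e - a) ^ 2 + 4 * b * c with hD
  by_cases h : 0 ≤ D
  · left
    obtain ⟨x, y, h0, hq⟩ : ∃ x y : ℝ, ![x, y] ≠ 0 ∧ c * x ^ 2 + (e - a) * x * y - b * y ^ 2 = 0 := by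
      by_cases hc : c = 0
      · exact ⟨1, 0, fun h => by simpa using congrFun h 0, by simp [hc]⟩
      · exact ⟨((a - e) + Real.sqrt D) / 2, c, fun h => hc (by simpa using congrFun h 1), by
          linear_combination c / 4 * (sq_sqrt h)⟩
    refine ⟨Projectivization.mk ℝ ![x, y] h0, ?_⟩
    rw [mobius, Projectivization.map_mk, Projectivization.mk_eq_mk_iff']
    have v : (Matrix.SpecialLinearGroup.toLin' W : (Fin 2 → ℝ) →ₗ[ℝ] Fin 2 → ℝ) ![x, y] = ![a * x + b * y, c * x + e * y] := by
      ext i; fin_cases i <;> simp [Matrix.SpecialLinearGroup.toLin'_apply, Matrix.mulVec, dotProduct, Fin.sum_univ_two, a, b, c, e]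
    rw [v]
    by_cases x0 : x = 0
    · have y0 : y ≠ 0 := fun hy => h0 (by simp [x0, hy])
      subst x0
      have : b = 0 := by simpa [y0] using hq
      exact ⟨e, by ext i; fin_cases i <;> simp [this]⟩
    · exact ⟨(a * x + b * y) / x, by
        ext i; fin_cases i <;> simp [x0]
        field_simp; linear_combination -hq⟩
  · right
    set q : ℝ → ℝ → ℝ := fun x y => c * x ^ 2 + (e - a) * x * y - b * y ^ 2 with hq
    have inv : ∀ (k : ℕ) (j : Fin 2), q ((W ^ k) 0 j) ((W ^ k) 1 j) = q ((1 : SL2) 0 j) ((1 : SL2) 1 j) := by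
      intro k j
      induction k with
      | zero => rw [pow_zero]
      | succ k ih =>
        rw [← ih, pow_succ']
        have m : ∀ i, (W * W ^ k) i j = W i 0 * (W ^ k) 0 j + W i 1 * (W ^ k) 1 j := fun i => by
          rw [Matrix.SpecialLinearGroup.coe_mul, Matrix.mul_apply, Fin.sum_univ_two]
        rw [m, m]
        simp only [hq]
        generalize (W ^ k) 0 j = x
        generalize (W ^ k) 1 j = y
        change c * (a * x + b * y) ^ 2 + (e - a) * (a * x + b * y) * (c * x + e * y) - b * (c * x + e * y) ^ 2 = _
        linear_combination (c * x ^ 2 + (e - a) * x * y - b * y ^ 2) * d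
    have bd : ∀ x y : ℝ, x ^ 2 + y ^ 2 ≤ 4 * (c - b) * q x y / -D := fun x y => by
      rw [le_div_iff₀ (by linarith)]
      simp only [hq]
      linarith [show c * (c * x ^ 2 + (e - a) * x * y - b * y ^ 2) = (c * x + (e - a) / 2 * y) ^ 2 - D / 4 * y ^ 2 by rw [hD]; ring,
        show -b * (c * x ^ 2 + (e - a) * x * y - b * y ^ 2) = (b * y + (a - e) / 2 * x) ^ 2 - D / 4 * x ^ 2 by rw [hD]; ring,
        sq_nonneg (c * x + (e - a) / 2 * y), sq_nonneg (b * y + (a - e) / 2 * x)]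
    refine ⟨4 * (c - b) * q ((1 : SL2) 0 0) ((1 : SL2) 1 0) / -D + 4 * (c - b) * q ((1 : SL2) 0 1) ((1 : SL2) 1 1) / -D, fun k => ?_⟩
    rw [nsq, ← inv k, ← inv k]
    linarith [bd ((W ^ k) 0 0) ((W ^ k) 1 0), bd ((W ^ k) 0 1) ((W ^ k) 1 1)]

lemma two_le_rank {n : ℕ} {ρ : FreeGroup (Fin n) →* Perm RP1} (h : IsConvexCocompact ρ) : 2 ≤ n := by
  by_contra! hn
  obtain ⟨M, hM, fin, -⟩ := exists_matrices h
  obtain ⟨-, -, -, ⟨L, hL⟩, hC, -⟩ := h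
  obtain ⟨X, hX⟩ : ∃ X, ∀ i, ρ (FreeGroup.of i) X = X := by
    rcases Nat.lt_succ_iff.1 hn |>.lt_or_eq with h0 | rfl
    · obtain rfl : n = 0 := by omega
      exact ⟨para 0, fun i => i.elim0⟩
    rcases fixed_or_bounded (M (FreeGroup.of 0)) with ⟨X, hX⟩ | ⟨N, hN⟩
    · exact ⟨X, fun i => by rw [Subsingleton.elim i 0, hM]; exact hX⟩
    · exfalso
      have inj : Injective fun k : ℕ => (FreeGroup.of 0 : FreeGroup (Fin 1)) ^ k := fun k l hkl => by
        have := congrArg (FreeGroup.lift fun _ : Fin 1 => Multiplicative.ofAdd (1 : ℤ)) hkl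
        simp only [map_pow, FreeGroup.lift_apply_of, ← ofAdd_nsmul] at this
        simpa using this
      refine (Set.infinite_range_of_injective inj) ((fin N).subset ?_)
      rintro _ ⟨k, rfl⟩
      refine (nsq_congr ?_).trans_le (hN k)
      beta_reduce
      induction k with
      | zero =>
        rw [pow_zero, pow_zero, ← hM, map_one]
        exact funext fun X => mobius_inj 1 (by rw [← mobius_mul, mul_one]; rfl)
      | succ k ih =>
        rw [pow_succ, pow_succ, ← hM, map_mul]
        refine funext fun X => ?_
        rw [mobius_mul, ← ih, ← hM, ← hM]; rfl
  have hX' : ∀ γ, ρ γ X = X := fun γ => by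
    have : γ ∈ (MulAction.stabilizer (Perm RP1) X).comap ρ := by
      induction γ using FreeGroup.induction_on with
      | C1 => exact one_mem _
      | of i => exact hX i
      | inv_of i hi => exact inv_mem hi
      | mul x y hx hy => exact mul_mem hx hy
    exact this
  have LX := hL.2.2.2 {X} ⟨X, rfl⟩ (isClosed_point X) fun γ => by rw [image_singleton, hX']
  obtain ⟨⟨Y, hY⟩, hp, -⟩ := hC L hL
  have := accPt_iff_nhds.1 (hp.acc Y hY) univ univ_mem
  obtain ⟨Z, ⟨-, hZ⟩, hne⟩ := this
  exact hne ((LX hZ).trans (LX hY).symm)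

/-! ### Perturbation of words -/
section

lemma lipschitz_of_periodic {f : ℝ → ℝ} (h : ContDiff ℝ ∞ f) (hp : ∀ x (m : ℤ), deriv f (x + m) = deriv f x) :
    ∃ K > 0, ∀ x y, |f x - f y| ≤ K * |x - y| := by
  have h1 : ContDiff ℝ (∞ + 1) f := by simpa using h
  obtain ⟨B, hB⟩ := periodic_bounded (contDiff_succ_iff_deriv.1 h1).2.2.continuous hp
  refine ⟨|B| + 1, by positivity, fun x y => ?_⟩
  refine (convex_univ.norm_image_sub_le_of_norm_deriv_le (fun w _ => h.contDiffAt.differentiableAt (by simp))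
    (fun w _ => hB w) (mem_univ y) (mem_univ x)).trans ?_
  exact mul_le_mul_of_nonneg_right (by linarith [le_abs_self B]) (norm_nonneg _)

lemma Good.lipschitz {F : ℝ → ℝ} (h : Good F) : ∃ K > 0, ∀ x y, |F x - F y| ≤ K * |x - y| ∧ |ld F x - ld F y| ≤ K * |x - y| := by
  obtain ⟨K, K0, hK⟩ := lipschitz_of_periodic h.smooth h.deriv_per
  obtain ⟨K', K0', hK'⟩ := lipschitz_of_periodic h.ld_smooth fun x m => by
    rw [← deriv_comp_add_const]; congr 1; exact funext fun x => h.ld_per x m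
  refine ⟨K + K', by positivity, fun x y => ⟨(hK x y).trans ?_, (hK' x y).trans ?_⟩⟩ <;>
  exact mul_le_mul_of_nonneg_right (by linarith) (abs_nonneg _)

/-- The two lifts and the logarithms of their derivatives are uniformly `η`-close. -/
def Near (F G : ℝ → ℝ) (η : ℝ) : Prop := ∀ z, |F z - G z| < η ∧ |ld F z - ld G z| < η

lemma near_mul {F F' G G' : Perm ℝ} {K η : ℝ} (hF : Good F) (hF' : Good F') (hG : Good G) (hG' : Good G') (K0 : 0 < K)
    (hK : ∀ x y, |G x - G y| ≤ K * |x - y| ∧ |ld G x - ld G y| ≤ K * |x - y|) (h : Near F G (η / 3))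
    (h' : Near F' G' (min (η / 3) (η / (3 * K)))) : Near (F * F' : Perm ℝ) (G * G' : Perm ℝ) η := fun z => by
  have a := (h' z).1.trans_le (min_le_right _ _)
  have b := (h' z).2.trans_le (min_le_left _ _)
  have c : K * |F' z - G' z| < η / 3 := by
    calc _ < K * (η / (3 * K)) := by gcongr
      _ = _ := by field_simp
  obtain ⟨d, e⟩ := hK (F' z) (G' z)
  obtain ⟨f, g⟩ := h (F' z)
  constructor
  · show |F (F' z) - G (G' z)| < η
    linarith [abs_sub_le (F (F' z)) (G (F' z)) (G (G' z)), abs_nonneg (F (F' z) - G (F' z))]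
  · show |ld (F ∘ F') z - ld (G ∘ G') z| < η
    rw [hF.ld_comp hF', hG.ld_comp hG', add_sub_add_comm]
    linarith [abs_add_le (ld F (F' z) - ld G (G' z)) (ld F' z - ld G' z), abs_sub_le (ld F (F' z)) (ld G (F' z)) (ld G (G' z))]

lemma ld_inv {F : Perm ℝ} (hF : Good F) (z : ℝ) : ld (F⁻¹ : Perm ℝ) z = -ld F ((F⁻¹ : Perm ℝ) z) := by
  have := hF.ld_comp hF.inv z
  rw [show ⇑F ∘ ⇑(F⁻¹ : Perm ℝ) = (tr 0 : Perm ℝ) from funext fun x => by simp, ld_tr] at this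
  linarith

lemma near_inv {F G : Perm ℝ} {K K' η : ℝ} (hF : Good F) (hG : Good G) (K0 : 0 < K) (K0' : 0 < K')
    (hK : ∀ x y, |ld G x - ld G y| ≤ K * |x - y|)
    (hK' : ∀ x y, |(G⁻¹ : Perm ℝ) x - (G⁻¹ : Perm ℝ) y| ≤ K' * |x - y|)
    (h : Near F G (min (η / 2) (min (η / K') (η / (2 * K * K'))))) : Near (F⁻¹ : Perm ℝ) (G⁻¹ : Perm ℝ) η := fun z => by
  obtain ⟨y, rfl⟩ := F.surjective z
  have a := (h y).1.trans_le ((min_le_right _ _).trans (min_le_left _ _))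
  have a' := (h y).1.trans_le ((min_le_right _ _).trans (min_le_right _ _))
  have b := (h y).2.trans_le (min_le_left _ _)
  have c := hK' (G y) (F y)
  rw [pinv, abs_sub_comm (G y)] at c
  rw [ld_inv hF, ld_inv hG, pinv]
  have d := hK y ((G⁻¹ : Perm ℝ) (F y))
  constructor
  · calc _ ≤ _ := c
      _ < K' * (η / K') := by gcongr
      _ = η := by field_simp
  · have : K * |y - (G⁻¹ : Perm ℝ) (F y)| < η / 2 := by
      calc _ ≤ K * (K' * |F y - G y|) := by gcongr
        _ < K * (K' * (η / (2 * K * K'))) := by gcongr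
        _ = η / 2 := by field_simp
    rw [show -ld F y - -ld G ((G⁻¹ : Perm ℝ) (F y)) = -(ld F y - ld G y + (ld G y - ld G ((G⁻¹ : Perm ℝ) (F y)))) by ring, abs_neg]
    linarith [abs_add_le (ld F y - ld G y) (ld G y - ld G ((G⁻¹ : Perm ℝ) (F y)))]

variable {n : ℕ}

/-- The lift attached to a letter. -/
def lett (F : Fin n → Perm ℝ) (s : Fin n × Bool) : Perm ℝ := if s.2 then F s.1 else (F s.1)⁻¹

lemma good_lett {F : Fin n → Perm ℝ} (hF : ∀ i, Good (F i)) (s : Fin n × Bool) : Good (lett F s) := by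
  rw [lett]; split_ifs
  exacts [hF _, (hF _).inv]

lemma good_word {F : Fin n → Perm ℝ} (hF : ∀ i, Good (F i)) (w : List (Fin n × Bool)) : Good (w.map (lett F)).prod := by
  induction w with
  | nil => exact good_one
  | cons s w ih => rw [List.map_cons, List.prod_cons]; exact (good_lett hF s).mul ih

/-- The lifts of the generators and their derivatives are `δ`-close. -/
def Close (F g : Fin n → Perm ℝ) (δ : ℝ) : Prop :=
  (∀ i, Good (F i)) ∧ ∀ i t, |F i t - g i t| ≤ δ ∧ |deriv (F i) t - deriv (g i) t| ≤ δ

lemma Good.deriv_ge {F : ℝ → ℝ} (h : Good F) : ∃ c > 0, ∀ x, c ≤ deriv F x := by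
  obtain ⟨B, hB⟩ := periodic_bounded h.ld_smooth.continuous h.ld_per
  exact ⟨exp (-B), exp_pos _, fun x => by rw [← h.exp_ld]; exact exp_le_exp.2 (neg_le_of_abs_le (hB x))⟩

lemma near_gen {g : Fin n → Perm ℝ} (hg : ∀ i, Good (g i)) (i : Fin n) {η : ℝ} (η0 : 0 < η) :
    ∀ᶠ δ in 𝓝[>] (0 : ℝ), ∀ F, Close F g δ → Near (F i) (g i) η := by
  obtain ⟨c, c0, hc⟩ := (hg i).deriv_ge
  have ev : ∀ᶠ δ in 𝓝[>] (0 : ℝ), δ < min η (min (c / 2) (η * c / 2)) := by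
    refine nhdsWithin_le_nhds (Iio_mem_nhds (by positivity))
  filter_upwards [ev, self_mem_nhdsWithin] with δ hδ δ0 F hF z
  simp only [lt_min_iff] at hδ
  refine ⟨(hF.2 i z).1.trans_lt hδ.1, ?_⟩
  have key : ∀ a b : ℝ, c / 2 ≤ a → c / 2 ≤ b → |a - b| ≤ δ → log a - log b < η := fun a b ha hb hab => by
    have b0 : 0 < b := by linarith
    have a0 : 0 < a := by linarith
    rw [← log_div a0.ne' b0.ne']
    have := log_le_sub_one_of_pos (div_pos a0 b0)
    have e : a / b - 1 = (a - b) / b := by field_simp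
    have : (a - b) / b < η := by
      rw [div_lt_iff₀ b0]
      have : η * (c / 2) ≤ η * b := by gcongr
      linarith [le_abs_self (a - b)]
    linarith
  have h1 := hc z
  have h2 := (hF.2 i z).2
  have h3 := abs_le.1 h2
  rw [abs_lt]
  have := key _ _ (by linarith) (by linarith) h2
  have := key (deriv (g i) z) (deriv (F i) z) (by linarith) (by linarith) (by rwa [abs_sub_comm])
  simp only [ld]
  constructor <;> linarith

lemma near_lett {g : Fin n → Perm ℝ} (hg : ∀ i, Good (g i)) (s : Fin n × Bool) {η : ℝ} (η0 : 0 < η) :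
    ∀ᶠ δ in 𝓝[>] (0 : ℝ), ∀ F, Close F g δ → Near (lett F s) (lett g s) η := by
  obtain ⟨i, b⟩ := s
  cases b
  · obtain ⟨K, K0, hK⟩ := (hg i).lipschitz
    obtain ⟨K', K0', hK'⟩ := (hg i).inv.lipschitz
    filter_upwards [near_gen hg i (show 0 < min (η / 2) (min (η / K') (η / (2 * K * K'))) by positivity)] with δ hδ F hF
    simpa [lett] using near_inv (hF.1 i) (hg i) K0 K0' (fun x y => (hK x y).2) (fun x y => (hK' x y).1) (hδ F hF)
  · simpa [lett] using near_gen hg i η0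

lemma near_word {g : Fin n → Perm ℝ} (hg : ∀ i, Good (g i)) (w : List (Fin n × Bool)) {η : ℝ} (η0 : 0 < η) :
    ∀ᶠ δ in 𝓝[>] (0 : ℝ), ∀ F, Close F g δ → Near (w.map (lett F)).prod (w.map (lett g)).prod η := by
  induction w generalizing η with
  | nil => exact Eventually.of_forall fun δ F _ z => by simpa using η0
  | cons s w ih =>
    obtain ⟨K, K0, hK⟩ := (good_lett hg s).lipschitz
    filter_upwards [near_lett hg s (show 0 < η / 3 by positivity), ih (show 0 < min (η / 3) (η / (3 * K)) by positivity)] with δ h1 h2 F hF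
    rw [List.map_cons, List.prod_cons, List.map_cons, List.prod_cons]
    exact near_mul (good_lett hF.1 s) (good_word hF.1 w) (good_lett hg s) (good_word hg w) K0 hK (h1 F hF) (h2 F hF)

lemma lift_word {ρ : FreeGroup (Fin n) →* Perm RP1} {F : Fin n → Perm ℝ} (hF : ∀ i, IsLift (F i) (ρ (FreeGroup.of i)))
    (w : List (Fin n × Bool)) : IsLift (w.map (lett F)).prod (ρ (FreeGroup.mk w)) := by
  induction w with
  | nil => exact fun t => by rw [← FreeGroup.one_eq_mk, map_one]; rfl
  | cons s w ih =>
    intro t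
    rw [← List.singleton_append, ← FreeGroup.mul_mk, map_mul, List.map_append, List.prod_append, Equiv.Perm.mul_apply, ih t,
      Equiv.Perm.mul_apply]
    generalize (w.map (lett F)).prod t = t
    obtain ⟨i, b⟩ := s
    cases b
    · rw [show FreeGroup.mk [(i, false)] = (FreeGroup.of i)⁻¹ from rfl, map_inv, Equiv.Perm.inv_eq_iff_eq, hF i]
      simp [lett]
    · rw [show FreeGroup.mk [(i, true)] = FreeGroup.of i from rfl]
      simpa [lett] using hF i t

/-- The structure of contracting maps persists for all representations near a convex cocompact one. -/
lemma exists_ping {ρ : FreeGroup (Fin n) →* Perm RP1} (h : IsConvexCocompact ρ) {g : Fin n → Perm ℝ}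
    (hg : ∀ i, Good (g i)) (hl : ∀ i, IsLift (g i) (ρ (FreeGroup.of i))) :
    ∀ᶠ δ in 𝓝[>] (0 : ℝ), ∀ F, Close F g δ → ∃ P : Ping (Fin n × Bool), P.f = lett F ∧ P.inv = fun s => (s.1, !s.2) := by
  obtain ⟨m, r, A, m1, r0, sep, con⟩ := exists_contracting h
  have n2 := two_le_rank h
  have η0 : 0 < min (r / 2) (log 2) := by have := log_pos one_lt_two; positivity
  have ev := (Filter.eventually_all_finite (List.finite_length_lt (Fin n × Bool) (2 * m))).2 fun w _ => near_word hg w η0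
  have red : ∀ w : List (Fin n × Bool), w.IsChain (fun s t => t ≠ (s.1, !s.2)) → FreeGroup.IsReduced w := fun w hw =>
    hw.imp fun s t hst e => by
      by_contra hne
      exact hst (Prod.ext e.symm (by cases h1 : s.2 <;> cases h2 : t.2 <;> simp_all))
  filter_upwards [ev] with δ hδ F hF
  refine ⟨{
    inv := fun s => (s.1, !s.2)
    f := lett F
    inv_inv := fun t => by simp
    inv_ne := fun t h => by simpa using congrArg Prod.snd h
    good := good_lett hF.1
    inv_f := fun t => by cases h : t.2 <;> simp [lett, h]
    three := fun e e' => ?_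
    M := m
    M1 := m1
    r := r
    r0 := r0
    A := A
    pp := fun w hw h1 h2 z hz => ?_
    sepA := fun u v hu hv => sep u v (red u hu) (red v hv)
    }, rfl, rfl⟩
  · let i0 : Fin n := ⟨0, by omega⟩
    let i1 : Fin n := ⟨1, by omega⟩
    have c3 : ({e, e'} : Finset (Fin n × Bool)).card < ({(i0, true), (i0, false), (i1, true)} : Finset (Fin n × Bool)).card := by
      refine Finset.card_le_two.trans_lt ?_
      rw [Finset.card_eq_three.2 ⟨_, _, _, ?_, ?_, ?_, rfl⟩]
      · norm_num
      all_goals simp [i0, i1]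
    obtain ⟨b, -, hb⟩ := Finset.exists_mem_notMem_of_card_lt_card c3
    simp only [Finset.mem_insert, Finset.mem_singleton, not_or] at hb
    exact ⟨b, hb.1, hb.2⟩
  · have inv : w.reverse.map (fun s : Fin n × Bool => (s.1, !s.2)) = FreeGroup.invRev w := by rw [FreeGroup.invRev, List.map_reverse]
    rw [inv] at hz
    obtain ⟨a, b⟩ := con w (red w hw) h1 _ (lift_word hl w) (fun x => (good_word hg w).diff x) z (by linarith)
    obtain ⟨c, d⟩ := hδ w h2 F hF z
    have c := c.trans_le (min_le_left _ _)
    have d := d.trans_le (min_le_right _ _)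
    constructor
    · linarith [nd_tri ((w.map (lett F)).prod z) ((w.map (lett g)).prod z) (A (w.take m)),
        nd_le_abs ((w.map (lett F)).prod z - (w.map (lett g)).prod z)]
    · rw [← (good_word hF.1 w).exp_ld]
      rw [← (good_word hg w).exp_ld] at b
      have := (abs_lt.1 d).2
      calc _ ≤ exp (ld (w.map (lett g)).prod z + log 2) := exp_le_exp.2 (by linarith)
        _ ≤ 1 / 2 := by rw [exp_add, exp_log two_pos]; linarith
end

/-! ### The invariant volume form on the cylinder -/
section

namespace Form
variable (A : Form)

/-- The volume form on pairs of points of the circle with logarithmic density `U`. -/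
def density (X Y : RP1) : ℝ :=
  exp (A.U (invFun para Y + Int.fract (invFun para X - invFun para Y), invFun para Y))

variable {A}

lemma density_para {q : ℝ × ℝ} (hq : q ∈ Ω) : A.density (para q.1) (para q.2) = exp (A.U q) := by
  have e : ∀ t, ∃ m : ℤ, invFun para (para t) = t + m := fun t => para_eq.1 (invFun_eq ⟨t, rfl⟩)
  obtain ⟨k, hk⟩ := e q.1
  obtain ⟨l, hl⟩ := e q.2
  have f : Int.fract (q.1 + k - (q.2 + l)) = q.1 - q.2 := by
    rw [Int.fract_eq_iff]
    exact ⟨by linarith [hq.1], by linarith [hq.2], k - l, by push_cast; ring⟩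
  have u := A.U_inv (A.trG l) hq
  rw [ld_tr, ld_tr, add_zero, add_zero] at u
  rw [density, hk, hl, f, ← u, tr_apply, tr_apply]
  congr 3; ring

lemma exists_rep {s t : ℝ} (h : para s ≠ para t) : ∃ m : ℤ, (s + m, t) ∈ Ω := by
  refine ⟨-⌊s - t⌋, ?_, ?_⟩ <;> push_cast
  · refine lt_of_le_of_ne (by linarith [Int.floor_le (s - t)]) fun e => h ?_
    exact para_eq.2 ⟨⌊s - t⌋, by linarith⟩
  · linarith [Int.lt_floor_add_one (s - t)]

lemma chartDensity_smoothAt {q : ℝ × ℝ} (hq : para q.1 ≠ para q.2) : ContDiffAt ℝ ∞ (chartDensity A.density) q := by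
  obtain ⟨m, hm⟩ := exists_rep hq
  have c : ContDiff ℝ ∞ fun q : ℝ × ℝ => (q.1 + (m : ℝ), q.2) := by fun_prop
  have v : ContDiffAt ℝ ∞ A.U ((fun q : ℝ × ℝ => (q.1 + (m : ℝ), q.2)) q) := A.U_smooth.contDiffAt (Ω_open.mem_nhds hm)
  have w := ContDiffAt.comp q v c.contDiffAt
  refine w.exp.congr_of_eventuallyEq ?_
  filter_upwards [c.continuous.continuousAt.preimage_mem_nhds (Ω_open.mem_nhds hm)] with p hp
  rw [chartDensity, ← para_add p.1 m]
  exact density_para (q := (p.1 + (m : ℝ), p.2)) hp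

lemma density_volume : IsVolumeForm (⊤ : ℕ∞) A.density :=
  ⟨fun _ _ _ => exp_pos _, fun _ hq => (chartDensity_smoothAt hq).contDiffWithinAt⟩

lemma density_invariant {f : RP1 → RP1} {F : Perm ℝ} (hF : F ∈ A.G) (h : IsLift F f) : PreservesForm f A.density := by
  intro X Y hXY
  obtain ⟨s, rfl⟩ := para_surj X
  obtain ⟨t, rfl⟩ := para_surj Y
  obtain ⟨m, hm⟩ := exists_rep hXY
  rw [← para_add s m] at hXY ⊢
  generalize s + (m : ℝ) = s at *
  have g := A.good F hF
  have hm' : (F s, F t) ∈ Ω := ⟨g.mono hm.1, by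
    show F s < F t + 1
    rw [← g.per]; exact g.mono hm.2⟩
  rw [circleDeriv_eq h g, circleDeriv_eq h g, h s, h t, density_para hm, density_para hm', ← A.U_inv hF hm,
    exp_add, exp_add, g.exp_ld, g.exp_ld]

end Form

variable {n : ℕ}

/-- A spectrally Möbius-like representation of a free group with contracting words is area-preserving. -/
lemma area_of_ping {ρ : FreeGroup (Fin n) →* Perm RP1} {F : Fin n → Perm ℝ} (hF : ∀ i, IsLift (F i) (ρ (FreeGroup.of i)))
    {P : Ping (Fin n × Bool)} (hP : P.f = lett F) (hn : 2 ≤ n) (hs : SpectrallyMobiusLike ρ) : AreaPreserving ρ := by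
  have word : ∀ γ, IsLift (P.fw γ.toWord) (ρ γ) := fun γ => by
    have := lift_word hF γ.toWord
    rwa [← hP, FreeGroup.mk_toWord] at this
  have lifts : ∀ H ∈ liftGroup P.φ, Good H ∧ ∃ γ, IsLift H (ρ γ) := fun H hH => by
    induction hH using Subgroup.closure_induction with
    | mem x hx =>
      rcases hx with ⟨t, rfl⟩ | ⟨m, rfl⟩
      · refine ⟨P.good _, FreeGroup.mk [P.inv t], ?_⟩
        have := lift_word hF [P.inv t]
        rwa [← hP, List.map_singleton, List.prod_singleton] at this
      · exact ⟨good_tr m, 1, fun t => by rw [map_one, tr_apply, para_add]; rfl⟩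
    | one => exact ⟨good_one, 1, fun t => by rw [map_one]; rfl⟩
    | mul x y _ _ hx hy =>
      obtain ⟨gx, a, ha⟩ := hx
      obtain ⟨gy, b, hb⟩ := hy
      exact ⟨gx.mul gy, a * b, fun t => by rw [map_mul, Equiv.Perm.mul_apply, hb, ha]; rfl⟩
    | inv x _ hx =>
      obtain ⟨gx, a, ha⟩ := hx
      exact ⟨gx.inv, a⁻¹, fun t => by rw [map_inv, Equiv.Perm.inv_eq_iff_eq, ha, pinv']⟩
  obtain ⟨D, hD⟩ := P.exists_dyn (⟨0, by omega⟩, true) fun H hH p q hp hq hpq hd => by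
    obtain ⟨g, γ, hγ⟩ := lifts H hH
    have ne : ρ γ ≠ 1 := fun e => by
      obtain ⟨m, hm⟩ := lift_unique hγ (H := id) (fun t => by rw [e]; rfl) g.cont continuous_id
      rw [show ⇑H = tr m from funext hm] at hd
      have := ld_tr m p
      rw [← (good_tr m).exp_ld, this, exp_zero] at hd
      exact lt_irrefl _ hd
    have hne : para p ≠ para q := fun e => by
      obtain ⟨k, hk⟩ := para_eq.1 e
      exact hpq k hk
    have fix : ({para p, para q} : Set RP1) = {x | ρ γ x = x} := by
      refine ((finite_singleton _).insert _).eq_of_subset_of_encard_le ?_ ?_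
      · rintro _ (rfl | rfl)
        · show ρ γ _ = _
          rw [hγ, hp]
        · show ρ γ _ = _
          rw [hγ, hq]
      · rw [Set.encard_pair hne]; exact (hs γ ne).1
    have := ((hs γ ne).2 _ _ hne fix.symm).1
    rwa [circleDeriv_eq hγ g, circleDeriv_eq hγ g] at this
  obtain ⟨A, -, hA⟩ := D.exists_form
  refine ⟨A.density, Form.density_volume, fun γ => Form.density_invariant (F := P.fw γ.toWord) ?_ (word γ)⟩
  rw [hA]
  show _ ∈ liftGroup D.φ
  rw [hD]
  exact Ping.fwG _

/-- A circle diffeomorphism that is `C¹`-close to a Möbius map has a smooth lift close to the given lift. -/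
lemma exists_close_lift {f f₀ : RP1 → RP1} {g : ℝ → ℝ} {δ : ℝ} (hf : Injective f) (hd : IsCircleDiffeo ⊤ f) (hc : C1Close f f₀ δ)
    (hg : Good g) (hl : IsLift g f₀) (hδ : ∀ x, δ < deriv g x) :
    ∃ F : Perm ℝ, Good F ∧ IsLift F f ∧ ∀ t, |F t - g t| ≤ δ ∧ |deriv F t - deriv g t| ≤ δ := by
  obtain ⟨H, hH, sH, -⟩ := hd
  obtain ⟨F, G, hF, hG, cF, cG, h⟩ := hc
  obtain ⟨k, hk⟩ := lift_unique hF hH cF.continuous sH.continuous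
  obtain ⟨m, hm⟩ := lift_unique hG hl cG.continuous hg.cont
  set E : ℝ → ℝ := fun t => F t + ((-m : ℤ) : ℝ) with hE
  have lE : IsLift E f := fun t => by rw [hE, para_add]; exact hF t
  have dE : deriv E = deriv F := by rw [hE]; exact funext fun t => deriv_add_const _
  have dG : deriv G = deriv g := by rw [show G = fun t => g t + (m : ℝ) from funext hm]; exact funext fun t => deriv_add_const _
  have sE : ContDiff ℝ ∞ E := by
    rw [show E = fun t => H t + ((k : ℝ) + ((-m : ℤ) : ℝ)) from funext fun t => by rw [hE]; simp only; rw [hk]; ring]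
    exact ContDiff.add sH contDiff_const
  have pE : ∀ x, 0 < deriv E x := fun x => by
    have := (abs_le.1 (h x).2).1
    rw [dG] at this; rw [dE]; linarith [hδ x]
  have gE : Good E := ⟨sE, pE, lift_per hf lE sE.continuous (strictMono_of_deriv_pos pE)⟩
  obtain ⟨P, hP⟩ := gE.perm
  refine ⟨P, by rwa [hP], by rwa [hP], fun t => ?_⟩
  rw [hP, dE, ← dG]
  refine ⟨?_, (h t).2⟩
  have := (h t).1
  rwa [hm, show F t - (g t + m) = E t - g t by rw [hE]; push_cast; ring] at this

lemma main (n : ℕ) (ρ₀ : FreeGroup (Fin n) →* Perm RP1) (hcc : IsConvexCocompact ρ₀) :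
    ∃ ε : ℝ, 0 < ε ∧ ∀ ρ₁ : FreeGroup (Fin n) →* Perm RP1, (∀ γ, IsCircleDiffeo ⊤ (ρ₁ γ)) →
      (∀ i : Fin n, C1Close (ρ₁ (FreeGroup.of i)) (ρ₀ (FreeGroup.of i)) ε) → SpectrallyMobiusLike ρ₁ → AreaPreserving ρ₁ := by
  by_cases hex : ∀ i, ∃ G : ℝ → ℝ, IsLift G (ρ₀ (FreeGroup.of i)) ∧ Differentiable ℝ G
  swap
  · -- without a differentiable lift no map is `C¹`-close
    push Not at hex
    obtain ⟨i, hi⟩ := hex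
    refine ⟨1, one_pos, fun ρ₁ _ hc _ => ?_⟩
    obtain ⟨F, G, -, hG, -, cG, -⟩ := hc i
    exact absurd (cG.differentiable one_ne_zero) (hi G hG)
  have hex' : ∀ i, ∃ g : Perm ℝ, Good g ∧ IsLift g (ρ₀ (FreeGroup.of i)) := fun i => by
    obtain ⟨G, hG, dG⟩ := hex i
    obtain ⟨W, hW⟩ := hcc.2.1 (FreeGroup.of i)
    have gG := good_of_mobius (hW ▸ hG) dG
    obtain ⟨g, rfl⟩ := gG.perm
    exact ⟨g, gG, hG⟩
  choose g hg hl using hex'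
  have small : ∀ᶠ δ in 𝓝[>] (0 : ℝ), ∀ i x, δ < deriv (g i) x := by
    rw [eventually_all]
    intro i
    obtain ⟨c, c0, hc⟩ := (hg i).deriv_ge
    filter_upwards [nhdsWithin_le_nhds (Iio_mem_nhds c0)] with δ hδ x using lt_of_lt_of_le hδ (hc x)
  obtain ⟨ε, ⟨h1, h2⟩, ε0⟩ := (((exists_ping hcc hg hl).and small).and self_mem_nhdsWithin).exists
  refine ⟨ε, ε0, fun ρ₁ hd hc hs => ?_⟩
  choose F gF lF cF using fun i => exists_close_lift (ρ₁ (FreeGroup.of i)).injective (hd _) (hc i) (hg i) (hl i) (h2 i)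
  obtain ⟨P, hP, -⟩ := h1 F ⟨gF, cF⟩
  exact area_of_ping lF hP (two_le_rank hcc) hs
end
end AP

/-- Spectrally Möbius-like `C¹`-small deformations of a convex cocompact representation of
a free group are area-preserving. -/
theorem stmt_18 (n : ℕ) (ρ₀ : FreeGroup (Fin n) →* Equiv.Perm RP1)
    (hcc : IsConvexCocompact ρ₀) :
    ∃ ε : ℝ, 0 < ε ∧ ∀ ρ₁ : FreeGroup (Fin n) →* Equiv.Perm RP1,
      (∀ γ : FreeGroup (Fin n), IsCircleDiffeo (⊤ : ℕ∞) (ρ₁ γ)) →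
      (∀ i : Fin n, C1Close (ρ₁ (FreeGroup.of i)) (ρ₀ (FreeGroup.of i)) ε) →
      SpectrallyMobiusLike ρ₁ →
      AreaPreserving ρ₁ :=
  AP.main n ρ₀ hcc

end
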